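/- For each d ≥ 1 and each ρ > 0 there exists c > 0 such that for each ρ-strictly admissible ordered triple E = (E₁,E₂,E₃) of Lebesgue measurable subsets of ℝ^d with finite measures, T(E) ≤ T(E⋆) − c · dist(E, O(E⋆))², where T(E₁,E₂,E₃) = ∫_{ℝ^d×ℝ^d} 1_{E₁}(x) 1_{E₂}(y) 1_{E₃}(−x−y) dx dy and E⋆ = (E₁⋆,E₂⋆,E₃⋆). -/

import Mathlib

/-!
The problem is invariant under `(x, y, -x-y) ↦ (ψ x + v₁, …)` and under dilations, so radii may be
normalized.

**Riesz–Sobolev by small steps.** On sets made of grid cells, sliding intervals towards the origin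
along a direction never decreases `T` (up to grid errors), and each step moves little measure. Hence a
bounded triple is joined to its balls by a chain of small steps along which `T` hardly decreases
(`greedy`). This gives `riesz_sobolev`, and a discrete intermediate value argument (`chain_ivt`)
reduces the theorem to triples close to the orbit of the balls (`global_bounded`).

**Close to the orbit.** Mass far from the boundary spheres can be moved at a gain linear in the measure
moved, so each `E_j` may be assumed to differ from its ball only in a thin shell (`truncate`). An element
of the symmetry group then centres `E₁` and `E₂` at the origin and makes the matrix of second moments of
`E₁` scalar (`exists_normal`).

**Slicing.** `T` is an integral over pairs of tails of one-dimensional forms of slices. In dimension one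
the deficit bounds both the deviation of the slices from intervals and the squared defect of additivity
of their centres (`TR_gain`). Stability of the additive Cauchy equation makes the centres nearly affine
(`strip_affine`), and the moments make the affine part small (`strip_small`). This holds in every
direction, so each `E_j` is nearly invariant under reflections, hence nearly radial, hence within
`C √deficit` of its ball (`ball_of_strips`, `shell_stability`, `local_stability`). A boundary layer
of relative width `κ` is lost, but costs only `√κ` times the distance and is absorbed.

Unbounded sets are treated by inner approximation (`global_stability`).
-/

open MeasureTheory Set

noncomputable section

/-- `ℝ^d` with Lebesgue measure. -/
abbrev Vec (d : ℕ) := EuclideanSpace ℝ (Fin d)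

/-- Indicator function of a set, with value `1 : ℝ`. -/
def ind {d : ℕ} (E : Set (Vec d)) : Vec d → ℝ := E.indicator 1

/-- Convolution of two functions on `ℝ^d`. -/
def conv {d : ℕ} (f g : Vec d → ℝ) (x : Vec d) : ℝ := ∫ y, f y * g (x - y)

/-- `E⋆`: the closed ball centered at the origin with the same measure as `E`. -/
def ballStar {d : ℕ} (E : Set (Vec d)) : Set (Vec d) :=
  Metric.closedBall 0
    (((volume E).toReal / (volume (Metric.closedBall (0 : Vec d) 1)).toReal) ^ ((1 : ℝ) / d))

/-- A triple of positive reals is `ρ`-strictly admissible. -/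
def RhoStrictlyAdmissible (ρ : ℝ) (r : Fin 3 → ℝ) : Prop :=
  (∀ j, 0 < r j) ∧
  (∀ i j k : Fin 3, ({i, j, k} : Set (Fin 3)) = Set.univ → r k ≤ (1 - ρ) * (r i + r j)) ∧
  (∀ i j, ρ * r i ≤ r j)


/-- The trilinear form `T(E₁,E₂,E₃) = ∫∫ 1_{E₁}(x) 1_{E₂}(y) 1_{E₃}(−x−y) dx dy`. -/
def Tfun {d : ℕ} (E : Fin 3 → Set (Vec d)) : ℝ :=
  ∫ p : Vec d × Vec d, ind (E 0) p.1 * ind (E 1) p.2 * ind (E 2) (-p.1 - p.2)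

/-- `dist(E, O(F))`: infimum over measure-preserving linear maps `ψ` and translations
`v` with `v₁ + v₂ + v₃ = 0` of the maximal measure of the symmetric differences
`E_j Δ (ψ(F_j) + v_j)`. -/
def tripleDist {d : ℕ} (E F : Fin 3 → Set (Vec d)) : ℝ :=
  sInf { r : ℝ | ∃ (ψ : Vec d ≃ₗ[ℝ] Vec d) (v : Fin 3 → Vec d),
    v 0 + v 1 + v 2 = 0 ∧ MeasurePreserving (⇑ψ) volume volume ∧
    r = max (volume (symmDiff (E 0) ((fun y => ψ y + v 0) '' F 0))).toReal
        (max (volume (symmDiff (E 1) ((fun y => ψ y + v 1) '' F 1))).toReal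
             (volume (symmDiff (E 2) ((fun y => ψ y + v 2) '' F 2))).toReal) }

open scoped ENNReal NNReal Topology symmDiff

set_option linter.unusedSectionVars false
set_option linter.unusedVariables false
set_option linter.deprecated false

open Metric
open Real (norm_eq_abs enorm_eq_ofReal_abs sq_sqrt sqrt_nonneg volume_Icc norm_of_nonneg)
open ENNReal (ofReal ofReal_add ofReal_add_le ofReal_div_of_pos ofReal_le_ofReal
  ofReal_le_ofReal_iff ofReal_lt_top ofReal_mul ofReal_ne_top ofReal_ofNat ofReal_of_nonpos
  ofReal_one ofReal_pos ofReal_pow ofReal_sum_of_nonneg ofReal_toReal toReal_add toReal_div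
  toReal_le_of_le_ofReal toReal_mono toReal_mul toReal_nonneg toReal_ofReal toReal_pos toReal_pow)

/-- The closed ball of `Vec m` about the origin, as a function of its radius. -/
local notation "𝔹[" m "]" => closedBall (0 : Vec m)

/-- The closed ball about the origin, in the space determined by the context. -/
local notation "𝔹" => closedBall 0

variable {n : ℕ}

/-- The space `Vec (n + 1)`, whose vectors split into a first coordinate and a tail in `Vec n`. -/
local notation "𝕍" => Vec (n + 1)

/-- Triples of sets in `Vec d`, the arguments of the trilinear form. -/
abbrev Triple (d : ℕ) := Fin 3 → Set (Vec d)

lemma ball_ne_top {d : ℕ} {x : Vec d} {r : ℝ} : volume (closedBall x r) ≠ ∞ :=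
  measure_closedBall_lt_top.ne

lemma cball_mono {d : ℕ} {x : Vec d} {r s : ℝ} (h : r ≤ s) : closedBall x r ⊆ closedBall x s :=
  closedBall_subset_closedBall h

/-! ### The trilinear form on a measured group -/

section Trilinear

variable {V : Type*} [AddCommGroup V] [MeasureSpace V]

/-- The region of integration of the trilinear form, as a subset of `V × V`. -/
def Treg (A B C : Set V) : Set (V × V) := {p | p.1 ∈ A ∧ p.2 ∈ B ∧ -p.1 - p.2 ∈ C}

/-- The trilinear form, with values in `[0, ∞]`. -/
def TT (A B C : Set V) : ℝ≥0∞ := (volume : Measure (V × V)) (Treg A B C)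

/-- The kernel `x ↦ |B ∩ (-x - C)|`, whose integral over `A` is `TT A B C`. -/
def KK (B C : Set V) (x : V) : ℝ≥0∞ := volume (B ∩ {y | -x - y ∈ C})

lemma TT_mono {A A' B B' C C' : Set V} (hA : A ⊆ A') (hB : B ⊆ B') (hC : C ⊆ C') :
    TT A B C ≤ TT A' B' C' :=
  measure_mono fun _ hp => ⟨hA hp.1, hB hp.2.1, hC hp.2.2⟩

lemma TT_union_le (A A' B C : Set V) : TT (A ∪ A') B C ≤ TT A B C + TT A' B C := by
  refine (measure_mono ?_).trans (measure_union_le _ _)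
  rintro p ⟨h | h, h2⟩
  · exact Or.inl ⟨h, h2⟩
  · exact Or.inr ⟨h, h2⟩

variable [SFinite (volume : Measure V)]

lemma TT_le_mul (A B C : Set V) : TT A B C ≤ volume A * volume B := by
  calc TT A B C ≤ (volume : Measure (V × V)) (A ×ˢ B) := measure_mono fun _ hp => ⟨hp.1, hp.2.1⟩
    _ ≤ _ := by rw [Measure.volume_eq_prod, Measure.prod_prod]

variable [MeasurableAdd₂ V] [MeasurableNeg V]

lemma measurable_third : Measurable (fun p : V × V => -p.1 - p.2) := by
  simp only [sub_eq_add_neg]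
  exact (measurable_fst.neg).add measurable_snd.neg

lemma measurableSet_Treg {A B C : Set V} (hA : MeasurableSet A) (hB : MeasurableSet B)
    (hC : MeasurableSet C) : MeasurableSet (Treg A B C) :=
  (measurable_fst hA).inter ((measurable_snd hB).inter (measurable_third hC))

lemma measurable_KK {B C : Set V} (hB : MeasurableSet B) (hC : MeasurableSet C) :
    Measurable (KK B C) := by
  have h := measurable_measure_prodMk_left (ν := (volume : Measure V))
    (measurableSet_Treg (MeasurableSet.univ) hB hC)
  refine (congrArg Measurable ?_).mp h
  funext x
  simp only [KK]
  congr 1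
  ext y
  simp [Treg]

lemma TT_eq_lintegral {A B C : Set V} (hA : MeasurableSet A) (hB : MeasurableSet B)
    (hC : MeasurableSet C) : TT A B C = ∫⁻ x in A, KK B C x := by
  rw [TT, Measure.volume_eq_prod, Measure.prod_apply (measurableSet_Treg hA hB hC),
    ← lintegral_indicator hA]
  congr 1
  funext x
  by_cases hx : x ∈ A
  · simp only [indicator_of_mem hx, KK]
    congr 1
    ext y
    simp [Treg, hx]
  · simp only [indicator_of_notMem hx]
    convert measure_empty (μ := (volume : Measure V))
    ext y
    simp [Treg, hx]

lemma TT_swap12 {A B C : Set V} (hA : MeasurableSet A) (hB : MeasurableSet B)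
    (hC : MeasurableSet C) : TT A B C = TT B A C := by
  have h := (Measure.measurePreserving_swap (μ := (volume : Measure V))
    (ν := (volume : Measure V))).measure_preimage
      (measurableSet_Treg hA hB hC).nullMeasurableSet
  rw [TT, TT, Measure.volume_eq_prod, ← h]
  congr 1
  ext ⟨x, y⟩
  simp only [Treg, mem_preimage, mem_setOf_eq, Prod.swap]
  rw [show -y - x = -x - y by abel]
  tauto

variable [(volume : Measure V).IsAddLeftInvariant] [(volume : Measure V).IsNegInvariant]

lemma measurePreserving_shear :
    MeasurePreserving (fun p : V × V => (p.1, -p.1 - p.2)) volume volume := by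
  have h1 : MeasurePreserving (fun p : V × V => (p.1, p.1 + p.2)) volume volume :=
    measurePreserving_prod_add volume volume
  have h2 : MeasurePreserving (fun p : V × V => (p.1, -p.2)) volume volume :=
    (MeasurePreserving.id (volume : Measure V)).prod (Measure.measurePreserving_neg volume)
  convert h2.comp h1 using 1
  funext p
  simp only [Function.comp, Prod.mk.injEq, true_and]
  abel

lemma TT_swap23 {A B C : Set V} (hA : MeasurableSet A) (hB : MeasurableSet B)
    (hC : MeasurableSet C) : TT A B C = TT A C B := by
  have h := measurePreserving_shear.measure_preimage
      (measurableSet_Treg hA hB hC).nullMeasurableSet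
  rw [TT, TT, ← h]
  congr 1
  ext ⟨x, y⟩
  simp only [Treg, mem_preimage, mem_setOf_eq]
  rw [show -x - (-x - y) = y by abel]
  tauto

lemma TT_rot {A B C : Set V} (hA : MeasurableSet A) (hB : MeasurableSet B)
    (hC : MeasurableSet C) : TT A B C = TT B C A := by
  rw [TT_swap12 hA hB hC, TT_swap23 hB hA hC]

lemma TT_lip1 (A A' B C : Set V) :
    TT A B C ≤ TT A' B C + volume (A \ A') * volume B := by
  calc TT A B C ≤ TT (A' ∪ A \ A') B C := TT_mono (by simp) le_rfl le_rfl
    _ ≤ TT A' B C + TT (A \ A') B C := TT_union_le _ _ _ _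
    _ ≤ _ := by gcongr; exact TT_le_mul _ _ _

lemma TT_lip {A B C A' B' C' : Set V} (hA : MeasurableSet A) (hB : MeasurableSet B)
    (hC : MeasurableSet C) (hA' : MeasurableSet A') (hB' : MeasurableSet B')
    (hC' : MeasurableSet C') :
    TT A B C ≤ TT A' B' C' + (volume (A \ A') * volume B + volume (B \ B') * volume C
      + volume (C \ C') * volume A') := by
  have h1 := TT_lip1 A A' B C
  have h2 : TT A' B C ≤ TT A' B' C + volume (B \ B') * volume C := by
    rw [TT_rot hA' hB hC, TT_rot hA' hB' hC]
    exact TT_lip1 _ _ _ _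
  have h3 : TT A' B' C ≤ TT A' B' C' + volume (C \ C') * volume A' := by
    rw [← TT_rot hC hA' hB', ← TT_rot hC' hA' hB']
    exact TT_lip1 _ _ _ _
  calc _ ≤ _ := h1
    _ ≤ TT A' B' C' + volume (C \ C') * volume A' + volume (B \ B') * volume C
        + volume (A \ A') * volume B := by gcongr; exact h2.trans (by gcongr)
    _ = _ := by ring

lemma TT_preimage {φ₁ φ₂ φ₃ : V → V} (h1 : MeasurePreserving φ₁) (h2 : MeasurePreserving φ₂)
    (h3 : ∀ x y, φ₃ (-x - y) = -φ₁ x - φ₂ y) {A B C : Set V}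
    (hA : MeasurableSet A) (hB : MeasurableSet B) (hC : MeasurableSet C) :
    TT (φ₁ ⁻¹' A) (φ₂ ⁻¹' B) (φ₃ ⁻¹' C) = TT A B C := by
  rw [TT, TT, Measure.volume_eq_prod, ← (h1.prod h2).measure_preimage
    (measurableSet_Treg hA hB hC).nullMeasurableSet]
  congr 1
  ext ⟨x, y⟩
  simp [Treg, Prod.map, h3]

end Trilinear

/-! ### Intervals on the line -/

/-- The half-open interval with centre `c` and half-length `h`. -/
def J (c h : ℝ) : Set ℝ := Ico (c - h) (c + h)

lemma measurableSet_J (c h : ℝ) : MeasurableSet (J c h) := measurableSet_Ico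

lemma volume_J (c h : ℝ) : volume (J c h) = ofReal (2 * h) := by
  rw [J, Real.volume_Ico]; congr 1; ring

lemma mem_J {c h t : ℝ} : t ∈ J c h ↔ c - h ≤ t ∧ t < c + h := Iff.rfl

lemma KK_J (h₁ h₂ x : ℝ) :
    KK (J 0 h₁) (J 0 h₂) x = ofReal (min h₁ (h₂ - x) + min h₁ (h₂ + x)) := by
  have : volume (Ico (max (-h₁) (-x - h₂)) (min h₁ (-x + h₂)))
      = volume (J 0 h₁ ∩ {y | -x - y ∈ J 0 h₂}) := by
    apply measure_congr
    have hfin : ∀ᵐ y : ℝ, y ≠ -x - h₂ ∧ y ≠ -x + h₂ := by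
      have h1 : ∀ᵐ y : ℝ, y ≠ -x - h₂ := by simp [ae_iff, measure_singleton]
      have h2 : ∀ᵐ y : ℝ, y ≠ -x + h₂ := by simp [ae_iff, measure_singleton]
      filter_upwards [h1, h2] with y a b using ⟨a, b⟩
    filter_upwards [hfin] with y hy
    apply propext
    change y ∈ Ico _ _ ↔ y ∈ (J 0 h₁ ∩ {y | -x - y ∈ J 0 h₂})
    simp only [mem_Ico, mem_inter_iff, J, mem_setOf_eq, max_le_iff, lt_min_iff]
    have := lt_or_gt_of_ne hy.1
    have := lt_or_gt_of_ne hy.2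
    constructor
    · rintro ⟨⟨a, b⟩, c, d⟩
      refine ⟨⟨by linarith, by linarith⟩, by linarith, ?_⟩
      rcases lt_or_gt_of_ne hy.1 with h | h <;> linarith
    · rintro ⟨⟨a, b⟩, c, d⟩
      refine ⟨⟨by linarith, by linarith⟩, by linarith, ?_⟩
      rcases lt_or_gt_of_ne hy.2 with h | h <;> linarith
  rw [KK, ← this, Real.volume_Ico]
  congr 1
  rw [show min h₁ (h₂ + x) = - max (-h₁) (-x - h₂) by
    rw [← min_neg_neg]; congr 1 <;> ring]
  rw [show -x + h₂ = h₂ - x by ring]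
  ring

lemma KK_J_anti (h₁ h₂ : ℝ) {x y : ℝ} (hxy : |x| ≤ |y|) :
    KK (J 0 h₁) (J 0 h₂) y ≤ KK (J 0 h₁) (J 0 h₂) x := by
  rw [KK_J, KK_J]
  apply ofReal_le_ofReal
  rcases abs_cases x with ⟨h1, h2⟩ | ⟨h1, h2⟩ <;> rcases abs_cases y with ⟨h3, h4⟩ | ⟨h3, h4⟩ <;>
  rw [h1, h3] at hxy <;>
  rcases min_cases h₁ (h₂ - x) with ⟨h5, h6⟩ | ⟨h5, h6⟩ <;>
  rcases min_cases h₁ (h₂ + x) with ⟨h7, h8⟩ | ⟨h7, h8⟩ <;> rw [h5, h7] <;>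
  linarith [min_le_left h₁ (h₂ - y), min_le_right h₁ (h₂ - y), min_le_left h₁ (h₂ + y),
    min_le_right h₁ (h₂ + y)]

lemma TT_J_shift (c₁ c₂ c₃ h₁ h₂ h₃ : ℝ) :
    TT (J c₁ h₁) (J c₂ h₂) (J c₃ h₃) = TT (J (c₁ + c₂ + c₃) h₁) (J 0 h₂) (J 0 h₃) := by
  have h := TT_preimage (φ₁ := fun x : ℝ => x + (-c₂ - c₃)) (φ₂ := fun x : ℝ => x + c₂)
    (φ₃ := fun x : ℝ => x + c₃) (measurePreserving_add_right volume _)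
    (measurePreserving_add_right volume _) (by intro x y; ring)
    (measurableSet_J c₁ h₁) (measurableSet_J c₂ h₂) (measurableSet_J c₃ h₃)
  rw [← h]
  congr 1 <;> ext t <;> simp only [mem_preimage, mem_J] <;> constructor <;> rintro ⟨a, b⟩ <;>
    constructor <;> linarith

lemma TT_J_center {u v : ℝ} (h₁ h₂ h₃ : ℝ) (h : (0 ≤ v ∧ v ≤ u) ∨ (u ≤ v ∧ v ≤ 0)) :
    TT (J u h₁) (J 0 h₂) (J 0 h₃) ≤ TT (J v h₁) (J 0 h₂) (J 0 h₃) := by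
  rw [TT_eq_lintegral (measurableSet_J _ _) (measurableSet_J _ _) (measurableSet_J _ _),
    TT_eq_lintegral (measurableSet_J _ _) (measurableSet_J _ _) (measurableSet_J _ _)]
  set k := KK (J 0 h₂) (J 0 h₃)
  have hA : MeasurableSet (J u h₁) := measurableSet_J _ _
  have hB : MeasurableSet (J v h₁) := measurableSet_J _ _
  rw [← lintegral_inter_add_sdiff k (J u h₁) hB, ← lintegral_inter_add_sdiff k (J v h₁) hA,
    inter_comm (J v h₁)]
  gcongr 1
  rw [← lintegral_indicator (hA.diff hB), ← lintegral_indicator (hB.diff hA),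
    ← lintegral_sub_left_eq_self ((J v h₁ \ J u h₁).indicator k) (u + v)]
  apply lintegral_mono_ae
  have hfin : ∀ᵐ y : ℝ, (y ≠ u - h₁ ∧ y ≠ v + h₁) := by
    have h1 : ∀ᵐ y : ℝ, y ≠ u - h₁ := by simp [ae_iff, measure_singleton]
    have h2 : ∀ᵐ y : ℝ, y ≠ v + h₁ := by simp [ae_iff, measure_singleton]
    filter_upwards [h1, h2] with y a b using ⟨a, b⟩
  filter_upwards [hfin] with x ⟨hx1, hx2⟩
  by_cases hx : x ∈ J u h₁ \ J v h₁
  · rw [indicator_of_mem hx]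
    obtain ⟨⟨h1, h2⟩, h3⟩ := hx
    have h3' : ¬ (v - h₁ ≤ x ∧ x < v + h₁) := h3
    have hx1' : u - h₁ < x := lt_of_le_of_ne h1 (Ne.symm hx1)
    rcases h with ⟨hv, huv⟩ | ⟨huv, hv⟩
    · have h4 : v + h₁ < x := by
        by_contra hcon
        exact h3' ⟨by linarith, lt_of_le_of_ne (not_lt.1 hcon) hx2⟩
      have hmem : u + v - x ∈ J v h₁ \ J u h₁ := by
        refine ⟨⟨by linarith, by linarith⟩, fun hh => ?_⟩
        have := hh.1; linarith
      rw [indicator_of_mem hmem]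
      apply KK_J_anti
      rw [← sq_le_sq]
      nlinarith
    · have h4 : x < v - h₁ := by
        by_contra hcon
        exact h3' ⟨by linarith, by linarith⟩
      have hmem : u + v - x ∈ J v h₁ \ J u h₁ := by
        refine ⟨⟨by linarith, by linarith⟩, fun hh => ?_⟩
        have := hh.2; linarith
      rw [indicator_of_mem hmem]
      apply KK_J_anti
      rw [← sq_le_sq]
      nlinarith
  · rw [indicator_of_notMem hx]; exact zero_le

lemma TT_J_scale {l : ℝ} (h0 : 0 ≤ l) (h1 : l ≤ 1) (c₁ c₂ c₃ h₁ h₂ h₃ : ℝ) :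
    TT (J c₁ h₁) (J c₂ h₂) (J c₃ h₃) ≤ TT (J (l * c₁) h₁) (J (l * c₂) h₂) (J (l * c₃) h₃) := by
  rw [TT_J_shift, TT_J_shift (l * c₁)]
  apply TT_J_center
  rw [show l * c₁ + l * c₂ + l * c₃ = l * (c₁ + c₂ + c₃) by ring]
  rcases le_total 0 (c₁ + c₂ + c₃) with h | h
  · left; constructor <;> nlinarith
  · right; constructor <;> nlinarith

lemma volume_J_sdiff (c c' h : ℝ) : volume (J c h \ J c' h) ≤ ofReal |c - c'| := by
  rcases le_total c c' with hc | hc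
  · rw [abs_of_nonpos (by linarith)]
    calc volume (J c h \ J c' h) ≤ volume (Ico (c - h) (c' - h)) := by
          apply measure_mono
          rintro t ⟨⟨h1, h2⟩, h3⟩
          refine ⟨h1, ?_⟩
          by_contra hh
          exact h3 ⟨not_lt.1 hh, by linarith⟩
      _ = _ := by rw [Real.volume_Ico]; congr 1; ring
  · rw [abs_of_nonneg (by linarith)]
    calc volume (J c h \ J c' h) ≤ volume (Ico (c' + h) (c + h)) := by
          apply measure_mono
          rintro t ⟨⟨h1, h2⟩, h3⟩
          refine ⟨?_, h2⟩
          by_contra hh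
          exact h3 ⟨by linarith, not_le.1 hh⟩
      _ = _ := by rw [Real.volume_Ico]; congr 1; ring

/-! ### Configurations of intervals and the sliding flow -/

/-- A finite set of pairs (centre, half-length) describing pairwise disjoint intervals which stay
disjoint when all centres are multiplied by any factor in `[a, 1]`. -/
def IsCfg (a : ℝ) (s : Finset (ℝ × ℝ)) : Prop :=
  (∀ p ∈ s, 0 < p.2) ∧ ∀ p ∈ s, ∀ q ∈ s, p ≠ q → p.2 + q.2 ≤ a * |p.1 - q.1|

/-- The union of the intervals of a configuration, with centres scaled by `m`. -/
def Ucfg (s : Finset (ℝ × ℝ)) (m : ℝ) : Set ℝ := ⋃ p ∈ s, J (m * p.1) p.2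

lemma measurableSet_Ucfg (s : Finset (ℝ × ℝ)) (m : ℝ) : MeasurableSet (Ucfg s m) :=
  Finset.measurableSet_biUnion _ fun _ _ => measurableSet_J _ _

lemma J_disjoint {c c' h h' : ℝ} (hh : h + h' ≤ |c - c'|) : Disjoint (J c h) (J c' h') := by
  rw [Set.disjoint_left]
  rintro t ⟨h1, h2⟩ ⟨h3, h4⟩
  rcases abs_cases (c - c') with ⟨h5, h6⟩ | ⟨h5, h6⟩ <;> linarith

lemma IsCfg.disj {a m : ℝ} {s : Finset (ℝ × ℝ)} (hs : IsCfg a s) (ha : 0 ≤ a) (hm : a ≤ m) :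
    (s : Set (ℝ × ℝ)).PairwiseDisjoint (fun p => J (m * p.1) p.2) := by
  intro p hp q hq hpq
  apply J_disjoint
  have := hs.2 p hp q hq hpq
  rw [← mul_sub, abs_mul, abs_of_nonneg (ha.trans hm)]
  exact this.trans (by gcongr)

lemma volume_Ucfg {a m : ℝ} {s : Finset (ℝ × ℝ)} (hs : IsCfg a s) (ha : 0 ≤ a) (hm : a ≤ m) :
    volume (Ucfg s m) = ∑ p ∈ s, ofReal (2 * p.2) := by
  rw [Ucfg, measure_biUnion_finset (hs.disj ha hm) fun _ _ => measurableSet_J _ _]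
  simp_rw [volume_J]

lemma Treg_biUnion {α : Type*} (s t r : Finset α) (A B C : α → Set ℝ) :
    Treg (⋃ p ∈ s, A p) (⋃ p ∈ t, B p) (⋃ p ∈ r, C p)
      = ⋃ x ∈ s ×ˢ t ×ˢ r, Treg (A x.1) (B x.2.1) (C x.2.2) := by
  ext p
  simp only [Treg, mem_iUnion, mem_setOf_eq, Finset.mem_product, exists_prop, Prod.exists]
  constructor
  · rintro ⟨⟨a, ha, ha'⟩, ⟨b, hb, hb'⟩, ⟨c, hc, hc'⟩⟩
    exact ⟨a, b, c, ⟨ha, hb, hc⟩, ha', hb', hc'⟩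
  · rintro ⟨a, b, c, ⟨ha, hb, hc⟩, ha', hb', hc'⟩
    exact ⟨⟨a, ha, ha'⟩, ⟨b, hb, hb'⟩, ⟨c, hc, hc'⟩⟩

lemma TT_Ucfg_mono {a m m' : ℝ} {s t r : Finset (ℝ × ℝ)} (hs : IsCfg a s) (ht : IsCfg a t)
    (hr : IsCfg a r) (ha : 0 ≤ a) (hm : a ≤ m') (hmm : m' ≤ m) :
    TT (Ucfg s m) (Ucfg t m) (Ucfg r m) ≤ TT (Ucfg s m') (Ucfg t m') (Ucfg r m') := by
  have hm0 : 0 ≤ m' := ha.trans hm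
  obtain ⟨l, hl0, hl1, hl⟩ : ∃ l : ℝ, 0 ≤ l ∧ l ≤ 1 ∧ m' = l * m := by
    rcases eq_or_lt_of_le (hm0.trans hmm) with h | h
    · exact ⟨1, by simp, le_rfl, by linarith⟩
    · exact ⟨m' / m, by positivity, (div_le_one h).2 hmm, by field_simp⟩
  calc TT (Ucfg s m) (Ucfg t m) (Ucfg r m)
      ≤ ∑ x ∈ s ×ˢ t ×ˢ r, TT (J (m * x.1.1) x.1.2) (J (m * x.2.1.1) x.2.1.2)
          (J (m * x.2.2.1) x.2.2.2) := by
        simp only [TT, Ucfg]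
        rw [Treg_biUnion]
        exact measure_biUnion_finset_le _ _
    _ ≤ ∑ x ∈ s ×ˢ t ×ˢ r, TT (J (m' * x.1.1) x.1.2) (J (m' * x.2.1.1) x.2.1.2)
          (J (m' * x.2.2.1) x.2.2.2) := by
        apply Finset.sum_le_sum
        intro x _
        rw [hl]
        simp only [mul_assoc]
        exact TT_J_scale hl0 hl1 _ _ _ _ _ _
    _ = TT (Ucfg s m') (Ucfg t m') (Ucfg r m') := by
        simp only [TT, Ucfg]
        rw [Treg_biUnion, measure_biUnion_finset]
        · intro x hx y hy hxy
          simp only [Finset.coe_product, mem_prod, Finset.mem_coe] at hx hy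
          rw [Function.onFun, Set.disjoint_left]
          rintro p ⟨p1, p2, p3⟩ ⟨q1, q2, q3⟩
          apply hxy
          have e1 : x.1 = y.1 := by
            by_contra hne
            exact Set.disjoint_left.1 (hs.disj ha hm hx.1 hy.1 hne) p1 q1
          have e2 : x.2.1 = y.2.1 := by
            by_contra hne
            exact Set.disjoint_left.1 (ht.disj ha hm hx.2.1 hy.2.1 hne) p2 q2
          have e3 : x.2.2 = y.2.2 := by
            by_contra hne
            exact Set.disjoint_left.1 (hr.disj ha hm hx.2.2 hy.2.2 hne) p3 q3
          exact Prod.ext e1 (Prod.ext e2 e3)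
        · intro x _
          exact measurableSet_Treg (measurableSet_J _ _) (measurableSet_J _ _)
            (measurableSet_J _ _)

/-- One small step of the flow on a family of subsets of the line: every set is changed by at
most `ε`, measures are kept and no trilinear form of three members decreases. -/
def FlowStep {ι : Type*} (ε : ℝ≥0∞) (A A' : ι → Set ℝ) : Prop :=
  (∀ i, MeasurableSet (A' i)) ∧ (∀ i, volume (A i ∆ A' i) ≤ ε) ∧
  (∀ i, volume (A' i) = volume (A i)) ∧
  ∀ i j k, TT (A i) (A j) (A k) ≤ TT (A' i) (A' j) (A' k)

lemma Ucfg_sdiff (s : Finset (ℝ × ℝ)) (m m' : ℝ) :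
    volume (Ucfg s m \ Ucfg s m') ≤ ofReal (|m - m'| * ∑ p ∈ s, |p.1|) := by
  calc volume (Ucfg s m \ Ucfg s m') ≤ volume (⋃ p ∈ s, J (m * p.1) p.2 \ J (m' * p.1) p.2) := by
        apply measure_mono
        rintro t ⟨h1, h2⟩
        simp only [Ucfg, mem_iUnion, exists_prop, not_exists, not_and] at h1 h2 ⊢
        obtain ⟨p, hp, hpt⟩ := h1
        exact ⟨p, hp, hpt, h2 p hp⟩
    _ ≤ ∑ p ∈ s, volume (J (m * p.1) p.2 \ J (m' * p.1) p.2) := measure_biUnion_finset_le _ _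
    _ ≤ ∑ p ∈ s, ofReal |m * p.1 - m' * p.1| :=
        Finset.sum_le_sum fun p _ => volume_J_sdiff _ _ _
    _ = _ := by
        rw [← ofReal_sum_of_nonneg fun _ _ => abs_nonneg _, Finset.mul_sum]
        congr 1
        apply Finset.sum_congr rfl
        intro p _
        rw [← sub_mul, abs_mul]

lemma flow_slide {ι : Type*} [Fintype ι] {ε : ℝ} (hε : 0 < ε) {a : ℝ} (ha : 0 ≤ a) (ha1 : a ≤ 1)
    (s : ι → Finset (ℝ × ℝ)) (hs : ∀ i, IsCfg a (s i)) :
    Relation.ReflTransGen (FlowStep (ofReal ε))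
      (fun i => Ucfg (s i) 1) (fun i => Ucfg (s i) a) := by
  set M : ℝ := ∑ i, ∑ p ∈ s i, |p.1|
  have hMi : ∀ i, ∑ p ∈ s i, |p.1| ≤ M := fun i =>
    Finset.single_le_sum (f := fun i => ∑ p ∈ s i, |p.1|)
      (fun i _ => Finset.sum_nonneg fun p _ => abs_nonneg _) (Finset.mem_univ i)
  obtain ⟨N, hN⟩ := exists_nat_gt (2 * M / ε)
  have hN0 : (0 : ℝ) < N := lt_of_le_of_lt (by positivity) hN
  set μ : ℕ → ℝ := fun k => 1 - k * ((1 - a) / N) with hμ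
  have key : ∀ k : ℕ, k ≤ N → Relation.ReflTransGen (FlowStep (ofReal ε))
      (fun i => Ucfg (s i) 1) (fun i => Ucfg (s i) (μ k)) := by
    intro k
    induction k with
    | zero => intro _; simp only [hμ]; simp; exact Relation.ReflTransGen.refl
    | succ k ih =>
      intro hk
      refine (ih (by omega)).tail ?_
      have hstep : 0 ≤ (1 - a) / N := div_nonneg (by linarith) hN0.le
      have e1 : μ k - μ (k + 1) = (1 - a) / N := by simp only [hμ]; push_cast; ring
      have e2 : a ≤ μ (k + 1) := by
        have h1 : ((k + 1 : ℕ) : ℝ) ≤ N := by exact_mod_cast hk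
        have h2 : ((k + 1 : ℕ) : ℝ) * ((1 - a) / N) ≤ N * ((1 - a) / N) := by gcongr
        have h3 : (N : ℝ) * ((1 - a) / N) = 1 - a := by field_simp
        simp only [hμ]; linarith
      have e3 : |μ k - μ (k + 1)| * M ≤ ε / 2 := by
        rw [e1, abs_of_nonneg hstep]
        have : (1 - a) / N * M ≤ 1 / N * M := by gcongr; linarith
        refine this.trans ?_
        rw [div_lt_iff₀ hε] at hN
        rw [div_mul_eq_mul_div, div_le_iff₀ hN0]; linarith
      refine ⟨fun i => measurableSet_Ucfg _ _, fun i => ?_, fun i => ?_, fun i j k => ?_⟩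
      · rw [Set.symmDiff_def]
        refine (measure_union_le _ _).trans ?_
        calc _ ≤ ofReal (ε / 2) + ofReal (ε / 2) := by
              gcongr
              · refine (Ucfg_sdiff _ _ _).trans (ofReal_le_ofReal ?_)
                exact le_trans (by gcongr; exact hMi i) e3
              · refine (Ucfg_sdiff _ _ _).trans (ofReal_le_ofReal ?_)
                rw [abs_sub_comm]
                exact le_trans (by gcongr; exact hMi i) e3
          _ = _ := by rw [← ofReal_add (by positivity) (by positivity)]; congr 1; ring
      · rw [volume_Ucfg (hs i) ha e2, volume_Ucfg (hs i) ha (by linarith)]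
      · exact TT_Ucfg_mono (hs i) (hs j) (hs _) ha e2 (by linarith)
  have := key N le_rfl
  have e : μ N = a := by simp only [hμ]; field_simp; ring
  rwa [e] at this

/-- The configuration with all centres multiplied by `a`. -/
def scaleCfg (a : ℝ) (s : Finset (ℝ × ℝ)) : Finset (ℝ × ℝ) := s.image fun p => (a * p.1, p.2)

lemma scale_inj {a : ℝ} (ha : 0 < a) : Function.Injective fun p : ℝ × ℝ => (a * p.1, p.2) := by
  rintro ⟨x, y⟩ ⟨x', y'⟩ h
  simp only [Prod.mk.injEq, mul_eq_mul_left_iff] at h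
  rcases h with ⟨h1 | h1, h2⟩
  · rw [h1, h2]
  · linarith

lemma scaleCfg_isCfg {a : ℝ} (ha : 0 < a) {s : Finset (ℝ × ℝ)} (hs : IsCfg a s) :
    IsCfg 1 (scaleCfg a s) := by
  constructor
  · intro p hp
    obtain ⟨q, hq, rfl⟩ := Finset.mem_image.1 hp
    exact hs.1 q hq
  · intro p hp q hq hpq
    obtain ⟨p, hp', rfl⟩ := Finset.mem_image.1 hp
    obtain ⟨q, hq', rfl⟩ := Finset.mem_image.1 hq
    have := hs.2 p hp' q hq' (by rintro rfl; exact hpq rfl)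
    simp only
    rw [← mul_sub, abs_mul, abs_of_pos ha]
    linarith

lemma scaleCfg_U {a : ℝ} (s : Finset (ℝ × ℝ)) : Ucfg (scaleCfg a s) 1 = Ucfg s a := by
  simp only [Ucfg, scaleCfg, Finset.set_biUnion_finset_image, one_mul]

lemma scaleCfg_sum {a : ℝ} (ha : 0 < a) (s : Finset (ℝ × ℝ)) :
    ∑ p ∈ scaleCfg a s, p.2 = ∑ p ∈ s, p.2 := by
  rw [scaleCfg, Finset.sum_image fun x _ y _ h => scale_inj ha h]

lemma scaleCfg_card {a : ℝ} (ha : 0 < a) (s : Finset (ℝ × ℝ)) :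
    (scaleCfg a s).card = s.card :=
  Finset.card_image_of_injective _ (scale_inj ha)

/-- Two touching intervals of a configuration may be replaced by their union. -/
lemma merge_cfg {t : Finset (ℝ × ℝ)} (ht : IsCfg 1 t) {p q : ℝ × ℝ} (hp : p ∈ t) (hq : q ∈ t)
    (hpq : p.1 + p.2 = q.1 - q.2) :
    ∃ t' : Finset (ℝ × ℝ), IsCfg 1 t' ∧ Ucfg t' 1 = Ucfg t 1 ∧
      ∑ x ∈ t', x.2 = ∑ x ∈ t, x.2 ∧ t'.card < t.card := by
  have hp0 := ht.1 p hp
  have hq0 := ht.1 q hq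
  have hne : p ≠ q := by rintro rfl; linarith
  set m : ℝ × ℝ := (p.1 + q.2, p.2 + q.2) with hm
  set t₀ := (t.erase p).erase q with ht₀
  have hsub : ∀ r ∈ t₀, r ∈ t ∧ r ≠ p ∧ r ≠ q := by
    intro r hr
    simp only [ht₀, Finset.mem_erase] at hr
    exact ⟨hr.2.2, hr.2.1, hr.1⟩
  have hfar : ∀ r ∈ t₀, r.2 + m.2 ≤ |r.1 - m.1| := by
    intro r hr
    obtain ⟨h1, h2, h3⟩ := hsub r hr
    have hr0 := ht.1 r h1
    have h4 := ht.2 r h1 p hp h2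
    have h5 := ht.2 r h1 q hq h3
    simp only [hm]
    rw [one_mul] at h4 h5
    rcases abs_cases (r.1 - p.1) with ⟨h6, h7⟩ | ⟨h6, h7⟩ <;>
    rcases abs_cases (r.1 - q.1) with ⟨h8, h9⟩ | ⟨h8, h9⟩ <;>
    rcases abs_cases (r.1 - (p.1 + q.2)) with ⟨h10, h11⟩ | ⟨h10, h11⟩ <;> linarith
  have hmt : m ∉ t₀ := by
    intro h
    have := hfar m h
    simp [hm] at this
    linarith
  have hqe : q ∈ t.erase p := Finset.mem_erase.2 ⟨hne.symm, hq⟩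
  have hins : insert p (insert q t₀) = t := by
    rw [ht₀, Finset.insert_erase hqe, Finset.insert_erase hp]
  have hqt₀ : q ∉ t₀ := by simp [ht₀]
  have hpt₀ : p ∉ insert q t₀ := by simp [ht₀, hne]
  refine ⟨insert m t₀, ⟨?_, ?_⟩, ?_, ?_, ?_⟩
  · intro r hr
    rcases Finset.mem_insert.1 hr with rfl | hr
    · simp only [hm]; linarith
    · exact ht.1 r (hsub r hr).1
  · intro r hr u hu hru
    rw [one_mul]
    rcases Finset.mem_insert.1 hr with rfl | hr <;> rcases Finset.mem_insert.1 hu with rfl | hu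
    · exact absurd rfl hru
    · rw [add_comm, abs_sub_comm]; exact hfar u hu
    · exact hfar r hr
    · have := ht.2 r (hsub r hr).1 u (hsub u hu).1 hru
      rwa [one_mul] at this
  · rw [← hins]
    simp only [Ucfg, Finset.set_biUnion_insert, one_mul]
    rw [← union_assoc]
    congr 1
    ext x
    simp only [mem_union, mem_J, hm]
    constructor
    · rintro ⟨h1, h2⟩
      rcases lt_or_ge x (p.1 + p.2) with h | h
      · left; constructor <;> linarith
      · right; constructor <;> linarith
    · rintro (⟨h1, h2⟩ | ⟨h1, h2⟩) <;> constructor <;> linarith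
  · rw [← hins, Finset.sum_insert hmt, Finset.sum_insert hpt₀, Finset.sum_insert hqt₀]
    simp only [hm]; ring
  · rw [← hins, Finset.card_insert_of_notMem hmt, Finset.card_insert_of_notMem hpt₀,
      Finset.card_insert_of_notMem hqt₀]
    omega

/-- The sliding flow on the line: a finite family of finite unions of intervals is connected, by
arbitrarily small steps which never decrease any trilinear form, to the family of centred
intervals of the same lengths. -/
lemma flow_main {ι : Type*} [Fintype ι] {ε : ℝ} (hε : 0 < ε) (s : ι → Finset (ℝ × ℝ))
    (hs : ∀ i, IsCfg 1 (s i)) :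
    Relation.ReflTransGen (FlowStep (ofReal ε))
      (fun i => Ucfg (s i) 1) (fun i => J 0 (∑ p ∈ s i, p.2)) := by
  classical
  induction hN : ∑ i, (s i).card using Nat.strong_induction_on generalizing s with
  | _ N ih =>
  set Q : Finset (Σ _ : ι, (ℝ × ℝ) × (ℝ × ℝ)) := Finset.univ.sigma fun i => (s i).offDiag with hQ
  rcases Q.eq_empty_or_nonempty with hempty | hne
  · have h0 : ∀ i, ∀ p ∈ s i, ∀ q ∈ s i, p = q := by
      intro i p hp q hq
      by_contra hpq
      have : (⟨i, (p, q)⟩ : Σ _ : ι, (ℝ × ℝ) × (ℝ × ℝ)) ∈ Q := by simp [hQ, hp, hq, hpq]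
      rw [hempty] at this
      simp at this
    have h1 : ∀ i, IsCfg 0 (s i) := fun i =>
      ⟨(hs i).1, fun p hp q hq hpq => absurd (h0 i p hp q hq) hpq⟩
    have h2 := flow_slide hε le_rfl zero_le_one s h1
    convert h2 using 2 with i
    rcases (s i).eq_empty_or_nonempty with he | ⟨p, hp⟩
    · simp [he, Ucfg, J]
    · have : s i = {p} := Finset.eq_singleton_iff_unique_mem.2 ⟨hp, fun q hq => h0 i q hq p hp⟩
      simp [this, Ucfg]
  · obtain ⟨⟨i, p, q⟩, hmem, hmax⟩ := Q.exists_max_image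
      (fun x => (x.2.1.2 + x.2.2.2) / |x.2.1.1 - x.2.2.1|) hne
    have hmem' : p ∈ s i ∧ q ∈ s i ∧ p ≠ q := by simpa [hQ] using hmem
    obtain ⟨hp, hq, hpq⟩ := hmem'
    have hp0 := (hs i).1 p hp
    have hq0 := (hs i).1 q hq
    have h1 := (hs i).2 p hp q hq hpq
    rw [one_mul] at h1
    have hd : 0 < |p.1 - q.1| := by linarith
    set a := (p.2 + q.2) / |p.1 - q.1| with ha
    have ha0 : 0 < a := by positivity
    have ha1 : a ≤ 1 := (div_le_one hd).2 h1
    have hc : ∀ j, IsCfg a (s j) := by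
      intro j
      refine ⟨(hs j).1, fun u hu v hv huv => ?_⟩
      have h2 := hmax ⟨j, (u, v)⟩ (by simp [hQ, hu, hv, huv])
      simp only at h2
      have h3 := (hs j).2 u hu v hv huv
      have hu0 := (hs j).1 u hu
      have hv0 := (hs j).1 v hv
      rw [one_mul] at h3
      rwa [div_le_iff₀ (by linarith)] at h2
    refine (flow_slide hε ha0.le ha1 s hc).trans ?_
    have hta : a * |p.1 - q.1| = p.2 + q.2 := by rw [ha]; field_simp
    have hpm : (a * p.1, p.2) ∈ scaleCfg a (s i) := Finset.mem_image_of_mem _ hp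
    have hqm : (a * q.1, q.2) ∈ scaleCfg a (s i) := Finset.mem_image_of_mem _ hq
    have hsc := scaleCfg_isCfg ha0 (hc i)
    obtain ⟨t', ht1, ht2, ht3, ht4⟩ : ∃ t' : Finset (ℝ × ℝ), IsCfg 1 t' ∧
        Ucfg t' 1 = Ucfg (scaleCfg a (s i)) 1 ∧
        ∑ x ∈ t', x.2 = ∑ x ∈ scaleCfg a (s i), x.2 ∧ t'.card < (scaleCfg a (s i)).card := by
      rcases abs_cases (p.1 - q.1) with ⟨h6, h7⟩ | ⟨h6, h7⟩
      · exact merge_cfg hsc hqm hpm (by simp only; rw [h6] at hta; linarith)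
      · exact merge_cfg hsc hpm hqm (by simp only; rw [h6] at hta; linarith)
    set s' : ι → Finset (ℝ × ℝ) := Function.update (fun j => scaleCfg a (s j)) i t' with hs'
    have hs'i : s' i = t' := by simp [hs']
    have hs'j : ∀ j, j ≠ i → s' j = scaleCfg a (s j) := fun j hj => by simp [hs', hj]
    have h5 := ih (∑ j, (s' j).card) (by
      rw [← hN]
      apply Finset.sum_lt_sum
      · intro j _
        by_cases hj : j = i
        · subst hj; rw [hs'i]; exact (ht4.trans_eq (scaleCfg_card ha0 _)).le
        · rw [hs'j j hj, scaleCfg_card ha0]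
      · exact ⟨i, Finset.mem_univ _, by rw [hs'i]; exact ht4.trans_eq (scaleCfg_card ha0 _)⟩)
      s' (by
        intro j
        by_cases hj : j = i
        · subst hj; rw [hs'i]; exact ht1
        · rw [hs'j j hj]; exact scaleCfg_isCfg ha0 (hc j)) rfl
    convert h5 using 2 with j j
    · by_cases hj : j = i
      · subst hj; rw [hs'i, ht2, scaleCfg_U]
      · rw [hs'j j hj, scaleCfg_U]
    · by_cases hj : j = i
      · subst hj; rw [hs'i, ht3, scaleCfg_sum ha0]
      · rw [hs'j j hj, scaleCfg_sum ha0]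

/-! ### Slicing along the first coordinate -/

/-- The point of `ℝ^(n+1)` with first coordinate `t` and remaining coordinates `y`. -/
def vcons (t : ℝ) (y : Vec n) : 𝕍 := WithLp.toLp 2 (Fin.cons t y.ofLp)

/-- All coordinates but the first. -/
def vtail (x : 𝕍) : Vec n := WithLp.toLp 2 fun i => x i.succ

@[simp] lemma vcons_zero (t : ℝ) (y : Vec n) : vcons t y 0 = t := rfl
@[simp] lemma vcons_succ (t : ℝ) (y : Vec n) (i : Fin n) : vcons t y i.succ = y i := rfl
@[simp] lemma vtail_vcons (t : ℝ) (y : Vec n) : vtail (vcons t y) = y := rfl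
@[simp] lemma vcons_vtail (x : 𝕍) : vcons (x 0) (vtail x) = x := by
  ext i; refine Fin.cases ?_ (fun i => ?_) i <;> simp [vtail]

lemma vcons_add (s t : ℝ) (y z : Vec n) : vcons (s + t) (y + z) = vcons s y + vcons t z := by
  ext i; refine Fin.cases ?_ (fun i => ?_) i <;> simp

lemma vcons_neg (t : ℝ) (y : Vec n) : vcons (-t) (-y) = -vcons t y := by
  ext i; refine Fin.cases ?_ (fun i => ?_) i <;> simp

lemma vcons_smul (a t : ℝ) (y : Vec n) : vcons (a * t) (a • y) = a • vcons t y := by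
  ext i; refine Fin.cases ?_ (fun i => ?_) i <;> simp

lemma vcons_sub (s t : ℝ) (y z : Vec n) : vcons (s - t) (y - z) = vcons s y - vcons t z := by
  rw [sub_eq_add_neg, sub_eq_add_neg, vcons_add, vcons_neg, ← sub_eq_add_neg]

lemma norm_vcons_sq (t : ℝ) (y : Vec n) : ‖vcons t y‖ ^ 2 = t ^ 2 + ‖y‖ ^ 2 := by
  rw [EuclideanSpace.norm_sq_eq, EuclideanSpace.norm_sq_eq, Fin.sum_univ_succ]
  simp

lemma inner_vcons (s t : ℝ) (y z : Vec n) :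
    inner ℝ (vcons s y) (vcons t z) = s * t + inner ℝ y z := by
  rw [PiLp.inner_apply, PiLp.inner_apply, Fin.sum_univ_succ]
  simp [mul_comm]

lemma measurable_vtail : Measurable (vtail : 𝕍 → Vec n) := by
  unfold vtail; fun_prop

lemma continuous_vcons : Continuous (fun p : ℝ × Vec n => vcons p.1 p.2) := by
  unfold vcons
  refine (PiLp.continuous_toLp 2 _).comp ?_
  refine continuous_pi fun i => ?_
  refine Fin.cases ?_ (fun i => ?_) i
  · exact continuous_fst
  · simp only [Fin.cons_succ]; fun_prop

lemma measurable_vcons : Measurable (fun p : ℝ × Vec n => vcons p.1 p.2) :=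
  continuous_vcons.measurable

lemma measurable_vcons_left (y : Vec n) : Measurable (fun t : ℝ => vcons t y) :=
  measurable_vcons.comp (measurable_id.prodMk measurable_const)

lemma measurePreserving_vcons :
    MeasurePreserving (fun p : ℝ × Vec n => vcons p.1 p.2) volume volume := by
  have h1 : MeasurePreserving (fun p : ℝ × Vec n => ((p.1, p.2.ofLp) : ℝ × (Fin n → ℝ)))
      volume volume :=
    (MeasurePreserving.id (volume : Measure ℝ)).prod
      (EuclideanSpace.volume_preserving_symm_measurableEquiv_toLp (Fin n))
  have h2 := (volume_preserving_piFinSuccAbove (fun _ : Fin (n + 1) => ℝ) 0).symm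
  have h3 := (EuclideanSpace.volume_preserving_symm_measurableEquiv_toLp (Fin (n + 1))).symm
  exact (congrArg (fun f => MeasurePreserving f volume volume) (by
    funext p; ext i; refine Fin.cases ?_ (fun i => ?_) i <;> simp [vcons])).mp (h3.comp (h2.comp h1))

lemma lintegral_vcons {f : 𝕍 → ℝ≥0∞} (hf : Measurable f) :
    ∫⁻ x, f x = ∫⁻ y : Vec n, ∫⁻ t : ℝ, f (vcons t y) := by
  rw [← measurePreserving_vcons.lintegral_comp hf, Measure.volume_eq_prod]
  exact lintegral_prod_symm' _ (hf.comp measurable_vcons)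

/-- The slice of `E` over `y`, along the first coordinate. -/
def sl (E : Set 𝕍) (y : Vec n) : Set ℝ := {t | vcons t y ∈ E}

lemma measurableSet_sl {E : Set 𝕍} (hE : MeasurableSet E) (y : Vec n) :
    MeasurableSet (sl E y) := measurable_vcons_left y hE

lemma measurable_vol_sl {E : Set 𝕍} (hE : MeasurableSet E) :
    Measurable fun y => volume (sl E y) := by
  have := measurable_measure_prodMk_right (μ := (volume : Measure ℝ)) (measurable_vcons hE)
  exact this

lemma volume_eq_sl {E : Set 𝕍} (hE : MeasurableSet E) :
    volume E = ∫⁻ y, volume (sl E y) := by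
  rw [← lintegral_indicator_one hE, lintegral_vcons (measurable_one.indicator hE)]
  congr 1; funext y
  rw [← lintegral_indicator_one (measurableSet_sl hE y)]
  rfl

lemma lintegral_ind {V : Type*} [AddCommGroup V] [MeasureSpace V]
    [SFinite (volume : Measure V)] [MeasurableAdd₂ V] [MeasurableNeg V] {A B C : Set V}
    (hA : MeasurableSet A) (hB : MeasurableSet B) (hC : MeasurableSet C) :
    TT A B C = ∫⁻ x, ∫⁻ y, (Treg A B C).indicator 1 (x, y) := by
  rw [TT, ← lintegral_indicator_one (measurableSet_Treg hA hB hC), Measure.volume_eq_prod,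
    lintegral_prod _ ((measurable_one.indicator (measurableSet_Treg hA hB hC)).aemeasurable)]

lemma TT_slices {A B C : Set 𝕍}
    (hA : MeasurableSet A) (hB : MeasurableSet B) (hC : MeasurableSet C) :
    TT A B C = ∫⁻ y, ∫⁻ z, TT (sl A y) (sl B z) (sl C (-y - z)) := by
  set F : 𝕍 × 𝕍 → ℝ≥0∞ := (Treg A B C).indicator 1 with hF
  have hFm : Measurable F := measurable_one.indicator (measurableSet_Treg hA hB hC)
  rw [lintegral_ind hA hB hC, lintegral_vcons hFm.lintegral_prod_right']
  congr 1; funext y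
  have h1 : ∀ t : ℝ, ∫⁻ x, F (vcons t y, x) = ∫⁻ z, ∫⁻ s, F (vcons t y, vcons s z) := fun t =>
    lintegral_vcons (hFm.comp (measurable_const.prodMk measurable_id))
  simp_rw [h1]
  rw [lintegral_lintegral_swap]
  · congr 1; funext z
    rw [lintegral_ind (measurableSet_sl hA _) (measurableSet_sl hB _) (measurableSet_sl hC _)]
    congr 1; funext t; congr 1; funext s
    simp only [hF, indicator]
    congr 1
    simp only [Treg, sl, mem_setOf_eq, vcons_sub, vcons_neg]
  · apply Measurable.aemeasurable
    have : Measurable (fun q : (ℝ × Vec n) × ℝ => F (vcons q.1.1 y, vcons q.2 q.1.2)) := by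
      apply hFm.comp
      refine Measurable.prodMk ?_ ?_
      · exact (measurable_vcons_left y).comp (measurable_fst.comp measurable_fst)
      · exact measurable_vcons.comp (measurable_snd.prodMk (measurable_snd.comp measurable_fst))
    exact this.lintegral_prod_right'

lemma sl_diff (A B : Set 𝕍) (y : Vec n) : sl (A \ B) y = sl A y \ sl B y := rfl

lemma sl_symmDiff (A B : Set 𝕍) (y : Vec n) :
    sl (A ∆ B) y = sl A y ∆ sl B y := rfl

/-! ### Steiner symmetrization -/

/-- Length of the slice over `y`, as a real number. -/
def len (E : Set 𝕍) (y : Vec n) : ℝ := (volume (sl E y)).toReal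

/-- Steiner symmetrization along the first coordinate. -/
def St (E : Set 𝕍) : Set 𝕍 := {x | x 0 ∈ J 0 (len E (vtail x) / 2)}

lemma len_nonneg (E : Set 𝕍) (y : Vec n) : 0 ≤ len E y := toReal_nonneg

lemma measurable_len {E : Set 𝕍} (hE : MeasurableSet E) : Measurable (len E) :=
  (measurable_vol_sl hE).ennreal_toReal

lemma measurableSet_St {E : Set 𝕍} (hE : MeasurableSet E) : MeasurableSet (St E) := by
  have h1 : Measurable fun x : 𝕍 => len E (vtail x) / 2 :=
    ((measurable_len hE).comp measurable_vtail).div_const 2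
  have h2 : Measurable fun x : 𝕍 => x 0 := by fun_prop
  have : St E = {x | 0 - len E (vtail x) / 2 ≤ x 0} ∩ {x | x 0 < 0 + len E (vtail x) / 2} := rfl
  rw [this]
  exact (measurableSet_le (h1.const_sub 0) h2).inter (measurableSet_lt h2 (h1.const_add 0))

lemma sl_St (E : Set 𝕍) (y : Vec n) : sl (St E) y = J 0 (len E y / 2) := rfl

/-- All slices have finite length. -/
def FinSl (E : Set 𝕍) : Prop := ∀ y, volume (sl E y) ≠ ⊤

lemma abs_le_norm_vcons (t : ℝ) (y : Vec n) : |t| ≤ ‖vcons t y‖ := by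
  refine abs_le_of_sq_le_sq ?_ (norm_nonneg _)
  rw [norm_vcons_sq]; nlinarith [norm_nonneg y]

lemma norm_le_norm_vcons (t : ℝ) (y : Vec n) : ‖y‖ ≤ ‖vcons t y‖ := by
  apply le_of_sq_le_sq _ (norm_nonneg _)
  rw [norm_vcons_sq]; nlinarith [sq_nonneg t]

lemma finSl_of_bdd {E : Set 𝕍} {R : ℝ} (hE : E ⊆ 𝔹 R) :
    FinSl E := by
  intro y
  have : sl E y ⊆ Icc (-R) R := by
    intro t ht
    have h1 := hE ht
    rw [mem_closedBall_zero_iff] at h1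
    exact abs_le.1 ((abs_le_norm_vcons t y).trans h1)
  exact ne_top_of_le_ne_top (by simp [volume_Icc]) (measure_mono this)

lemma volume_sl_eq {E : Set 𝕍} (hf : FinSl E) (y : Vec n) :
    volume (sl E y) = ofReal (len E y) := (ofReal_toReal (hf y)).symm

lemma volume_sl_St {E : Set 𝕍} (hf : FinSl E) (y : Vec n) :
    volume (sl (St E) y) = volume (sl E y) := by
  rw [sl_St, volume_J, volume_sl_eq hf]; congr 1; ring

lemma volume_St {E : Set 𝕍} (hE : MeasurableSet E) (hf : FinSl E) :
    volume (St E) = volume E := by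
  rw [volume_eq_sl hE, volume_eq_sl (measurableSet_St hE)]
  simp_rw [volume_sl_St hf]

lemma volume_J0_sdiff (a b : ℝ) :
    volume (J 0 a \ J 0 b) ≤ ofReal (2 * a) - ofReal (2 * b) := by
  rcases le_total a b with h | h
  · have : J 0 a \ J 0 b = ∅ := by
      rw [diff_eq_empty]; exact Ico_subset_Ico (by linarith) (by linarith)
    rw [this]; simp
  · have hsub : J 0 b ⊆ J 0 a := Ico_subset_Ico (by linarith) (by linarith)
    rw [measure_sdiff hsub
      (measurableSet_J _ _).nullMeasurableSet (by rw [volume_J]; exact ofReal_ne_top),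
      volume_J, volume_J]

lemma volume_St_sdiff {E F : Set 𝕍} (hE : MeasurableSet E) (hF : MeasurableSet F)
    (hfE : FinSl E) (hfF : FinSl F) : volume (St E \ St F) ≤ volume (E \ F) := by
  rw [volume_eq_sl (hE.diff hF), volume_eq_sl ((measurableSet_St hE).diff (measurableSet_St hF))]
  apply lintegral_mono
  intro y
  simp only [sl_diff, sl_St]
  refine (volume_J0_sdiff _ _).trans ?_
  rw [mul_div_cancel₀ _ two_ne_zero, mul_div_cancel₀ _ two_ne_zero, ← volume_sl_eq hfE,
    ← volume_sl_eq hfF]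
  exact le_measure_sdiff

lemma volume_St_symmDiff {E F : Set 𝕍} (hE : MeasurableSet E) (hF : MeasurableSet F)
    (hfE : FinSl E) (hfF : FinSl F) : volume (St E ∆ St F) ≤ volume (E ∆ F) := by
  rw [measure_symmDiff_eq (measurableSet_St hE).nullMeasurableSet
    (measurableSet_St hF).nullMeasurableSet, measure_symmDiff_eq hE.nullMeasurableSet
    hF.nullMeasurableSet]
  exact add_le_add (volume_St_sdiff hE hF hfE hfF) (volume_St_sdiff hF hE hfF hfE)

lemma St_subset_ball {E : Set 𝕍} {R : ℝ} (hE : E ⊆ 𝔹 R) :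
    St E ⊆ 𝔹 R := by
  intro x hx
  set y := vtail x
  have hxc : x = vcons (x 0) y := (vcons_vtail x).symm
  have hlen : 0 < len E y := by
    have h1 : 0 - len E y / 2 ≤ x 0 := hx.1
    have h2 : x 0 < 0 + len E y / 2 := hx.2
    linarith
  have hR2 : ∀ t ∈ sl E y, t ^ 2 + ‖y‖ ^ 2 ≤ R ^ 2 := by
    intro t ht
    have h1 := hE ht
    rw [mem_closedBall_zero_iff] at h1
    rw [← norm_vcons_sq]
    exact pow_le_pow_left₀ (norm_nonneg _) h1 2
  have hne : (sl E y).Nonempty := by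
    by_contra h
    rw [Set.not_nonempty_iff_eq_empty] at h
    simp [len, h] at hlen
  obtain ⟨t₀, ht₀⟩ := hne
  have hR0 : 0 ≤ R := by
    have := hE ht₀
    rw [mem_closedBall_zero_iff] at this
    exact (norm_nonneg _).trans this
  set a := Real.sqrt (R ^ 2 - ‖y‖ ^ 2)
  have ha2 : a ^ 2 = R ^ 2 - ‖y‖ ^ 2 := sq_sqrt (by nlinarith [hR2 t₀ ht₀])
  have hle : len E y ≤ 2 * a := by
    have hsub : sl E y ⊆ Icc (-a) a := by
      intro t ht
      apply abs_le.1
      apply Real.abs_le_sqrt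
      linarith [hR2 t ht]
    have := toReal_mono (by simp [volume_Icc]) (measure_mono (μ := volume) hsub)
    rw [volume_Icc, toReal_ofReal (by linarith [sqrt_nonneg (R ^ 2 - ‖y‖ ^ 2)])]
      at this
    simp only [len]; linarith
  rw [mem_closedBall_zero_iff]
  apply le_of_sq_le_sq _ hR0
  rw [hxc, norm_vcons_sq]
  have h1 : 0 - len E y / 2 ≤ x 0 := hx.1
  have h2 : x 0 < 0 + len E y / 2 := hx.2
  have : x 0 ^ 2 ≤ a ^ 2 := sq_le_sq' (by linarith) (by linarith)
  linarith

/-! ### Grid approximation -/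

/-- A set whose slices run through finitely many configurations of disjoint intervals, in a
measurable way. -/
def GridSet (P : Set 𝕍) : Prop :=
  ∃ (M : ℕ) (idx : Vec n → (Fin M → Bool)) (s : (Fin M → Bool) → Finset (ℝ × ℝ)),
    Measurable idx ∧ (∀ i, IsCfg 1 (s i)) ∧ ∀ y, sl P y = Ucfg (s (idx y)) 1

lemma exists_gridSet {E : Set 𝕍} (hE : MeasurableSet E) {R : ℝ}
    (hR : E ⊆ 𝔹 R) {ε : ℝ≥0∞} (hε : ε ≠ 0) :
    ∃ P, MeasurableSet P ∧ GridSet P ∧ volume (E ∆ P) ≤ ε ∧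
      ∀ x ∈ P, vtail x ∈ 𝔹[n] R := by
  classical
  have hEfin : volume E ≠ ⊤ :=
    ne_top_of_le_ne_top (measure_closedBall_lt_top (x := (0 : 𝕍)) (r := R)).ne
      (measure_mono hR)
  have hε2 : ε / 2 ≠ 0 := by simp [hε]
  obtain ⟨K, hKE, hK, hKv⟩ := hE.exists_isCompact_sdiff_lt hEfin hε2
  obtain ⟨U, hKU, hUo, -, hUv⟩ := hK.measurableSet.exists_isOpen_sdiff_lt
    (μ := volume) hK.measure_lt_top.ne hε2
  obtain ⟨h, hh, hhU⟩ := hK.exists_cthickening_subset_open hUo hKU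
  obtain ⟨N, hN⟩ := exists_nat_gt (R / h)
  have hNR : R < N * h := (div_lt_iff₀ hh).1 hN
  set lo : Fin (2 * N) → ℝ := fun k => ((k : ℕ) - (N : ℝ)) * h with hlo
  set pr : Fin (2 * N) → Set (Vec n) :=
    fun k => vtail '' (K ∩ {x | x 0 ∈ Icc (lo k) (lo k + h)})
  have hvt : Continuous (vtail : 𝕍 → Vec n) := by unfold vtail; fun_prop
  have hprm : ∀ k, MeasurableSet (pr k) := by
    intro k
    have hcl : IsClosed {x : 𝕍 | x 0 ∈ Icc (lo k) (lo k + h)} :=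
      isClosed_Icc.preimage (by fun_prop : Continuous fun x : 𝕍 => x 0)
    exact ((hK.inter_right hcl).image hvt).measurableSet
  set P : Set 𝕍 := ⋃ k, (vtail ⁻¹' pr k) ∩ {x | x 0 ∈ J (lo k + h / 2) (h / 2)} with hP
  have hPm : MeasurableSet P := by
    refine MeasurableSet.iUnion fun k => ?_
    refine (measurable_vtail (hprm k)).inter ?_
    exact (by fun_prop : Measurable fun x : 𝕍 => x 0) (measurableSet_J _ _)
  have hKP : K ⊆ P := by
    intro x hx
    have hxR : ‖x‖ ≤ R := mem_closedBall_zero_iff.1 (hR (hKE hx))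
    have hx0 : |x 0| ≤ R := (by
      have := abs_le_norm_vcons (x 0) (vtail x)
      rw [vcons_vtail] at this
      exact this.trans hxR)
    have hx0' := abs_le.1 hx0
    set z := x 0 / h + N with hz
    have hz0 : 0 ≤ z := by
      have : -(N : ℝ) ≤ x 0 / h := by rw [le_div_iff₀ hh]; linarith [hx0'.1]
      linarith
    have hz1 : z < 2 * N := by
      have : x 0 / h < N := by rw [div_lt_iff₀ hh]; linarith [hx0'.2]
      linarith
    have hfl := Nat.floor_le hz0
    have hfl2 := Nat.lt_floor_add_one z
    have hk : ⌊z⌋₊ < 2 * N := by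
      rw [Nat.floor_lt hz0]; push_cast; exact hz1
    have e1 : x 0 = (z - N) * h := by rw [hz]; field_simp; ring
    have h1 : lo ⟨⌊z⌋₊, hk⟩ ≤ x 0 := by
      rw [e1]; simp only [hlo]; gcongr
    have h2 : x 0 < lo ⟨⌊z⌋₊, hk⟩ + h := by
      rw [e1]; simp only [hlo]; nlinarith
    refine mem_iUnion.2 ⟨⟨⌊z⌋₊, hk⟩, ⟨x, ⟨hx, h1, h2.le⟩, rfl⟩, ?_⟩
    constructor <;> linarith
  have hPU : P ⊆ U := by
    intro x hx
    obtain ⟨k, ⟨x', ⟨hx', hx'1⟩, hx'2⟩, hx1⟩ := mem_iUnion.1 hx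
    apply hhU
    refine Metric.mem_cthickening_of_dist_le x x' h K hx' ?_
    rw [dist_eq_norm, ← vcons_vtail x, ← vcons_vtail x', hx'2, ← vcons_sub, sub_self]
    apply le_of_sq_le_sq _ hh.le
    rw [norm_vcons_sq]
    simp only [norm_zero]
    have h1 := hx'1.1
    have h2 := hx'1.2
    have h3 := hx1.1
    have h4 := hx1.2
    nlinarith
  refine ⟨P, hPm, ?_, ?_, ?_⟩
  · refine ⟨2 * N, fun y k => decide (y ∈ pr k),
      fun b => (Finset.univ.filter fun k => b k = true).image fun k => (lo k + h / 2, h / 2),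
      ?_, ?_, ?_⟩
    · refine measurable_pi_iff.2 fun k => ?_
      exact measurable_to_bool (by
        have : (fun y => decide (y ∈ pr k)) ⁻¹' {true} = pr k := by ext; simp
        rw [this]; exact hprm k)
    · intro b
      constructor
      · intro p hp
        obtain ⟨k, -, rfl⟩ := Finset.mem_image.1 hp
        simp only; linarith
      · intro p hp q hq hpq
        obtain ⟨k, -, rfl⟩ := Finset.mem_image.1 hp
        obtain ⟨l, -, rfl⟩ := Finset.mem_image.1 hq
        have hkl : k ≠ l := by rintro rfl; exact hpq rfl
        have hkl' : (k : ℕ) ≠ l := fun h => hkl (Fin.ext h)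
        simp only [hlo]
        rw [show ((k : ℕ) - (N : ℝ)) * h + h / 2 - (((l : ℕ) - (N : ℝ)) * h + h / 2)
          = ((k : ℕ) - (l : ℕ) : ℝ) * h by ring, abs_mul, abs_of_pos hh, one_mul, add_halves]
        have : (1 : ℝ) ≤ |((k : ℕ) : ℝ) - (l : ℕ)| := by
          have h1 : (1 : ℤ) ≤ |((k : ℕ) : ℤ) - ((l : ℕ) : ℤ)| :=
            Int.one_le_abs (by omega)
          exact_mod_cast h1
        nlinarith
    · intro y
      ext t
      simp only [sl, hP, Ucfg, mem_iUnion, mem_setOf_eq, Finset.mem_image, Finset.mem_filter,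
        Finset.mem_univ, true_and, decide_eq_true_eq, one_mul, mem_inter_iff, mem_preimage,
        vtail_vcons, vcons_zero]
      constructor
      · rintro ⟨k, h1, h2⟩
        exact ⟨_, ⟨k, h1, rfl⟩, h2⟩
      · rintro ⟨_, ⟨k, h1, rfl⟩, h2⟩
        exact ⟨k, h1, h2⟩
  · rw [Set.symmDiff_def]
    refine (measure_union_le _ _).trans ?_
    calc _ ≤ ε / 2 + ε / 2 := by
          gcongr
          · exact (measure_mono (diff_subset_diff_right hKP)).trans hKv.le
          · exact (measure_mono (diff_subset_diff hPU hKE)).trans hUv.le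
      _ = ε := ENNReal.add_halves ε
  · intro x hx
    obtain ⟨k, ⟨x', ⟨hx', hx'1⟩, hx'2⟩, hx1⟩ := mem_iUnion.1 hx
    rw [← hx'2, mem_closedBall_zero_iff]
    have h1 := norm_le_norm_vcons (x' 0) (vtail x')
    rw [vcons_vtail] at h1
    exact h1.trans (mem_closedBall_zero_iff.1 (hR (hKE hx')))

/-! ### Chains of small steps -/

section Chain

variable {d : ℕ}

/-- The trilinear form of a triple of sets. -/
def T3 {V : Type*} [AddCommGroup V] [MeasureSpace V] (E : Fin 3 → Set V) : ℝ≥0∞ :=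
  TT (E 0) (E 1) (E 2)

/-- `F` is measurable, its measures are within `ε` of those of `E`, and its trilinear form is not
below that of `E` by more than `ε`. -/
def Near (ε : ℝ≥0∞) (E F : Triple d) : Prop :=
  (∀ j, MeasurableSet (F j)) ∧ T3 E ≤ T3 F + ε ∧
    ∀ j, volume (F j) ≤ volume (E j) + ε ∧ volume (E j) ≤ volume (F j) + ε

/-- A step changing each set by at most `ε` in measure and ending in `Q`. -/
def CStep (ε : ℝ≥0∞) (Q : (Triple d) → Prop) (F F' : Triple d) : Prop :=
  (∀ j, volume (F j ∆ F' j) ≤ ε) ∧ Q F'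

lemma TT_empty1 {V : Type*} [AddCommGroup V] [MeasureSpace V] (B C : Set V) : TT ∅ B C = 0 := by
  simp [TT, Treg]
lemma TT_empty2 {V : Type*} [AddCommGroup V] [MeasureSpace V] (B C : Set V) : TT B ∅ C = 0 := by
  simp [TT, Treg]
lemma TT_empty3 {V : Type*} [AddCommGroup V] [MeasureSpace V] (B C : Set V) : TT B C ∅ = 0 := by
  simp [TT, Treg]

/-- The flow on the line, applied to all slices of a triple of grid sets at once. -/
lemma grid_chain (P : Triple (n + 1)) (hP : ∀ j, GridSet (P j)) {R : ℝ}
    (hR : ∀ j, ∀ x ∈ P j, vtail x ∈ 𝔹[n] R)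
    (hPm : ∀ j, MeasurableSet (P j)) {ε : ℝ} (hε : 0 < ε) :
    Relation.ReflTransGen (CStep (ofReal ε) fun F => (∀ j, MeasurableSet (F j)) ∧
      T3 P ≤ T3 F ∧ ∀ j, volume (F j) = volume (P j)) P (fun j => St (P j)) := by
  classical
  choose M idx s hidx hcfg hsl using hP
  set B : Set (Vec n) := 𝔹[n] R
  set Vb : ℝ := (volume B).toReal with hVb
  have hBfin : volume B ≠ ⊤ := ball_ne_top
  set ε' : ℝ := ε / (Vb + 1) with hε'
  have hε'0 : 0 < ε' := by positivity
  let ι := Σ j : Fin 3, (Fin (M j) → Bool)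
  let Fam : (ι → Set ℝ) → Triple (n + 1) := fun A j =>
    {x | vtail x ∈ B ∧ x 0 ∈ A ⟨j, idx j (vtail x)⟩}
  have hflow := flow_main hε'0 (fun i : ι => s i.1 i.2) (fun i => hcfg i.1 i.2)
  have hFamSl : ∀ A j y, sl (Fam A j) y = if y ∈ B then A ⟨j, idx j y⟩ else ∅ := by
    intro A j y
    ext t
    by_cases hy : y ∈ B <;> simp [sl, Fam, hy]
  have hFamM : ∀ A : ι → Set ℝ, (∀ i, MeasurableSet (A i)) → ∀ j, MeasurableSet (Fam A j) := by
    intro A hA j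
    have : Fam A j = (vtail ⁻¹' B) ∩ ⋃ i : Fin (M j) → Bool,
        ((fun x => idx j (vtail x)) ⁻¹' {i}) ∩ ((fun x : 𝕍 => x 0) ⁻¹' A ⟨j, i⟩) := by
      ext x
      simp [Fam]
    rw [this]
    refine (measurable_vtail measurableSet_closedBall).inter (MeasurableSet.iUnion fun i => ?_)
    refine ((hidx j).comp measurable_vtail (measurableSet_singleton i)).inter ?_
    exact (by fun_prop : Measurable fun x : 𝕍 => x 0) (hA _)
  have hsl0 : ∀ j y, y ∉ B → sl (P j) y = ∅ := by
    intro j y hy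
    ext t
    simp only [mem_empty_iff_false, iff_false]
    intro ht
    exact hy (by simpa using hR j _ ht)
  have hset : ∀ F G : Set 𝕍, (∀ y, sl F y = sl G y) → F = G := by
    intro F G h
    ext x
    have : x 0 ∈ sl F (vtail x) ↔ x 0 ∈ sl G (vtail x) := by rw [h]
    simpa [sl] using this
  have hstart : Fam (fun i => Ucfg (s i.1 i.2) 1) = P := by
    funext j
    apply hset
    intro y
    have := hFamSl (fun i => Ucfg (s i.1 i.2) 1) j y
    rw [this]
    split_ifs with hy
    · rw [hsl]
    · rw [hsl0 j y hy]
  have hlen : ∀ j y, len (P j) y / 2 = ∑ p ∈ s j (idx j y), p.2 := by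
    intro j y
    have h0 : ∀ p ∈ s j (idx j y), 0 ≤ 2 * p.2 := fun p hp => by
      linarith [(hcfg j (idx j y)).1 p hp]
    rw [len, hsl, volume_Ucfg (hcfg j _) zero_le_one le_rfl, ← ofReal_sum_of_nonneg h0,
      toReal_ofReal (Finset.sum_nonneg h0), ← Finset.mul_sum]
    ring
  have hend : Fam (fun i => J 0 (∑ p ∈ s i.1 i.2, p.2)) = fun j => St (P j) := by
    funext j
    apply hset
    intro y
    have := hFamSl (fun i => J 0 (∑ p ∈ s i.1 i.2, p.2)) j y
    rw [this, sl_St]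
    split_ifs with hy
    · rw [hlen]
    · simp [len, hsl0 j y hy, J]
  have key : ∀ A : ι → Set ℝ, Relation.ReflTransGen (FlowStep (ofReal ε'))
      (fun i : ι => Ucfg (s i.1 i.2) 1) A → (∀ i, MeasurableSet (A i)) ∧
      T3 P ≤ T3 (Fam A) ∧ (∀ j, volume (Fam A j) = volume (P j)) ∧
      Relation.ReflTransGen (CStep (ofReal ε) fun F => (∀ j, MeasurableSet (F j)) ∧
        T3 P ≤ T3 F ∧ ∀ j, volume (F j) = volume (P j)) P (Fam A) := by
    intro A hA
    induction hA with
    | refl =>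
      rw [hstart]
      exact ⟨fun i => measurableSet_Ucfg _ _, le_rfl, fun _ => rfl, Relation.ReflTransGen.refl⟩
    | @tail A A' _ hstep ih =>
      obtain ⟨ih1, ih2, ih3, ih4⟩ := ih
      obtain ⟨h1, h2, h3, h4⟩ := hstep
      have hT : T3 (Fam A) ≤ T3 (Fam A') := by
        rw [T3, T3, TT_slices (hFamM A ih1 _) (hFamM A ih1 _) (hFamM A ih1 _),
          TT_slices (hFamM A' h1 _) (hFamM A' h1 _) (hFamM A' h1 _)]
        refine lintegral_mono fun y => lintegral_mono fun z => ?_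
        simp only [hFamSl]
        split_ifs <;> first | exact h4 _ _ _ | simp [TT_empty1, TT_empty2, TT_empty3]
      have hv : ∀ j, volume (Fam A' j) = volume (Fam A j) := by
        intro j
        rw [volume_eq_sl (hFamM A ih1 _), volume_eq_sl (hFamM A' h1 _)]
        congr 1; funext y
        simp only [hFamSl]
        split_ifs
        · exact h3 _
        · rfl
      refine ⟨h1, ih2.trans hT, fun j => (hv j).trans (ih3 j), ih4.tail ⟨fun j => ?_,
        hFamM A' h1, ih2.trans hT, fun j => (hv j).trans (ih3 j)⟩⟩
      rw [volume_eq_sl ((hFamM A ih1 _).symmDiff (hFamM A' h1 _))]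
      calc _ ≤ ∫⁻ y, B.indicator (fun _ => ofReal ε') y := by
            apply lintegral_mono
            intro y
            simp only [sl_symmDiff, hFamSl]
            by_cases hy : y ∈ B
            · simp only [hy, if_true, indicator_of_mem]; exact h2 _
            · simp [hy]
        _ = ofReal ε' * volume B := by
            rw [lintegral_indicator measurableSet_closedBall, setLIntegral_const]
        _ = ofReal (ε' * Vb) := by
            rw [ofReal_mul hε'0.le, hVb, ofReal_toReal hBfin]
        _ ≤ ofReal ε := by
            apply ofReal_le_ofReal
            rw [hε', div_mul_eq_mul_div, div_le_iff₀ (by positivity)]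
            nlinarith
  have := (key _ hflow).2.2.2
  rwa [hend] at this

lemma T3_lip {E F : Triple d} (hE : ∀ j, MeasurableSet (E j))
    (hF : ∀ j, MeasurableSet (F j)) {M η : ℝ≥0∞} (hEM : ∀ j, volume (E j) ≤ M)
    (hFM : ∀ j, volume (F j) ≤ M) (hη : ∀ j, volume (E j ∆ F j) ≤ η) :
    T3 E ≤ T3 F + 3 * (η * M) := by
  refine (TT_lip (hE 0) (hE 1) (hE 2) (hF 0) (hF 1) (hF 2)).trans ?_
  have h : ∀ j, volume (E j \ F j) ≤ η := fun j =>
    (measure_mono (by rw [Set.symmDiff_def]; exact subset_union_left)).trans (hη j)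
  calc _ ≤ T3 F + (η * M + η * M + η * M) := by
        unfold T3
        gcongr <;> first | exact h _ | exact hEM _ | exact hFM _
    _ = _ := by ring

lemma vol_le_of_symmDiff {E F : Set (Vec d)} {η : ℝ≥0∞} (h : volume (E ∆ F) ≤ η) :
    volume E ≤ volume F + η := by
  calc volume E ≤ volume (F ∪ E ∆ F) := by
        apply measure_mono
        intro x hx
        by_cases hxF : x ∈ F
        · exact Or.inl hxF
        · exact Or.inr (Or.inl ⟨hx, hxF⟩)
    _ ≤ _ := (measure_union_le _ _).trans (by gcongr)

/-- Steiner symmetrization of a triple of bounded sets can be reached by arbitrarily small steps,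
almost without decreasing the trilinear form. -/
lemma steiner_chain (E : Triple (n + 1)) (hE : ∀ j, MeasurableSet (E j)) {R : ℝ}
    (hR : ∀ j, E j ⊆ 𝔹 R) {ε : ℝ} (hε : 0 < ε) :
    Relation.ReflTransGen (CStep (ofReal ε) (Near (ofReal ε) E)) E
      (fun j => St (E j)) := by
  set M : ℝ := (volume (𝔹[n + 1] R)).toReal + 1 with hM
  have hMv : volume (𝔹[n + 1] R) + 1 = ofReal M := by
    rw [hM, ofReal_add toReal_nonneg zero_le_one,
      ofReal_toReal ball_ne_top, ofReal_one]
  set η : ℝ := min 1 (min ε (ε / (6 * M)))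
  have hη0 : 0 < η := by positivity
  have hη1 : η ≤ 1 := min_le_left _ _
  have hηε : η ≤ ε := (min_le_right _ _).trans (min_le_left _ _)
  have hη6 : 6 * (η * M) ≤ ε := by
    have : η ≤ ε / (6 * M) := (min_le_right _ _).trans (min_le_right _ _)
    rw [le_div_iff₀ (by positivity)] at this
    linarith
  set e := ofReal ε
  set t := ofReal η with ht
  have ht1 : t ≤ 1 := by rw [← ofReal_one]; exact ofReal_le_ofReal hη1
  have hte : t ≤ e := ofReal_le_ofReal hηε
  set m := ofReal M with hm
  have h6 : 3 * (t * m) + 3 * (t * m) ≤ e := by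
    rw [ht, hm, ← ofReal_mul hη0.le, ← two_mul, ← mul_assoc,
      show (2 * 3 : ℝ≥0∞) = ofReal 6 by norm_num, ← ofReal_mul (by norm_num)]
    exact ofReal_le_ofReal hη6
  have h3 : 3 * (t * m) ≤ e := le_trans le_self_add h6
  have hex := fun j => exists_gridSet (hE j) (hR j) (ε := t) (by simpa [ht] using hη0)
  choose P hPm hPg hPv hPR using hex
  have hPv' : ∀ j, volume (P j ∆ E j) ≤ t := fun j => by
    rw [symmDiff_comm]; exact hPv j
  have hEM : ∀ j, volume (E j) ≤ m := fun j => by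
    rw [← hMv]; exact (measure_mono (hR j)).trans le_self_add
  have hPM : ∀ j, volume (P j) ≤ m := fun j => by
    rw [← hMv]
    exact (vol_le_of_symmDiff (hPv' j)).trans (add_le_add (measure_mono (hR j)) ht1)
  have hT1 : T3 E ≤ T3 P + 3 * (t * m) := T3_lip hE hPm hEM hPM hPv
  have hv1 : ∀ j, volume (P j) ≤ volume (E j) + e := fun j =>
    (vol_le_of_symmDiff (hPv' j)).trans (by gcongr)
  have hv2 : ∀ j, volume (E j) ≤ volume (P j) + e := fun j =>
    (vol_le_of_symmDiff (hPv j)).trans (by gcongr)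
  have hfE : ∀ j, FinSl (E j) := fun j => finSl_of_bdd (hR j)
  have hfP : ∀ j, FinSl (P j) := by
    intro j y
    obtain ⟨M', idx, s, -, h2, h3⟩ := hPg j
    rw [h3, volume_Ucfg (h2 _) zero_le_one le_rfl]
    exact (ENNReal.sum_lt_top.2 fun _ _ => ofReal_lt_top).ne
  have hc := grid_chain P hPg hPR hPm hε
  have s1 : Relation.ReflTransGen (CStep e (Near e E)) E P :=
    Relation.ReflTransGen.single ⟨fun j => (hPv j).trans hte, hPm,
      hT1.trans (by gcongr), fun j => ⟨hv1 j, hv2 j⟩⟩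
  have s2 : Relation.ReflTransGen (CStep e (Near e E)) P (fun j => St (P j)) := by
    refine Relation.ReflTransGen.mono (fun F F' h => ?_) _ _ hc
    obtain ⟨h1, h2, h3', h4⟩ := h
    refine ⟨h1, h2, ?_, fun j => ?_⟩
    · calc T3 E ≤ T3 P + 3 * (t * m) := hT1
        _ ≤ T3 F' + e := by gcongr
    · rw [h4]; exact ⟨hv1 j, hv2 j⟩
  have hStT : T3 P ≤ T3 (fun j => St (P j)) := by
    rcases Relation.ReflTransGen.cases_tail hc with h | ⟨b, _, h⟩
    · rw [h]
    · exact h.2.2.1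
  refine (s1.trans s2).tail ⟨fun j => ?_, fun j => measurableSet_St (hE j), ?_, fun j => ?_⟩
  · exact (volume_St_symmDiff (hPm j) (hE j) (hfP j) (hfE j)).trans ((hPv' j).trans hte)
  · have : T3 (fun j => St (P j)) ≤ T3 (fun j => St (E j)) + 3 * (t * m) :=
      T3_lip (fun j => measurableSet_St (hPm j)) (fun j => measurableSet_St (hE j))
        (fun j => by rw [volume_St (hPm j) (hfP j)]; exact hPM j)
        (fun j => by rw [volume_St (hE j) (hfE j)]; exact hEM j)
        (fun j => (volume_St_symmDiff (hPm j) (hE j) (hfP j) (hfE j)).trans (hPv' j))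
    calc T3 E ≤ T3 P + 3 * (t * m) := hT1
      _ ≤ T3 (fun j => St (E j)) + 3 * (t * m) + 3 * (t * m) := by
          gcongr; exact hStT.trans this
      _ ≤ _ := by rw [add_assoc]; gcongr
  · rw [volume_St (hE j) (hfE j)]; exact ⟨le_self_add, le_self_add⟩

lemma T3_le_St (E : Triple (n + 1)) (hE : ∀ j, MeasurableSet (E j)) {R : ℝ}
    (hR : ∀ j, E j ⊆ 𝔹 R) : T3 E ≤ T3 (fun j => St (E j)) := by
  refine ENNReal.le_of_forall_pos_le_add fun ε hε _ => ?_
  rcases Relation.ReflTransGen.cases_tail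
    (steiner_chain E hE hR (show (0 : ℝ) < ε from hε)) with h | ⟨b, _, h⟩
  · rw [h]; exact le_self_add
  · simpa using h.2.2.1

end Chain

/-! ### Decrease of the excess and the Riesz–Sobolev inequality -/

/-- Half the length of the slice at `y` of the ball of radius `r`; it is `0` if `r ≤ ‖y‖`. -/
def hgt (r : ℝ) (y : Vec n) : ℝ := √(r ^ 2 - ‖y‖ ^ 2)

lemma hgt_nonneg (r : ℝ) (y : Vec n) : 0 ≤ hgt r y := sqrt_nonneg _

lemma sl_ball {r : ℝ} (hr : 0 ≤ r) {y : Vec n} (hy : ‖y‖ ≤ r) :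
    sl (𝔹[n + 1] r) y = Icc (-hgt r y) (hgt r y) := by
  ext t
  have h0 : 0 ≤ r ^ 2 - ‖y‖ ^ 2 := by nlinarith [norm_nonneg y]
  simp only [sl, mem_setOf_eq, mem_closedBall_zero_iff, mem_Icc, ← abs_le]
  rw [← abs_of_nonneg (norm_nonneg (vcons t y)), ← abs_of_nonneg hr, ← sq_le_sq, norm_vcons_sq,
    hgt]
  constructor
  · intro h
    apply Real.le_sqrt_of_sq_le
    rw [sq_abs]; simp only [abs_of_nonneg hr] at h ⊢; linarith
  · intro h
    have h1 := sq_sqrt h0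
    simp only [abs_of_nonneg hr] at h ⊢
    have h2 : |t| ^ 2 ≤ √(r ^ 2 - ‖y‖ ^ 2) ^ 2 := by gcongr
    rw [sq_abs] at h2; linarith

lemma sl_ball_empty {r : ℝ} {y : Vec n} (hy : r < ‖y‖) :
    sl (𝔹[n + 1] r) y = ∅ := by
  ext t
  simp only [sl, mem_setOf_eq, mem_closedBall_zero_iff, mem_empty_iff_false, iff_false, not_le]
  exact hy.trans_le (norm_le_norm_vcons t y)

lemma hgt_zero {r : ℝ} (hr : 0 ≤ r) {y : Vec n} (hy : r ≤ ‖y‖) : hgt r y = 0 :=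
  Real.sqrt_eq_zero_of_nonpos (by nlinarith [norm_nonneg y])

lemma len_ball {r : ℝ} (hr : 0 ≤ r) (y : Vec n) :
    len (𝔹[n + 1] r) y = 2 * hgt r y := by
  rcases le_or_gt ‖y‖ r with hy | hy
  · rw [len, sl_ball hr hy, volume_Icc, toReal_ofReal]
    · ring
    · linarith [hgt_nonneg r y]
  · rw [len, sl_ball_empty hy, hgt_zero hr hy.le]; simp

lemma St_ball {r : ℝ} (hr : 0 ≤ r) :
    volume ((St (𝔹[n + 1] r)) ∆ 𝔹 r) = 0 := by
  rw [volume_eq_sl ((measurableSet_St measurableSet_closedBall).symmDiff measurableSet_closedBall)]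
  rw [lintegral_eq_zero_iff' (measurable_vol_sl
    ((measurableSet_St measurableSet_closedBall).symmDiff measurableSet_closedBall)).aemeasurable]
  refine ae_of_all _ fun y => ?_
  simp only [Pi.zero_apply]
  rw [sl_symmDiff, sl_St, len_ball hr]
  rcases le_or_gt ‖y‖ r with hy | hy
  · rw [sl_ball hr hy]
    have : (J 0 (2 * hgt r y / 2)) ∆ (Icc (-hgt r y) (hgt r y)) ⊆ {hgt r y} := by
      intro t ht
      rcases ht with ⟨h1, h2⟩ | ⟨h1, h2⟩
      · exact absurd ⟨by linarith [h1.1], by linarith [h1.2]⟩ h2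
      · by_contra h3
        refine h2 ⟨by linarith [h1.1], ?_⟩
        have := lt_of_le_of_ne h1.2 h3
        linarith
    exact measure_mono_null this (by simp)
  · rw [sl_ball_empty hy, hgt_zero hr hy.le]; simp [J]

lemma slice_excess {A I : Set ℝ} (hA : MeasurableSet A) (hI : MeasurableSet I)
    (hAf : volume A ≠ ⊤) (hIf : volume I ≠ ⊤) (s : ℝ) :
    volume (J 0 ((volume A).toReal / 2) \ J 0 ((volume I).toReal / 2)) +
      volume ((A \ I) ∩ {t | t - s ∈ I \ A}) ≤ volume (A \ I) := by
  have h1 := volume_J0_sdiff ((volume A).toReal / 2) ((volume I).toReal / 2)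
  rw [mul_div_cancel₀ _ two_ne_zero, mul_div_cancel₀ _ two_ne_zero, ofReal_toReal hAf,
    ofReal_toReal hIf] at h1
  have h2 : volume ((A \ I) ∩ {t | t - s ∈ I \ A}) ≤ volume (I \ A) := by
    refine (measure_mono inter_subset_right).trans ?_
    have := (measurePreserving_sub_right (volume : Measure ℝ) s).measure_preimage
      (hI.diff hA).nullMeasurableSet
    exact this.le
  have h3 : volume ((A \ I) ∩ {t | t - s ∈ I \ A}) ≤ volume (A \ I) := measure_mono inter_subset_left
  have hA' : volume A = volume (A ∩ I) + volume (A \ I) := (measure_inter_add_sdiff A hI).symm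
  have hI' : volume I = volume (A ∩ I) + volume (I \ A) := by
    rw [inter_comm]; exact (measure_inter_add_sdiff I hA).symm
  have hfin : volume (A ∩ I) ≠ ⊤ := measure_ne_top_of_subset inter_subset_left hAf
  have h4 : volume A - volume I = volume (A \ I) - volume (I \ A) := by
    rw [hA', hI', ENNReal.add_sub_add_eq_sub_left hfin]
  rw [h4] at h1
  refine (add_le_add h1 (le_min h2 h3)).trans ?_
  rcases le_total (volume (I \ A)) (volume (A \ I)) with h | h
  · rw [min_eq_left h, tsub_add_cancel_of_le h]
  · rw [tsub_eq_zero_of_le h, min_eq_right h, zero_add]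

lemma St_excess {E B : Set 𝕍} (hE : MeasurableSet E) (hB : MeasurableSet B)
    (hfE : FinSl E) (hfB : FinSl B) (s : ℝ) :
    volume (St E \ St B) + volume ((E \ B) ∩ {x | x - vcons s 0 ∈ B \ E}) ≤ volume (E \ B) := by
  have hm : MeasurableSet ((E \ B) ∩ {x | x - vcons s 0 ∈ B \ E}) :=
    (hE.diff hB).inter ((measurable_sub_const _) (hB.diff hE))
  have hm' := (measurableSet_St hE).diff (measurableSet_St hB)
  rw [volume_eq_sl (hE.diff hB), volume_eq_sl hm, volume_eq_sl hm',
    ← lintegral_add_left (measurable_vol_sl hm')]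
  refine lintegral_mono fun y => ?_
  refine le_trans (le_of_eq ?_) (slice_excess (measurableSet_sl hE y) (measurableSet_sl hB y)
    (hfE y) (hfB y) s)
  congr 2
  ext t
  simp only [sl, mem_inter_iff, mem_setOf_eq, mem_diff]
  rw [← vcons_sub, sub_zero]

/-- Some translate of `D` meets `C` in a set of at least the average measure. -/
lemma exists_translate {C D : Set (Vec n)} (hC : MeasurableSet C) (hD : MeasurableSet D) {R : ℝ}
    (hCR : C ⊆ 𝔹 R) (hDR : D ⊆ 𝔹 R) :
    ∃ z : Vec n, volume C * volume D ≤
      volume (C ∩ {x | x - z ∈ D}) * volume (𝔹[n] (2 * R)) := by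
  by_contra hcon
  push Not at hcon
  have hfin : volume (𝔹[n] (2 * R)) ≠ ⊤ := ball_ne_top
  have hS : MeasurableSet {p : Vec n × Vec n | p.1 ∈ C ∧ p.1 - p.2 ∈ D} :=
    (measurable_fst hC).inter ((measurable_fst.sub measurable_snd) hD)
  have hitg : ∫⁻ z, volume (C ∩ {x | x - z ∈ D}) = volume C * volume D := by
    have e1 : ∀ z, volume (C ∩ {x | x - z ∈ D}) =
        volume ((fun x => (x, z)) ⁻¹' {p : Vec n × Vec n | p.1 ∈ C ∧ p.1 - p.2 ∈ D}) := fun z => rfl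
    simp_rw [e1]
    rw [← Measure.prod_apply_symm hS, Measure.prod_apply hS]
    have e2 : ∀ x, volume (Prod.mk x ⁻¹' {p : Vec n × Vec n | p.1 ∈ C ∧ p.1 - p.2 ∈ D}) =
        C.indicator (fun _ => volume D) x := by
      intro x
      by_cases hx : x ∈ C
      · rw [indicator_of_mem hx]
        have := (Measure.measurePreserving_sub_left (volume : Measure (Vec n)) x).measure_preimage
          hD.nullMeasurableSet
        rw [← this]
        congr 1; ext z; simp [hx]
      · rw [indicator_of_notMem hx]
        have : Prod.mk x ⁻¹' {p : Vec n × Vec n | p.1 ∈ C ∧ p.1 - p.2 ∈ D} = ∅ := by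
          ext z; simp [hx]
        rw [this]; simp
    simp_rw [e2]
    rw [lintegral_indicator hC, setLIntegral_const, mul_comm]
  have hsupp : ∀ z, z ∉ 𝔹[n] (2 * R) → volume (C ∩ {x | x - z ∈ D}) = 0 := by
    intro z hz
    have : C ∩ {x | x - z ∈ D} = ∅ := by
      ext x
      simp only [mem_inter_iff, mem_setOf_eq, mem_empty_iff_false, iff_false, not_and]
      intro hx hxz
      apply hz
      have h1 := mem_closedBall_zero_iff.1 (hCR hx)
      have h2 := mem_closedBall_zero_iff.1 (hDR hxz)
      rw [mem_closedBall_zero_iff]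
      calc ‖z‖ = ‖x - (x - z)‖ := by simp
        _ ≤ _ := (norm_sub_le _ _).trans (by linarith)
    rw [this]; simp
  have hmeas : Measurable fun z => volume (C ∩ {x | x - z ∈ D}) :=
    measurable_measure_prodMk_right hS
  have h0 : volume C * volume D ≠ 0 := by
    intro h
    have := hcon 0
    rw [h] at this
    exact not_lt_bot this
  set V := volume (𝔹[n] (2 * R))
  have hVpos : V ≠ 0 := by
    intro h
    have hC0 : volume C = 0 := by
      refine measure_mono_null (hCR.trans ?_) h
      have : 0 ≤ R ∨ R < 0 := le_or_gt _ _
      rcases this with h | h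
      · exact cball_mono (by linarith)
      · intro x hx
        exact absurd (mem_closedBall_zero_iff.1 hx) (by linarith [norm_nonneg x])
    simp [hC0] at h0
  have hlt : ∫⁻ z in 𝔹[n] (2 * R), volume (C ∩ {x | x - z ∈ D}) * V <
      ∫⁻ z in 𝔹[n] (2 * R), volume C * volume D := by
    refine lintegral_strict_mono ?_ aemeasurable_const ?_ ?_
    · simpa [Measure.restrict_eq_zero] using hVpos
    · rw [lintegral_mul_const _ hmeas]
      refine ENNReal.mul_ne_top ?_ hfin
      refine ne_top_of_le_ne_top ?_ (setLIntegral_le_lintegral _ _)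
      rw [hitg]
      exact ENNReal.mul_ne_top (measure_ne_top_of_subset hCR ball_ne_top)
        (measure_ne_top_of_subset hDR ball_ne_top)
    · exact ae_of_all _ fun z => hcon z
  rw [lintegral_mul_const _ hmeas, setLIntegral_const, setLIntegral_eq_of_support_subset, hitg] at hlt
  · exact lt_irrefl _ hlt
  · intro z hz
    by_contra h
    exact hz (hsupp z h)

section Greedy

variable {d : ℕ}

lemma exists_isom (z w : Vec d) (h : ‖z‖ = ‖w‖) : ∃ g : Vec d ≃ₗᵢ[ℝ] Vec d, g z = w :=
  ⟨_, Submodule.reflection_sub h⟩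

/-- `F` can be reached from `E` by arbitrarily small steps along which the measures and the
trilinear form are controlled. -/
def Ch (E F : Triple d) : Prop :=
  ∀ ε : ℝ, 0 < ε → Relation.ReflTransGen
    (CStep (ofReal ε) (Near (ofReal ε) E)) E F

lemma Ch.refl (E : Triple d) : Ch E E := fun _ _ => Relation.ReflTransGen.refl

lemma near_refl {E : Triple d} (hE : ∀ j, MeasurableSet (E j)) (ε : ℝ≥0∞) :
    Near ε E E := ⟨hE, le_self_add, fun _ => ⟨le_self_add, le_self_add⟩⟩

lemma Near.trans {ε ε' : ℝ≥0∞} {E F G : Triple d} (h1 : Near ε E F)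
    (h2 : Near ε' F G) : Near (ε + ε') E G := by
  refine ⟨h2.1, (h1.2.1.trans (add_le_add_left h2.2.1 _)).trans (le_of_eq (by ring)), fun j => ?_⟩
  exact ⟨((h2.2.2 j).1.trans (add_le_add_left (h1.2.2 j).1 _)).trans (le_of_eq (by ring)),
    ((h1.2.2 j).2.trans (add_le_add_left (h2.2.2 j).2 _)).trans (le_of_eq (by ring))⟩

lemma Near.mono {ε ε' : ℝ≥0∞} {E F : Triple d} (h1 : Near ε E F) (h : ε ≤ ε') :
    Near ε' E F :=
  ⟨h1.1, h1.2.1.trans (by gcongr), fun j => ⟨(h1.2.2 j).1.trans (by gcongr),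
    (h1.2.2 j).2.trans (by gcongr)⟩⟩

lemma near_of_chain {E F : Triple d} {ε : ℝ≥0∞} (hE : ∀ j, MeasurableSet (E j))
    (h : Relation.ReflTransGen (CStep ε (Near ε E)) E F) : Near ε E F := by
  rcases Relation.ReflTransGen.cases_tail h with h | ⟨b, _, h⟩
  · rw [h]; exact near_refl hE ε
  · exact h.2

lemma Ch.trans {E F G : Triple d} (hE : ∀ j, MeasurableSet (E j)) (h1 : Ch E F)
    (h2 : Ch F G) : Ch E G := by
  intro ε hε
  have e2 : ofReal (ε / 2) + ofReal (ε / 2) = ofReal ε := by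
    rw [← ofReal_add (by positivity) (by positivity)]; congr 1; ring
  have hle : ofReal (ε / 2) ≤ ofReal ε := by rw [← e2]; exact le_self_add
  have c1 := h1 (ε / 2) (by positivity)
  have c2 := h2 (ε / 2) (by positivity)
  have hN := near_of_chain hE c1
  refine Relation.ReflTransGen.trans (b := F) ?_ ?_
  · refine Relation.ReflTransGen.mono (fun X Y h => ?_) _ _ c1
    exact ⟨fun j => (h.1 j).trans hle, h.2.mono hle⟩
  · refine Relation.ReflTransGen.mono (fun X Y h => ?_) _ _ c2
    exact ⟨fun j => (h.1 j).trans hle, by rw [← e2]; exact hN.trans h.2⟩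

lemma T3_isom (g : Vec d ≃ₗᵢ[ℝ] Vec d) {E : Triple d} (hE : ∀ j, MeasurableSet (E j)) :
    T3 (fun j => g ⁻¹' E j) = T3 E :=
  TT_preimage (φ₁ := g) (φ₂ := g) (φ₃ := g) g.measurePreserving g.measurePreserving
    (fun x y => by simp) (hE 0) (hE 1) (hE 2)

lemma vol_isom (g : Vec d ≃ₗᵢ[ℝ] Vec d) {E : Set (Vec d)} (hE : MeasurableSet E) :
    volume (g ⁻¹' E) = volume E := g.measurePreserving.measure_preimage hE.nullMeasurableSet

lemma vol_isom' (g : Vec d ≃ₗᵢ[ℝ] Vec d) (E : Set (Vec d)) :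
    volume (g ⁻¹' E) = volume E :=
  g.measurePreserving.measure_preimage_emb g.toMeasurableEquiv.measurableEmbedding _

lemma ball_isom (g : Vec d ≃ₗᵢ[ℝ] Vec d) (r : ℝ) :
    g ⁻¹' 𝔹 r = 𝔹 r := by
  ext x; simp

lemma near_isom (g : Vec d ≃ₗᵢ[ℝ] Vec d) {E F : Triple d} {ε : ℝ≥0∞}
    (hE : ∀ j, MeasurableSet (E j)) (h : Near ε E F) :
    Near ε (fun j => g ⁻¹' E j) (fun j => g ⁻¹' F j) := by
  refine ⟨fun j => g.continuous.measurable (h.1 j), ?_, fun j => ?_⟩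
  · rw [T3_isom g hE, T3_isom g h.1]; exact h.2.1
  · rw [vol_isom', vol_isom']; exact h.2.2 j

lemma Ch.isom (g : Vec d ≃ₗᵢ[ℝ] Vec d) {E F : Triple d} (hE : ∀ j, MeasurableSet (E j))
    (h : Ch E F) : Ch (fun j => g ⁻¹' E j) (fun j => g ⁻¹' F j) := by
  intro ε hε
  refine Relation.ReflTransGen.lift (fun X j => g ⁻¹' X j) (fun X Y hXY => ?_) _ _ (h ε hε)
  refine ⟨fun j => ?_, near_isom g hE hXY.2⟩
  have : (g ⁻¹' X j) ∆ (g ⁻¹' Y j) = g ⁻¹' (X j ∆ Y j) := rfl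
  rw [this, vol_isom']
  exact hXY.1 j

/-- Steiner symmetrization in the direction that the isometry `g` moves to the first axis. -/
def StG (g : 𝕍 ≃ₗᵢ[ℝ] 𝕍) (E : Set 𝕍) : Set 𝕍 :=
  g ⁻¹' St (g.symm ⁻¹' E)

lemma isom_sub_ball (g : Vec d ≃ₗᵢ[ℝ] Vec d) {E : Set (Vec d)} {R : ℝ}
    (h : E ⊆ 𝔹 R) : g ⁻¹' E ⊆ 𝔹 R := by
  rw [← ball_isom g]; exact preimage_mono h

lemma meas_isom (g : Vec d ≃ₗᵢ[ℝ] Vec d) {E : Set (Vec d)} (h : MeasurableSet E) :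
    MeasurableSet (g ⁻¹' E) := g.continuous.measurable h

lemma isom_symm_preimage (g : Vec d ≃ₗᵢ[ℝ] Vec d) (E : Set (Vec d)) :
    g ⁻¹' (g.symm ⁻¹' E) = E := by ext x; simp

lemma Ch_StG (g : 𝕍 ≃ₗᵢ[ℝ] 𝕍) {E : Triple (n + 1)}
    (hE : ∀ j, MeasurableSet (E j)) {R : ℝ} (hR : ∀ j, E j ⊆ 𝔹 R) :
    Ch E (fun j => StG g (E j)) := by
  have h1 : Ch (fun j => g.symm ⁻¹' E j) (fun j => St (g.symm ⁻¹' E j)) := fun ε hε =>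
    steiner_chain _ (fun j => meas_isom _ (hE j)) (fun j => isom_sub_ball _ (hR j)) hε
  have h2 := Ch.isom g (fun j => meas_isom g.symm (hE j)) h1
  simp only [isom_symm_preimage] at h2
  exact h2

lemma measurableSet_StG (g : 𝕍 ≃ₗᵢ[ℝ] 𝕍) {E : Set 𝕍}
    (hE : MeasurableSet E) : MeasurableSet (StG g E) :=
  meas_isom _ (measurableSet_St (meas_isom _ hE))

lemma volume_StG (g : 𝕍 ≃ₗᵢ[ℝ] 𝕍) {E : Set 𝕍}
    (hE : MeasurableSet E) {R : ℝ} (hR : E ⊆ 𝔹 R) :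
    volume (StG g E) = volume E := by
  rw [StG, vol_isom', volume_St (meas_isom _ hE) (finSl_of_bdd (isom_sub_ball _ hR)), vol_isom']

lemma StG_sub_ball (g : 𝕍 ≃ₗᵢ[ℝ] 𝕍) {E : Set 𝕍}
    {R : ℝ} (hR : E ⊆ 𝔹 R) : StG g E ⊆ 𝔹 R :=
  isom_sub_ball _ (St_subset_ball (isom_sub_ball _ hR))

lemma StG_sdiff_ball (g : 𝕍 ≃ₗᵢ[ℝ] 𝕍) {E : Set 𝕍} {r : ℝ}
    (hr : 0 ≤ r) : volume (StG g E \ 𝔹 r) =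
      volume (St (g.symm ⁻¹' E) \ St (𝔹 r)) := by
  have h1 : StG g E \ 𝔹 r =
      g ⁻¹' (St (g.symm ⁻¹' E) \ 𝔹 r) := by
    rw [preimage_diff, ball_isom]; rfl
  rw [h1, vol_isom']
  have hb := St_ball (n := n) hr
  apply measure_congr
  have h2 : St (𝔹[n + 1] r) =ᵐ[volume] 𝔹 r :=
    measure_symmDiff_eq_zero_iff.1 hb
  exact (ae_eq_refl _).diff h2.symm

lemma StG_excess (g : 𝕍 ≃ₗᵢ[ℝ] 𝕍) {E : Set 𝕍} {r : ℝ}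
    (hr : 0 ≤ r) (hE : MeasurableSet E) {R : ℝ} (hR : E ⊆ 𝔹 R) (z : 𝕍)
    {s : ℝ} (hgz : g z = vcons s 0) :
    volume (StG g E \ 𝔹 r) +
      volume ((E \ 𝔹 r) ∩ {x | x - z ∈ 𝔹 r \ E}) ≤
      volume (E \ 𝔹 r) := by
  rw [StG_sdiff_ball g hr]
  have := St_excess (meas_isom g.symm hE) measurableSet_closedBall (B := 𝔹 r)
    (finSl_of_bdd (isom_sub_ball g.symm hR)) (finSl_of_bdd le_rfl) s
  rw [← vol_isom' g.symm (E \ 𝔹 r), preimage_diff, ball_isom]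
  refine le_trans (le_of_eq ?_) this
  congr 1
  rw [← vol_isom' g.symm]
  congr 1
  ext x
  have hz : z = g.symm (vcons s 0) := by rw [← hgz]; simp
  simp only [mem_inter_iff, mem_preimage, mem_diff, mem_setOf_eq, mem_closedBall_zero_iff,
    LinearIsometryEquiv.norm_map, hz, ← map_sub]

lemma StG_excess_le (g : 𝕍 ≃ₗᵢ[ℝ] 𝕍) {E : Set 𝕍} {r : ℝ}
    (hr : 0 ≤ r) (hE : MeasurableSet E) {R : ℝ} (hR : E ⊆ 𝔹 R) :
    volume (StG g E \ 𝔹 r) ≤ volume (E \ 𝔹 r) :=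
  le_self_add.trans (StG_excess g hr hE hR 0 (s := 0) (by ext i; refine Fin.cases ?_ ?_ i <;> simp))

lemma norm_vcons_zero (t : ℝ) : ‖vcons t (0 : Vec n)‖ = |t| := by
  rw [← abs_of_nonneg (norm_nonneg (vcons t (0 : Vec n))), ← sq_eq_sq_iff_abs_eq_abs,
    norm_vcons_sq]; simp

/-- A suitable Steiner symmetrization decreases the excess by a quadratic amount. -/
lemma exists_StG_excess {E : Set 𝕍} {r : ℝ} (hr : 0 ≤ r) (hE : MeasurableSet E)
    {R : ℝ} (hR : E ⊆ 𝔹 R) (hrR : r ≤ R)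
    (hv : volume E = volume (𝔹[n + 1] r)) :
    ∃ g : 𝕍 ≃ₗᵢ[ℝ] 𝕍,
      volume (StG g E \ 𝔹 r) + volume (E \ 𝔹 r) ^ 2 /
        volume (𝔹[n + 1] (2 * R)) ≤
      volume (E \ 𝔹 r) := by
  set B := 𝔹[n + 1] r with hB
  have hBR : B ⊆ 𝔹 R := cball_mono hrR
  obtain ⟨z, hz⟩ := exists_translate (hE.diff measurableSet_closedBall : MeasurableSet (E \ B))
    (measurableSet_closedBall.diff hE : MeasurableSet (B \ E))
    (diff_subset.trans hR) (diff_subset.trans hBR)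
  have hBE : volume (B \ E) = volume (E \ B) := by
    have h1 := measure_inter_add_sdiff (μ := volume) E (measurableSet_closedBall : MeasurableSet B)
    have h2 := measure_inter_add_sdiff (μ := volume) B hE
    rw [inter_comm] at h2
    have hfin : volume (E ∩ B) ≠ ⊤ :=
      measure_ne_top_of_subset inter_subset_right ball_ne_top
    rw [hv, ← h2] at h1
    exact ((ENNReal.add_right_inj hfin).1 h1).symm
  obtain ⟨g, hg⟩ := exists_isom z (vcons ‖z‖ 0) (by rw [norm_vcons_zero, abs_norm])
  refine ⟨g, le_trans ?_ (StG_excess g hr hE hR z hg)⟩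
  gcongr
  rw [hBE, ← sq] at hz
  exact ENNReal.div_le_of_le_mul hz

end Greedy

/-- Bounded triples can be carried arbitrarily close to the triple of balls of the same measures. -/
lemma greedy {E : Triple (n + 1)} (hE : ∀ j, MeasurableSet (E j)) {R : ℝ}
    (hR : ∀ j, E j ⊆ 𝔹 R) {r : Fin 3 → ℝ} (hr : ∀ j, 0 ≤ r j)
    (hrR : ∀ j, r j ≤ R)
    (hv : ∀ j, volume (E j) = volume (𝔹[n + 1] (r j)))
    {τ : ℝ} (hτ : 0 < τ) :
    ∃ F, Ch E F ∧ (∀ j, MeasurableSet (F j)) ∧ (∀ j, F j ⊆ 𝔹 R) ∧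
      (∀ j, volume (F j) = volume (E j)) ∧
      ∀ j, volume (F j \ 𝔹 (r j)) ≤ ofReal τ := by
  set S : Set (Triple (n + 1)) := {F | Ch E F ∧ (∀ j, MeasurableSet (F j)) ∧
    (∀ j, F j ⊆ 𝔹 R) ∧ (∀ j, volume (F j) = volume (E j))}
  set ex : (Triple (n + 1)) → Fin 3 → ℝ := fun F j =>
    (volume (F j \ 𝔹 (r j))).toReal with hex
  set Φ : (Triple (n + 1)) → ℝ := fun F => ∑ j, ex F j with hΦ
  have hex0 : ∀ F j, 0 ≤ ex F j := fun F j => toReal_nonneg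
  have hΦ0 : ∀ F, 0 ≤ Φ F := fun F => Finset.sum_nonneg fun j _ => hex0 F j
  have hES : E ∈ S := ⟨Ch.refl E, hE, hR, fun _ => rfl⟩
  have hbdd : BddBelow (Φ '' S) := ⟨0, by rintro _ ⟨F, _, rfl⟩; exact hΦ0 F⟩
  have hne : (Φ '' S).Nonempty := ⟨_, E, hES, rfl⟩
  set s := sInf (Φ '' S)
  have hfin : ∀ F ∈ S, ∀ j, volume (F j \ 𝔹 (r j)) ≠ ⊤ := fun F hF j =>
    measure_ne_top_of_subset (diff_subset.trans (hF.2.2.1 j)) ball_ne_top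
  -- A triple in the class whose total excess is below `τ`.
  suffices h : ∃ F ∈ S, Φ F < τ by
    obtain ⟨F, hF, hlt⟩ := h
    refine ⟨F, hF.1, hF.2.1, hF.2.2.1, hF.2.2.2, fun j => ?_⟩
    rw [← ofReal_toReal (hfin F hF j)]
    apply ofReal_le_ofReal
    exact (Finset.single_le_sum (f := ex F) (fun i _ => hex0 F i) (Finset.mem_univ j)).trans hlt.le
  by_contra hcon
  push Not at hcon
  have hsτ : τ ≤ s := le_csInf hne (by rintro _ ⟨F, hF, rfl⟩; exact hcon F hF)
  have hspos : 0 < s := hτ.trans_le hsτ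
  have hR0 : 0 ≤ R := (hr 0).trans (hrR 0)
  have hRpos : 0 < R := by
    rcases hR0.lt_or_eq with h | h
    · exact h
    · exfalso
      have hz : ∀ j, ex E j = 0 := fun j => by
        have : volume (E j \ 𝔹 (r j)) = 0 := by
          refine measure_mono_null (diff_subset.trans (hR j)) ?_
          rw [← h, closedBall_zero]; simp
        simp [hex, this]
      have : Φ E = 0 := by simp [hΦ, hz]
      linarith [hcon E hES]
  set V := (volume (𝔹[n + 1] (2 * R))).toReal
  have hVfin : volume (𝔹[n + 1] (2 * R)) ≠ ⊤ :=
    ball_ne_top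
  have hVpos : 0 < V := toReal_pos
    (measure_closedBall_pos _ _ (by linarith)).ne' hVfin
  obtain ⟨_, ⟨F, hF, rfl⟩, hFlt⟩ := exists_lt_of_csInf_lt hne
    (show s < s + (s / 3) ^ 2 / V by linarith [show 0 < (s / 3) ^ 2 / V by positivity])
  have hFs : s ≤ Φ F := csInf_le hbdd ⟨F, hF, rfl⟩
  obtain ⟨j, hj⟩ : ∃ j, s / 3 ≤ ex F j := by
    by_contra hc
    push Not at hc
    have : Φ F = ex F 0 + ex F 1 + ex F 2 := by simp [hΦ, Fin.sum_univ_three]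
    linarith [hc 0, hc 1, hc 2]
  obtain ⟨g, hg⟩ := exists_StG_excess (hr j) (hF.2.1 j) (hF.2.2.1 j) (hrR j)
    ((hF.2.2.2 j).trans (hv j))
  set G : Triple (n + 1) := fun i => StG g (F i)
  have hGS : G ∈ S := ⟨hF.1.trans hE (Ch_StG g hF.2.1 hF.2.2.1),
    fun i => measurableSet_StG g (hF.2.1 i), fun i => StG_sub_ball g (hF.2.2.1 i),
    fun i => (volume_StG g (hF.2.1 i) (hF.2.2.1 i)).trans (hF.2.2.2 i)⟩
  have hle : ∀ i, ex G i ≤ ex F i := fun i =>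
    toReal_mono (hfin F hF i) (StG_excess_le g (hr i) (hF.2.1 i) (hF.2.2.1 i))
  have hlt : ex G j + ex F j ^ 2 / V ≤ ex F j := by
    have h1 := toReal_mono (hfin F hF j) hg
    rw [toReal_add (hfin G hGS j) (ENNReal.div_ne_top (ENNReal.pow_ne_top (hfin F hF j))
      (measure_closedBall_pos _ _ (by linarith)).ne'), toReal_div,
      toReal_pow] at h1
    exact h1
  have hq : (s / 3) ^ 2 / V ≤ ex F j ^ 2 / V := by gcongr
  have hsum : Φ G + (s / 3) ^ 2 / V ≤ Φ F := by
    have h0 := hle 0; have h1 := hle 1; have h2 := hle 2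
    simp only [hΦ, Fin.sum_univ_three]
    fin_cases j <;> simp only [Fin.zero_eta, Fin.mk_one, Fin.reduceFinMk] at hlt hq <;> linarith
  have := csInf_le hbdd ⟨G, hGS, rfl⟩
  linarith

section RieszSobolev

variable {d : ℕ}

lemma symmDiff_le_of_vol_eq {E B : Set (Vec d)} (hE : MeasurableSet E) (hB : MeasurableSet B)
    (hv : volume E = volume B) (hf : volume B ≠ ⊤) :
    volume (E ∆ B) = 2 * volume (E \ B) := by
  have hBE : volume (B \ E) = volume (E \ B) := by
    have h1 := measure_inter_add_sdiff (μ := volume) E hB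
    have h2 := measure_inter_add_sdiff (μ := volume) B hE
    rw [inter_comm] at h2
    have hfin : volume (E ∩ B) ≠ ⊤ := measure_ne_top_of_subset inter_subset_right hf
    rw [hv, ← h2] at h1
    exact ((ENNReal.add_right_inj hfin).1 h1).symm
  rw [measure_symmDiff_eq hE.nullMeasurableSet hB.nullMeasurableSet, hBE, two_mul]

/-- The Riesz–Sobolev inequality for bounded sets. -/
lemma riesz_sobolev {E : Triple (n + 1)} (hE : ∀ j, MeasurableSet (E j)) {R : ℝ}
    (hR : ∀ j, E j ⊆ 𝔹 R) {r : Fin 3 → ℝ} (hr : ∀ j, 0 ≤ r j)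
    (hrR : ∀ j, r j ≤ R)
    (hv : ∀ j, volume (E j) = volume (𝔹[n + 1] (r j))) :
    T3 E ≤ T3 (fun j => 𝔹[n + 1] (r j)) := by
  refine ENNReal.le_of_forall_pos_le_add fun ε hε _ => ?_
  set M : ℝ := (volume (𝔹[n + 1] R)).toReal
  have hM0 : 0 ≤ M := toReal_nonneg
  have hMe : volume (𝔹[n + 1] R) = ofReal M :=
    (ofReal_toReal ball_ne_top).symm
  set τ : ℝ := ε / (12 * (M + 1)) with hτ
  have hτ0 : 0 < τ := by positivity
  obtain ⟨F, hC, hFm, hFR, hFv, hFe⟩ := greedy hE hR hr hrR hv hτ0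
  have h1 := (near_of_chain hE (hC (ε / 2) (by positivity))).2.1
  have h2 : T3 F ≤ T3 (fun j => 𝔹[n + 1] (r j)) +
      3 * (ofReal (2 * τ) * ofReal M) := by
    refine T3_lip hFm (fun j => measurableSet_closedBall) (fun j => ?_) (fun j => ?_) fun j => ?_
    · rw [← hMe]; exact measure_mono (hFR j)
    · rw [← hMe]; exact measure_mono (cball_mono (hrR j))
    · rw [symmDiff_le_of_vol_eq (hFm j) measurableSet_closedBall ((hFv j).trans (hv j))
        ball_ne_top, ofReal_mul zero_le_two, ofReal_ofNat]
      gcongr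
      exact hFe j
  have h3 : 3 * (ofReal (2 * τ) * ofReal M) ≤ ofReal (ε / 2) := by
    rw [← ofReal_mul (by positivity), show (3 : ℝ≥0∞) = ofReal 3 by norm_num,
      ← ofReal_mul (by norm_num)]
    apply ofReal_le_ofReal
    have : τ * (12 * (M + 1)) = ε := by rw [hτ]; field_simp
    nlinarith
  calc T3 E ≤ T3 F + ofReal (ε / 2) := h1
    _ ≤ T3 (fun j => 𝔹[n + 1] (r j)) + ofReal (ε / 2) +
        ofReal (ε / 2) := by gcongr; exact h2.trans (by gcongr)
    _ = _ := by
      rw [add_assoc, ← ofReal_add (by positivity) (by positivity)]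
      congr 1
      rw [add_halves]; simp

/-- A discrete intermediate value theorem along a chain. -/
lemma chain_ivt {α : Type*} {r : α → α → Prop} {P : α → Prop} {Φ : α → ℝ} {k δ : ℝ}
    (hstep : ∀ X Y, P X → r X Y → P Y ∧ Φ X - k ≤ Φ Y) {E F : α}
    (h : Relation.ReflTransGen r E F) (hP : P E) (hE : δ < Φ E) (hF : Φ F ≤ δ) :
    ∃ Y, P Y ∧ δ - k ≤ Φ Y ∧ Φ Y ≤ δ := by
  have key : P F ∧ (Φ F ≤ δ → ∃ Y, P Y ∧ δ - k ≤ Φ Y ∧ Φ Y ≤ δ) := by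
    clear hF
    induction h with
    | refl => exact ⟨hP, fun h => absurd h (not_le.2 hE)⟩
    | @tail b c _ hbc ih =>
      obtain ⟨h1, h2⟩ := hstep b c ih.1 hbc
      refine ⟨h1, fun hc => ?_⟩
      rcases le_or_gt (Φ b) δ with hb | hb
      · exact ih.2 hb
      · exact ⟨c, h1, by linarith, hc⟩
  exact key.2 hF

end RieszSobolev

/-! ### The one-dimensional gain -/

/-- The trilinear form as a real number. -/
def TR {V : Type*} [AddCommGroup V] [MeasureSpace V] (A B C : Set V) : ℝ := (TT A B C).toReal

/-- The kernel of the trilinear form as a real number. -/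
def KR {V : Type*} [AddCommGroup V] [MeasureSpace V] (B C : Set V) (x : V) : ℝ :=
  (KK B C x).toReal

section General

variable {V : Type*} [AddCommGroup V] [MeasureSpace V] [SFinite (volume : Measure V)]
  [MeasurableAdd₂ V] [MeasurableNeg V]

lemma KK_le (B C : Set V) (x : V) : KK B C x ≤ volume B := measure_mono inter_subset_left

lemma measurable_KR {B C : Set V} (hB : MeasurableSet B) (hC : MeasurableSet C) :
    Measurable (KR B C) := (measurable_KK hB hC).ennreal_toReal

lemma KR_nonneg (B C : Set V) (x : V) : 0 ≤ KR B C x := toReal_nonneg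

lemma KR_le {B C : Set V} (hB : volume B ≠ ⊤) (x : V) : KR B C x ≤ (volume B).toReal :=
  toReal_mono hB (KK_le B C x)

lemma TR_eq {A B C : Set V} (hA : MeasurableSet A) (hB : MeasurableSet B) (hC : MeasurableSet C)
    (hBf : volume B ≠ ⊤) : TR A B C = ∫ x in A, KR B C x := by
  rw [TR, TT_eq_lintegral hA hB hC]
  symm
  exact integral_toReal (measurable_KK hB hC).aemeasurable
    (ae_of_all _ fun x => (KK_le B C x).trans_lt hBf.lt_top)

lemma integrableOn_KR {A B C : Set V} (hB : MeasurableSet B) (hC : MeasurableSet C)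
    (hAf : volume A ≠ ⊤) (hBf : volume B ≠ ⊤) : IntegrableOn (KR B C) A := by
  refine Measure.integrableOn_of_bounded (M := (volume B).toReal) hAf
    (measurable_KR hB hC).aestronglyMeasurable (ae_of_all _ fun x => ?_)
  rw [norm_of_nonneg (KR_nonneg _ _ _)]
  exact KR_le hBf x

lemma TR_rot [(volume : Measure V).IsAddLeftInvariant] [(volume : Measure V).IsNegInvariant]
    {A B C : Set V} (hA : MeasurableSet A) (hB : MeasurableSet B) (hC : MeasurableSet C) :
    TR A B C = TR B C A := by rw [TR, TR, TT_rot hA hB hC]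

end General

/-- A set on the line that agrees with `[-R, R]` off the `σ`-neighbourhood of the end points. -/
def Shell1 (R σ : ℝ) (A : Set ℝ) : Prop :=
  MeasurableSet A ∧ Icc (-(R - σ)) (R - σ) ⊆ A ∧ A ⊆ Icc (-(R + σ)) (R + σ)

/-- Measure of the positive part. -/
def alp (A : Set ℝ) : ℝ := volume.real (A ∩ Ioi 0)

/-- Measure of the negative part. -/
def bet (A : Set ℝ) : ℝ := volume.real (A ∩ Iio 0)

lemma Shell1.vol_ne_top {R σ : ℝ} {A : Set ℝ} (h : Shell1 R σ A) : volume A ≠ ⊤ :=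
  measure_ne_top_of_subset h.2.2 (by simp)

lemma Shell1.neg {R σ : ℝ} {A : Set ℝ} (h : Shell1 R σ A) : Shell1 R σ ((fun x => -x) ⁻¹' A) := by
  refine ⟨measurable_neg h.1, fun x hx => h.2.1 ⟨by linarith [hx.2], by linarith [hx.1]⟩,
    fun x hx => ?_⟩
  have := h.2.2 hx
  exact ⟨by linarith [this.2], by linarith [this.1]⟩

lemma real_neg (S : Set ℝ) : volume.real ((fun x : ℝ => -x) ⁻¹' S) = volume.real S := by
  rw [Measure.real, Measure.real]
  congr 1
  exact Measure.measure_preimage_neg _ _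

lemma alp_neg (A : Set ℝ) : alp ((fun x => -x) ⁻¹' A) = bet A := by
  rw [alp, bet, ← real_neg (A ∩ Iio 0)]
  congr 1
  ext x; simp

lemma bet_neg (A : Set ℝ) : bet ((fun x => -x) ⁻¹' A) = alp A := by
  rw [alp, bet, ← real_neg (A ∩ Ioi 0)]
  congr 1
  ext x; simp

lemma Shell1.iic {R σ : ℝ} {A : Set ℝ} (h : Shell1 R σ A) {t : ℝ} (h1 : -(R - σ) ≤ t)
    (h2 : t ≤ R - σ) : volume.real (A ∩ Iic t) = bet A + t := by
  have hf := h.vol_ne_top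
  have fin : ∀ S, volume (A ∩ S) ≠ ⊤ := fun S => measure_ne_top_of_subset inter_subset_left hf
  rcases le_or_gt 0 t with ht | ht
  · have : A ∩ Iic t = (A ∩ Iio 0) ∪ Icc 0 t := by
      ext x
      simp only [mem_inter_iff, mem_Iic, mem_union, mem_Iio, mem_Icc]
      constructor
      · rintro ⟨hx, hxt⟩
        rcases lt_or_ge x 0 with h0 | h0
        · exact Or.inl ⟨hx, h0⟩
        · exact Or.inr ⟨h0, hxt⟩
      · rintro (⟨hx, h0⟩ | ⟨h0, hxt⟩)
        · exact ⟨hx, by linarith⟩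
        · exact ⟨h.2.1 ⟨by linarith, by linarith⟩, hxt⟩
    rw [this, measureReal_union _ measurableSet_Icc (fin _) (by simp), bet]
    · simp [ht]
    · rw [Set.disjoint_left]; intro x hx hx'
      exact absurd hx.2 (not_lt.2 hx'.1)
  · have : A ∩ Iio 0 = (A ∩ Iic t) ∪ Ioo t 0 := by
      ext x
      simp only [mem_inter_iff, mem_Iic, mem_union, mem_Iio, mem_Ioo]
      constructor
      · rintro ⟨hx, hxt⟩
        rcases le_or_gt x t with h0 | h0
        · exact Or.inl ⟨hx, h0⟩
        · exact Or.inr ⟨h0, hxt⟩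
      · rintro (⟨hx, h0⟩ | ⟨h0, hxt⟩)
        · exact ⟨hx, by linarith⟩
        · exact ⟨h.2.1 ⟨by linarith, by linarith⟩, hxt⟩
    rw [bet, this, measureReal_union _ measurableSet_Ioo (fin _) (by simp)]
    · simp [ht.le]
    · rw [Set.disjoint_left]; intro x hx hx'
      exact absurd hx.2 (not_le.2 hx'.1)

/-- Near the right end, the kernel of two near-intervals is affine with slope `-1`. -/
lemma KR_near {R₂ R₃ σ : ℝ} {A₂ A₃ : Set ℝ} (h2 : Shell1 R₂ σ A₂) (h3 : Shell1 R₃ σ A₃) {x : ℝ}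
    (hx1 : x ≤ R₂ + R₃ - 2 * σ) (hx2 : R₂ - R₃ + 2 * σ ≤ x) (hx3 : R₃ - R₂ + 2 * σ ≤ x)
    (hσ2 : 0 ≤ R₂) (hσ3 : 0 ≤ R₃) :
    KR A₂ A₃ x = bet A₂ + bet A₃ - x := by
  set p := (R₃ - R₂ - x) / 2 with hp
  have hsplit : A₂ ∩ {y | -x - y ∈ A₃} = (A₂ ∩ Iic p) ∪ ((fun y => -x - y) ⁻¹' (A₃ ∩ Iio (-x - p))) := by
    ext y
    simp only [mem_inter_iff, mem_setOf_eq, mem_union, mem_Iic, mem_preimage, mem_Iio]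
    constructor
    · rintro ⟨hy2, hy3⟩
      rcases le_or_gt y p with h | h
      · exact Or.inl ⟨hy2, h⟩
      · exact Or.inr ⟨hy3, by linarith⟩
    · rintro (⟨hy2, hyp⟩ | ⟨hy3, hyp⟩)
      · refine ⟨hy2, h3.2.1 ⟨by linarith, ?_⟩⟩
        have := (h2.2.2 hy2).1
        linarith
      · refine ⟨h2.2.1 ⟨by linarith, ?_⟩, hy3⟩
        have := (h3.2.2 hy3).1
        linarith
  have hm : MeasurableSet ((fun y => -x - y) ⁻¹' (A₃ ∩ Iio (-x - p))) :=
    (measurable_const.sub measurable_id) (h3.1.inter measurableSet_Iio)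
  have hmp := (Measure.measurePreserving_sub_left (volume : Measure ℝ) (-x))
  have hv : volume.real ((fun y => -x - y) ⁻¹' (A₃ ∩ Iio (-x - p))) =
      volume.real (A₃ ∩ Iic (-x - p)) := by
    rw [Measure.real, Measure.real, hmp.measure_preimage (h3.1.inter measurableSet_Iio).nullMeasurableSet]
    congr 1
    exact measure_congr ((ae_eq_refl _).inter Iio_ae_eq_Iic)
  have hdisj : Disjoint (A₂ ∩ Iic p) ((fun y => -x - y) ⁻¹' (A₃ ∩ Iio (-x - p))) := by
    rw [Set.disjoint_left]; intro y hy hy'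
    have h1 : y ≤ p := hy.2
    have h2 : -x - y < -x - p := hy'.2
    linarith
  have e1 := h2.iic (t := p) (by linarith) (by linarith)
  have e2 := h3.iic (t := -x - p) (by linarith) (by linarith)
  have hfin2 : volume ((fun y => -x - y) ⁻¹' (A₃ ∩ Iio (-x - p))) ≠ ⊤ := by
    rw [hmp.measure_preimage (h3.1.inter measurableSet_Iio).nullMeasurableSet]
    exact measure_ne_top_of_subset inter_subset_left h3.vol_ne_top
  have : KR A₂ A₃ x = volume.real (A₂ ∩ {y | -x - y ∈ A₃}) := rfl
  rw [this, hsplit, measureReal_union hdisj hm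
    (measure_ne_top_of_subset inter_subset_left h2.vol_ne_top) hfin2, hv, e1, e2]
  ring

lemma KR_neg (A₂ A₃ : Set ℝ) (x : ℝ) :
    KR A₂ A₃ (-x) = KR ((fun x => -x) ⁻¹' A₂) ((fun x => -x) ⁻¹' A₃) x := by
  have h1 : KR A₂ A₃ (-x) = volume.real (A₂ ∩ {y | -(-x) - y ∈ A₃}) := rfl
  rw [h1, ← real_neg]
  congr 1
  ext y
  simp only [mem_preimage, mem_inter_iff, mem_setOf_eq]
  rw [show -(-x) - -y = -(-x - y) by ring]

lemma cheb_right {S : Set ℝ} (hS : MeasurableSet S) {a M : ℝ} (h : S ⊆ Icc a M) :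
    volume.real S ^ 2 / 4 ≤ ∫ x in S, (x - a) := by
  set m := volume.real S
  have hf : volume S ≠ ⊤ := measure_ne_top_of_subset h (by simp)
  have hm0 : 0 ≤ m := measureReal_nonneg
  set S' := S \ Ico a (a + m / 2)
  have hmS' : MeasurableSet S' := hS.diff measurableSet_Ico
  have h1 : m / 2 ≤ volume.real S' := by
    have h2 := measureReal_inter_add_sdiff (μ := volume) (s := S) (t := Ico a (a + m / 2))
      measurableSet_Ico hf
    have h3 : volume.real (S ∩ Ico a (a + m / 2)) ≤ m / 2 := by
      refine (measureReal_mono inter_subset_right (by simp)).trans ?_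
      rw [Real.volume_real_Ico_of_le (by linarith)]; linarith
    linarith
  have hitg : IntegrableOn (fun x => x - a) S :=
    ((continuous_id.sub continuous_const).integrableOn_Icc).mono_set h
  have hnn : 0 ≤ᵐ[volume.restrict S] fun x => x - a := by
    rw [Filter.EventuallyLE, ae_restrict_iff' hS]
    exact ae_of_all _ fun x hx => by simpa using (h hx).1
  calc m ^ 2 / 4 = m / 2 * (m / 2) := by ring
    _ ≤ volume.real S' * (m / 2) := by gcongr
    _ = ∫ x in S', (m / 2) := by rw [setIntegral_const]; rfl
    _ ≤ ∫ x in S', (x - a) := by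
        refine setIntegral_mono_on ?_ (hitg.mono_set diff_subset) hmS' fun x hx => ?_
        · exact integrableOn_const (measure_ne_top_of_subset diff_subset hf)
        · have h1 := (h hx.1).1
          have h2 : ¬ x < a + m / 2 := fun h3 => hx.2 ⟨h1, h3⟩
          linarith
    _ ≤ ∫ x in S, (x - a) :=
        setIntegral_mono_set hitg hnn (Filter.Eventually.of_forall diff_subset)

lemma setIntegral_neg_preimage (S : Set ℝ) (f : ℝ → ℝ) :
    ∫ x in (fun x => -x) ⁻¹' S, f (-x) = ∫ x in S, f x :=
  (Measure.measurePreserving_neg (volume : Measure ℝ)).setIntegral_preimage_emb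
    (MeasurableEquiv.neg ℝ).measurableEmbedding f S

lemma cheb_left {S : Set ℝ} (hS : MeasurableSet S) {a M : ℝ} (h : S ⊆ Icc M a) :
    volume.real S ^ 2 / 4 ≤ ∫ x in S, (a - x) := by
  have := cheb_right (S := (fun x => -x) ⁻¹' S) (measurable_neg hS) (a := -a) (M := -M)
    (fun x hx => ⟨by linarith [(h hx).2], by linarith [(h hx).1]⟩)
  rw [real_neg, ← setIntegral_neg_preimage S] at *
  refine this.trans (le_of_eq ?_)
  congr 1; funext x; ring

/-- Exchange step on the half line: replacing `A` by the interval of the same measure increases the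
integral of a function with slope `-1` where the two sets differ. -/
lemma bath_pos {A : Set ℝ} (hA : MeasurableSet A) {u v p : ℝ} (hu : 0 ≤ u) (huv : u ≤ v)
    (hA1 : Ioc 0 u ⊆ A) (hA2 : A ⊆ Ioc 0 v) {K : ℝ → ℝ} (hK : IntegrableOn K (Ioc 0 v))
    (hp : ∀ x ∈ Icc u v, K x = p - x) :
    (∫ x in A, K x) + volume.real (A ∆ (Ioo 0 (volume.real A))) ^ 2 / 8 ≤
      ∫ x in Ioo 0 (volume.real A), K x := by
  set a := volume.real A
  set I := Ioo (0 : ℝ) a with hI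
  have hAf : volume A ≠ ⊤ := measure_ne_top_of_subset hA2 (by simp)
  have hau : u ≤ a := by
    have := measureReal_mono hA1 hAf
    rwa [Real.volume_real_Ioc_of_le hu, sub_zero] at this
  have hav : a ≤ v := by
    have := measureReal_mono (μ := volume) hA2 (by simp)
    rwa [Real.volume_real_Ioc_of_le (hu.trans huv), sub_zero] at this
  have ha0 : 0 ≤ a := hu.trans hau
  have hIm : MeasurableSet I := measurableSet_Ioo
  have hIf : volume I ≠ ⊤ := by simp [hI]
  have hIv : I ⊆ Ioc 0 v := fun x hx => ⟨hx.1, by linarith [hx.2]⟩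
  have hIa : volume.real I = a := by rw [hI, Real.volume_real_Ioo_of_le ha0, sub_zero]
  have h1 := integral_inter_add_diff (μ := volume) (f := K) (s := A) (t := I) hIm (hK.mono_set hA2)
  have h2 := integral_inter_add_diff (μ := volume) (f := K) (s := I) (t := A) hA (hK.mono_set hIv)
  have m1 := measureReal_inter_add_sdiff (μ := volume) (s := A) (t := I) hIm hAf
  have m2 := measureReal_inter_add_sdiff (μ := volume) (s := I) (t := A) hA hIf
  rw [inter_comm] at h2 m2
  have sA : A \ I ⊆ Icc a v := fun x hx =>
    ⟨by by_contra h; exact hx.2 ⟨(hA2 hx.1).1, not_le.1 h⟩, (hA2 hx.1).2⟩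
  have sI : I \ A ⊆ Icc u a := fun x hx =>
    ⟨by by_contra h; exact hx.2 (hA1 ⟨hx.1.1, (not_le.1 h).le⟩), hx.1.2.le⟩
  have iA : ∫ x in A \ I, K x = (p - a) * volume.real (A \ I) - ∫ x in A \ I, (x - a) := by
    rw [setIntegral_congr_fun (g := fun x => (p - a) - (x - a)) (hA.diff hIm)
      (fun x hx => by
        have := sA hx
        simp only []
        rw [hp x ⟨by linarith [this.1], this.2⟩]; ring)]
    rw [integral_sub, setIntegral_const, smul_eq_mul, mul_comm]
    · exact integrableOn_const (measure_ne_top_of_subset diff_subset hAf)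
    · exact ((continuous_id.sub continuous_const).integrableOn_Icc).mono_set sA
  have iI : ∫ x in I \ A, K x = (p - a) * volume.real (I \ A) + ∫ x in I \ A, (a - x) := by
    rw [setIntegral_congr_fun (g := fun x => (p - a) + (a - x)) (hIm.diff hA)
      (fun x hx => by
        have := sI hx
        simp only []
        rw [hp x ⟨this.1, by linarith [this.2]⟩]; ring)]
    rw [integral_add, setIntegral_const, smul_eq_mul, mul_comm]
    · exact integrableOn_const (measure_ne_top_of_subset diff_subset hIf)
    · exact ((continuous_const.sub continuous_id).integrableOn_Icc).mono_set sI
  have c1 := cheb_right (hA.diff hIm) sA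
  have c2 := cheb_left (hIm.diff hA) sI
  have hs : volume.real (A ∆ I) = volume.real (A \ I) + volume.real (I \ A) := by
    rw [Set.symmDiff_def, measureReal_union disjoint_sdiff_sdiff (hIm.diff hA)
      (measure_ne_top_of_subset diff_subset hAf) (measure_ne_top_of_subset diff_subset hIf)]
  have hmm : volume.real (A \ I) = volume.real (I \ A) := by linarith
  rw [hs]
  rw [← h1, ← h2, iA, iI]
  rw [hmm] at c1 ⊢
  nlinarith

/-- The interval with the same positive and negative parts as `A`. -/
def Iab (A : Set ℝ) : Set ℝ := Ico (-bet A) (alp A)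

lemma alp_nonneg (A : Set ℝ) : 0 ≤ alp A := measureReal_nonneg
lemma bet_nonneg (A : Set ℝ) : 0 ≤ bet A := measureReal_nonneg

lemma Shell1.alp_mem {R σ : ℝ} {A : Set ℝ} (h : Shell1 R σ A) (hσ : 0 ≤ σ) (hR : σ ≤ R) :
    R - σ ≤ alp A ∧ alp A ≤ R + σ := by
  have hf : volume (A ∩ Ioi 0) ≠ ⊤ := measure_ne_top_of_subset inter_subset_left h.vol_ne_top
  constructor
  · have := measureReal_mono (μ := volume) (s₁ := Ioc 0 (R - σ)) (s₂ := A ∩ Ioi 0)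
      (fun x hx => ⟨h.2.1 ⟨by linarith [hx.1], hx.2⟩, hx.1⟩) hf
    rwa [Real.volume_real_Ioc_of_le (by linarith), sub_zero] at this
  · have := measureReal_mono (μ := volume) (s₂ := Ioc 0 (R + σ)) (s₁ := A ∩ Ioi 0)
      (fun x hx => ⟨hx.2, (h.2.2 hx.1).2⟩) (by simp)
    rwa [Real.volume_real_Ioc_of_le (by linarith), sub_zero] at this

lemma Shell1.bet_mem {R σ : ℝ} {A : Set ℝ} (h : Shell1 R σ A) (hσ : 0 ≤ σ) (hR : σ ≤ R) :
    R - σ ≤ bet A ∧ bet A ≤ R + σ := by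
  rw [← alp_neg]; exact h.neg.alp_mem hσ hR

lemma shell1_Ico {R σ a b : ℝ} (hσ : 0 < σ) (ha : R - σ ≤ a) (ha' : a ≤ R + σ) (hb : R - σ ≤ b)
    (hb' : b ≤ R + σ) : Shell1 R (2 * σ) (Ico (-b) a) :=
  ⟨measurableSet_Ico, fun x hx => ⟨by linarith [hx.1], by linarith [hx.2]⟩,
    fun x hx => ⟨by linarith [hx.1], by linarith [hx.2]⟩⟩

lemma Shell1.Iab {R σ : ℝ} {A : Set ℝ} (h : Shell1 R σ A) (hσ : 0 < σ) (hR : σ ≤ R) :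
    Shell1 R (2 * σ) (Iab A) :=
  shell1_Ico hσ (h.alp_mem hσ.le hR).1 (h.alp_mem hσ.le hR).2 (h.bet_mem hσ.le hR).1
    (h.bet_mem hσ.le hR).2

lemma Shell1.mono {R σ σ' : ℝ} {A : Set ℝ} (h : Shell1 R σ A) (hσ : σ ≤ σ') : Shell1 R σ' A :=
  ⟨h.1, (Icc_subset_Icc (by linarith) (by linarith)).trans h.2.1,
    h.2.2.trans (Icc_subset_Icc (by linarith) (by linarith))⟩

lemma setIntegral_split_zero {A : Set ℝ} (hA : MeasurableSet A) {K : ℝ → ℝ}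
    (hK : IntegrableOn K A) :
    ∫ x in A, K x = (∫ x in A ∩ Ioi 0, K x) + ∫ x in A ∩ Iio 0, K x := by
  rw [← integral_inter_add_diff (μ := volume) (s := A) (t := Ioi 0) measurableSet_Ioi hK]
  congr 1
  apply setIntegral_congr_set
  have : A \ Ioi 0 = A ∩ Iic 0 := by ext x; simp
  rw [this]
  exact (ae_eq_refl _).inter Iio_ae_eq_Iic.symm

/-- Replacing a near-interval by the interval with the same positive and negative parts. -/
lemma bath {R σ p q : ℝ} {A : Set ℝ} (h : Shell1 R σ A) (hσ : 0 < σ) (hR : σ ≤ R) {K : ℝ → ℝ}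
    (hK : ∀ M, IntegrableOn K (Icc (-M) M)) (hp : ∀ x ∈ Icc (R - σ) (R + σ), K x = p - x)
    (hq : ∀ x ∈ Icc (R - σ) (R + σ), K (-x) = q - x) :
    (∫ x in A, K x) + volume.real (A ∆ Iab A) ^ 2 / 16 ≤ ∫ x in Iab A, K x := by
  have hKA : IntegrableOn K A := (hK (R + σ)).mono_set h.2.2
  have hKI : IntegrableOn K (Iab A) := (hK (R + 2 * σ)).mono_set (h.Iab hσ hR).2.2
  have hpos := bath_pos (A := A ∩ Ioi 0) (h.1.inter measurableSet_Ioi) (u := R - σ) (v := R + σ)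
    (by linarith) (by linarith)
    (fun x hx => ⟨h.2.1 ⟨by linarith [hx.1], hx.2⟩, hx.1⟩)
    (fun x hx => ⟨hx.2, (h.2.2 hx.1).2⟩) ((hK (R + σ)).mono_set
      (fun x hx => ⟨by linarith [hx.1], hx.2⟩)) hp
  set A' := (fun x : ℝ => -x) ⁻¹' A with hA'
  have h' := h.neg
  have hK' : IntegrableOn (fun x => K (-x)) (Icc (-(R + σ)) (R + σ)) := by
    have := (Measure.measurePreserving_neg (volume : Measure ℝ)).integrableOn_comp_preimage
      (MeasurableEquiv.neg ℝ).measurableEmbedding (f := K) (s := Icc (-(R + σ)) (R + σ))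
    have h2 := this.2 (hK _)
    refine h2.mono_set fun x hx => ?_
    exact ⟨by linarith [hx.2], by linarith [hx.1]⟩
  have hneg := bath_pos (A := A' ∩ Ioi 0) (h'.1.inter measurableSet_Ioi) (u := R - σ) (v := R + σ)
    (by linarith) (by linarith)
    (fun x hx => ⟨h'.2.1 ⟨by linarith [hx.1], hx.2⟩, hx.1⟩)
    (fun x hx => ⟨hx.2, (h'.2.2 hx.1).2⟩) (K := fun x => K (-x)) (hK'.mono_set
      (fun x hx => ⟨by linarith [hx.1], hx.2⟩)) hq
  have eα : volume.real (A ∩ Ioi 0) = alp A := rfl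
  have eβ : volume.real (A' ∩ Ioi 0) = bet A := alp_neg A
  rw [eα] at hpos
  rw [eβ] at hneg
  have e1 : ∫ x in A' ∩ Ioi 0, K (-x) = ∫ x in A ∩ Iio 0, K x := by
    rw [← setIntegral_neg_preimage (A ∩ Iio 0)]
    congr 2; ext x; simp [hA']
  have e2 : ∫ x in Ioo 0 (bet A), K (-x) = ∫ x in Ioo (-bet A) 0, K x := by
    rw [← setIntegral_neg_preimage (Ioo (-bet A) 0)]
    congr 2; ext x; simp only [mem_Ioo, mem_preimage]
    constructor <;> rintro ⟨a, b⟩ <;> constructor <;> linarith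
  rw [e1, e2] at hneg
  have iA := setIntegral_split_zero h.1 hKA
  have iI := setIntegral_split_zero (A := Iab A) measurableSet_Ico hKI
  have s1 : Iab A ∩ Ioi 0 = Ioo 0 (alp A) := by
    ext x; simp only [Iab, mem_inter_iff, mem_Ico, mem_Ioi, mem_Ioo]
    have := bet_nonneg A
    constructor
    · rintro ⟨⟨_, h⟩, h0⟩; exact ⟨h0, h⟩
    · rintro ⟨h0, h⟩; exact ⟨⟨by linarith, h⟩, h0⟩
  have s2 : Iab A ∩ Iio 0 = Ico (-bet A) 0 := by
    ext x; simp only [Iab, mem_inter_iff, mem_Ico, mem_Iio]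
    have := alp_nonneg A
    constructor
    · rintro ⟨⟨h, _⟩, h0⟩; exact ⟨h, h0⟩
    · rintro ⟨h, h0⟩; exact ⟨⟨h, by linarith⟩, h0⟩
  rw [s1, s2, integral_Ico_eq_integral_Ioo] at iI
  set w1 := volume.real ((A ∩ Ioi 0) ∆ (Ioo 0 (alp A))) with hw1
  set w2 := volume.real ((A' ∩ Ioi 0) ∆ (Ioo 0 (bet A))) with hw2
  have hw : volume.real (A ∆ Iab A) ≤ w1 + w2 := by
    have e3 : w2 = volume.real ((A ∩ Iio 0) ∆ (Ioo (-bet A) 0)) := by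
      rw [hw2, ← real_neg ((A ∩ Iio 0) ∆ (Ioo (-bet A) 0))]
      congr 1
      ext x
      simp only [Set.mem_symmDiff, mem_inter_iff, mem_Ioi, mem_Ioo, mem_preimage, mem_Iio, hA']
      constructor
      · rintro (⟨⟨a, b⟩, c⟩ | ⟨⟨a, b⟩, c⟩)
        · exact Or.inl ⟨⟨a, by linarith⟩, fun h => c ⟨b, by linarith [h.1]⟩⟩
        · exact Or.inr ⟨⟨by linarith, by linarith⟩, fun h => c ⟨h.1, a⟩⟩
      · rintro (⟨⟨a, b⟩, c⟩ | ⟨⟨a, b⟩, c⟩)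
        · exact Or.inl ⟨⟨a, by linarith⟩, fun h => c ⟨by linarith [h.2], by linarith⟩⟩
        · exact Or.inr ⟨⟨by linarith, by linarith⟩, fun h => c ⟨h.1, by linarith⟩⟩
    rw [e3, hw1]
    have hfin : volume ((A ∩ Ioi 0) ∆ (Ioo 0 (alp A)) ∪
        (A ∩ Iio 0) ∆ (Ioo (-bet A) 0) ∪ {0, -bet A}) ≠ ⊤ := by
      refine ne_top_of_le_ne_top (b := volume (Icc (-(R + 2 * σ)) (R + 2 * σ) ∪ {0, -bet A})) ?_ (measure_mono ?_)
      rotate_left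
      · have hb1 := h.alp_mem hσ.le hR
        have hb2 := h.bet_mem hσ.le hR
        rintro x ((hx | hx) | hx)
        · left
          rcases hx with ⟨⟨hx, _⟩, _⟩ | ⟨hx, _⟩
          · have := h.2.2 hx; exact ⟨by linarith [this.1], by linarith [this.2]⟩
          · exact ⟨by linarith [hx.1], by linarith [hx.2]⟩
        · left
          rcases hx with ⟨⟨hx, _⟩, _⟩ | ⟨hx, _⟩
          · have := h.2.2 hx; exact ⟨by linarith [this.1], by linarith [this.2]⟩
          · exact ⟨by linarith [hx.1], by linarith [hx.2]⟩
        · right; exact hx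
      · refine ((measure_union_le _ _).trans_lt ?_).ne
        have : volume ({0, -bet A} : Set ℝ) = 0 := (Set.toFinite _).measure_zero _
        rw [this]; simp
    have h3 : volume.real ({0, -bet A} : Set ℝ) = 0 := by
      rw [Measure.real, (Set.toFinite _).measure_zero]; rfl
    calc volume.real (A ∆ Iab A) ≤ volume.real ((A ∩ Ioi 0) ∆ (Ioo 0 (alp A)) ∪
        (A ∩ Iio 0) ∆ (Ioo (-bet A) 0) ∪ {0, -bet A}) := by
          refine measureReal_mono ?_ hfin
          intro x hx
          have hb2 := bet_nonneg A
          have hb1 := alp_nonneg A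
          by_cases h0 : x = 0
          · exact Or.inr (Or.inl h0)
          by_cases h1 : x = -bet A
          · exact Or.inr (Or.inr h1)
          left
          rcases lt_or_gt_of_ne h0 with h2 | h2
          · right
            rcases hx with ⟨ha, hb⟩ | ⟨ha, hb⟩
            · exact Or.inl ⟨⟨ha, h2⟩, fun h => hb ⟨h.1.le, by linarith [h.2]⟩⟩
            · exact Or.inr ⟨⟨lt_of_le_of_ne ha.1 (Ne.symm h1), h2⟩, fun h => hb h.1⟩
          · left
            rcases hx with ⟨ha, hb⟩ | ⟨ha, hb⟩
            · exact Or.inl ⟨⟨ha, h2⟩, fun h => hb ⟨by linarith [h.1], h.2⟩⟩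
            · exact Or.inr ⟨⟨h2, ha.2⟩, fun h => hb h.1⟩
      _ ≤ _ := by
          refine (measureReal_union_le _ _).trans ?_
          rw [h3, add_zero]
          exact measureReal_union_le _ _
  have hsq : volume.real (A ∆ Iab A) ^ 2 ≤ (w1 + w2) ^ 2 := by gcongr
  rw [iA, iI]
  nlinarith [sq_nonneg (w1 - w2)]

lemma KR_J {h₂ h₃ x : ℝ} (h1 : |h₂ - h₃| ≤ |x|) (h2 : |x| ≤ h₂ + h₃) :
    KR (J 0 h₂) (J 0 h₃) x = h₂ + h₃ - |x| := by
  rw [KR, KK_J]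
  have h3 := abs_le.1 h1
  have key : min h₂ (h₃ - x) + min h₂ (h₃ + x) = h₂ + h₃ - |x| := by
    rcases abs_cases x with ⟨hx, hx'⟩ | ⟨hx, hx'⟩ <;> rw [hx] at h3 ⊢
    · rw [min_eq_right (by linarith), min_eq_left (by linarith)]; ring
    · rw [min_eq_left (by linarith), min_eq_right (by linarith)]; ring
  rw [key, toReal_ofReal (by linarith)]

/-- Quantitative gain when three intervals are re-centred. -/
lemma TR_J_quad {e h₁ h₂ h₃ : ℝ} (hm1 : |h₂ - h₃| + |e| ≤ h₁) (hm2 : h₁ + |e| ≤ h₂ + h₃) :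
    TR (J e h₁) (J 0 h₂) (J 0 h₃) + e ^ 2 ≤ TR (J 0 h₁) (J 0 h₂) (J 0 h₃) := by
  have hh1 : 0 ≤ h₁ := by linarith [abs_nonneg (h₂ - h₃), abs_nonneg e]
  set K := KR (J 0 h₂) (J 0 h₃) with hKdef
  have hitg : ∀ a b, IntervalIntegrable K volume a b := by
    intro a b
    rw [intervalIntegrable_iff]
    exact integrableOn_KR (measurableSet_J _ _) (measurableSet_J _ _)
      (by rw [uIoc]; simp) (by rw [volume_J]; exact ofReal_ne_top)
  have hT : ∀ c, TR (J c h₁) (J 0 h₂) (J 0 h₃) = ∫ x in (c - h₁)..(c + h₁), K x := by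
    intro c
    rw [TR_eq (measurableSet_J _ _) (measurableSet_J _ _) (measurableSet_J _ _)
      (by rw [volume_J]; exact ofReal_ne_top), intervalIntegral.integral_of_le (by linarith), J,
      integral_Ico_eq_integral_Ioc]
  rw [hT, hT]
  have h1 : (∫ x in (0 - h₁)..(0 + h₁), K x) - ∫ x in (e - h₁)..(e + h₁), K x
      = (∫ x in (0 - h₁)..(e - h₁), K x) - ∫ x in (0 + h₁)..(e + h₁), K x := by
    have a := intervalIntegral.integral_add_adjacent_intervals (hitg (0 - h₁) (0 + h₁)) (hitg _ (e + h₁))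
    have b := intervalIntegral.integral_add_adjacent_intervals (hitg (0 - h₁) (e - h₁)) (hitg _ (e + h₁))
    linarith
  have he := abs_le.1 (le_refl |e|)
  have habs := abs_nonneg (h₂ - h₃)
  have h2 : (∫ x in (0 - h₁)..(e - h₁), K x) = ∫ x in (0 - h₁)..(e - h₁), (h₂ + h₃ + x) := by
    apply intervalIntegral.integral_congr
    intro x hx
    have hx1 : -h₁ - |e| ≤ x ∧ x ≤ -h₁ + |e| := by
      rcases le_total 0 e with h | h
      · rw [uIcc_of_le (by linarith)] at hx; exact ⟨by linarith [hx.1], by linarith [hx.2]⟩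
      · rw [uIcc_of_ge (by linarith)] at hx; exact ⟨by linarith [hx.1], by linarith [hx.2]⟩
    have hx0 : |x| = -x := abs_of_nonpos (by linarith)
    show K x = _
    rw [hKdef, KR_J (by rw [hx0]; linarith) (by rw [hx0]; linarith), hx0]; ring
  have h3 : (∫ x in (0 + h₁)..(e + h₁), K x) = ∫ x in (0 + h₁)..(e + h₁), (h₂ + h₃ - x) := by
    apply intervalIntegral.integral_congr
    intro x hx
    have hx1 : h₁ - |e| ≤ x ∧ x ≤ h₁ + |e| := by
      rcases le_total 0 e with h | h
      · rw [uIcc_of_le (by linarith)] at hx; exact ⟨by linarith [hx.1], by linarith [hx.2]⟩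
      · rw [uIcc_of_ge (by linarith)] at hx; exact ⟨by linarith [hx.1], by linarith [hx.2]⟩
    have hx0 : |x| = x := abs_of_nonneg (by linarith)
    show K x = _
    rw [hKdef, KR_J (by rw [hx0]; linarith) (by rw [hx0]; linarith), hx0]
  have h4 : (∫ x in (0 - h₁)..(e - h₁), (h₂ + h₃ + x)) - (∫ x in (0 + h₁)..(e + h₁), (h₂ + h₃ - x)) = e ^ 2 := by
    rw [intervalIntegral.integral_add (by simp) (by simp), intervalIntegral.integral_sub (by simp) (by simp)]
    simp only [intervalIntegral.integral_const, integral_id, smul_eq_mul]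
    ring
  rw [h2, h3] at h1
  linarith

/-- Replacing the first set by the interval with the same measures on both half lines. -/
lemma TR_bath {R₁ R₂ R₃ σ : ℝ} {A₁ A₂ A₃ : Set ℝ} (h1 : Shell1 R₁ σ A₁) (h2 : Shell1 R₂ (2 * σ) A₂)
    (h3 : Shell1 R₃ (2 * σ) A₃) (hσ : 0 < σ) (m1 : R₂ + 10 * σ ≤ R₁ + R₃) (m2 : R₃ + 10 * σ ≤ R₁ + R₂)
    (m3 : R₁ + 10 * σ ≤ R₂ + R₃) :
    TR A₁ A₂ A₃ + volume.real (A₁ ∆ Iab A₁) ^ 2 / 16 ≤ TR (Iab A₁) A₂ A₃ := by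
  rw [TR_eq h1.1 h2.1 h3.1 h2.vol_ne_top, TR_eq (A := Iab A₁) measurableSet_Ico h2.1 h3.1 h2.vol_ne_top]
  refine bath (p := bet A₂ + bet A₃) (q := alp A₂ + alp A₃) h1 hσ (by linarith) (fun M => ?_) ?_ ?_
  · exact integrableOn_KR h2.1 h3.1 (by simp) h2.vol_ne_top
  · intro x hx
    exact KR_near h2 h3 (by linarith [hx.2]) (by linarith [hx.1]) (by linarith [hx.1]) (by linarith)
      (by linarith)
  · intro x hx
    rw [KR_neg, KR_near h2.neg h3.neg (by linarith [hx.2]) (by linarith [hx.1]) (by linarith [hx.1])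
      (by linarith) (by linarith), bet_neg, bet_neg]

/-- Centre of the interval `Iab A`. -/
def cen (A : Set ℝ) : ℝ := (alp A - bet A) / 2

/-- Half of the measure of `A`. -/
def hlf (A : Set ℝ) : ℝ := (alp A + bet A) / 2

lemma Iab_eq_J (A : Set ℝ) : Iab A = J (cen A) (hlf A) := by
  rw [Iab, J, cen, hlf]; congr 1 <;> ring

/-- In dimension one the deficit bounds the squared sum of the centres and the squared deviations of
the sets from intervals. -/
lemma TR_gain {R₁ R₂ R₃ σ : ℝ} {A₁ A₂ A₃ : Set ℝ} (h1 : Shell1 R₁ σ A₁) (h2 : Shell1 R₂ σ A₂)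
    (h3 : Shell1 R₃ σ A₃) (hσ : 0 < σ) (m1 : R₂ + 10 * σ ≤ R₁ + R₃) (m2 : R₃ + 10 * σ ≤ R₁ + R₂)
    (m3 : R₁ + 10 * σ ≤ R₂ + R₃) :
    TR A₁ A₂ A₃ + ((cen A₁ + cen A₂ + cen A₃) ^ 2 + volume.real (A₁ ∆ Iab A₁) ^ 2 / 16
      + volume.real (A₂ ∆ Iab A₂) ^ 2 / 16 + volume.real (A₃ ∆ Iab A₃) ^ 2 / 16)
      ≤ TR (J 0 (hlf A₁)) (J 0 (hlf A₂)) (J 0 (hlf A₃)) := by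
  have b1 := TR_bath h1 (h2.mono (by linarith)) (h3.mono (by linarith)) hσ m1 m2 m3
  have i1 := h1.Iab hσ (by linarith)
  have i2 := h2.Iab hσ (by linarith)
  have i3 := h3.Iab hσ (by linarith)
  have b2 := TR_bath h2 (h3.mono (by linarith)) i1 hσ (by linarith) (by linarith) (by linarith)
  have b3 := TR_bath h3 i1 i2 hσ (by linarith) (by linarith) (by linarith)
  rw [← TR_rot i1.1 h2.1 h3.1, ← TR_rot i1.1 i2.1 h3.1] at b2
  rw [TR_rot h3.1 i1.1 i2.1, TR_rot i3.1 i1.1 i2.1] at b3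
  have e : TR (Iab A₁) (Iab A₂) (Iab A₃)
      = TR (J (cen A₁ + cen A₂ + cen A₃) (hlf A₁)) (J 0 (hlf A₂)) (J 0 (hlf A₃)) := by
    rw [Iab_eq_J, Iab_eq_J, Iab_eq_J, TR, TR, TT_J_shift]
  have a1 := h1.alp_mem hσ.le (by linarith)
  have a2 := h2.alp_mem hσ.le (by linarith)
  have a3 := h3.alp_mem hσ.le (by linarith)
  have c1 := h1.bet_mem hσ.le (by linarith)
  have c2 := h2.bet_mem hσ.le (by linarith)
  have c3 := h3.bet_mem hσ.le (by linarith)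
  have he : |cen A₁ + cen A₂ + cen A₃| ≤ 3 * σ := by
    rw [cen, cen, cen, abs_le]; constructor <;> linarith [a1.1, a1.2]
  have hd : |hlf A₂ - hlf A₃| ≤ hlf A₁ - 3 * σ := by
    rw [hlf, hlf, hlf, abs_le]; constructor <;> linarith [a1.1, a1.2]
  have q := TR_J_quad (e := cen A₁ + cen A₂ + cen A₃) (h₁ := hlf A₁) (h₂ := hlf A₂) (h₃ := hlf A₃)
    (by linarith) (by rw [hlf, hlf, hlf] at *; linarith [a1.1, a1.2])
  linarith

/-! ### Stability of the additive Cauchy equation -/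

/-- A smooth even probability density supported in the ball of radius `w`, with value and
gradient bounded by `M`. -/
structure IsBump {n : ℕ} (w M : ℝ) (ψ : Vec n → ℝ) : Prop where
  smooth : ContDiff ℝ 1 ψ
  even : ∀ x, ψ (-x) = ψ x
  int : ∫ x, ψ x = 1
  supp : ∀ x, w < ‖x‖ → ψ x = 0
  cpt : HasCompactSupport ψ
  bd : ∀ x, |ψ x| ≤ M
  bd' : ∀ x, ‖fderiv ℝ ψ x‖ ≤ M
  supp' : ∀ x, w < ‖x‖ → fderiv ℝ ψ x = 0

lemma exists_bump (n : ℕ) {w : ℝ} (hw : 0 < w) : ∃ M : ℝ, 0 < M ∧ ∃ ψ : Vec n → ℝ, IsBump w M ψ := by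
  let f : ContDiffBump (0 : Vec n) := ⟨w / 2, w, by linarith, by linarith⟩
  have hc : ContDiff ℝ 1 (f.normed volume) := f.contDiff_normed (n := 1)
  have hs : HasCompactSupport (f.normed volume) := f.hasCompactSupport_normed
  obtain ⟨M1, hM1⟩ := hs.exists_bound_of_continuous hc.continuous
  obtain ⟨M2, hM2⟩ := (hs.fderiv ℝ).exists_bound_of_continuous (hc.continuous_fderiv one_ne_zero)
  have hM : M1 ≤ max 1 (max M1 M2) := (le_max_left _ _).trans (le_max_right _ _)
  have hM' : M2 ≤ max 1 (max M1 M2) := (le_max_right _ _).trans (le_max_right _ _)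
  have hts : ∀ x : Vec n, w < ‖x‖ → x ∉ tsupport (f.normed (volume : Measure (Vec n))) := by
    intro x hx
    rw [f.tsupport_normed_eq]
    simp only [mem_closedBall, dist_zero_right, not_le]
    exact hx
  refine ⟨max 1 (max M1 M2), lt_of_lt_of_le one_pos (le_max_left _ _), f.normed volume, hc,
    f.normed_neg, f.integral_normed, fun x hx => ?_, hs, fun x => (hM1 x).trans hM,
    fun x => (hM2 x).trans hM', fun x hx => ?_⟩
  · exact image_eq_zero_of_notMem_tsupport (hts x hx)
  · exact image_eq_zero_of_notMem_tsupport (fun h => hts x hx (tsupport_fderiv_subset ℝ h))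

/-- A bounded measurable function. -/
def BM {X : Type*} [MeasurableSpace X] (c : X → ℝ) : Prop := Measurable c ∧ ∃ M, ∀ y, |c y| ≤ M

section

variable {w M : ℝ} {ψ : Vec n → ℝ}

/-- Mollification. -/
def U (ψ c : Vec n → ℝ) (y : Vec n) : ℝ := ∫ t, c t * ψ (y - t)

/-- Gradient of the mollification. -/
def Gd (ψ c : Vec n → ℝ) (y : Vec n) : Vec n →L[ℝ] ℝ := fderiv ℝ (U ψ c) y

lemma BM.integrable_mul {c χ : Vec n → ℝ} (hc : BM c) (hχ : Integrable χ) :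
    Integrable (fun t => c t * χ t) := by
  obtain ⟨hm, M, hM⟩ := hc
  exact hχ.bdd_mul hm.aestronglyMeasurable (ae_of_all _ hM)

lemma BM.locallyIntegrable {c : Vec n → ℝ} (hc : BM c) : LocallyIntegrable c := by
  obtain ⟨hm, M, hM⟩ := hc
  rw [locallyIntegrable_iff]
  intro K hK
  exact Measure.integrableOn_of_bounded hK.measure_lt_top.ne hm.aestronglyMeasurable (ae_of_all _ hM)

lemma IsBump.integrable (h : IsBump w M ψ) : Integrable ψ :=
  h.smooth.continuous.integrable_of_hasCompactSupport h.cpt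

lemma IsBump.integrable' (h : IsBump w M ψ) (v : Vec n) : Integrable (fun x => fderiv ℝ ψ x v) := by
  refine Continuous.integrable_of_hasCompactSupport ?_ ?_
  · exact (h.smooth.continuous_fderiv one_ne_zero).clm_apply continuous_const
  · exact (h.cpt.fderiv ℝ).mono (fun x hx => by
      simp only [Function.mem_support] at *
      intro h0; exact hx (by rw [h0]; rfl))

lemma IsBump.int' (h : IsBump w M ψ) (v : Vec n) : ∫ x, fderiv ℝ ψ x v = 0 := by
  have h1 : ∀ x, fderiv ℝ ψ (-x) v = - fderiv ℝ ψ x v := by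
    intro x
    have e : ψ = fun x => ψ (-x) := by ext x; rw [h.even]
    have hd : HasFDerivAt ψ (fderiv ℝ ψ (-x)) (-x) :=
      (h.smooth.differentiable one_ne_zero _).hasFDerivAt
    have hd2 : HasFDerivAt (fun x => ψ (-x)) ((fderiv ℝ ψ (-x)).comp (-ContinuousLinearMap.id ℝ (Vec n))) x :=
      hd.comp x (hasFDerivAt_id x).neg
    rw [← e] at hd2
    rw [hd2.fderiv]; simp
  have h2 := integral_neg_eq_self (fun x => fderiv ℝ ψ x v) volume
  simp_rw [h1] at h2
  rw [integral_neg] at h2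
  linarith

lemma U_hasFDerivAt (h : IsBump w M ψ) {c : Vec n → ℝ} (hc : BM c) (y : Vec n) :
    HasFDerivAt (U ψ c) (Gd ψ c y) y := by
  have := h.cpt.hasFDerivAt_convolution_right (ContinuousLinearMap.mul ℝ ℝ) (μ := volume)
    hc.locallyIntegrable h.smooth y
  exact (DifferentiableAt.hasFDerivAt (f := U ψ c) this.differentiableAt)

lemma Gd_apply (h : IsBump w M ψ) {c : Vec n → ℝ} (hc : BM c) (y v : Vec n) :
    Gd ψ c y v = ∫ t, c t * fderiv ℝ ψ (y - t) v := by
  have := h.cpt.hasFDerivAt_convolution_right (ContinuousLinearMap.mul ℝ ℝ) (μ := volume)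
    hc.locallyIntegrable h.smooth y
  have e : Gd ψ c y = _ := this.fderiv
  rw [e, convolution_precompR_apply _ hc.locallyIntegrable (h.cpt.fderiv ℝ)
    (h.smooth.continuous_fderiv one_ne_zero)]
  rfl

/-- Testing the Cauchy defect against an antisymmetric product weight. -/
lemma pair_core {a b c χ ψ : Vec n → ℝ} (ha : BM a) (hb : BM b) (hc : BM c) (hχ : Integrable χ)
    (hψ : Integrable ψ) (h0 : ∫ x, χ x = 0) (h1 : ∫ x, ψ x = 1) :
    (∫ x, a x * χ x) - ∫ x, b x * χ x = ∫ p : Vec n × Vec n,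
      (a p.1 + b p.2 + c (p.1 + p.2)) * (χ p.1 * ψ p.2 - ψ p.1 * χ p.2) := by
  have i1 : Integrable (fun p : Vec n × Vec n => (a p.1 * χ p.1) * ψ p.2) :=
    (ha.integrable_mul hχ).mul_prod hψ
  have i2 : Integrable (fun p : Vec n × Vec n => (a p.1 * ψ p.1) * χ p.2) :=
    (ha.integrable_mul hψ).mul_prod hχ
  have i3 : Integrable (fun p : Vec n × Vec n => χ p.1 * (b p.2 * ψ p.2)) :=
    hχ.mul_prod (hb.integrable_mul hψ)
  have i4 : Integrable (fun p : Vec n × Vec n => ψ p.1 * (b p.2 * χ p.2)) :=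
    hψ.mul_prod (hb.integrable_mul hχ)
  obtain ⟨hcm, Mc, hMc⟩ := hc
  have hcm' : AEStronglyMeasurable (fun p : Vec n × Vec n => c (p.1 + p.2)) (volume.prod volume) :=
    (hcm.comp (measurable_fst.add measurable_snd)).aestronglyMeasurable
  have i5 : Integrable (fun p : Vec n × Vec n => c (p.1 + p.2) * (χ p.1 * ψ p.2)) :=
    (hχ.mul_prod hψ).bdd_mul hcm' (ae_of_all _ fun p => hMc _)
  have i6 : Integrable (fun p : Vec n × Vec n => c (p.1 + p.2) * (ψ p.1 * χ p.2)) :=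
    (hψ.mul_prod hχ).bdd_mul hcm' (ae_of_all _ fun p => hMc _)
  have e5 : ∫ p : Vec n × Vec n, c (p.1 + p.2) * (χ p.1 * ψ p.2)
      = ∫ p : Vec n × Vec n, c (p.1 + p.2) * (ψ p.1 * χ p.2) := by
    rw [Measure.volume_eq_prod, ← integral_prod_swap]
    congr 1; ext p
    simp only [Prod.fst_swap, Prod.snd_swap]
    rw [add_comm p.2 p.1]; ring
  have s : ∀ p : Vec n × Vec n, (a p.1 + b p.2 + c (p.1 + p.2)) * (χ p.1 * ψ p.2 - ψ p.1 * χ p.2)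
      = (((a p.1 * χ p.1) * ψ p.2 - (a p.1 * ψ p.1) * χ p.2) + (χ p.1 * (b p.2 * ψ p.2) -
        ψ p.1 * (b p.2 * χ p.2))) + (c (p.1 + p.2) * (χ p.1 * ψ p.2) -
        c (p.1 + p.2) * (ψ p.1 * χ p.2)) := fun p => by ring
  simp_rw [s]
  have j1 : ∫ p : Vec n × Vec n, (a p.1 * χ p.1) * ψ p.2 = (∫ x, a x * χ x) * ∫ x, ψ x :=
    integral_prod_mul (fun x => a x * χ x) ψ
  have j2 : ∫ p : Vec n × Vec n, (a p.1 * ψ p.1) * χ p.2 = (∫ x, a x * ψ x) * ∫ x, χ x :=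
    integral_prod_mul (fun x => a x * ψ x) χ
  have j3 : ∫ p : Vec n × Vec n, χ p.1 * (b p.2 * ψ p.2) = (∫ x, χ x) * ∫ x, b x * ψ x :=
    integral_prod_mul χ (fun x => b x * ψ x)
  have j4 : ∫ p : Vec n × Vec n, ψ p.1 * (b p.2 * χ p.2) = (∫ x, ψ x) * ∫ x, b x * χ x :=
    integral_prod_mul ψ (fun x => b x * χ x)
  have k1 : Integrable (fun p : Vec n × Vec n => (a p.1 * χ p.1) * ψ p.2 - (a p.1 * ψ p.1) * χ p.2) :=
    i1.sub i2
  have k2 : Integrable (fun p : Vec n × Vec n => χ p.1 * (b p.2 * ψ p.2) -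
        ψ p.1 * (b p.2 * χ p.2)) := i3.sub i4
  have k3 : Integrable (fun p : Vec n × Vec n => c (p.1 + p.2) * (χ p.1 * ψ p.2) -
        c (p.1 + p.2) * (ψ p.1 * χ p.2)) := i5.sub i6
  have k4 : Integrable (fun p : Vec n × Vec n => ((a p.1 * χ p.1) * ψ p.2 - (a p.1 * ψ p.1) * χ p.2)
      + (χ p.1 * (b p.2 * ψ p.2) - ψ p.1 * (b p.2 * χ p.2))) := k1.add k2
  rw [integral_add k4 k3, integral_add k1 k2,
    integral_sub i1 i2, integral_sub i3 i4, integral_sub i5 i6, e5, j1, j2, j3, j4, h0, h1]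
  ring


/-- The defect of the additive Cauchy equation. -/
def defect (c₁ c₂ c₃ : Vec n → ℝ) (p : Vec n × Vec n) : ℝ := c₁ p.1 + c₂ p.2 + c₃ (-p.1 - p.2)

lemma measurable_defect {c₁ c₂ c₃ : Vec n → ℝ} (h1 : Measurable c₁) (h2 : Measurable c₂)
    (h3 : Measurable c₃) : Measurable (defect c₁ c₂ c₃) :=
  ((h1.comp measurable_fst).add (h2.comp measurable_snd)).add
    (h3.comp (measurable_fst.neg.sub measurable_snd))

lemma BM.comp {X Z : Type*} [MeasurableSpace X] [MeasurableSpace Z] {c : X → ℝ} (hc : BM c) {f : Z → X} (hf : Measurable f) :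
    BM (fun x => c (f x)) := ⟨hc.1.comp hf, hc.2.choose, fun y => hc.2.choose_spec _⟩

/-- Where the Cauchy defect is small, the gradients of the mollifications agree. -/
lemma Gd_pair (h : IsBump w M ψ) (hM : 0 < M) {c₁ c₂ c₃ : Vec n → ℝ} (h1 : BM c₁) (h2 : BM c₂)
    (h3 : BM c₃) {ε : ℝ} (hε : 0 ≤ ε) {S : Set (Vec n × Vec n)}
    (hS : ∫⁻ p in S, ‖defect c₁ c₂ c₃ p‖ₑ ≤ ofReal ε) {y₀ z₀ : Vec n}
    (hyz : ∀ s t : Vec n, ‖s - y₀‖ ≤ w → ‖t - z₀‖ ≤ w → (s, t) ∈ S) :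
    ‖Gd ψ c₁ y₀ - Gd ψ c₂ z₀‖ ≤ 2 * M ^ 2 * ε := by
  refine ContinuousLinearMap.opNorm_le_bound _ (by positivity) fun v => ?_
  set χ : Vec n → ℝ := fun x => fderiv ℝ ψ x v with hχ
  have e1 : Gd ψ c₁ y₀ v = ∫ p, c₁ (y₀ - p) * χ p := by
    rw [Gd_apply h h1, ← integral_sub_left_eq_self (fun p => c₁ (y₀ - p) * χ p) volume y₀]
    simp [hχ]
  have e2 : Gd ψ c₂ z₀ v = ∫ p, c₂ (z₀ - p) * χ p := by
    rw [Gd_apply h h2, ← integral_sub_left_eq_self (fun p => c₂ (z₀ - p) * χ p) volume z₀]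
    simp [hχ]
  have hsub : (Gd ψ c₁ y₀ - Gd ψ c₂ z₀) v = Gd ψ c₁ y₀ v - Gd ψ c₂ z₀ v := rfl
  rw [hsub, e1, e2, pair_core (a := fun p => c₁ (y₀ - p)) (b := fun p => c₂ (z₀ - p))
    (c := fun s => c₃ (s - y₀ - z₀)) (χ := χ) (ψ := ψ)
    (h1.comp (measurable_const.sub measurable_id)) (h2.comp (measurable_const.sub measurable_id))
    (h3.comp ((measurable_id.sub measurable_const).sub measurable_const)) (h.integrable' v) h.integrable
    (h.int' v) h.int]
  set box : Set (Vec n × Vec n) := 𝔹 w ×ˢ 𝔹 w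
  have hboxm : MeasurableSet box := measurableSet_closedBall.prod measurableSet_closedBall
  set φ : Vec n × Vec n → Vec n × Vec n := Prod.map (fun p => y₀ - p) (fun p => z₀ - p) with hφ
  have hmp : MeasurePreserving φ :=
    (Measure.measurePreserving_sub_left volume y₀).prod (Measure.measurePreserving_sub_left volume z₀)
  have hχb : ∀ x, |χ x| ≤ M * ‖v‖ := fun x =>
    ((fderiv ℝ ψ x).le_opNorm v).trans (mul_le_mul_of_nonneg_right (h.bd' x) (norm_nonneg v))
  have bound : ∀ p : Vec n × Vec n, ‖(c₁ (y₀ - p.1) + c₂ (z₀ - p.2) + c₃ (p.1 + p.2 - y₀ - z₀)) *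
      (χ p.1 * ψ p.2 - ψ p.1 * χ p.2)‖ₑ ≤ ofReal (2 * M ^ 2 * ‖v‖) *
        box.indicator (fun p => ‖defect c₁ c₂ c₃ (φ p)‖ₑ) p := by
    intro p
    by_cases hp : p ∈ box
    · rw [indicator_of_mem hp, enorm_mul, mul_comm]
      have : defect c₁ c₂ c₃ (φ p) = c₁ (y₀ - p.1) + c₂ (z₀ - p.2) + c₃ (p.1 + p.2 - y₀ - z₀) := by
        simp only [defect, hφ, Prod.map_fst, Prod.map_snd]; congr 2; abel
      rw [this]
      gcongr
      rw [enorm_eq_ofReal_abs]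
      apply ofReal_le_ofReal
      calc |χ p.1 * ψ p.2 - ψ p.1 * χ p.2| ≤ |χ p.1 * ψ p.2| + |ψ p.1 * χ p.2| := abs_sub _ _
        _ ≤ (M * ‖v‖) * M + M * (M * ‖v‖) := by
          rw [abs_mul, abs_mul]
          gcongr
          · exact hχb _
          · exact h.bd _
          · exact h.bd _
          · exact hχb _
        _ = _ := by ring
    · have : χ p.1 * ψ p.2 - ψ p.1 * χ p.2 = 0 := by
        have hp' : w < ‖p.1‖ ∨ w < ‖p.2‖ := by
          by_contra hc
          push Not at hc
          exact hp ⟨by simpa using hc.1, by simpa using hc.2⟩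
        rcases hp' with hp' | hp'
        · simp [hχ, h.supp _ hp', h.supp' _ hp']
        · simp [hχ, h.supp _ hp', h.supp' _ hp']
      rw [this]; simp
  have hfin : ‖∫ p : Vec n × Vec n, (c₁ (y₀ - p.1) + c₂ (z₀ - p.2) + c₃ (p.1 + p.2 - y₀ - z₀)) *
      (χ p.1 * ψ p.2 - ψ p.1 * χ p.2)‖ₑ ≤ ofReal (2 * M ^ 2 * ‖v‖ * ε) := by
    refine (enorm_integral_le_lintegral_enorm _).trans ((lintegral_mono bound).trans ?_)
    have hmd := (measurable_defect h1.1 h2.1 h3.1).enorm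
    have hmd' : Measurable (box.indicator (fun p => ‖defect c₁ c₂ c₃ (φ p)‖ₑ)) :=
      (hmd.comp hmp.measurable).indicator hboxm
    rw [lintegral_const_mul _ hmd', lintegral_indicator hboxm,
      ofReal_mul (p := 2 * M ^ 2 * ‖v‖) (by positivity)]
    gcongr
    refine le_trans ?_ hS
    have hsub : box ⊆ φ ⁻¹' (closedBall y₀ w ×ˢ closedBall z₀ w) := by
      rintro ⟨p, q⟩ ⟨hp, hq⟩
      simp only [hφ, mem_preimage, Prod.map, mem_prod, mem_closedBall, dist_eq_norm] at hp hq ⊢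
      simp only [sub_zero] at hp hq
      simpa using ⟨hp, hq⟩
    refine (lintegral_mono_set hsub).trans ?_
    have := hmp.setLIntegral_comp_preimage
      (measurableSet_closedBall.prod measurableSet_closedBall : MeasurableSet
        (closedBall y₀ w ×ˢ closedBall z₀ w)) hmd
    rw [this]
    apply lintegral_mono_set
    rintro ⟨s, t⟩ ⟨hs, ht⟩
    exact hyz s t (by simpa [dist_eq_norm] using hs) (by simpa [dist_eq_norm] using ht)
  rw [enorm_eq_ofReal_abs, ofReal_le_ofReal_iff (by positivity)] at hfin
  calc _ ≤ _ := hfin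
    _ = _ := by ring


/-- Pairs `(y, z)` whose sum has norm at most `ϱ` and which lie within `W` of the axis
`(-h s, -(1 - h) s)`. -/
def tube (n : ℕ) (h ϱ W : ℝ) : Set (Vec n × Vec n) :=
  {p | ‖p.1 + p.2‖ ≤ ϱ ∧ ‖(1 - h) • p.1 - h • p.2‖ ≤ W}

lemma measurableSet_tube (h ϱ W : ℝ) : MeasurableSet (tube n h ϱ W) := by
  have h1 : IsClosed {p : Vec n × Vec n | ‖p.1 + p.2‖ ≤ ϱ} :=
    isClosed_le (by fun_prop) continuous_const
  have h2 : IsClosed {p : Vec n × Vec n | ‖(1 - h) • p.1 - h • p.2‖ ≤ W} :=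
    isClosed_le (by fun_prop) continuous_const
  have e : tube n h ϱ W = {p : Vec n × Vec n | ‖p.1 + p.2‖ ≤ ϱ} ∩
    {p : Vec n × Vec n | ‖(1 - h) • p.1 - h • p.2‖ ≤ W} := rfl
  rw [e]
  exact h1.measurableSet.inter h2.measurableSet

lemma lintegral_axis (h : ℝ) {f : Vec n × Vec n → ℝ≥0∞} (hf : Measurable f) :
    ∫⁻ s : Vec n, ∫⁻ ζ : Vec n, f (-(h • s) + ζ, -((1 - h) • s) - ζ) = ∫⁻ p, f p := by
  have e1 : ∀ s : Vec n, ∫⁻ ζ : Vec n, f (-(h • s) + ζ, -((1 - h) • s) - ζ)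
      = ∫⁻ ζ : Vec n, f (ζ, -ζ - s) := by
    intro s
    rw [← lintegral_add_left_eq_self (fun ζ => f (ζ, -ζ - s)) (-(h • s))]
    congr 1; ext ζ; congr 2
    rw [sub_smul, one_smul]; abel
  simp_rw [e1]
  rw [lintegral_lintegral_swap]
  · rw [Measure.volume_eq_prod, lintegral_prod _ hf.aemeasurable]
    congr 1; ext ζ
    exact lintegral_sub_left_eq_self (fun t => f (ζ, t)) (-ζ)
  · exact (hf.comp (measurable_snd.prodMk (measurable_snd.neg.sub measurable_fst))).aemeasurable

lemma axis_mem_tube {h ϱ W : ℝ} {s ζ : Vec n} :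
    (-(h • s) + ζ, -((1 - h) • s) - ζ) ∈ tube n h ϱ W ↔ ‖s‖ ≤ ϱ ∧ ‖ζ‖ ≤ W := by
  have e1 : -(h • s) + ζ + (-((1 - h) • s) - ζ) = -s := by rw [sub_smul, one_smul]; abel
  have e2 : (1 - h) • (-(h • s) + ζ) - h • (-((1 - h) • s) - ζ) = ζ := by module
  simp only [tube, mem_setOf_eq, e1, e2, norm_neg]

lemma lintegral_tube (h ϱ W : ℝ) {f : Vec n × Vec n → ℝ≥0∞} (hf : Measurable f) :
    ∫⁻ p in tube n h ϱ W, f p = ∫⁻ s in 𝔹[n] ϱ,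
      ∫⁻ ζ in 𝔹[n] W, f (-(h • s) + ζ, -((1 - h) • s) - ζ) := by
  rw [← lintegral_indicator (measurableSet_tube _ _ _),
    ← lintegral_axis h (hf.indicator (measurableSet_tube h ϱ W)),
    ← lintegral_indicator measurableSet_closedBall]
  congr 1; ext s
  by_cases hs : ‖s‖ ≤ ϱ
  · rw [indicator_of_mem (by simpa using hs), ← lintegral_indicator measurableSet_closedBall]
    congr 1; ext ζ
    by_cases hζ : ‖ζ‖ ≤ W
    · rw [indicator_of_mem (axis_mem_tube.2 ⟨hs, hζ⟩), indicator_of_mem (by simpa using hζ)]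
    · rw [indicator_of_notMem (fun hc => hζ (axis_mem_tube.1 hc).2),
        indicator_of_notMem (by simpa using hζ)]
  · rw [indicator_of_notMem (by simpa using hs)]
    refine (lintegral_congr fun ζ => ?_).trans lintegral_zero
    rw [indicator_of_notMem (fun hc => hs (axis_mem_tube.1 hc).1)]

/-- Alternating chain of comparisons along a pair of rays. -/
lemma chain_pair {X : Type*} [NormedAddCommGroup X] (g₁ g₂ : ℝ → X) {N : ℕ} (hN : 0 < N) {B : ℝ}
    (hB : ∀ a b : ℝ, 0 ≤ a → a ≤ 1 → 0 ≤ b → b ≤ 1 → |a - b| ≤ 1 / N → ‖g₁ a - g₂ b‖ ≤ B) :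
    ‖g₁ 1 - g₁ 0‖ ≤ 2 * N * B ∧ ‖g₂ 1 - g₂ 0‖ ≤ 2 * N * B := by
  have hN' : (0 : ℝ) < N := by exact_mod_cast hN
  have key : ∀ k : ℕ, k ≤ N → ‖g₁ (k / N) - g₁ 0‖ ≤ 2 * k * B ∧ ‖g₂ (k / N) - g₂ 0‖ ≤ 2 * k * B := by
    intro k
    induction k with
    | zero => intro _; simp
    | succ k ih =>
      intro hk
      obtain ⟨i1, i2⟩ := ih (by omega)
      have hk' : ((k : ℝ) + 1) ≤ N := by exact_mod_cast hk
      have k0 : (0 : ℝ) ≤ k / N := by positivity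
      have k1 : (k : ℝ) / N ≤ 1 := by rw [div_le_one hN']; linarith
      have k2 : (0 : ℝ) ≤ (k + 1) / N := by positivity
      have k3 : ((k : ℝ) + 1) / N ≤ 1 := by rw [div_le_one hN']; linarith
      have hd : ((k : ℝ) + 1) / N - k / N = 1 / N := by ring
      have hpos : (0 : ℝ) ≤ 1 / N := by positivity
      push_cast
      constructor
      · have a1 := hB ((k + 1) / N) (k / N) k2 k3 k0 k1 (by rw [hd, abs_of_nonneg hpos])
        have a2 := hB (k / N) (k / N) k0 k1 k0 k1 (by simp)
        have := norm_add₃_le (a := g₁ ((k + 1) / N) - g₂ (k / N)) (b := g₂ (k / N) - g₁ (k / N))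
          (c := g₁ (k / N) - g₁ 0)
        rw [norm_sub_rev (g₂ _)] at this
        rw [show g₁ ((k + 1) / N) - g₁ 0 = (g₁ ((k + 1) / N) - g₂ (k / N)) + (g₂ (k / N) - g₁ (k / N))
          + (g₁ (k / N) - g₁ 0) by abel]
        linarith
      · have a1 := hB (k / N) ((k + 1) / N) k0 k1 k2 k3 (by rw [abs_sub_comm, hd, abs_of_nonneg hpos])
        have a2 := hB (k / N) (k / N) k0 k1 k0 k1 (by simp)
        have := norm_add₃_le (a := g₂ ((k + 1) / N) - g₁ (k / N)) (b := g₁ (k / N) - g₂ (k / N))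
          (c := g₂ (k / N) - g₂ 0)
        rw [norm_sub_rev (g₂ ((k + 1) / N))] at this
        rw [show g₂ ((k + 1) / N) - g₂ 0 = (g₂ ((k + 1) / N) - g₁ (k / N)) + (g₁ (k / N) - g₂ (k / N))
          + (g₂ (k / N) - g₂ 0) by abel]
        linarith
  have := key N le_rfl
  rwa [div_self hN'.ne'] at this


/-- Inside a tube of width `16 K w` the gradients of the mollifications vary little along rays. -/
lemma chain_tube (hψ : IsBump w M ψ) (hM : 0 < M) {c₁ c₂ c₃ : Vec n → ℝ} (h1 : BM c₁) (h2 : BM c₂)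
    (h3 : BM c₃) {ε : ℝ} (hε : 0 ≤ ε) {K h ϱ : ℝ} (hK : 1 ≤ K) (hh : |h| ≤ K) (hh' : |1 - h| ≤ K)
    (hw : 0 < w) {N : ℕ} (hN : K ≤ N * w)
    (hS : ∫⁻ p in tube n h ϱ (16 * K * w), ‖defect c₁ c₂ c₃ p‖ₑ ≤ ofReal ε)
    {y z : Vec n} (hyz : ‖y + z‖ ≤ ϱ - 4 * w) (hyz' : ‖(1 - h) • y - h • z‖ ≤ 8 * K * w)
    (hz : ‖z‖ ≤ 2 * K) :
    ‖Gd ψ c₁ y - Gd ψ c₁ 0‖ ≤ 2 * N * (2 * M ^ 2 * ε) ∧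
      ‖Gd ψ c₂ z - Gd ψ c₂ 0‖ ≤ 2 * N * (2 * M ^ 2 * ε) := by
  have hNpos : (0 : ℝ) < N := by
    by_contra hc
    have : (N : ℝ) = 0 := le_antisymm (not_lt.1 hc) (Nat.cast_nonneg N)
    rw [this] at hN; linarith
  have key := chain_pair (fun a => Gd ψ c₁ (a • y)) (fun b => Gd ψ c₂ (b • z)) (N := N)
    (by exact_mod_cast hNpos) (B := 2 * M ^ 2 * ε) (by
      intro a b ha0 ha1 hb0 hb1 hab
      refine Gd_pair hψ hM h1 h2 h3 hε hS fun s t hs ht => ?_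
      have hKN : 2 * K * (1 / N) ≤ 2 * w := by
        rw [mul_one_div, div_le_iff₀ hNpos]; linarith
      have hbz : ‖(b - a) • z‖ ≤ 2 * w := by
        rw [norm_smul, norm_eq_abs, abs_sub_comm]
        calc |a - b| * ‖z‖ ≤ (1 / N) * (2 * K) := by gcongr
          _ ≤ _ := by linarith
      have hay : ‖a • (y + z)‖ ≤ ϱ - 4 * w := by
        rw [norm_smul, norm_eq_abs, abs_of_nonneg ha0]
        calc a * ‖y + z‖ ≤ 1 * ‖y + z‖ := by gcongr
          _ ≤ _ := by linarith
      have hay' : ‖a • ((1 - h) • y - h • z)‖ ≤ 8 * K * w := by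
        rw [norm_smul, norm_eq_abs, abs_of_nonneg ha0]
        calc a * ‖(1 - h) • y - h • z‖ ≤ 1 * ‖(1 - h) • y - h • z‖ := by gcongr
          _ ≤ _ := by linarith
      constructor
      · have e : (s, t).1 + (s, t).2 = (a • (y + z) + (b - a) • z) + (s - a • y) + (t - b • z) := by
          simp only; module
        rw [e]
        have := norm_add₃_le (a := a • (y + z) + (b - a) • z) (b := s - a • y) (c := t - b • z)
        have := norm_add_le (a • (y + z)) ((b - a) • z)
        linarith
      · have e : (1 - h) • (s, t).1 - h • (s, t).2 = (a • ((1 - h) • y - h • z) - h • ((b - a) • z))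
            + (1 - h) • (s - a • y) + (-h) • (t - b • z) := by
          simp only; module
        rw [e]
        have i1 := norm_add₃_le (a := a • ((1 - h) • y - h • z) - h • ((b - a) • z))
          (b := (1 - h) • (s - a • y)) (c := (-h) • (t - b • z))
        have i2 := norm_sub_le (a • ((1 - h) • y - h • z)) (h • ((b - a) • z))
        have i3 : ‖h • ((b - a) • z)‖ ≤ K * (2 * w) := by
          rw [norm_smul, norm_eq_abs]; gcongr
        have i4 : ‖(1 - h) • (s - a • y)‖ ≤ K * w := by
          rw [norm_smul, norm_eq_abs]; gcongr
        have i5 : ‖(-h) • (t - b • z)‖ ≤ K * w := by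
          rw [norm_smul, norm_eq_abs, abs_neg]; gcongr
        nlinarith)
  simpa using key

/-- Mollifications are nearly affine along the axis of the tube. -/
lemma U_affine (hψ : IsBump w M ψ) {c : Vec n → ℝ} (hc : BM c) {x : Vec n} {h K B : ℝ}
    (hx : ‖x‖ ≤ 1) (hh : |h| ≤ K)
    (hB : ∀ τ : ℝ, 0 ≤ τ → τ ≤ 1 → ‖Gd ψ c (-(h • (τ • x))) - Gd ψ c 0‖ ≤ B) :
    |U ψ c (-(h • x)) - U ψ c 0 + h * Gd ψ c 0 x| ≤ B * K := by
  have hB0 : 0 ≤ B := (norm_nonneg _).trans (hB 0 le_rfl zero_le_one)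
  have := (convex_segment (𝕜 := ℝ) (0 : Vec n) (-(h • x))).norm_image_sub_le_of_norm_hasFDerivWithin_le'
    (f := U ψ c) (f' := fun y => Gd ψ c y) (φ := Gd ψ c 0) (C := B)
    (fun y _ => by
      have := (U_hasFDerivAt hψ hc y).differentiableAt.hasFDerivAt
      exact this.hasFDerivWithinAt)
    (fun y hy => by
      rw [segment_eq_image'] at hy
      obtain ⟨τ, hτ, rfl⟩ := hy
      have := hB τ hτ.1 hτ.2
      convert this using 3
      simp only [sub_zero, zero_add]; congr 1; module)
    (left_mem_segment _ _ _) (right_mem_segment _ _ _)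
  simp only [sub_zero, map_neg, map_smul, smul_eq_mul, sub_neg_eq_add, norm_neg] at this
  rw [norm_eq_abs, norm_smul, norm_eq_abs] at this
  refine this.trans ?_
  have : |h| * ‖x‖ ≤ K * 1 := by
    have := abs_nonneg h
    gcongr
    linarith
  rw [mul_one] at this
  gcongr


/-- Averaging the Cauchy defect across the tube. -/
lemma avg_defect (hψ : IsBump w M ψ) {c₁ c₂ c₃ : Vec n → ℝ} (h1 : BM c₁) (h2 : BM c₂)
    (h3 : BM c₃) (h : ℝ) (s : Vec n) :
    ∫ ζ, defect c₁ c₂ c₃ (-(h • s) + ζ, -((1 - h) • s) - ζ) * ψ ζ =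
      U ψ c₁ (-(h • s)) + U ψ c₂ (-((1 - h) • s)) + c₃ s := by
  have e1 : ∫ ζ, c₁ (-(h • s) + ζ) * ψ ζ = U ψ c₁ (-(h • s)) := by
    rw [U, ← integral_add_left_eq_self (fun t => c₁ t * ψ (-(h • s) - t)) (-(h • s))]
    congr 1; ext ζ
    rw [show -(h • s) - (-(h • s) + ζ) = -ζ by abel, hψ.even]
  have e2 : ∫ ζ, c₂ (-((1 - h) • s) - ζ) * ψ ζ = U ψ c₂ (-((1 - h) • s)) := by
    rw [U, ← integral_sub_left_eq_self (fun t => c₂ t * ψ (-((1 - h) • s) - t)) volume (-((1 - h) • s))]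
    congr 1; ext ζ
    rw [show -((1 - h) • s) - (-((1 - h) • s) - ζ) = ζ by abel]
  have e3 : ∫ ζ, c₃ s * ψ ζ = c₃ s := by
    rw [integral_const_mul, hψ.int, mul_one]
  have i1 : Integrable fun ζ => c₁ (-(h • s) + ζ) * ψ ζ :=
    (h1.comp (measurable_const.add measurable_id)).integrable_mul hψ.integrable
  have i2 : Integrable fun ζ => c₂ (-((1 - h) • s) - ζ) * ψ ζ :=
    (h2.comp (measurable_const.sub measurable_id)).integrable_mul hψ.integrable
  have i3 : Integrable fun ζ => c₃ s * ψ ζ := hψ.integrable.const_mul _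
  have i12 : Integrable fun ζ => c₁ (-(h • s) + ζ) * ψ ζ + c₂ (-((1 - h) • s) - ζ) * ψ ζ := i1.add i2
  rw [← e1, ← e2, ← e3, ← integral_add i1 i2, e3, ← e3, ← integral_add i12 i3]
  congr 1; ext ζ
  have : -(-(h • s) + ζ) - (-((1 - h) • s) - ζ) = s := by rw [sub_smul, one_smul]; abel
  simp only [defect, this]
  ring

/-- Stability of the Cauchy functional equation on a tube: the third function is `L¹`-close to an
affine function whose linear part is the mollified gradient of the first at the origin. -/
lemma cauchy_stab (n : ℕ) {K W : ℝ} (hK : 1 ≤ K) (hW : 0 < W) : ∃ C : ℝ, 0 < C ∧ ∃ M : ℝ, 0 < M ∧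
    ∃ ψ : Vec n → ℝ, IsBump (W / (16 * K)) M ψ ∧ ∀ (h ϱ ε : ℝ) (c₁ c₂ c₃ : Vec n → ℝ),
      |h| ≤ K → |1 - h| ≤ K → W ≤ ϱ → ϱ ≤ 1 → 0 ≤ ε → BM c₁ → BM c₂ → BM c₃ →
      ∫⁻ p in tube n h ϱ W, ‖defect c₁ c₂ c₃ p‖ₑ ≤ ofReal ε →
      ‖Gd ψ c₁ 0 - Gd ψ c₂ 0‖ ≤ C * ε ∧
      ∫⁻ s in 𝔹[n] ϱ, ‖c₃ s - (Gd ψ c₁ 0 s - U ψ c₁ 0 - U ψ c₂ 0)‖ₑ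
        ≤ ofReal (C * ε) := by
  have hw : 0 < W / (16 * K) := by positivity
  set w := W / (16 * K) with hwdef
  have hWw : W = 16 * K * w := by rw [hwdef]; field_simp
  obtain ⟨M, hM, ψ, hψ⟩ := exists_bump n hw
  obtain ⟨N, hN⟩ := exists_nat_ge (K / w)
  have hN' : K ≤ N * w := by rwa [div_le_iff₀ hw] at hN
  set V := (volume (𝔹[n] 1)).toReal with hV
  set B₀ := 2 * M ^ 2
  refine ⟨B₀ + M + (2 * (2 * N * B₀ * K) + K * B₀) * V, by positivity, M, hM, ψ, hψ, ?_⟩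
  intro h ϱ ε c₁ c₂ c₃ hh hh' hWϱ hϱ hε h1 h2 h3 hS
  rw [hWw] at hS
  have hK0 : 0 < K := by linarith
  have hϱ0 : 0 < ϱ := by linarith
  have hw16 : 16 * w ≤ W := by rw [hWw]; nlinarith
  have hL : ‖Gd ψ c₁ 0 - Gd ψ c₂ 0‖ ≤ B₀ * ε := by
    refine Gd_pair hψ hM h1 h2 h3 hε hS fun s t hs ht => ?_
    rw [sub_zero] at hs ht
    constructor
    · have := norm_add_le s t
      simp only
      linarith
    · have i1 := norm_sub_le ((1 - h) • s) (h • t)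
      have i3 : ‖(1 - h) • s‖ ≤ K * w := by rw [norm_smul, norm_eq_abs]; gcongr
      have i4 : ‖h • t‖ ≤ K * w := by rw [norm_smul, norm_eq_abs]; gcongr
      simp only
      nlinarith
  set μ := 4 * w / ϱ with hμ
  have hμ0 : 0 < μ := by positivity
  have hμϱ : μ * ϱ = 4 * w := by rw [hμ]; field_simp
  have hμ1 : μ ≤ 1 := by rw [hμ, div_le_one hϱ0]; linarith
  have hμx : ∀ x : Vec n, ‖x‖ ≤ ϱ → ‖(1 - μ) • x‖ ≤ ϱ - 4 * w := by
    intro x hx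
    rw [norm_smul, norm_eq_abs, abs_of_nonneg (by linarith), ← hμϱ]
    nlinarith
  have hμx' : ∀ (k : ℝ) (x : Vec n), |k| ≤ K → ‖x‖ ≤ ϱ → ‖(k * μ) • x‖ ≤ 8 * K * w := by
    intro k x hk hx
    rw [norm_smul, norm_eq_abs, abs_mul, abs_of_pos hμ0]
    calc |k| * μ * ‖x‖ ≤ K * μ * ϱ := by gcongr
      _ = 4 * K * w := by rw [mul_assoc, hμϱ]; ring
      _ ≤ _ := by nlinarith
  have hG1 : ∀ x : Vec n, ‖x‖ ≤ ϱ → ‖Gd ψ c₁ (-(h • x)) - Gd ψ c₁ 0‖ ≤ 2 * N * (B₀ * ε) := by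
    intro x hx
    refine (chain_tube hψ hM h1 h2 h3 hε hK hh hh' hw hN' hS (y := -(h • x))
      (z := (h - 1 + μ) • x) ?_ ?_ ?_).1
    · rw [show -(h • x) + (h - 1 + μ) • x = -((1 - μ) • x) by module, norm_neg]; exact hμx x hx
    · rw [show (1 - h) • -(h • x) - h • (h - 1 + μ) • x = -((h * μ) • x) by module, norm_neg]
      exact hμx' h x hh hx
    · rw [norm_smul, norm_eq_abs]
      have : |h - 1 + μ| ≤ 2 * K := by
        rw [abs_le] at *; constructor <;> linarith
      nlinarith [abs_nonneg (h - 1 + μ), norm_nonneg x]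
  have hG2 : ∀ x : Vec n, ‖x‖ ≤ ϱ → ‖Gd ψ c₂ (-((1 - h) • x)) - Gd ψ c₂ 0‖ ≤ 2 * N * (B₀ * ε) := by
    intro x hx
    refine (chain_tube hψ hM h1 h2 h3 hε hK hh hh' hw hN' hS (y := (-h + μ) • x)
      (z := -((1 - h) • x)) ?_ ?_ ?_).2
    · rw [show (-h + μ) • x + -((1 - h) • x) = -((1 - μ) • x) by module, norm_neg]; exact hμx x hx
    · rw [show (1 - h) • (-h + μ) • x - h • -((1 - h) • x) = (((1 - h) * μ) • x) by module]
      exact hμx' (1 - h) x hh' hx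
    · rw [norm_neg, norm_smul, norm_eq_abs]
      nlinarith [abs_nonneg (1 - h), norm_nonneg x]
  have hτ : ∀ x : Vec n, ‖x‖ ≤ ϱ → ∀ τ : ℝ, 0 ≤ τ → τ ≤ 1 → ‖τ • x‖ ≤ ϱ := by
    intro x hx τ h0 h1
    rw [norm_smul, norm_eq_abs, abs_of_nonneg h0]
    nlinarith [norm_nonneg x]
  set Q := (2 * (2 * N * B₀ * K) + K * B₀) * ε with hQ
  have hQ0 : 0 ≤ Q := by positivity
  have hpt : ∀ x : Vec n, ‖x‖ ≤ ϱ →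
      |U ψ c₁ (-(h • x)) + U ψ c₂ (-((1 - h) • x)) + (Gd ψ c₁ 0 x - U ψ c₁ 0 - U ψ c₂ 0)| ≤ Q := by
    intro x hx
    have a1 := U_affine hψ h1 (hx.trans hϱ) hh (fun τ t0 t1 => hG1 _ (hτ x hx τ t0 t1))
    have a2 := U_affine hψ h2 (hx.trans hϱ) hh' (fun τ t0 t1 => hG2 _ (hτ x hx τ t0 t1))
    have a3 : |(1 - h) * (Gd ψ c₁ 0 x - Gd ψ c₂ 0 x)| ≤ K * (B₀ * ε) := by
      rw [abs_mul]
      have := (Gd ψ c₁ 0 - Gd ψ c₂ 0).le_opNorm x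
      rw [ContinuousLinearMap.sub_apply, norm_eq_abs] at this
      have h3 : |Gd ψ c₁ 0 x - Gd ψ c₂ 0 x| ≤ B₀ * ε := by
        refine this.trans ((mul_le_mul hL (hx.trans hϱ) (norm_nonneg _) (by positivity)).trans ?_)
        linarith
      gcongr
    have e : U ψ c₁ (-(h • x)) + U ψ c₂ (-((1 - h) • x)) + (Gd ψ c₁ 0 x - U ψ c₁ 0 - U ψ c₂ 0)
      = (U ψ c₁ (-(h • x)) - U ψ c₁ 0 + h * Gd ψ c₁ 0 x) +
        (U ψ c₂ (-((1 - h) • x)) - U ψ c₂ 0 + (1 - h) * Gd ψ c₂ 0 x) +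
        (1 - h) * (Gd ψ c₁ 0 x - Gd ψ c₂ 0 x) := by ring
    rw [e, hQ]
    have := abs_add_three (U ψ c₁ (-(h • x)) - U ψ c₁ 0 + h * Gd ψ c₁ 0 x)
      (U ψ c₂ (-((1 - h) • x)) - U ψ c₂ 0 + (1 - h) * Gd ψ c₂ 0 x)
      ((1 - h) * (Gd ψ c₁ 0 x - Gd ψ c₂ 0 x))
    linarith
  constructor
  · refine hL.trans ?_
    gcongr
    have : 0 ≤ (2 * (2 * N * B₀ * K) + K * B₀) * V := by positivity
    linarith
  set D : Vec n → Vec n → ℝ := fun s ζ => defect c₁ c₂ c₃ (-(h • s) + ζ, -((1 - h) • s) - ζ)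
  have hb : ∀ s : Vec n, ‖s‖ ≤ ϱ → ‖c₃ s - (Gd ψ c₁ 0 s - U ψ c₁ 0 - U ψ c₂ 0)‖ₑ ≤
      ofReal M * (∫⁻ ζ in 𝔹[n] W, ‖D s ζ‖ₑ) + ofReal Q := by
    intro s hs
    have e := avg_defect hψ h1 h2 h3 h s
    have e' : c₃ s - (Gd ψ c₁ 0 s - U ψ c₁ 0 - U ψ c₂ 0) = (∫ ζ, D s ζ * ψ ζ) -
      (U ψ c₁ (-(h • s)) + U ψ c₂ (-((1 - h) • s)) + (Gd ψ c₁ 0 s - U ψ c₁ 0 - U ψ c₂ 0)) := by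
      rw [e]; ring
    rw [e']
    refine (enorm_sub_le).trans (add_le_add ?_ ?_)
    · refine (enorm_integral_le_lintegral_enorm _).trans ?_
      rw [← lintegral_const_mul' _ _ ofReal_ne_top,
        ← lintegral_indicator measurableSet_closedBall]
      refine lintegral_mono fun ζ => ?_
      by_cases hζ : ‖ζ‖ ≤ W
      · rw [indicator_of_mem (by simpa using hζ), enorm_mul, mul_comm]
        gcongr
        rw [enorm_eq_ofReal_abs]
        exact ofReal_le_ofReal (hψ.bd ζ)
      · have : ψ ζ = 0 := hψ.supp ζ (by linarith)
        simp [this]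
    · rw [enorm_eq_ofReal_abs]
      exact ofReal_le_ofReal (hpt s hs)
  have hdm : Measurable fun p : Vec n × Vec n => ‖defect c₁ c₂ c₃ p‖ₑ :=
    (measurable_defect h1.1 h2.1 h3.1).enorm
  calc ∫⁻ s in 𝔹[n] ϱ, ‖c₃ s - (Gd ψ c₁ 0 s - U ψ c₁ 0 - U ψ c₂ 0)‖ₑ
      ≤ ∫⁻ s in 𝔹[n] ϱ, (ofReal M *
        (∫⁻ ζ in 𝔹[n] W, ‖D s ζ‖ₑ) + ofReal Q) :=
        setLIntegral_mono' measurableSet_closedBall fun s hs => hb s (by simpa using hs)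
    _ = ofReal M * (∫⁻ p in tube n h ϱ W, ‖defect c₁ c₂ c₃ p‖ₑ) +
        ofReal Q * volume (𝔹[n] ϱ) := by
        rw [lintegral_add_right _ measurable_const, lintegral_const_mul' _ _ ofReal_ne_top,
          setLIntegral_const, lintegral_tube _ _ _ hdm]
    _ ≤ ofReal M * ofReal ε + ofReal Q * ofReal V := by
        rw [hWw]
        gcongr
        rw [hV, ofReal_toReal ball_ne_top]
        exact measure_mono (cball_mono hϱ)
    _ = ofReal (M * ε + Q * V) := by
        rw [← ofReal_mul hM.le, ← ofReal_mul hQ0, ← ofReal_add (by positivity)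
          (by positivity)]
    _ ≤ _ := by
        apply ofReal_le_ofReal
        rw [hQ]
        have : 0 ≤ B₀ * ε := by positivity
        nlinarith

/-! ### Slices of near-extremizers -/

/-- The one-dimensional rearrangement inequality for bounded sets. -/
lemma riesz_line {A B C : Set ℝ} (hA : MeasurableSet A) (hB : MeasurableSet B) (hC : MeasurableSet C)
    {R : ℝ} (bA : A ⊆ Icc (-R) R) (bB : B ⊆ Icc (-R) R) (bC : C ⊆ Icc (-R) R) :
    TT A B C ≤ TT (J 0 (volume.real A / 2)) (J 0 (volume.real B / 2)) (J 0 (volume.real C / 2)) := by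
  have hm : Measurable fun x : Vec 1 => x 0 := by fun_prop
  let lift : Set ℝ → Set (Vec (0 + 1)) := fun A => {x | x 0 ∈ A}
  have hsl : ∀ (A : Set ℝ) (y : Vec 0), sl (lift A) y = A := fun A y => rfl
  have hml : ∀ {A : Set ℝ}, MeasurableSet A → MeasurableSet (lift A) := fun hA => hm hA
  have hbl : ∀ {A : Set ℝ}, A ⊆ Icc (-R) R → lift A ⊆ 𝔹 R := by
    intro A hA x hx
    have h1 : |x 0| ≤ R := abs_le.2 (hA hx)
    rw [mem_closedBall_zero_iff, EuclideanSpace.norm_eq]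
    simpa [Real.sqrt_sq_eq_abs] using h1
  have hT : ∀ {A B C : Set (Vec (0 + 1))}, MeasurableSet A → MeasurableSet B → MeasurableSet C →
      TT A B C = TT (sl A 0) (sl B 0) (sl C 0) := by
    intro A B C hA hB hC
    rw [TT_slices hA hB hC]
    have hd : (volume : Measure (Vec 0)) = Measure.dirac 0 := volume_euclideanSpace_eq_dirac _
    rw [hd, lintegral_dirac, lintegral_dirac]
    simp
  have key := T3_le_St (n := 0) ![lift A, lift B, lift C]
    (by intro j; fin_cases j <;> simp [hml hA, hml hB, hml hC]) (R := R)
    (by intro j; fin_cases j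
        · exact hbl bA
        · exact hbl bB
        · exact hbl bC)
  simp only [T3, Matrix.cons_val_zero, Matrix.cons_val_one, Matrix.cons_val] at key
  rw [hT (hml hA) (hml hB) (hml hC), hT (measurableSet_St (hml hA)) (measurableSet_St (hml hB))
    (measurableSet_St (hml hC)), sl_St, sl_St, sl_St, hsl, hsl, hsl] at key
  exact key

lemma real_eq_alp_bet {A : Set ℝ} (hA : MeasurableSet A) (hf : volume A ≠ ∞) :
    volume.real A = alp A + bet A := by
  rw [alp, bet, ← measureReal_inter_add_sdiff (s := A) (t := Ioi 0) measurableSet_Ioi hf]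
  congr 1
  refine measureReal_congr ?_
  have h0 : ∀ᵐ x : ℝ, x ≠ 0 := by simp [ae_iff]
  filter_upwards [h0] with x hx
  apply propext
  show x ∈ A \ Ioi 0 ↔ x ∈ A ∩ Iio 0
  simp only [mem_sdiff, mem_Ioi, not_lt, mem_inter_iff, mem_Iio]
  exact and_congr_right fun _ => ⟨fun h => lt_of_le_of_ne h hx, le_of_lt⟩

/-- Centre of the interval into which a slice is compressed. -/
def cc (E : Set 𝕍) (y : Vec n) : ℝ := cen (sl E y)

/-- Measure of the part of a slice which moves when it is compressed to an interval. -/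
def qq (E : Set 𝕍) (y : Vec n) : ℝ := volume.real (sl E y ∆ (Iab (sl E y)))

lemma measurable_alp {E : Set 𝕍} (hE : MeasurableSet E) :
    Measurable fun y => alp (sl E y) := by
  have h : MeasurableSet (E ∩ {x | x 0 ∈ Ioi (0 : ℝ)}) :=
    hE.inter ((by fun_prop : Measurable fun x : 𝕍 => x 0) measurableSet_Ioi)
  exact (measurable_vol_sl h).ennreal_toReal

lemma measurable_bet {E : Set 𝕍} (hE : MeasurableSet E) :
    Measurable fun y => bet (sl E y) := by
  have h : MeasurableSet (E ∩ {x | x 0 ∈ Iio (0 : ℝ)}) :=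
    hE.inter ((by fun_prop : Measurable fun x : 𝕍 => x 0) measurableSet_Iio)
  exact (measurable_vol_sl h).ennreal_toReal

lemma measurable_cc {E : Set 𝕍} (hE : MeasurableSet E) : Measurable (cc E) :=
  ((measurable_alp hE).sub (measurable_bet hE)).div_const 2

/-- The set whose slices are the compressed slices of `E`. -/
def Cmp (E : Set 𝕍) : Set 𝕍 := {x | x 0 ∈ Iab (sl E (vtail x))}

lemma sl_Cmp (E : Set 𝕍) (y : Vec n) : sl (Cmp E) y = Iab (sl E y) := by
  ext t
  show vcons t y ∈ Cmp E ↔ _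
  have : vtail (vcons t y) = y := by ext i; simp [vtail, vcons]
  simp only [Cmp, mem_setOf_eq, this]
  simp [vcons]

lemma measurableSet_Cmp {E : Set 𝕍} (hE : MeasurableSet E) : MeasurableSet (Cmp E) := by
  have h0 : Measurable fun x : 𝕍 => x 0 := by fun_prop
  have h1 : Measurable fun x : 𝕍 => -bet (sl E (vtail x)) :=
    ((measurable_bet hE).comp measurable_vtail).neg
  have h2 : Measurable fun x : 𝕍 => alp (sl E (vtail x)) :=
    (measurable_alp hE).comp measurable_vtail
  have e : Cmp E = {x : 𝕍 | -bet (sl E (vtail x)) ≤ x 0} ∩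
    {x : 𝕍 | x 0 < alp (sl E (vtail x))} := rfl
  rw [e]
  exact (measurableSet_le h1 h0).inter (measurableSet_lt h0 h2)

lemma measurable_qq {E : Set 𝕍} (hE : MeasurableSet E) : Measurable (qq E) := by
  have := (measurable_vol_sl (hE.symmDiff (measurableSet_Cmp hE))).ennreal_toReal
  simp_rw [sl_symmDiff, sl_Cmp] at this
  exact this

lemma sl_subset_Icc {E : Set 𝕍} {R : ℝ} (hE : E ⊆ 𝔹 R) (y : Vec n) :
    sl E y ⊆ Icc (-R) R := by
  intro t ht
  have h1 := mem_closedBall_zero_iff.1 (hE ht)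
  exact abs_le.1 ((abs_le_norm_vcons t y).trans h1)

lemma bm_cc {E : Set 𝕍} (hE : MeasurableSet E) {R : ℝ} (hR : E ⊆ 𝔹 R) :
    BM (cc E) := by
  refine ⟨measurable_cc hE, 2 * |R|, fun y => ?_⟩
  have hb : volume (sl E y) ≠ ∞ := finSl_of_bdd hR y
  have e := real_eq_alp_bet (measurableSet_sl hE y) hb
  have h1 : volume.real (sl E y) ≤ 2 * |R| := by
    refine (measureReal_mono (sl_subset_Icc hR y) measure_Icc_lt_top.ne).trans ?_
    rw [Real.volume_real_Icc]
    refine max_le ?_ (by positivity)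
    have := le_abs_self R
    linarith
  have a0 := alp_nonneg (sl E y)
  have b0 := bet_nonneg (sl E y)
  rw [cc, cen, abs_le]
  constructor <;> linarith

lemma hlf_eq_len {E : Set 𝕍} (hE : MeasurableSet E) (hF : FinSl E) (y : Vec n) :
    hlf (sl E y) = len E y / 2 := by
  have := real_eq_alp_bet (measurableSet_sl hE y) (hF y)
  rw [hlf, ← this]; rfl

/-- Integrated gain of Steiner symmetrization over a set of pairs of slices. -/
lemma gain_int {E₁ E₂ E₃ : Set 𝕍} (h1 : MeasurableSet E₁) (h2 : MeasurableSet E₂)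
    (h3 : MeasurableSet E₃) {R : ℝ} (b1 : E₁ ⊆ 𝔹 R)
    (b2 : E₂ ⊆ 𝔹 R) (b3 : E₃ ⊆ 𝔹 R) {σ : ℝ} (hσ : 0 < σ)
    {S : Set (Vec n × Vec n)} (hS : MeasurableSet S)
    (hgood : ∀ p ∈ S, ∃ R₁ R₂ R₃ : ℝ, Shell1 R₁ σ (sl E₁ p.1) ∧ Shell1 R₂ σ (sl E₂ p.2) ∧
      Shell1 R₃ σ (sl E₃ (-p.1 - p.2)) ∧ R₂ + 10 * σ ≤ R₁ + R₃ ∧ R₃ + 10 * σ ≤ R₁ + R₂ ∧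
      R₁ + 10 * σ ≤ R₂ + R₃) :
    TT E₁ E₂ E₃ + ∫⁻ p in S, ofReal (defect (cc E₁) (cc E₂) (cc E₃) p ^ 2 +
      qq E₃ (-p.1 - p.2) ^ 2 / 16) ≤ TT (St E₁) (St E₂) (St E₃) := by
  have f1 := finSl_of_bdd b1
  have f2 := finSl_of_bdd b2
  have f3 := finSl_of_bdd b3
  set g : Vec n × Vec n → ℝ≥0∞ := S.indicator fun p =>
    ofReal (defect (cc E₁) (cc E₂) (cc E₃) p ^ 2 + qq E₃ (-p.1 - p.2) ^ 2 / 16) with hg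
  have hgm : Measurable g := by
    refine Measurable.indicator (Measurable.ennreal_ofReal (Measurable.add ?_ ?_)) hS
    · exact (measurable_defect (measurable_cc h1) (measurable_cc h2) (measurable_cc h3)).pow_const 2
    · exact (((measurable_qq h3).comp (measurable_fst.neg.sub measurable_snd)).pow_const 2).div_const _
  rw [← lintegral_indicator hS, ← hg, Measure.volume_eq_prod, lintegral_prod _ hgm.aemeasurable,
    TT_slices h1 h2 h3, TT_slices (measurableSet_St h1) (measurableSet_St h2) (measurableSet_St h3)]
  refine (le_lintegral_add _ _).trans (lintegral_mono fun y => ?_)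
  refine (le_lintegral_add _ _).trans (lintegral_mono fun z => ?_)
  simp only [sl_St]
  by_cases hp : (y, z) ∈ S
  · rw [hg, indicator_of_mem hp]
    obtain ⟨R₁, R₂, R₃, s1, s2, s3, m1, m2, m3⟩ := hgood _ hp
    have := TR_gain s1 s2 s3 hσ m1 m2 m3
    simp only at this
    rw [hlf_eq_len h1 f1, hlf_eq_len h2 f2, hlf_eq_len h3 f3] at this
    have n1 : ∀ {A B C : Set ℝ}, volume A ≠ ∞ → volume B ≠ ∞ → TT A B C ≠ ∞ := by
      intro A B C hA hB
      exact ne_top_of_le_ne_top (ENNReal.mul_ne_top hA hB) (TT_le_mul A B C)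
    have hn2 : TT (J 0 (len E₁ y / 2)) (J 0 (len E₂ z / 2)) (J 0 (len E₃ (-y - z) / 2)) ≠ ∞ :=
      n1 (by rw [volume_J]; exact ofReal_ne_top) (by rw [volume_J]; exact ofReal_ne_top)
    have hn1 : TT (sl E₁ y) (sl E₂ z) (sl E₃ (-y - z)) ≠ ∞ := n1 (f1 y) (f2 z)
    rw [← ofReal_toReal hn1, ← ofReal_toReal hn2, ← ofReal_add
      toReal_nonneg (by positivity)]
    apply ofReal_le_ofReal
    refine le_trans ?_ this
    simp only [TR, defect, cc, qq]
    have p1 := sq_nonneg (volume.real (sl E₁ y ∆ (Iab (sl E₁ y))))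
    have p2 := sq_nonneg (volume.real (sl E₂ z ∆ (Iab (sl E₂ z))))
    linarith
  · rw [hg, indicator_of_notMem hp, add_zero]
    exact riesz_line (measurableSet_sl h1 _) (measurableSet_sl h2 _) (measurableSet_sl h3 _)
      (sl_subset_Icc b1 _) (sl_subset_Icc b2 _) (sl_subset_Icc b3 _)

/-- Quantitative strict admissibility of three normalized radii. -/
structure Adm (τ r₁ r₂ r₃ : ℝ) : Prop where
  pos : 0 < τ
  l1 : τ ≤ r₁
  l2 : τ ≤ r₂
  l3 : τ ≤ r₃
  u1 : r₁ ≤ 1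
  u2 : r₂ ≤ 1
  u3 : r₃ ≤ 1
  t1 : r₁ + τ ≤ r₂ + r₃
  t2 : r₂ + τ ≤ r₃ + r₁
  t3 : r₃ + τ ≤ r₁ + r₂

lemma Adm.rot {τ r₁ r₂ r₃ : ℝ} (h : Adm τ r₁ r₂ r₃) : Adm τ r₂ r₃ r₁ :=
  ⟨h.pos, h.l2, h.l3, h.l1, h.u2, h.u3, h.u1, h.t2, h.t3, h.t1⟩

lemma Adm.le_one {τ r₁ r₂ r₃ : ℝ} (h : Adm τ r₁ r₂ r₃) : τ ≤ 1 := h.l1.trans h.u1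

lemma diff_core {X Y Q μ : ℝ} (hX : 0 ≤ X) (hY : 0 ≤ Y) (hXY : X + Y ≤ 3) (hQ : Q ≤ X ^ 2 - Y ^ 2)
    (hμ0 : 0 ≤ μ) (hμ : 3 * μ ≤ Q) : Y + μ ≤ X := by
  have h : Y ≤ X := le_of_sq_le_sq (by linarith) hX
  nlinarith

lemma margin_one {τ a p r H S₁ S₂ μ : ℝ} (ha : 0 ≤ a) (ha1 : a ≤ 1) (hτ : τ ≤ r) (hτ0 : 0 < τ)
    (hr : r ≤ 1) (hH : 0 ≤ H) (hp : |p| ≤ 1) (hS₁ : 0 ≤ S₁) (hS₂ : 0 ≤ S₂) (hS₁' : S₁ ≤ 1)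
    (hS₂' : S₂ ≤ 1) (e1 : S₁ ^ 2 = H + a ^ 2 * p ^ 2) (e2 : S₂ ^ 2 = H + a ^ 2 * (r - p) ^ 2)
    (hμ0 : 0 ≤ μ) (hμ : μ ≤ a * τ * H / 3) : S₂ + μ ≤ S₁ + a * r := by
  have hap : |a * p| ≤ 1 := by
    rw [abs_mul, abs_of_nonneg ha]; nlinarith [abs_nonneg p]
  have hprod : (S₁ - |a * p|) * (S₁ + |a * p|) = H := by
    have := sq_abs (a * p)
    nlinarith
  have hq : H / 2 ≤ S₁ - |a * p| := by
    by_contra hc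
    push Not at hc
    have : 0 ≤ S₁ - |a * p| := by
      by_contra hcc
      push Not at hcc
      nlinarith
    nlinarith
  have hq' : H / 2 ≤ S₁ + a * p := by
    have := neg_abs_le (a * p); linarith
  have hd : (S₁ + a * r) ^ 2 - S₂ ^ 2 = 2 * a * r * (a * p + S₁) := by
    rw [e2]
    linear_combination e1
  have har : 0 ≤ a * r := mul_nonneg ha (by linarith)
  have hd2 : a * τ * H ≤ (S₁ + a * r) ^ 2 - S₂ ^ 2 := by
    rw [hd]
    have : a * τ ≤ a * r := mul_le_mul_of_nonneg_left hτ ha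
    nlinarith
  have har1 : a * r ≤ 1 := by nlinarith
  exact diff_core (by linarith) hS₂ (by linarith) hd2 hμ0 (by linarith)

lemma margin_two {a p r H S₁ S₂ μ : ℝ} (ha : 0 ≤ a) (ha1 : a ≤ 1) (hr0 : 0 ≤ r) (hr : r ≤ 1)
    (hH : 0 ≤ H) (hS₁ : 0 ≤ S₁) (hS₂ : 0 ≤ S₂) (hS₁' : S₁ ≤ 1)
    (hS₂' : S₂ ≤ 1) (e1 : S₁ ^ 2 = H + a ^ 2 * p ^ 2) (e2 : S₂ ^ 2 = H + a ^ 2 * (r - p) ^ 2)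
    (hμ0 : 0 ≤ μ) (hμ : μ ≤ 2 * H / 3) : a * r + μ ≤ S₁ + S₂ := by
  have h12 : a ^ 2 * (p * (r - p)) ≤ S₁ * S₂ := by
    refine le_of_sq_le_sq ?_ (mul_nonneg hS₁ hS₂)
    rw [mul_pow S₁, e1, e2]
    have := mul_nonneg hH hH
    have := mul_nonneg hH (mul_nonneg (sq_nonneg a) (sq_nonneg p))
    have := mul_nonneg hH (mul_nonneg (sq_nonneg a) (sq_nonneg (r - p)))
    nlinarith
  have hd : 2 * H ≤ (S₁ + S₂) ^ 2 - (a * r) ^ 2 := by nlinarith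
  have har1 : a * r ≤ 1 := by nlinarith
  have har : 0 ≤ a * r := mul_nonneg ha hr0
  exact diff_core (by linarith) har (by linarith) hd hμ0 (by linarith)

/-- The position along the axis determined by the radii. -/
def hpos (r₁ r₂ r₃ : ℝ) : ℝ := (r₃ ^ 2 + r₁ ^ 2 - r₂ ^ 2) / (2 * r₃ ^ 2)

lemma hpos_spec {τ r₁ r₂ r₃ : ℝ} (h : Adm τ r₁ r₂ r₃) :
    3 / 4 * τ ^ 4 ≤ r₁ ^ 2 - (hpos r₁ r₂ r₃ * r₃) ^ 2 ∧
    r₁ ^ 2 - (hpos r₁ r₂ r₃ * r₃) ^ 2 = r₂ ^ 2 - ((1 - hpos r₁ r₂ r₃) * r₃) ^ 2 ∧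
    |hpos r₁ r₂ r₃| ≤ 1 / τ ∧ |1 - hpos r₁ r₂ r₃| ≤ 1 / τ := by
  have hτ := h.pos
  have hr3 : 0 < r₃ := lt_of_lt_of_le h.pos h.l3
  have hp : hpos r₁ r₂ r₃ * (2 * r₃ ^ 2) = r₃ ^ 2 + r₁ ^ 2 - r₂ ^ 2 := by
    rw [hpos]; field_simp
  set k := hpos r₁ r₂ r₃ with hk
  have e2 : r₁ ^ 2 - (k * r₃) ^ 2 = r₂ ^ 2 - ((1 - k) * r₃) ^ 2 := by linear_combination -hp
  have her : 4 * r₃ ^ 2 * (r₁ ^ 2 - (k * r₃) ^ 2) =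
      ((r₁ + r₂ + r₃) * (r₂ + r₃ - r₁)) * ((r₃ + r₁ - r₂) * (r₁ + r₂ - r₃)) := by
    have : 4 * r₃ ^ 2 * (r₁ ^ 2 - (k * r₃) ^ 2) = 4 * r₃ ^ 2 * r₁ ^ 2 - (k * (2 * r₃ ^ 2)) ^ 2 := by ring
    rw [this, hp]; ring
  have h1 : τ ≤ r₂ + r₃ - r₁ := by linarith [h.t1]
  have h2 : τ ≤ r₃ + r₁ - r₂ := by linarith [h.t2]
  have h3 : τ ≤ r₁ + r₂ - r₃ := by linarith [h.t3]
  have h4 : 3 * τ ≤ r₁ + r₂ + r₃ := by linarith [h.l1, h.l2, h.l3]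
  have hl : (3 * τ * τ) * (τ * τ) ≤ 4 * r₃ ^ 2 * (r₁ ^ 2 - (k * r₃) ^ 2) := by
    have := h.pos
    rw [her]
    refine mul_le_mul (mul_le_mul h4 h1 hτ.le (by linarith)) (mul_le_mul h2 h3 hτ.le (by linarith))
      (by positivity) (mul_nonneg (by linarith) (by linarith))
  have hH : 3 / 4 * τ ^ 4 ≤ r₁ ^ 2 - (k * r₃) ^ 2 := by
    have hr1 : r₃ ^ 2 ≤ 1 := by nlinarith [h.u3]
    have hpos : 0 < r₁ ^ 2 - (k * r₃) ^ 2 := by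
      by_contra hc
      push Not at hc
      have : 0 < (3 * τ * τ) * (τ * τ) := by positivity
      nlinarith [sq_nonneg r₃]
    nlinarith
  have hH0 : 0 ≤ r₁ ^ 2 - (k * r₃) ^ 2 := le_trans (by positivity) hH
  refine ⟨hH, e2, ?_, ?_⟩
  · rw [le_div_iff₀ hτ]
    have : |k| * r₃ ≤ 1 := by
      have h5 : |k * r₃| ≤ 1 := by
        rw [abs_le_one_iff_mul_self_le_one]
        nlinarith [h.u1, h.l1]
      rwa [abs_mul, abs_of_pos hr3] at h5
    nlinarith [abs_nonneg k, h.l3]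
  · rw [le_div_iff₀ hτ]
    have : |1 - k| * r₃ ≤ 1 := by
      have h5 : |(1 - k) * r₃| ≤ 1 := by
        rw [abs_le_one_iff_mul_self_le_one]
        nlinarith [h.u2, h.l2]
      rwa [abs_mul, abs_of_pos hr3] at h5
    nlinarith [abs_nonneg (1 - k), h.l3]

lemma sqrt_close {a b θ : ℝ} (hθ : 0 ≤ θ) (h : |a - b| ≤ θ ^ 2) : |√a - √b| ≤ θ := by
  rw [abs_le] at h ⊢
  have h1 : √a ≤ √b + θ := by
    refine (Real.sqrt_le_sqrt (by linarith : a ≤ b + θ ^ 2)).trans ?_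
    rcases le_total 0 b with hb | hb
    · rw [Real.sqrt_le_left (by positivity)]
      nlinarith [sq_sqrt hb, sqrt_nonneg b]
    · rw [Real.sqrt_eq_zero_of_nonpos hb, zero_add]
      rw [Real.sqrt_le_left hθ]; linarith
  have h2 : √b ≤ √a + θ := by
    refine (Real.sqrt_le_sqrt (by linarith : b ≤ a + θ ^ 2)).trans ?_
    rcases le_total 0 a with hb | hb
    · rw [Real.sqrt_le_left (by positivity)]
      nlinarith [sq_sqrt hb, sqrt_nonneg a]
    · rw [Real.sqrt_eq_zero_of_nonpos hb, zero_add]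
      rw [Real.sqrt_le_left hθ]; linarith
  constructor <;> linarith

set_option maxHeartbeats 400000 in
/-- Near the axis the half-chords of three admissible balls satisfy strict triangle inequalities. -/
lemma margins {τ r₁ r₂ r₃ : ℝ} (h : Adm τ r₁ r₂ r₃) {κ x a₁ a₂ m : ℝ} (hκ : 0 < κ) (hκ1 : κ ≤ 1)
    (hx0 : 0 ≤ x) (hx : x ≤ r₃ * (1 - κ)) (hm0 : 0 ≤ m) (hm : m = √κ * τ ^ 5 / 4)
    (h1 : |a₁ ^ 2 - (hpos r₁ r₂ r₃ * x) ^ 2| ≤ (m / 4) ^ 2)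
    (h2 : |a₂ ^ 2 - ((1 - hpos r₁ r₂ r₃) * x) ^ 2| ≤ (m / 4) ^ 2) :
    √(r₂ ^ 2 - a₂ ^ 2) + m / 2 ≤ √(r₁ ^ 2 - a₁ ^ 2) + √(r₃ ^ 2 - x ^ 2) ∧
    √(r₃ ^ 2 - x ^ 2) + m / 2 ≤ √(r₁ ^ 2 - a₁ ^ 2) + √(r₂ ^ 2 - a₂ ^ 2) ∧
    √(r₁ ^ 2 - a₁ ^ 2) + m / 2 ≤ √(r₂ ^ 2 - a₂ ^ 2) + √(r₃ ^ 2 - x ^ 2) ∧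
    (m / 2) ^ 2 ≤ r₁ ^ 2 - a₁ ^ 2 ∧ (m / 2) ^ 2 ≤ r₂ ^ 2 - a₂ ^ 2 ∧ (m / 2) ^ 2 ≤ r₃ ^ 2 - x ^ 2 := by
  obtain ⟨hH, he, -, -⟩ := hpos_spec h
  have hr1 : r₁ ^ 2 ≤ 1 := pow_le_one₀ (h.pos.le.trans h.l1) h.u1
  have hr2 : r₂ ^ 2 ≤ 1 := pow_le_one₀ (h.pos.le.trans h.l2) h.u2
  have hτ := h.pos
  have hτ1 := h.le_one
  have hr3 : 0 < r₃ := lt_of_lt_of_le h.pos h.l3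
  set k := hpos r₁ r₂ r₃ with hk
  set H := r₁ ^ 2 - (k * r₃) ^ 2 with hHdef
  have hH0 : 0 ≤ H := le_trans (by positivity) hH
  set u := x / r₃ with hu
  have hxu : x = u * r₃ := by rw [hu]; field_simp
  have hu0 : 0 ≤ u := by positivity
  have hu1 : u ≤ 1 - κ := by rw [hu, div_le_iff₀ hr3]; linarith
  have hau : κ ≤ 1 - u ^ 2 := by
    have : u ^ 2 ≤ (1 - κ) ^ 2 := by gcongr
    nlinarith only [this, hκ, hκ1]
  set a := √(1 - u ^ 2) with ha
  have ha2 : a ^ 2 = 1 - u ^ 2 := sq_sqrt (by linarith)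
  have ha0 : 0 ≤ a := sqrt_nonneg _
  have ha1 : a ≤ 1 := Real.sqrt_le_iff.2 ⟨zero_le_one, by linarith [sq_nonneg u]⟩
  have hsκ : √κ ≤ a := Real.sqrt_le_sqrt hau
  have hsκ0 : 0 ≤ √κ := sqrt_nonneg _
  have hsκ1 : √κ ≤ 1 := Real.sqrt_le_iff.2 ⟨zero_le_one, by linarith⟩
  set S₁ := √(r₁ ^ 2 - (k * x) ^ 2) with hS₁
  set S₂ := √(r₂ ^ 2 - ((1 - k) * x) ^ 2) with hS₂
  have q1 : r₁ ^ 2 - (k * x) ^ 2 = H + a ^ 2 * (k * r₃) ^ 2 := by rw [ha2, hHdef, hxu]; ring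
  have q2 : r₂ ^ 2 - ((1 - k) * x) ^ 2 = H + a ^ 2 * (r₃ - k * r₃) ^ 2 := by rw [ha2, he, hxu]; ring
  have e1 : S₁ ^ 2 = H + a ^ 2 * (k * r₃) ^ 2 := by
    rw [hS₁, q1, sq_sqrt (by positivity)]
  have e2 : S₂ ^ 2 = H + a ^ 2 * (r₃ - k * r₃) ^ 2 := by
    rw [hS₂, q2, sq_sqrt (by positivity)]
  have e3 : √(r₃ ^ 2 - x ^ 2) = a * r₃ := by
    rw [show r₃ ^ 2 - x ^ 2 = (a * r₃) ^ 2 by rw [mul_pow, ha2, hxu]; ring,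
      Real.sqrt_sq (by positivity)]
  have s1 : S₁ ≤ 1 :=
    Real.sqrt_le_iff.2 ⟨zero_le_one, by linarith [sq_nonneg (k * x)]⟩
  have s2 : S₂ ≤ 1 :=
    Real.sqrt_le_iff.2 ⟨zero_le_one, by linarith [sq_nonneg ((1 - k) * x)]⟩
  have hp1 : |k * r₃| ≤ 1 := by
    rw [abs_le_one_iff_mul_self_le_one]
    calc (k * r₃) * (k * r₃) = r₁ ^ 2 - H := by rw [hHdef]; ring
      _ ≤ 1 := by linarith
  have hp2 : |r₃ - k * r₃| ≤ 1 := by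
    rw [abs_le_one_iff_mul_self_le_one]
    calc (r₃ - k * r₃) * (r₃ - k * r₃) = r₂ ^ 2 - (r₂ ^ 2 - ((1 - k) * r₃) ^ 2) := by ring
      _ ≤ 1 := by rw [← he]; linarith
  have hm1 : m ≤ a * τ * H / 3 := by
    rw [hm]
    calc √κ * τ ^ 5 / 4 ≤ a * τ ^ 5 / 4 := by gcongr
      _ = a * τ * (3 / 4 * τ ^ 4) / 3 := by ring
      _ ≤ _ := by gcongr
  have hm2 : m ≤ 2 * H / 3 := by
    have : a * τ * H ≤ 1 * 1 * H := by gcongr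
    linarith
  have M1 := margin_one ha0 ha1 h.l3 hτ h.u3 hH0 hp1 (sqrt_nonneg _) (sqrt_nonneg _) s1 s2
    e1 e2 hm0 hm1
  have M2 := margin_two ha0 ha1 hr3.le h.u3 hH0 (sqrt_nonneg _) (sqrt_nonneg _) s1 s2
    e1 e2 hm0 hm2
  have M3 := margin_one ha0 ha1 h.l3 hτ h.u3 hH0 hp2 (sqrt_nonneg _) (sqrt_nonneg _) s2 s1
    e2 (by rw [e1]; ring) hm0 hm1
  have c1 : |√(r₁ ^ 2 - a₁ ^ 2) - S₁| ≤ m / 4 := by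
    refine sqrt_close (by positivity) ?_
    rw [abs_sub_comm]; convert h1 using 2; ring
  have c2 : |√(r₂ ^ 2 - a₂ ^ 2) - S₂| ≤ m / 4 := by
    refine sqrt_close (by positivity) ?_
    rw [abs_sub_comm]; convert h2 using 2; ring
  rw [abs_le] at c1 c2 h1 h2
  have hmH : m ^ 2 ≤ H := by
    have : H ≤ 1 := by linarith [sq_nonneg (k * r₃)]
    have hmm : m ≤ 1 := by linarith
    have : m ^ 2 ≤ m := by nlinarith only [hmm, hm0]
    linarith
  have hm3 : m ^ 2 ≤ r₃ ^ 2 - x ^ 2 := by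
    have e : r₃ ^ 2 - x ^ 2 = a ^ 2 * r₃ ^ 2 := by rw [ha2, hxu]; ring
    rw [e, ← mul_pow]
    have : m ≤ a * r₃ := by
      rw [hm]
      have : τ ^ 5 ≤ τ := by
        have := pow_le_of_le_one hτ.le hτ1 (n := 5) (by norm_num); exact this
      calc √κ * τ ^ 5 / 4 ≤ √κ * τ ^ 5 := by
            have : 0 ≤ √κ * τ ^ 5 := by positivity
            linarith
        _ ≤ a * r₃ := by
            have := h.l3
            gcongr
            linarith
    gcongr
  rw [e3]
  have g1 : 0 ≤ a ^ 2 * (k * r₃) ^ 2 := by positivity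
  have g2 : 0 ≤ a ^ 2 * (r₃ - k * r₃) ^ 2 := by positivity
  have z1 : (m / 2) ^ 2 = m ^ 2 / 4 := by ring
  have z2 : (m / 4) ^ 2 = m ^ 2 / 16 := by ring
  have z3 := sq_nonneg m
  rw [z1]
  rw [z2] at h1 h2
  refine ⟨by linarith, by linarith, by linarith, by linarith, by linarith, by linarith⟩

/-- A measurable set between two concentric balls of radii `r - η` and `r + η`. -/
def Shell {d : ℕ} (r η : ℝ) (E : Set (Vec d)) : Prop :=
  MeasurableSet E ∧ 𝔹 (r - η) ⊆ E ∧ E ⊆ 𝔹 (r + η)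

lemma shell_slice {r η σ : ℝ} {E : Set 𝕍} (hE : Shell r η E) (hη : 0 < η) (hηr : η ≤ r)
    (hr : r ≤ 1) (hσ : 0 < σ) (hση : 4 * η ≤ σ ^ 2) {y : Vec n} (hy : σ ^ 2 ≤ r ^ 2 - ‖y‖ ^ 2) :
    Shell1 (hgt r y) σ (sl E y) := by
  obtain ⟨hm, hin, hout⟩ := hE
  set R := hgt r y
  have hR0 : 0 ≤ R := hgt_nonneg _ _
  have hR2 : R ^ 2 = r ^ 2 - ‖y‖ ^ 2 := sq_sqrt (by nlinarith [sq_nonneg σ])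
  have hσR : σ ≤ R := le_of_sq_le_sq (by linarith) hR0
  refine ⟨measurableSet_sl hm y, fun t ht => ?_, fun t ht => ?_⟩
  · apply hin
    rw [mem_closedBall_zero_iff]
    refine le_of_sq_le_sq ?_ (by linarith)
    rw [norm_vcons_sq]
    have h1 : |t| ≤ R - σ := abs_le.2 ht
    have h2 : t ^ 2 ≤ (R - σ) ^ 2 := by
      rw [← sq_abs]; gcongr
    nlinarith
  · have h1 := mem_closedBall_zero_iff.1 (hout ht)
    have h2 : ‖vcons t y‖ ^ 2 ≤ (r + η) ^ 2 := by gcongr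
    rw [norm_vcons_sq] at h2
    apply abs_le.1
    refine le_of_sq_le_sq ?_ (by linarith)
    rw [sq_abs]
    nlinarith

lemma norm_sq_close {y s ζ : Vec n} {h K W : ℝ} (hK : 1 ≤ K) (hh : |h| ≤ K) (hs : ‖s‖ ≤ 1)
    (hW : W ≤ 1) (hζ : ‖ζ‖ ≤ W) (hy : y = -(h • s) + ζ) :
    |‖y‖ ^ 2 - (h * ‖s‖) ^ 2| ≤ 3 * K * W := by
  have e : (h * ‖s‖) ^ 2 = ‖-(h • s)‖ ^ 2 := by rw [norm_neg, norm_smul, norm_eq_abs, mul_pow, mul_pow, sq_abs]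
  have hhs : ‖-(h • s)‖ ≤ K := by
    rw [norm_neg, norm_smul, norm_eq_abs]
    nlinarith [abs_nonneg h, norm_nonneg s]
  have h1 : |‖y‖ - ‖-(h • s)‖| ≤ W := by
    refine (abs_norm_sub_norm_le _ _).trans ?_
    rw [hy]; simpa using hζ
  have h2 : |‖y‖ + ‖-(h • s)‖| ≤ 3 * K := by
    rw [abs_of_nonneg (by positivity)]
    have := (abs_le.1 h1).2
    linarith
  rw [e, sq_sub_sq, abs_mul]
  calc |‖y‖ + ‖-(h • s)‖| * |‖y‖ - ‖-(h • s)‖| ≤ 3 * K * W := by gcongr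

lemma tube_coords {h ϱ W : ℝ} {p : Vec n × Vec n} (hp : p ∈ tube n h ϱ W) :
    ∃ ζ : Vec n, ‖ζ‖ ≤ W ∧ p.1 = -(h • (-p.1 - p.2)) + ζ ∧ p.2 = -((1 - h) • (-p.1 - p.2)) + -ζ ∧
      ‖-p.1 - p.2‖ ≤ ϱ := by
  refine ⟨(1 - h) • p.1 - h • p.2, hp.2, by module, by module, ?_⟩
  have := hp.1
  rwa [← norm_neg, show -(p.1 + p.2) = -p.1 - p.2 by abel] at this

lemma T3_St_le_ball {E : Triple (n + 1)} (hE : ∀ j, MeasurableSet (E j)) {R : ℝ}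
    (hb : ∀ j, E j ⊆ 𝔹 R) {r : Fin 3 → ℝ} (hr : ∀ j, 0 ≤ r j) (hrR : ∀ j, r j ≤ R)
    (hv : ∀ j, volume (E j) = volume (𝔹[n + 1] (r j))) :
    (T3 fun j => St (E j)) ≤ T3 fun j => 𝔹[n + 1] (r j) :=
  riesz_sobolev (fun j => measurableSet_St (hE j)) (fun j => St_subset_ball (hb j)) hr hrR
    (fun j => by rw [volume_St (hE j) (finSl_of_bdd (hb j)), hv j])

lemma le_sq_div_add {x ε : ℝ} (hε : 0 < ε) : |x| ≤ x ^ 2 / ε + ε := by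
  have h : |x| * ε ≤ x ^ 2 + ε * ε := by
    rw [← sq_abs]; nlinarith [sq_nonneg (|x| - ε), abs_nonneg x]
  have h2 : |x| * ε ≤ (x ^ 2 / ε + ε) * ε := by
    rw [add_mul, div_mul_cancel₀ _ hε.ne']; exact h
  exact le_of_mul_le_mul_right h2 hε

/-- An `L²` bound on a set of bounded measure gives an `L¹` bound. -/
lemma L1_of_sq {X : Type*} [MeasurableSpace X] {μ : Measure X} {S : Set X} {f g : X → ℝ} {a ε V : ℝ}
    (ha : 0 ≤ a) (hε : 0 < ε) (hV : 0 ≤ V) (hS : μ S ≤ ofReal V) (hf : ∀ x, f x ^ 2 ≤ a * g x)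
    (hg : ∫⁻ x in S, ofReal (g x) ∂μ ≤ ofReal (ε ^ 2)) :
    ∫⁻ x in S, ‖f x‖ₑ ∂μ ≤ ofReal ((a + V) * ε) := by
  calc ∫⁻ x in S, ‖f x‖ₑ ∂μ ≤ ∫⁻ x in S, (ofReal (a / ε) * ofReal (g x) +
        ofReal ε) ∂μ := by
        refine lintegral_mono fun x => ?_
        rw [enorm_eq_ofReal_abs, ← ofReal_mul (by positivity)]
        refine le_trans (ofReal_le_ofReal ?_) ofReal_add_le
        refine (le_sq_div_add hε).trans ?_
        gcongr
        rw [div_mul_eq_mul_div]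
        gcongr
        exact hf x
    _ = ofReal (a / ε) * (∫⁻ x in S, ofReal (g x) ∂μ) + ofReal ε * μ S := by
        rw [lintegral_add_right _ measurable_const, lintegral_const_mul' _ _ ofReal_ne_top,
          setLIntegral_const]
    _ ≤ ofReal (a / ε) * ofReal (ε ^ 2) + ofReal ε * ofReal V := by
        gcongr
    _ = _ := by
        rw [← ofReal_mul (by positivity), ← ofReal_mul hε.le, ← ofReal_add
          (by positivity) (by positivity)]
        congr 1
        field_simp

lemma volume_tube_le {h ϱ W : ℝ} (hϱ : ϱ ≤ 1) (hW : W ≤ 1) : volume (tube n h ϱ W) ≤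
    ofReal ((volume (𝔹[n] 1)).toReal ^ 2) := by
  have := lintegral_tube (n := n) h ϱ W (f := fun _ => 1) measurable_const
  simp only [lintegral_const, MeasurableSet.univ, Measure.restrict_apply, univ_inter, one_mul] at this
  rw [this, ofReal_pow toReal_nonneg, ofReal_toReal ball_ne_top,
    sq]
  gcongr

end

/-- On a nearly extremal triple of shell sets the slice centres are affine, up to a constant multiple
of the square root `ε` of the deficit, and the slices are intervals up to the same error.  The
constants depend on the width `κ` of the discarded boundary layer. -/
lemma strip_affine (n : ℕ) {τ κ : ℝ} (hτ0 : 0 < τ) (hτ1 : τ ≤ 1) (hκ0 : 0 < κ) (hκ1 : κ ≤ 1 / 2) :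
    ∃ η₀ > 0, η₀ ≤ κ * τ / 4 ∧ ∃ C > 0, ∃ M > 0, ∃ w > 0, ∃ ψ : Vec n → ℝ, w ≤ τ / 4 ∧ IsBump w M ψ ∧
    ∀ (r₁ r₂ r₃ η ε : ℝ) (E₁ E₂ E₃ : Set (Vec (n + 1))), Adm τ r₁ r₂ r₃ → 0 < η → η ≤ η₀ → 0 < ε →
      Shell r₁ η E₁ → Shell r₂ η E₂ → Shell r₃ η E₃ →
      volume E₁ = volume (𝔹[n + 1] r₁) →
      volume E₂ = volume (𝔹[n + 1] r₂) →
      volume E₃ = volume (𝔹[n + 1] r₃) →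
      TT (𝔹[n + 1] r₁) (𝔹 r₂) (𝔹 r₃)
        ≤ TT E₁ E₂ E₃ + ofReal (ε ^ 2) →
      ‖Gd ψ (cc E₁) 0 - Gd ψ (cc E₂) 0‖ ≤ C * ε ∧
      ∫⁻ s in 𝔹 (r₃ * (1 - κ)),
        ‖cc E₃ s - (Gd ψ (cc E₁) 0 s - U ψ (cc E₁) 0 - U ψ (cc E₂) 0)‖ₑ ≤ ofReal (C * ε) ∧
      ∫⁻ s in 𝔹 (r₃ * (1 - κ)), ‖qq E₃ s‖ₑ ≤ ofReal (C * ε) := by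
  obtain ⟨m, hm⟩ : ∃ m, m = √κ * τ ^ 5 / 4 := ⟨_, rfl⟩
  have hsk1 : √κ ≤ 1 := Real.sqrt_le_one.2 (by linarith)
  have hskk : √κ ^ 2 = κ := sq_sqrt hκ0.le
  have hτ55 : τ ^ 5 ≤ τ := by
    calc τ ^ 5 = τ ^ 4 * τ := by ring
      _ ≤ 1 * τ := by gcongr; exact pow_le_one₀ hτ0.le hτ1
      _ = τ := one_mul _
  have hm0 : 0 < m := by rw [hm]; positivity
  have hmm : m ≤ √κ * τ / 4 := by rw [hm]; gcongr
  have hm1 : m ≤ 1 / 4 := by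
    have : √κ * τ ≤ 1 * 1 := by gcongr
    linarith
  have hm2 : m ^ 2 ≤ κ * τ / 16 := by
    calc m ^ 2 ≤ (√κ * τ / 4) ^ 2 := by gcongr
      _ = √κ ^ 2 * (τ * τ) / 16 := by ring
      _ ≤ κ * (1 * τ) / 16 := by rw [hskk]; gcongr
      _ = _ := by ring
  have hK : 1 ≤ 1 / τ := by rw [le_div_iff₀ hτ0]; linarith
  obtain ⟨W, hWd⟩ : ∃ W, W = m ^ 2 * τ / 48 := ⟨_, rfl⟩
  have hW0 : 0 < W := by rw [hWd]; positivity
  have hWτ : W ≤ τ / 48 := by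
    rw [hWd]
    have : m ^ 2 ≤ 1 := pow_le_one₀ hm0.le (by linarith)
    have := mul_le_mul_of_nonneg_right this hτ0.le
    linarith
  have h3KW : 3 * (1 / τ) * W = (m / 4) ^ 2 := by rw [hWd]; field_simp; norm_num
  obtain ⟨C₁, hC₁, M, hM, ψ, hψ, H⟩ := cauchy_stab n hK hW0
  have hvW : 0 < (volume (𝔹[n] W)).toReal :=
    toReal_pos (measure_closedBall_pos _ _ hW0).ne' ball_ne_top
  obtain ⟨v, hv⟩ : ∃ v, v = (volume (𝔹[n] W)).toReal := ⟨_, rfl⟩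
  obtain ⟨V, hV⟩ : ∃ V, V = (volume (𝔹[n] 1)).toReal ^ 2 := ⟨_, rfl⟩
  have hV0 : 0 ≤ V := by rw [hV]; positivity
  rw [← hv] at hvW
  have hη₀ : 0 < m ^ 2 / 1600 := by positivity
  refine ⟨m ^ 2 / 1600, hη₀, by nlinarith [mul_pos hκ0 hτ0], C₁ * (1 + V) + (16 + V) / v, by positivity, M, hM,
    W / (16 * (1 / τ)), by positivity, ψ, ?_, hψ, ?_⟩
  · have : W / (16 * (1 / τ)) = W * τ / 16 := by field_simp
    rw [this]
    have : W * τ ≤ τ / 48 * 1 := by gcongr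
    linarith
  intro r₁ r₂ r₃ η ε E₁ E₂ E₃ hA hη0 hη1 hε hS₁ hS₂ hS₃ hv₁ hv₂ hv₃ hT
  obtain ⟨-, -, hh1, hh2⟩ := hpos_spec hA
  have hητ : η ≤ τ := by
    have : κ * τ ≤ 1 / 2 * τ := by gcongr
    nlinarith [hm2]
  obtain ⟨h, hh⟩ : ∃ h, h = hpos r₁ r₂ r₃ := ⟨_, rfl⟩
  rw [← hh] at hh1 hh2
  have l1 := hA.l1; have l2 := hA.l2; have l3 := hA.l3
  have u1 := hA.u1; have u2 := hA.u2; have u3 := hA.u3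
  obtain ⟨ϱ, hϱ⟩ : ∃ ϱ, ϱ = r₃ * (1 - κ) := ⟨_, rfl⟩
  have hϱ1 : ϱ ≤ 1 := by
    rw [hϱ]; calc r₃ * (1 - κ) ≤ 1 * 1 := by gcongr <;> linarith
      _ = 1 := one_mul _
  have hWϱ : W ≤ ϱ := by
    have : r₃ * (1 / 2) ≤ r₃ * (1 - κ) := by gcongr <;> linarith
    linarith
  have hsub : ∀ {r : ℝ} {E : Set (Vec (n + 1))}, r ≤ 1 → Shell r η E → E ⊆ 𝔹 2 :=
    fun hr hE => hE.2.2.trans (cball_mono (by linarith))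
  have hg := gain_int hS₁.1 hS₂.1 hS₃.1 (hsub u1 hS₁) (hsub u2 hS₂) (hsub u3 hS₃) (σ := m / 20) (by positivity)
    (measurableSet_tube h ϱ W) (fun p hp => by
      obtain ⟨ζ, hζ, hp1, hp2, hp3⟩ := tube_coords hp
      have hs1 : ‖-p.1 - p.2‖ ≤ 1 := hp3.trans hϱ1
      have a1 := norm_sq_close hK hh1 hs1 (by linarith) hζ hp1
      have a2 := norm_sq_close (W := W) hK hh2 hs1 (by linarith) (by rwa [norm_neg]) hp2
      rw [h3KW, hh] at a1 a2
      obtain ⟨k1, k2, k3, k4, k5, k6⟩ := margins hA hκ0 (by linarith) (norm_nonneg _) (hp3.trans_eq hϱ) hm0.le hm a1 a2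
      have hσ : 4 * η ≤ (m / 20) ^ 2 := by nlinarith only [hη1]
      have hσ2 : (m / 20) ^ 2 ≤ (m / 2) ^ 2 := by gcongr; norm_num
      refine ⟨hgt r₁ p.1, hgt r₂ p.2, hgt r₃ (-p.1 - p.2),
        shell_slice hS₁ hη0 (by linarith) u1 (by positivity) hσ (hσ2.trans k4),
        shell_slice hS₂ hη0 (by linarith) u2 (by positivity) hσ (hσ2.trans k5),
        shell_slice hS₃ hη0 (by linarith) u3 (by positivity) hσ (hσ2.trans k6), ?_, ?_, ?_⟩ <;>
      · simp only [hgt]; linarith)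
  have hB := T3_St_le_ball (E := ![E₁, E₂, E₃]) (R := 2) (r := ![r₁, r₂, r₃])
    (by intro j; fin_cases j <;> [exact hS₁.1; exact hS₂.1; exact hS₃.1])
    (by intro j; fin_cases j <;> [exact hsub u1 hS₁; exact hsub u2 hS₂; exact hsub u3 hS₃])
    (by intro j; fin_cases j <;> simp <;> linarith)
    (by intro j; fin_cases j <;> simp <;> linarith)
    (by intro j; fin_cases j <;> [exact hv₁; exact hv₂; exact hv₃])
  simp only [T3, Matrix.cons_val_zero, Matrix.cons_val_one, Matrix.cons_val] at hB
  have hfin : TT E₁ E₂ E₃ ≠ ∞ := by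
    refine ((TT_le_mul _ _ _).trans_lt ?_).ne
    rw [hv₁, hv₂]
    exact ENNReal.mul_lt_top measure_closedBall_lt_top measure_closedBall_lt_top
  have hI := (ENNReal.add_le_add_iff_left hfin).1 ((hg.trans hB).trans hT)
  have hvt : volume (tube n h ϱ W) ≤ ofReal V := by
    rw [hV]; exact volume_tube_le hϱ1 (by linarith)
  have hD := L1_of_sq (f := fun p => defect (cc E₁) (cc E₂) (cc E₃) p) zero_le_one hε hV0 hvt
    (fun p => by have := sq_nonneg (qq E₃ (-p.1 - p.2)); linarith) hI
  have hQ := L1_of_sq (f := fun p : Vec n × Vec n => qq E₃ (-p.1 - p.2)) (a := 16) (by norm_num) hε hV0 hvt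
    (fun p => by have := sq_nonneg (defect (cc E₁) (cc E₂) (cc E₃) p); linarith) hI
  obtain ⟨g1, g2⟩ := H h ϱ ((1 + V) * ε) (cc E₁) (cc E₂) (cc E₃) hh1 hh2 hWϱ hϱ1 (by positivity)
    (bm_cc hS₁.1 (hsub u1 hS₁)) (bm_cc hS₂.1 (hsub u2 hS₂)) (bm_cc hS₃.1 (hsub u3 hS₃)) hD
  rw [← hϱ]
  have hC : C₁ * ((1 + V) * ε) ≤ (C₁ * (1 + V) + (16 + V) / v) * ε := by
    have : 0 ≤ (16 + V) / v * ε := by positivity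
    linarith
  refine ⟨g1.trans hC, g2.trans (ofReal_le_ofReal hC), ?_⟩
  have hmq : Measurable fun p : Vec n × Vec n => ‖qq E₃ (-p.1 - p.2)‖ₑ :=
    ((measurable_qq hS₃.1).comp (by fun_prop)).enorm
  rw [lintegral_tube h ϱ W hmq] at hQ
  have e : ∀ s : Vec n, ∫⁻ ζ in 𝔹[n] W,
      ‖qq E₃ (-(-(h • s) + ζ, -((1 - h) • s) - ζ).1 - (-(h • s) + ζ, -((1 - h) • s) - ζ).2)‖ₑ
      = ofReal v * ‖qq E₃ s‖ₑ := by
    intro s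
    have e2 : ∀ ζ : Vec n, -(-(h • s) + ζ) - (-((1 - h) • s) - ζ) = s := by intro ζ; module
    simp only [e2]
    rw [setLIntegral_const, mul_comm, hv, ofReal_toReal ball_ne_top]
  simp only [e] at hQ
  rw [lintegral_const_mul' _ _ ofReal_ne_top] at hQ
  have h3 : ∫⁻ s in 𝔹 ϱ, ‖qq E₃ s‖ₑ ≤ ofReal ((16 + V) * ε / v) := by
    rw [ofReal_div_of_pos hvW, ENNReal.le_div_iff_mul_le
      (Or.inl (ofReal_pos.2 hvW).ne') (Or.inl ofReal_ne_top), mul_comm]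
    exact hQ
  refine h3.trans (ofReal_le_ofReal ?_)
  have : 0 ≤ C₁ * (1 + V) * ε := by positivity
  have e3 : (16 + V) * ε / v = (16 + V) / v * ε := by ring
  rw [e3]; linarith

/-- First moment of the slice of `E` over `y`. -/
def mo (E : Set 𝕍) (y : Vec n) : ℝ := ∫ t in sl E y, t

lemma integral_sub_le_symmDiff {S S' : Set ℝ} (hS : MeasurableSet S) (hS' : MeasurableSet S') {b : ℝ}
    (h : S ⊆ Icc (-b) b) (h' : S' ⊆ Icc (-b) b) :
    |(∫ t in S, t) - ∫ t in S', t| ≤ b * volume.real (S ∆ S') := by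
  have hf : ∀ {A : Set ℝ}, A ⊆ Icc (-b) b → volume A < ∞ := fun hA =>
    (measure_mono hA).trans_lt measure_Icc_lt_top
  have hi : ∀ {A : Set ℝ}, MeasurableSet A → A ⊆ Icc (-b) b → IntegrableOn (fun t : ℝ => t) A := by
    intro A hA hAb
    refine Measure.integrableOn_of_bounded (M := b) (hf hAb).ne (by fun_prop) ?_
    refine (ae_restrict_iff' hA).2 (ae_of_all _ fun t ht => ?_)
    rw [norm_eq_abs, abs_le]; exact hAb ht
  have e1 := integral_inter_add_diff hS' (hi hS h)
  have e2 := integral_inter_add_diff hS (hi hS' h')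
  rw [inter_comm] at e2
  have hb : ∀ {A : Set ℝ}, MeasurableSet A → A ⊆ Icc (-b) b → |∫ t in A, t| ≤ b * volume.real A := by
    intro A hA hAb
    have := norm_setIntegral_le_of_norm_le_const (f := fun t : ℝ => t) (C := b) (hf hAb) (fun t ht => by
      rw [norm_eq_abs, abs_le]; exact hAb ht)
    simpa [norm_eq_abs] using this
  have b1 := hb (hS.diff hS') (diff_subset.trans h)
  have b2 := hb (hS'.diff hS) (diff_subset.trans h')
  have e3 : volume.real (S ∆ S') = volume.real (S \ S') + volume.real (S' \ S) := by
    rw [Set.symmDiff_def]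
    exact measureReal_union (disjoint_sdiff_sdiff) (hS'.diff hS) (hf (diff_subset.trans h)).ne
      (hf (diff_subset.trans h')).ne
  rw [e3, ← e1, ← e2, mul_add]
  calc _ = |(∫ t in S \ S', t) - ∫ t in S' \ S, t| := by congr 1; ring
    _ ≤ _ := (abs_sub _ _).trans (add_le_add b1 b2)

lemma measurable_mo {E : Set 𝕍} (hE : MeasurableSet E) : Measurable (mo E) := by
  have : mo E = fun y => ∫ t : ℝ, E.indicator (fun x => x 0) (vcons t y) := by
    funext y
    rw [mo, ← integral_indicator (measurableSet_sl hE y)]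
    congr 1
  rw [this]
  have h2 : Measurable fun p : ℝ × Vec n => E.indicator (fun x => x 0) (vcons p.1 p.2) :=
    ((by fun_prop : Measurable fun x : 𝕍 => x 0).indicator hE).comp measurable_vcons
  exact (h2.stronglyMeasurable.integral_prod_left' (μ := volume)).measurable

/-- Moments of `E` against `x 0 * g (vtail x)` in terms of the first moments of the slices. -/
lemma integral_mo {E : Set 𝕍} (hE : MeasurableSet E) {R : ℝ} (hR : E ⊆ 𝔹 R)
    {g : Vec n → ℝ} (hg : Continuous g) :
    ∫ y, mo E y * g y = ∫ x in E, x 0 * g (vtail x) := by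
  have hcv : Continuous (vtail : 𝕍 → Vec n) := by unfold vtail; fun_prop
  have hf : Measurable (E.indicator fun x => x 0 * g (vtail x)) :=
    (((by fun_prop : Measurable fun x : 𝕍 => x 0)).mul
      (hg.measurable.comp measurable_vtail)).indicator hE
  have hcont : Continuous fun x : 𝕍 => x 0 * g (vtail x) := by fun_prop
  have hi : Integrable (E.indicator fun x => x 0 * g (vtail x)) := by
    rw [integrable_indicator_iff hE]
    exact (hcont.continuousOn.integrableOn_compact (isCompact_closedBall _ _)).mono_set hR
  rw [← integral_indicator hE]
  have hmp := measurePreserving_vcons (n := n)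
  have e1 : ∫ x, E.indicator (fun x => x 0 * g (vtail x)) x
      = ∫ p : ℝ × Vec n, E.indicator (fun x => x 0 * g (vtail x)) (vcons p.1 p.2) := by
    rw [← hmp.map_eq, integral_map hmp.measurable.aemeasurable]
    exact hf.aestronglyMeasurable
  have hi2 : Integrable (fun p : ℝ × Vec n => E.indicator (fun x => x 0 * g (vtail x)) (vcons p.1 p.2)) :=
    hmp.integrable_comp_of_integrable hi
  rw [e1]
  have e2 := integral_prod_symm (μ := (volume : Measure ℝ)) (ν := (volume : Measure (Vec n))) _ hi2
  refine Eq.trans ?_ e2.symm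
  congr 1
  funext y
  rw [mo, ← integral_indicator (measurableSet_sl hE y), ← integral_mul_const]
  congr 1
  funext t
  by_cases h : vcons t y ∈ E
  · simp only []
    rw [indicator_of_mem (show t ∈ sl E y from h), indicator_of_mem h, vtail_vcons]; rfl
  · simp only []
    rw [indicator_of_notMem (show t ∉ sl E y from h), indicator_of_notMem h, zero_mul]

lemma mo_inner {E : Set 𝕍} (hE : MeasurableSet E) (hR : E ⊆ 𝔹 2) (y : Vec n) :
    |mo E y - len E y * cc E y| ≤ 2 * qq E y := by
  have hb : volume (sl E y) ≠ ∞ := finSl_of_bdd hR y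
  have hS := measurableSet_sl hE y
  have hsub := sl_subset_Icc hR y
  have ha : alp (sl E y) ≤ 2 := by
    refine (measureReal_mono (s₂ := Ioc 0 2) (fun t ht => ⟨ht.2, (hsub ht.1).2⟩) measure_Ioc_lt_top.ne).trans ?_
    rw [Real.volume_real_Ioc_of_le (by norm_num)]; norm_num
  have hbt : bet (sl E y) ≤ 2 := by
    refine (measureReal_mono (s₂ := Ico (-2) 0) (fun t ht => ⟨(hsub ht.1).1, ht.2⟩) measure_Ico_lt_top.ne).trans ?_
    rw [Real.volume_real_Ico_of_le (by norm_num)]; norm_num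
  have a0 := alp_nonneg (sl E y)
  have b0 := bet_nonneg (sl E y)
  have hI : Iab (sl E y) ⊆ Icc (-2) 2 := fun t ht => ⟨by linarith [ht.1], by linarith [ht.2]⟩
  have e : ∫ t in Iab (sl E y), t = len E y * cc E y := by
    have hl := hlf_eq_len hE (finSl_of_bdd hR) y
    have : len E y = alp (sl E y) + bet (sl E y) := by rw [hlf] at hl; linarith
    rw [this, cc, cen, Iab, integral_Ico_eq_integral_Ioc, ← intervalIntegral.integral_of_le (by linarith),
      integral_id]
    ring
  rw [mo, ← e]
  exact integral_sub_le_symmDiff hS measurableSet_Ico hsub hI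

/-- The slices of a ball are centred, so near the equator the first moment of a slice of `E` is small
compared with the symmetric difference. -/
lemma mo_outer {E : Set 𝕍} {r η κ b : ℝ} (hE : Shell r η E) (hη0 : 0 < η) (hr0 : 0 < r)
    (hb0 : 0 ≤ b) (hb : (r + η) ^ 2 - (r * (1 - κ)) ^ 2 ≤ b ^ 2) (hκ : κ ≤ 1) {y : Vec n} (hy : r * (1 - κ) < ‖y‖) :
    |mo E y| ≤ b * volume.real (sl (E ∆ 𝔹 r) y) := by
  have hsub : ∀ {A : Set 𝕍}, A ⊆ 𝔹 (r + η) → sl A y ⊆ Icc (-b) b := by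
    intro A hA t ht
    have h1 : ‖vcons t y‖ ≤ r + η := by simpa using hA ht
    have h2 := norm_vcons_sq t y
    have h3 : ‖vcons t y‖ ^ 2 ≤ (r + η) ^ 2 := by gcongr
    have h4 : (r * (1 - κ)) ^ 2 ≤ ‖y‖ ^ 2 := by gcongr
    exact abs_le.1 (abs_le_of_sq_le_sq (by linarith) hb0)
  have e0 : ∫ t in sl (𝔹[n + 1] r) y, t = 0 := by
    rcases le_or_gt ‖y‖ r with h | h
    · have := hgt_nonneg r y
      rw [sl_ball hr0.le h, integral_Icc_eq_integral_Ioc, ← intervalIntegral.integral_of_le (by linarith),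
        integral_id]
      ring
    · rw [sl_ball_empty h]; simp
  have := integral_sub_le_symmDiff (measurableSet_sl hE.1 y)
    (measurableSet_sl (measurableSet_closedBall : MeasurableSet (𝔹[n + 1] r)) y)
    (hsub hE.2.2) (hsub (cball_mono (by linarith)))
  rw [e0, sub_zero] at this
  rw [sl_symmDiff]
  exact this

/-- Nondegeneracy of the `L²` norm of affine functions on a ball. -/
lemma affine_lower (n : ℕ) {s : ℝ} (hs0 : 0 < s) (hs1 : s ≤ 1) : ∃ c > 0, ∀ (L : Vec n →L[ℝ] ℝ) (v : ℝ),
    c * (‖L‖ + |v|) ^ 2 ≤ ∫ y in 𝔹[n] s, (L y + v) ^ 2 := by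
  have hv : 0 < volume.real (𝔹[n] (s / 4)) :=
    toReal_pos (measure_closedBall_pos _ _ (by positivity)).ne' ball_ne_top
  refine ⟨(s / 4) ^ 2 * volume.real (𝔹[n] (s / 4)), by positivity, fun L v => ?_⟩
  -- the point of `closedBall 0 (s / 2)` where `|L y + v|` is largest
  obtain ⟨y₀, hy₀, hL⟩ : ∃ y₀ : Vec n, ‖y₀‖ ≤ s / 2 ∧ |L y₀ + v| = s / 2 * ‖L‖ + |v| := by
    obtain ⟨b, rfl⟩ := (InnerProductSpace.toDual ℝ (Vec n)).surjective L
    have key : ∃ u : Vec n, ‖u‖ ≤ 1 ∧ (inner ℝ b u : ℝ) = ‖b‖ := by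
      rcases eq_or_ne b 0 with rfl | hb
      · exact ⟨0, by simp, by simp⟩
      · refine ⟨‖b‖⁻¹ • b, ?_, ?_⟩
        · rw [norm_smul, norm_inv, norm_norm, inv_mul_cancel₀ (norm_ne_zero_iff.2 hb)]
        · rw [inner_smul_right, real_inner_self_eq_norm_sq]
          have := norm_ne_zero_iff.2 hb
          field_simp
    obtain ⟨u, hu1, hu2⟩ := key
    simp only [InnerProductSpace.toDual_apply_apply, LinearIsometryEquiv.norm_map]
    rcases le_total 0 v with h | h
    · refine ⟨(s / 2) • u, ?_, ?_⟩
      · rw [norm_smul, norm_of_nonneg (by positivity)]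
        exact mul_le_of_le_one_right (by positivity) hu1
      · rw [inner_smul_right, hu2, abs_of_nonneg h, abs_of_nonneg (by positivity)]
    · refine ⟨(-(s / 2)) • u, ?_, ?_⟩
      · rw [norm_smul, norm_neg, norm_of_nonneg (by positivity)]
        exact mul_le_of_le_one_right (by positivity) hu1
      · have : 0 ≤ s / 2 * ‖b‖ := by positivity
        rw [inner_smul_right, hu2, abs_of_nonpos h, abs_of_nonpos (by linarith)]; ring
  have hsub : closedBall y₀ (s / 4) ⊆ 𝔹 s := by
    refine closedBall_subset_closedBall' ?_
    rw [dist_zero_right]; linarith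
  have hcont : Continuous fun y : Vec n => (L y + v) ^ 2 := by fun_prop
  have hi : IntegrableOn (fun y : Vec n => (L y + v) ^ 2) (𝔹 s) :=
    hcont.continuousOn.integrableOn_compact (isCompact_closedBall _ _)
  have h1 : ∫ y in closedBall y₀ (s / 4), (L y + v) ^ 2 ≤ ∫ y in 𝔹[n] s, (L y + v) ^ 2 :=
    setIntegral_mono_set hi (ae_of_all _ fun y => sq_nonneg _) (HasSubset.Subset.eventuallyLE hsub)
  refine le_trans ?_ h1
  have h2 : ∫ y in closedBall y₀ (s / 4), (s / 4) ^ 2 * (‖L‖ + |v|) ^ 2 ≤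
      ∫ y in closedBall y₀ (s / 4), (L y + v) ^ 2 := by
    refine setIntegral_mono_on (integrableOn_const ball_ne_top) (hi.mono_set hsub)
      measurableSet_closedBall fun y hy => ?_
    rw [← mul_pow, ← sq_abs (L y + v)]
    have hy' : ‖y - y₀‖ ≤ s / 4 := by rwa [mem_closedBall_iff_norm] at hy
    have a1 : |L (y - y₀)| ≤ ‖L‖ * (s / 4) := (L.le_opNorm _).trans (by gcongr)
    have a2 : |L y₀ + v| ≤ |L y + v| + |L (y - y₀)| := by
      have : L y₀ + v = (L y + v) - L (y - y₀) := by rw [map_sub]; ring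
      rw [this]; exact abs_sub _ _
    have a3 : s / 4 * |v| ≤ |v| := mul_le_of_le_one_left (abs_nonneg _) (by linarith)
    gcongr
    rw [hL] at a2
    linarith
  refine le_trans (le_of_eq ?_) h2
  rw [setIntegral_const, measureReal_def, measureReal_def, Measure.addHaar_closedBall_center volume y₀, smul_eq_mul]
  ring

lemma len_shell_lower {E : Set 𝕍} {r η : ℝ} (hE : Shell r η E) (hr0 : 0 < r) (hη : η ≤ r / 8)
    (hfin : FinSl E) {y : Vec n} (hy : ‖y‖ ≤ r / 2) : r ≤ len E y := by
  have h0 : Icc (-(r / 2)) (r / 2) ⊆ sl E y := by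
    intro t ht
    refine hE.2.1 ?_
    rw [mem_closedBall_zero_iff]
    refine abs_le_of_sq_le_sq' ?_ (by linarith) |>.2
    have h2 : t ^ 2 ≤ (r / 2) ^ 2 := sq_le_sq' ht.1 ht.2
    have h3 : ‖y‖ ^ 2 ≤ (r / 2) ^ 2 := by gcongr
    rw [norm_vcons_sq]
    nlinarith
  have := measureReal_mono h0 (hfin y)
  rw [Real.volume_real_Icc_of_le (by linarith)] at this
  have e : volume.real (sl E y) = len E y := rfl
  linarith

lemma abs_le_of_enorm_le {x y : ℝ} (hy : 0 ≤ y) (h : ‖x‖ₑ ≤ ofReal y) : |x| ≤ y := by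
  rw [enorm_eq_ofReal_abs] at h
  exact (ofReal_le_ofReal_iff hy).1 h

/-- If the slice centres of `E` are close to the affine function `L y + v` and `E` is balanced against
that function, then the function is small.  The constant does not depend on the width `κ` of the
boundary layer, whose contribution carries the small factor `√κ`. -/
lemma balance (n : ℕ) {τ : ℝ} (hτ0 : 0 < τ) (hτ1 : τ ≤ 1) : ∃ C₀ > 0, ∀ (κ r η e δ : ℝ) (E : Set (Vec (n + 1)))
    (L : Vec n →L[ℝ] ℝ) (v : ℝ), 0 < κ → κ ≤ 1 / 2 → τ ≤ r → r ≤ 1 → 0 < η → η ≤ κ * τ / 4 → Shell r η E →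
    0 ≤ e → 0 ≤ δ → ∫ x in E, x 0 * (L (vtail x) + v) = 0 →
    ∫⁻ s in 𝔹 (r * (1 - κ)), ‖cc E s - (L s + v)‖ₑ ≤ ofReal e →
    ∫⁻ s in 𝔹 (r * (1 - κ)), ‖qq E s‖ₑ ≤ ofReal e →
    volume (E ∆ 𝔹 r) ≤ ofReal δ →
    ‖L‖ + |v| ≤ C₀ * (e + √κ * δ) := by
  obtain ⟨c, hc, H⟩ := affine_lower n (s := τ / 2) (by positivity) (by linarith)
  refine ⟨12 / (τ * c), by positivity, ?_⟩
  intro κ r η e δ E L v hκ0 hκ1 hr0 hr1 hη0 hη1 hE he hδ hbal hcc hqq hvol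
  have hr00 : 0 < r := by linarith
  have hκτ : κ * τ ≤ 1 / 2 * τ := by gcongr
  have hκτ2 : κ * τ ≤ κ * 1 := by gcongr
  have hR : E ⊆ 𝔹 2 := hE.2.2.trans (cball_mono (by linarith))
  have hfin : FinSl E := finSl_of_bdd hR
  obtain ⟨mm, hmm⟩ : ∃ mm, mm = ‖L‖ + |v| := ⟨_, rfl⟩
  have hmm0 : 0 ≤ mm := by rw [hmm]; positivity
  obtain ⟨A, hA⟩ : ∃ A, A = 𝔹[n] (r * (1 - κ)) := ⟨_, rfl⟩
  have hAm : MeasurableSet A := by rw [hA]; exact measurableSet_closedBall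
  have hA2 : A ⊆ 𝔹 2 := by
    rw [hA]; refine cball_mono ?_
    have : r * (1 - κ) ≤ 1 * 1 := by gcongr <;> linarith
    linarith
  have hAf : volume A < ∞ := (measure_mono hA2).trans_lt measure_closedBall_lt_top
  rw [← hA] at hcc hqq
  have hg : ∀ y ∈ 𝔹[n] 2, |L y + v| ≤ 2 * mm := by
    intro y hy
    rw [mem_closedBall_zero_iff] at hy
    have h1 : |L y| ≤ ‖L‖ * 2 := (L.le_opNorm y).trans (by gcongr)
    have := abs_add_le (L y) v
    have := abs_nonneg v
    rw [hmm]; linarith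
  have hlen4 : ∀ y, len E y ≤ 4 := by
    intro y
    refine (measureReal_mono (sl_subset_Icc hR y) measure_Icc_lt_top.ne).trans ?_
    rw [Real.volume_real_Icc_of_le (by norm_num)]; norm_num
  have hmo8 : ∀ y, |mo E y| ≤ 8 := by
    intro y
    have := integral_sub_le_symmDiff (measurableSet_sl hE.1 y) MeasurableSet.empty (sl_subset_Icc hR y) (empty_subset _)
    rw [setIntegral_empty, sub_zero, show symmDiff (sl E y) ∅ = sl E y from symmDiff_bot _] at this
    have h4 : volume.real (sl E y) ≤ 4 := hlen4 y
    rw [mo]; linarith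
  have hmo0 : ∀ y, y ∉ 𝔹[n] 2 → mo E y = 0 := by
    intro y hy
    have : sl E y = ∅ := by
      refine Set.eq_empty_of_forall_notMem fun t ht => hy ?_
      have := hR ht
      rw [mem_closedBall_zero_iff] at this ⊢
      exact (norm_le_norm_vcons t y).trans this
    rw [mo, this]; simp
  have hgm : Measurable fun y : Vec n => L y + v := by fun_prop
  have hbd : ∀ {f : Vec n → ℝ} {M : ℝ}, Measurable f → (∀ y ∈ 𝔹[n] 2, |f y| ≤ M) →
      IntegrableOn f (𝔹[n] 2) := by
    intro f M hf hM
    refine Measure.integrableOn_of_bounded (M := M) ball_ne_top hf.aestronglyMeasurable ?_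
    exact (ae_restrict_iff' measurableSet_closedBall).2 (ae_of_all _ fun y hy => hM y hy)
  have i1 : IntegrableOn (fun y => mo E y * (L y + v)) (𝔹[n] 2) :=
    hbd (M := 8 * (2 * mm)) ((measurable_mo hE.1).mul hgm) fun y hy => by
      rw [abs_mul]; exact mul_le_mul (hmo8 y) (hg y hy) (abs_nonneg _) (by norm_num)
  have i1' : Integrable (fun y => mo E y * (L y + v)) := by
    rw [← integrableOn_univ]
    refine i1.of_forall_diff_eq_zero MeasurableSet.univ fun y hy => ?_
    simp only [hmo0 y hy.2, zero_mul]
  have hlen0 : ∀ y, 0 ≤ len E y := fun y => len_nonneg E y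
  have i2 : IntegrableOn (fun y => len E y * (L y + v) ^ 2) (𝔹[n] 2) :=
    hbd (M := 4 * (2 * mm) ^ 2) ((measurable_len hE.1).mul (hgm.pow_const 2)) fun y hy => by
      rw [abs_mul, abs_of_nonneg (hlen0 y), abs_pow]
      have := hg y hy
      have := hlen4 y
      gcongr
  -- lower bound for the quadratic form
  have lower : τ * (c * mm ^ 2) ≤ ∫ y in A, len E y * (L y + v) ^ 2 := by
    have hsub : 𝔹[n] (τ / 2) ⊆ A := by
      rw [hA]; refine cball_mono ?_
      have : r * (1 / 2) ≤ r * (1 - κ) := by gcongr; linarith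
      linarith
    have h1 : ∫ y in 𝔹[n] (τ / 2), len E y * (L y + v) ^ 2 ≤ ∫ y in A, len E y * (L y + v) ^ 2 :=
      setIntegral_mono_set (i2.mono_set hA2) (ae_of_all _ fun y => mul_nonneg (hlen0 y) (sq_nonneg _))
        (HasSubset.Subset.eventuallyLE hsub)
    refine le_trans ?_ h1
    have h2 : ∫ y in 𝔹[n] (τ / 2), τ * (L y + v) ^ 2 ≤
        ∫ y in 𝔹[n] (τ / 2), len E y * (L y + v) ^ 2 := by
      have hcont : Continuous fun y : Vec n => τ * (L y + v) ^ 2 := by fun_prop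
      refine setIntegral_mono_on (hcont.continuousOn.integrableOn_compact (isCompact_closedBall _ _))
        (i2.mono_set (hsub.trans hA2)) measurableSet_closedBall fun y hy => ?_
      rw [mem_closedBall_zero_iff] at hy
      have := len_shell_lower hE hr00 (by linarith) hfin (y := y) (by linarith)
      gcongr
      linarith
    refine le_trans ?_ h2
    rw [integral_const_mul, hmm]
    have := H L v
    gcongr
  have split : ∫ y in A, len E y * (L y + v) ^ 2 =
      (∫ y in A, (len E y * (L y + v) - mo E y) * (L y + v)) - ∫ y in Aᶜ, mo E y * (L y + v) := by
    have e1 : ∫ y in A, (len E y * (L y + v) - mo E y) * (L y + v) =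
        (∫ y in A, len E y * (L y + v) ^ 2) - ∫ y in A, mo E y * (L y + v) := by
      rw [← integral_sub (i2.mono_set hA2) i1'.integrableOn]
      congr 1; funext y; ring
    have e2 := integral_add_compl hAm i1'
    rw [integral_mo hE.1 hR (by fun_prop : Continuous fun y : Vec n => L y + v), hbal] at e2
    linarith
  have b1 : |∫ y in A, (len E y * (L y + v) - mo E y) * (L y + v)| ≤ 2 * mm * (6 * e) := by
    refine abs_le_of_enorm_le (by positivity) ((enorm_integral_le_lintegral_enorm _).trans ?_)
    calc ∫⁻ y in A, ‖(len E y * (L y + v) - mo E y) * (L y + v)‖ₑ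
        ≤ ∫⁻ y in A, ofReal (2 * mm) * (ofReal 2 * ‖qq E y‖ₑ + ofReal 4 * ‖cc E y - (L y + v)‖ₑ) := by
          refine setLIntegral_mono' hAm fun y hy => ?_
          have h1 := mo_inner hE.1 hR y
          have h2 := hg y (hA2 hy)
          have h3 : |len E y * (L y + v) - mo E y| ≤ 2 * |qq E y| + 4 * |cc E y - (L y + v)| := by
            have : len E y * (L y + v) - mo E y = -(mo E y - len E y * cc E y) + -(len E y * (cc E y - (L y + v))) := by ring
            rw [this]
            refine (abs_add_le _ _).trans ?_
            rw [abs_neg, abs_neg, abs_mul, abs_of_nonneg (hlen0 y)]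
            have := le_abs_self (qq E y)
            have := mul_le_mul_of_nonneg_right (hlen4 y) (abs_nonneg (cc E y - (L y + v)))
            linarith
          rw [enorm_mul, mul_comm, enorm_eq_ofReal_abs, enorm_eq_ofReal_abs, enorm_eq_ofReal_abs,
            enorm_eq_ofReal_abs]
          rw [← ofReal_mul (p := 2) (by norm_num), ← ofReal_mul (p := 4) (by norm_num),
            ← ofReal_add (by positivity) (by positivity)]
          gcongr
      _ = ofReal (2 * mm) * (ofReal 2 * (∫⁻ y in A, ‖qq E y‖ₑ) + ofReal 4 * ∫⁻ y in A, ‖cc E y - (L y + v)‖ₑ) := by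
          rw [lintegral_const_mul' _ _ ofReal_ne_top,
            lintegral_add_left (((measurable_qq hE.1).enorm).const_mul _),
            lintegral_const_mul' _ _ ofReal_ne_top, lintegral_const_mul' _ _ ofReal_ne_top]
      _ ≤ ofReal (2 * mm) * (ofReal 2 * ofReal e + ofReal 4 * ofReal e) := by gcongr
      _ = ofReal (2 * mm * (6 * e)) := by
          rw [ofReal_mul (p := 2 * mm) (by positivity), ofReal_mul (p := 6) (by positivity)]
          congr 1
          rw [← add_mul, ← ofReal_add (by norm_num) (by norm_num)]
          norm_num
  have b2 : |∫ y in Aᶜ, mo E y * (L y + v)| ≤ 2 * mm * (2 * √κ) * δ := by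
    refine abs_le_of_enorm_le (by positivity) ((enorm_integral_le_lintegral_enorm _).trans ?_)
    have hD : MeasurableSet (E ∆ 𝔹 r) :=
      hE.1.symmDiff measurableSet_closedBall
    calc ∫⁻ y in Aᶜ, ‖mo E y * (L y + v)‖ₑ
        ≤ ∫⁻ y in Aᶜ, ofReal (2 * mm * (2 * √κ)) * volume (sl (E ∆ 𝔹 r) y) := by
          refine setLIntegral_mono' hAm.compl fun y hy => ?_
          by_cases hy2 : y ∈ 𝔹[n] 2
          · have hy' : r * (1 - κ) < ‖y‖ := by
              rw [hA, mem_compl_iff, mem_closedBall_zero_iff] at hy; linarith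
            have hb : (r + η) ^ 2 - (r * (1 - κ)) ^ 2 ≤ (2 * √κ) ^ 2 := by
              rw [mul_pow 2, sq_sqrt hκ0.le]
              have q1 : r * η ≤ 1 * (κ / 4) := by gcongr; linarith
              have q2 : η * η ≤ (1 / 8) * (κ / 4) := by gcongr <;> linarith
              have q3 : κ * (r * r) ≤ κ * (1 * 1) := by gcongr
              have q4 : 0 ≤ κ * κ * (r * r) := by positivity
              nlinarith only [q1, q2, q3, q4, hκ0]
            have h1 := mo_outer hE hη0 hr00 (by positivity) hb (by linarith) hy'
            have h2 := hg y hy2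
            have hne : volume (sl (E ∆ 𝔹 r) y) ≠ ∞ := by
              refine finSl_of_bdd (R := 2) ?_ y
              rw [symmDiff_def]
              refine union_subset (diff_subset.trans hR) (diff_subset.trans (cball_mono (by linarith)))
            rw [← ofReal_toReal hne, ← ofReal_mul (by positivity), enorm_eq_ofReal_abs]
            refine ofReal_le_ofReal ?_
            rw [abs_mul]
            calc |mo E y| * |L y + v| ≤ (2 * √κ * volume.real (sl (E ∆ 𝔹 r) y)) * (2 * mm) := by
                  gcongr
              _ = _ := by rw [measureReal_def]; ring
          · rw [hmo0 y hy2]; simp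
      _ ≤ ofReal (2 * mm * (2 * √κ)) * ∫⁻ y, volume (sl (E ∆ 𝔹 r) y) := by
          rw [lintegral_const_mul' _ _ ofReal_ne_top]
          gcongr
          exact Measure.restrict_le_self
      _ ≤ ofReal (2 * mm * (2 * √κ)) * ofReal δ := by
          rw [← volume_eq_sl hD]; gcongr
      _ = _ := (ofReal_mul (by positivity)).symm
  have fin : τ * (c * mm ^ 2) ≤ mm * (12 * (e + √κ * δ)) := by
    have h1 := le_abs_self (∫ y in A, (len E y * (L y + v) - mo E y) * (L y + v))
    have h2 := neg_abs_le (∫ y in Aᶜ, mo E y * (L y + v))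
    have h3 : 0 ≤ mm * (√κ * δ) := by positivity
    nlinarith only [h1, h2, h3, b1, b2, split, lower]
  rw [← hmm]
  rcases hmm0.eq_or_lt with h | h
  · rw [← h]; positivity
  · have : τ * c * mm ≤ 12 * (e + √κ * δ) := by
      refine le_of_mul_le_mul_left ?_ h
      linarith
    rw [div_mul_eq_mul_div, le_div_iff₀ (by positivity)]
    linarith

lemma U_of_close {w M ϱ e v : ℝ} {ψ c : Vec n → ℝ} (hψ : IsBump w M ψ) (hw : w ≤ ϱ) (hc : BM c) (he : 0 ≤ e)
    (G : Vec n →L[ℝ] ℝ) (h : ∫⁻ s in 𝔹 ϱ, ‖c s - (G s + v)‖ₑ ≤ ofReal e) :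
    |U ψ c 0 - v| ≤ M * e := by
  have hM : 0 ≤ M := (abs_nonneg _).trans (hψ.bd 0)
  have hcψ : Continuous ψ := hψ.smooth.continuous
  have e1 : U ψ c 0 = ∫ t, c t * ψ t := by
    rw [U]; congr 1; funext t; rw [zero_sub, hψ.even]
  have i1 : Integrable fun t => c t * ψ t := hc.integrable_mul hψ.integrable
  have i2 : Integrable fun t => G t * ψ t :=
    (by fun_prop : Continuous fun t => G t * ψ t).integrable_of_hasCompactSupport hψ.cpt.mul_left
  have i3 : Integrable fun t => v * ψ t := hψ.integrable.const_mul v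
  have e2 : ∫ t, G t * ψ t = 0 := by
    have := integral_neg_eq_self (fun t => G t * ψ t) volume
    simp only [map_neg, hψ.even, neg_mul, integral_neg] at this
    linarith
  have e3 : ∫ t, v * ψ t = v := by rw [integral_const_mul, hψ.int, mul_one]
  have k : Integrable (fun t => G t * ψ t + v * ψ t) := i2.add i3
  have e4 : U ψ c 0 - v = ∫ t, (c t - (G t + v)) * ψ t := by
    have : ∀ t, (c t - (G t + v)) * ψ t = c t * ψ t - (G t * ψ t + v * ψ t) := fun t => by ring
    simp only [this]
    rw [integral_sub i1 k, integral_add i2 i3, e2, e3, e1, zero_add]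
  rw [e4]
  refine abs_le_of_enorm_le (by positivity) ((enorm_integral_le_lintegral_enorm _).trans ?_)
  have e5 : ∫⁻ t, ‖(c t - (G t + v)) * ψ t‖ₑ = ∫⁻ t in 𝔹 ϱ, ‖(c t - (G t + v)) * ψ t‖ₑ := by
    refine (setLIntegral_eq_of_support_subset ?_).symm
    intro t ht
    rw [mem_closedBall_zero_iff]
    by_contra hcon
    push Not at hcon
    exact ht (by simp [hψ.supp t (hw.trans_lt hcon)])
  rw [e5]
  calc _ ≤ ∫⁻ t in 𝔹 ϱ, ofReal M * ‖c t - (G t + v)‖ₑ := by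
        refine lintegral_mono fun t => ?_
        rw [enorm_mul, mul_comm]
        gcongr
        rw [enorm_eq_ofReal_abs]
        exact ofReal_le_ofReal (hψ.bd t)
    _ ≤ ofReal M * ofReal e := by
        rw [lintegral_const_mul' _ _ ofReal_ne_top]; gcongr
    _ = _ := (ofReal_mul hM).symm

/-- A triple of sets of the measures of the balls of radii `r j`, squeezed between balls of radii
`r j ± η`, with deficit at most `ε ^ 2` and symmetric differences at most `δ`. -/
structure Cfg {d : ℕ} (τ η ε δ : ℝ) (r : Fin 3 → ℝ) (E : Triple d) : Prop where
  adm : Adm τ (r 0) (r 1) (r 2)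
  hη : 0 < η
  hε : 0 < ε
  hδ : 0 ≤ δ
  shell : ∀ j, Shell (r j) η (E j)
  vol : ∀ j, volume (E j) = volume (𝔹[d] (r j))
  def_le : T3 (fun j => 𝔹[d] (r j)) ≤ T3 E + ofReal (ε ^ 2)
  diff : ∀ j, volume (E j ∆ (𝔹[d] (r j))) ≤ ofReal δ

/-- The barycentre of `E` is the origin. -/
def Bal0 {d : ℕ} (E : Set (Vec d)) : Prop := ∀ u : Vec d, ∫ x in E, inner ℝ u x = 0

/-- The barycentre of `E` is the origin and its matrix of second moments is scalar. -/
def Bal1 {d : ℕ} (E : Set (Vec d)) : Prop :=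
  Bal0 E ∧ ∀ u w : Vec d, inner ℝ u w = 0 → ∫ x in E, inner ℝ u x * inner ℝ w x = 0

lemma inner_e0 (x : 𝕍) : inner ℝ (vcons 1 (0 : Vec n)) x = x 0 := by
  conv_lhs => rw [← vcons_vtail x]
  rw [inner_vcons]; simp

lemma inner_v0 (b : Vec n) (x : 𝕍) : inner ℝ (vcons 0 b) x = inner ℝ b (vtail x) := by
  conv_lhs => rw [← vcons_vtail x]
  rw [inner_vcons]; simp

lemma Bal0.frame {E : Set 𝕍} (h : Bal0 E) (v : ℝ) : ∫ x in E, x 0 * v = 0 := by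
  have := h (vcons 1 0)
  simp only [inner_e0] at this
  rw [integral_mul_const, this, zero_mul]

lemma Bal1.frame {E : Set 𝕍} (h : Bal1 E) {R : ℝ} (hR : E ⊆ 𝔹 R)
    (L : Vec n →L[ℝ] ℝ) (v : ℝ) : ∫ x in E, x 0 * (L (vtail x) + v) = 0 := by
  have hcv : Continuous (vtail : 𝕍 → Vec n) := by unfold vtail; fun_prop
  obtain ⟨b, rfl⟩ := (InnerProductSpace.toDual ℝ (Vec n)).surjective L
  have h2 := h.2 (vcons 1 0) (vcons 0 b) (by rw [inner_vcons]; simp)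
  have h1 := h.1.frame v
  simp only [inner_e0, inner_v0] at h2
  simp only [InnerProductSpace.toDual_apply_apply, mul_add]
  have c1 : Continuous fun x : 𝕍 => x 0 * inner ℝ b (vtail x) := by fun_prop
  have c2 : Continuous fun x : 𝕍 => x 0 * v := by fun_prop
  rw [integral_add ((c1.continuousOn.integrableOn_compact (isCompact_closedBall 0 R)).mono_set hR)
    ((c2.continuousOn.integrableOn_compact (isCompact_closedBall 0 R)).mono_set hR), h1, h2, add_zero]

lemma lint_affine_le {ϱ g v : ℝ} (hϱ : ϱ ≤ 1) (hv : 0 ≤ v) (G : Vec n →L[ℝ] ℝ) (hG : ‖G‖ ≤ g) {c f : Vec n → ℝ}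
    {e : ℝ} (he : 0 ≤ e) (hfm : Measurable f)
    (h : ∫⁻ s in 𝔹 ϱ, ‖f s‖ₑ ≤ ofReal e)
    (hcf : ∀ s, |c s| ≤ |f s| + (|G s| + v)) :
    ∫⁻ s in 𝔹 ϱ, ‖c s‖ₑ ≤
      ofReal (e + volume.real (𝔹[n] 1) * (g + v)) := by
  have hg : 0 ≤ g := (norm_nonneg _).trans hG
  calc ∫⁻ s in 𝔹 ϱ, ‖c s‖ₑ ≤ ∫⁻ s in 𝔹 ϱ, (‖f s‖ₑ + ofReal (g + v)) := by
        refine setLIntegral_mono' measurableSet_closedBall fun s hs => ?_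
        rw [mem_closedBall_zero_iff] at hs
        rw [enorm_eq_ofReal_abs, enorm_eq_ofReal_abs, ← ofReal_add (abs_nonneg _) (by positivity)]
        refine ofReal_le_ofReal ((hcf s).trans ?_)
        have h1 : |G s| ≤ g * 1 := (G.le_opNorm s).trans (mul_le_mul hG (hs.trans hϱ) (norm_nonneg _) hg)
        linarith
    _ ≤ ofReal e + ofReal (volume.real (𝔹[n] 1) * (g + v)) := by
        rw [lintegral_add_left hfm.enorm, setLIntegral_const]
        refine add_le_add h ?_
        rw [mul_comm, ofReal_mul measureReal_nonneg, measureReal_def,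
          ofReal_toReal ball_ne_top]
        gcongr
    _ = _ := (ofReal_add he (by positivity)).symm

/-- For a balanced, nearly extremal triple the slices are, away from the boundary layer, close to
centred intervals. -/
lemma strip_small (n : ℕ) {τ : ℝ} (hτ0 : 0 < τ) (hτ1 : τ ≤ 1) : ∃ C₀ > 0, ∀ κ, 0 < κ → κ ≤ 1 / 2 →
    ∃ η₀ > 0, η₀ ≤ κ * τ / 4 ∧ ∃ C > 0, ∀ (η ε δ : ℝ) (r : Fin 3 → ℝ) (E : Triple (n + 1)),
      Cfg τ η ε δ r E → η ≤ η₀ → Bal1 (E 0) → Bal0 (E 1) → ∀ j,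
      ∫⁻ s in 𝔹 (r j * (1 - κ)), (‖cc (E j) s‖ₑ + ‖qq (E j) s‖ₑ) ≤
        ofReal (C * ε + C₀ * (√κ * δ)) := by
  obtain ⟨B, hB, HB⟩ := balance n hτ0 hτ1
  obtain ⟨V, hV⟩ : ∃ V, V = volume.real (𝔹[n] 1) := ⟨_, rfl⟩
  have hV0 : 0 < V := by
    rw [hV]
    exact toReal_pos (measure_closedBall_pos _ _ one_pos).ne' ball_ne_top
  refine ⟨V * (2 * B + B * (V * B + 1)), by positivity, fun κ hκ0 hκ1 => ?_⟩
  obtain ⟨η₀, hη₀, hη₀κ, C, hC, M, hM, w, hw, ψ, hwτ, hψ, H⟩ := strip_affine n hτ0 hτ1 hκ0 hκ1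
  refine ⟨η₀, hη₀, hη₀κ, C * (2 + V * (2 * B + B * (1 + V * (B + 1)) + 1 + 2 * M)), by positivity, ?_⟩
  intro η ε δ r E hc hη hb1 hb0
  have hA := hc.adm
  have hε := hc.hε
  have hδ := hc.hδ
  have hrl : ∀ j, τ ≤ r j := by intro j; fin_cases j; exacts [hA.l1, hA.l2, hA.l3]
  have hru : ∀ j, r j ≤ 1 := by intro j; fin_cases j; exacts [hA.u1, hA.u2, hA.u3]
  have hκτ : κ * τ ≤ 1 * 1 := by gcongr; linarith
  have hsub : ∀ j, E j ⊆ 𝔹 2 := fun j =>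
    (hc.shell j).2.2.trans (cball_mono (by linarith [hru j]))
  have hm : ∀ j, MeasurableSet (E j) := fun j => (hc.shell j).1
  have hbm : ∀ j, BM (cc (E j)) := fun j => bm_cc (hm j) (hsub j)
  have hT := hc.def_le
  simp only [T3] at hT
  have hbm' : ∀ j, MeasurableSet (𝔹[n + 1] (r j)) := fun j =>
    measurableSet_closedBall
  have hT' := hT
  rw [TT_rot (hm 0) (hm 1) (hm 2), TT_rot (hbm' 0) (hbm' 1) (hbm' 2)] at hT'
  have hT'' := hT'
  rw [TT_rot (hm 1) (hm 2) (hm 0), TT_rot (hbm' 1) (hbm' 2) (hbm' 0)] at hT''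
  obtain ⟨g12, a3, q3⟩ := H _ _ _ η ε _ _ _ hA hc.hη hη hε (hc.shell 0) (hc.shell 1) (hc.shell 2)
    (hc.vol 0) (hc.vol 1) (hc.vol 2) hT
  obtain ⟨g23, a1, q1⟩ := H _ _ _ η ε _ _ _ hA.rot hc.hη hη hε (hc.shell 1) (hc.shell 2) (hc.shell 0)
    (hc.vol 1) (hc.vol 2) (hc.vol 0) hT'
  obtain ⟨g31, a2, q2⟩ := H _ _ _ η ε _ _ _ hA.rot.rot hc.hη hη hε (hc.shell 2) (hc.shell 0) (hc.shell 1)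
    (hc.vol 2) (hc.vol 0) (hc.vol 1) hT''
  clear H
  obtain ⟨G₁, hG₁⟩ : ∃ G, G = Gd ψ (cc (E 0)) 0 := ⟨_, rfl⟩
  obtain ⟨G₂, hG₂⟩ : ∃ G, G = Gd ψ (cc (E 1)) 0 := ⟨_, rfl⟩
  obtain ⟨G₃, hG₃⟩ : ∃ G, G = Gd ψ (cc (E 2)) 0 := ⟨_, rfl⟩
  obtain ⟨u₁, hu₁⟩ : ∃ u, u = U ψ (cc (E 0)) 0 := ⟨_, rfl⟩
  obtain ⟨u₂, hu₂⟩ : ∃ u, u = U ψ (cc (E 1)) 0 := ⟨_, rfl⟩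
  obtain ⟨u₃, hu₃⟩ : ∃ u, u = U ψ (cc (E 2)) 0 := ⟨_, rfl⟩
  rw [← hG₁, ← hG₂] at g12
  rw [← hG₂, ← hG₃] at g23
  rw [← hG₃, ← hG₁] at g31
  simp only [← hG₁, ← hu₁, ← hu₂] at a3
  simp only [← hG₂, ← hu₂, ← hu₃] at a1
  simp only [← hG₃, ← hu₃, ← hu₁] at a2
  obtain ⟨e, he⟩ : ∃ e, e = C * ε := ⟨_, rfl⟩
  rw [← he] at g12 g23 g31 a1 a2 a3 q1 q2 q3
  have he0 : 0 ≤ e := by rw [he]; positivity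
  obtain ⟨X₀, hX₀⟩ : ∃ X, X = B * (e + √κ * δ) := ⟨_, rfl⟩
  have hX₀0 : 0 ≤ X₀ := by rw [hX₀]; positivity
  -- the first set is balanced against all affine functions
  have s1 : ‖G₂‖ + |-u₂ - u₃| ≤ X₀ := by
    rw [hX₀]
    refine HB κ (r 0) η e δ (E 0) G₂ (-u₂ - u₃) hκ0 hκ1 (hrl 0) (hru 0) hc.hη (hη.trans hη₀κ) (hc.shell 0) he0 hδ
      (hb1.frame (hsub 0) _ _) ?_ q1 (hc.diff 0)
    refine le_of_eq_of_le ?_ a1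
    congr 1; funext s; congr 2; ring
  have n2 : ‖G₂‖ ≤ X₀ := by linarith [abs_nonneg (-u₂ - u₃)]
  have u23 : |-u₂ - u₃| ≤ X₀ := by linarith [norm_nonneg G₂]
  have n1 : ‖G₁‖ ≤ X₀ + e := by
    have : ‖G₁‖ ≤ ‖G₁ - G₂‖ + ‖G₂‖ := by simpa using norm_add_le (G₁ - G₂) G₂
    linarith
  have n3 : ‖G₃‖ ≤ X₀ + e := by
    have : ‖G₃‖ ≤ ‖G₂ - G₃‖ + ‖G₂‖ := by
      rw [norm_sub_rev]; simpa using norm_add_le (G₃ - G₂) G₂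
    linarith
  have hϱ1 : ∀ j, r j * (1 - κ) ≤ 1 := fun j => by
    calc r j * (1 - κ) ≤ 1 * 1 := by
          have := hru j
          gcongr <;> linarith
      _ = 1 := one_mul _
  obtain ⟨e', he'⟩ : ∃ e', e' = e + V * (X₀ + e) := ⟨_, rfl⟩
  have hee' : e ≤ e' := by
    have : 0 ≤ V * (X₀ + e) := by positivity
    linarith
  obtain ⟨X₁, hX₁⟩ : ∃ X, X = B * (e' + √κ * δ) := ⟨_, rfl⟩
  have he'0 : 0 ≤ e' := he0.trans hee'
  have hX₁0 : 0 ≤ X₁ := by rw [hX₁]; positivity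
  -- the second set is balanced against constants, and its linear part is already known to be small
  have s2 : |-u₃ - u₁| ≤ X₁ := by
    have := HB κ (r 1) η e' δ (E 1) 0 (-u₃ - u₁) hκ0 hκ1 (hrl 1) (hru 1) hc.hη (hη.trans hη₀κ) (hc.shell 1)
      (he0.trans hee') hδ (by simpa using hb0.frame (-u₃ - u₁)) (by
        have := lint_affine_le (hϱ1 1) le_rfl G₃ n3 (c := fun s => cc (E 1) s - (-u₃ - u₁)) he0
          (((measurable_cc (hm 1)).sub (by fun_prop))) a2 (fun s => by
            rw [add_zero]
            have : cc (E 1) s - (-u₃ - u₁) = (cc (E 1) s - (G₃ s - u₃ - u₁)) + G₃ s := by ring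
            rw [this]; exact abs_add_le _ _)
        rw [add_zero, ← hV, ← he'] at this
        simpa using this)
      (q2.trans (ofReal_le_ofReal hee')) (hc.diff 1)
    rw [norm_zero, zero_add] at this
    rw [hX₁]; exact this
  -- averaging the first centre function against the bump relates the three constants
  have s3 : |u₁ - (-u₂ - u₃)| ≤ M * e := by
    rw [hu₁]
    refine U_of_close hψ (ϱ := r 0 * (1 - κ)) ?_ (hbm 0) he0 G₂ ?_
    · have : r 0 * (1 / 2) ≤ r 0 * (1 - κ) := by
        have := hrl 0
        gcongr <;> linarith
      linarith [hrl 0]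
    · refine le_of_eq_of_le ?_ a1
      congr 1; funext s; congr 2; ring
  have u12 : |-u₁ - u₂| ≤ 2 * M * e + X₀ + X₁ := by
    rw [abs_le] at s2 s3 u23 ⊢
    constructor <;> linarith
  obtain ⟨Y, hY⟩ : ∃ Y, Y = 2 * M * e + X₀ + X₁ := ⟨_, rfl⟩
  rw [← hY] at u12
  have hY0 : 0 ≤ Y := (abs_nonneg _).trans u12
  have hMe : 0 ≤ 2 * M * e := by positivity
  have main : ∀ j, ∃ (G : Vec n →L[ℝ] ℝ) (v : ℝ), ‖G‖ ≤ X₀ + e ∧ |v| ≤ Y ∧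
      ∫⁻ s in 𝔹 (r j * (1 - κ)), ‖cc (E j) s - (G s + v)‖ₑ ≤ ofReal e ∧
      ∫⁻ s in 𝔹 (r j * (1 - κ)), ‖qq (E j) s‖ₑ ≤ ofReal e := by
    intro j
    fin_cases j
    · refine ⟨G₂, -u₂ - u₃, by linarith, by linarith, le_of_eq_of_le ?_ a1, q1⟩
      congr 1; funext s; congr 2; ring
    · refine ⟨G₃, -u₃ - u₁, by linarith, by linarith, le_of_eq_of_le ?_ a2, q2⟩
      congr 1; funext s; congr 2; ring
    · refine ⟨G₁, -u₁ - u₂, by linarith, by linarith, le_of_eq_of_le ?_ a3, q3⟩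
      congr 1; funext s; congr 2; ring
  intro j
  obtain ⟨G, v, hG, hv, k1, k2⟩ := main j
  have k3 := lint_affine_le (hϱ1 j) hY0 G hG (c := cc (E j)) he0
    ((measurable_cc (hm j)).sub (by fun_prop)) k1 (fun s => by
      have : cc (E j) s = (cc (E j) s - (G s + v)) + (G s + v) := by ring
      have h1 := abs_add_le (cc (E j) s - (G s + v)) (G s + v)
      rw [← this] at h1
      have h2 := abs_add_le (G s) v
      show |cc (E j) s| ≤ |cc (E j) s - (G s + v)| + (|G s| + Y)
      linarith)
  rw [← hV] at k3
  rw [lintegral_add_left (measurable_cc (hm j)).enorm]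
  refine (add_le_add k3 k2).trans ?_
  rw [← ofReal_add (by positivity) he0]
  refine ofReal_le_ofReal (le_of_eq ?_)
  rw [hY, hX₁, he', hX₀, he]
  ring

/-! ### From reflection symmetry to balls -/

lemma slice_center {A : Set ℝ} (hf : volume A ≠ ⊤) :
    volume (A ∆ (J 0 (hlf A))) ≤
      ofReal (2 * |cen A| + volume.real (A ∆ Iab A)) := by
  have hIf : volume (Iab A) ≠ ⊤ := by rw [Iab]; simp
  refine (measure_symmDiff_le A (Iab A) _).trans ?_
  rw [add_comm, ofReal_add (by positivity) (by positivity)]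
  refine add_le_add ?_ ?_
  · rw [Iab_eq_J, measure_symmDiff_eq (measurableSet_J _ _).nullMeasurableSet
      (measurableSet_J _ _).nullMeasurableSet, two_mul, ofReal_add (by positivity) (by positivity)]
    refine add_le_add ?_ ?_
    · simpa using volume_J_sdiff (cen A) 0 (hlf A)
    · simpa using volume_J_sdiff 0 (cen A) (hlf A)
  · rw [measureReal_def, ofReal_toReal (measure_symmDiff_ne_top hf hIf)]

/-- Reflecting a one-dimensional set through the origin changes it by at most a multiple of its
interval defect and of the offset of its centre. -/
lemma slice_flip {A : Set ℝ} (hA : MeasurableSet A) (hf : volume A ≠ ⊤) :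
    volume (A ∆ ((fun t => -t) ⁻¹' A)) ≤
      ofReal (4 * (|cen A| + volume.real (A ∆ Iab A))) := by
  have hJm : MeasurableSet (J 0 (hlf A)) := measurableSet_J _ _
  have h1 := slice_center hf
  have mp : MeasurePreserving (fun t : ℝ => -t) := Measure.measurePreserving_neg volume
  have h2 : volume (((fun t : ℝ => -t) ⁻¹' J 0 (hlf A)) ∆ ((fun t => -t) ⁻¹' A)) =
      volume (A ∆ (J 0 (hlf A))) := by
    have : ((fun t : ℝ => -t) ⁻¹' J 0 (hlf A)) ∆ ((fun t => -t) ⁻¹' A) =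
      (fun t : ℝ => -t) ⁻¹' (A ∆ (J 0 (hlf A))) := by
      rw [symmDiff_comm, preimage_symmDiff]
    rw [this, mp.measure_preimage (hA.symmDiff hJm).nullMeasurableSet]
  have h3 : volume ((J 0 (hlf A)) ∆ ((fun t : ℝ => -t) ⁻¹' J 0 (hlf A))) = 0 := by
    refine measure_mono_null (t := {hlf A, -hlf A}) ?_ (Set.Finite.measure_zero (by simp) _)
    intro t ht
    simp only [J, mem_symmDiff, mem_preimage, mem_Ico, mem_insert_iff, mem_singleton_iff] at ht ⊢
    rcases ht with ⟨⟨a, b⟩, c⟩ | ⟨⟨a, b⟩, c⟩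
    · right
      by_contra hne
      exact c ⟨by linarith, by have := lt_of_le_of_ne a (fun h => hne (by linarith)); linarith⟩
    · left
      by_contra hne
      exact c ⟨by linarith, lt_of_le_of_ne (by linarith) (by rwa [zero_add])⟩
  refine (measure_symmDiff_le A (J 0 (hlf A)) _).trans ?_
  refine (add_le_add_right (measure_symmDiff_le _ ((fun t : ℝ => -t) ⁻¹' J 0 (hlf A)) _) _).trans ?_
  rw [h2, h3, zero_add]
  refine (add_le_add h1 h1).trans ?_
  rw [← ofReal_add (by positivity) (by positivity)]
  refine ofReal_le_ofReal ?_
  have : 0 ≤ volume.real (A ∆ Iab A) := measureReal_nonneg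
  linarith

/-- The reflection of the first coordinate. -/
def flip0 (x : 𝕍) : 𝕍 := vcons (-x 0) (vtail x)

lemma measurable_flip0 : Measurable (flip0 : 𝕍 → 𝕍) := by
  unfold flip0
  exact measurable_vcons.comp ((by fun_prop : Measurable fun x : Vec (n+1) => -x 0).prodMk measurable_vtail)

lemma flip_strip {E : Set 𝕍} (hE : MeasurableSet E) (hf : FinSl E) (ϱ X : ℝ)
    (h : ∫⁻ s in 𝔹 ϱ, (‖cc E s‖ₑ + ‖qq E s‖ₑ) ≤ ofReal X) :
    volume {x | x ∈ E ∆ (flip0 ⁻¹' E) ∧ ‖vtail x‖ ≤ ϱ} ≤ ofReal (4 * X) := by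
  have hm : MeasurableSet {x : 𝕍 | x ∈ E ∆ (flip0 ⁻¹' E) ∧ ‖vtail x‖ ≤ ϱ} :=
    (hE.symmDiff (measurable_flip0 hE)).inter (measurableSet_le measurable_vtail.norm measurable_const)
  rw [volume_eq_sl hm]
  have key : ∀ y, volume (sl {x : 𝕍 | x ∈ E ∆ (flip0 ⁻¹' E) ∧ ‖vtail x‖ ≤ ϱ} y) ≤
      (𝔹[n] ϱ).indicator
        (fun s => ofReal 4 * (‖cc E s‖ₑ + ‖qq E s‖ₑ)) y := by
    intro y
    by_cases hy : y ∈ 𝔹[n] ϱ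
    · rw [indicator_of_mem hy]
      refine (measure_mono ?_).trans ((slice_flip (measurableSet_sl hE y) (hf y)).trans ?_)
      · intro t ht
        have := ht.1
        simp only [mem_symmDiff, mem_preimage, flip0, vtail_vcons] at this
        simpa only [sl, mem_symmDiff, mem_preimage, mem_setOf_eq, vcons, Fin.cons_zero] using this
      · rw [ofReal_mul (by norm_num), ofReal_add (by positivity) (by positivity),
          enorm_eq_ofReal_abs, enorm_eq_ofReal_abs, abs_of_nonneg (a := qq E y) measureReal_nonneg]
        rfl
    · rw [indicator_of_notMem hy]
      have : sl {x : 𝕍 | x ∈ E ∆ (flip0 ⁻¹' E) ∧ ‖vtail x‖ ≤ ϱ} y = ∅ := by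
        ext t
        simp only [sl, mem_setOf_eq, vtail_vcons, mem_empty_iff_false, iff_false, not_and]
        intro _ h2
        exact hy (by simpa using h2)
      rw [this, measure_empty]
  refine (lintegral_mono key).trans ?_
  rw [lintegral_indicator measurableSet_closedBall,
    lintegral_const_mul' _ _ ofReal_ne_top, ofReal_mul (by norm_num)]
  exact mul_le_mul_right h _

/-- The reflection in the hyperplane orthogonal to `w` (the identity for `w = 0`). -/
def Rf {d : ℕ} (w x : Vec d) : Vec d := x - (2 * inner ℝ w x / ‖w‖ ^ 2) • w

lemma measurable_Rf {d : ℕ} : Measurable fun p : Vec d × Vec d => Rf p.1 p.2 := by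
  unfold Rf; fun_prop

lemma inner_Rf {d : ℕ} {w : Vec d} (hw : w ≠ 0) (x : Vec d) : inner ℝ w (Rf w x) = -inner ℝ w x := by
  have : ‖w‖ ^ 2 ≠ 0 := by simpa using hw
  rw [Rf, inner_sub_right, inner_smul_right, real_inner_self_eq_norm_sq]
  field_simp; ring

lemma norm_Rf {d : ℕ} (w x : Vec d) : ‖Rf w x‖ = ‖x‖ := by
  by_cases hw : w = 0
  · simp [hw, Rf]
  have : ‖Rf w x‖ ^ 2 = ‖x‖ ^ 2 := by
    rw [← real_inner_self_eq_norm_sq, ← real_inner_self_eq_norm_sq]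
    simp only [Rf, inner_sub_left, inner_sub_right, inner_smul_left, inner_smul_right,
      real_inner_self_eq_norm_sq w, real_inner_comm w x, conj_trivial]
    field_simp; ring
  exact (sq_eq_sq₀ (norm_nonneg _) (norm_nonneg _)).1 this

lemma Rf_Rf {d : ℕ} (w x : Vec d) : Rf w (Rf w x) = x := by
  by_cases hw : w = 0
  · simp [hw, Rf]
  conv_lhs => rw [Rf, inner_Rf hw, Rf]
  module

/-- The reflection as a linear isometry. -/
def RfI {d : ℕ} (w : Vec d) : Vec d ≃ₗᵢ[ℝ] Vec d where
  toFun := Rf w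
  invFun := Rf w
  left_inv := Rf_Rf w
  right_inv := Rf_Rf w
  map_add' x y := by simp only [Rf, inner_add_right]; module
  map_smul' c x := by simp only [Rf, inner_smul_right, RingHom.id_apply]; module
  norm_map' := norm_Rf w

lemma RfI_apply {d : ℕ} (w x : Vec d) : RfI w x = Rf w x := rfl

lemma Rf_frame (g : 𝕍 ≃ₗᵢ[ℝ] 𝕍) {w : 𝕍} (hw : w ≠ 0)
    (hg : g (vcons ‖w‖ 0) = w) (x : 𝕍) : Rf w (g x) = g (flip0 x) := by
  have h0 : ‖w‖ ≠ 0 := by simpa using hw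
  have e : vcons ‖w‖ (0 : Vec n) = ‖w‖ • vcons 1 0 := by rw [← vcons_smul]; simp
  have hi : inner ℝ w (g x) = ‖w‖ * x 0 := by
    conv_lhs => rw [← hg]
    rw [g.inner_map_map, e, inner_smul_left, inner_e0]; rfl
  rw [Rf, hi]
  conv_lhs => arg 2; arg 2; rw [← hg]
  rw [← map_smul, ← map_sub]
  congr 1
  conv_lhs => rw [← vcons_vtail x]
  rw [← vcons_smul, ← vcons_sub, flip0]
  simp only [smul_zero, sub_zero]
  congr 1
  rw [vcons_vtail]
  field_simp
  ring

lemma norm_vtail_frame (g : 𝕍 ≃ₗᵢ[ℝ] 𝕍) {w : 𝕍} (hw : w ≠ 0)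
    (hg : g (vcons ‖w‖ 0) = w) (x : 𝕍) :
    ‖w‖ ^ 2 * ‖vtail x‖ ^ 2 = ‖w‖ ^ 2 * ‖g x‖ ^ 2 - (inner ℝ w (g x)) ^ 2 := by
  have e : vcons ‖w‖ (0 : Vec n) = ‖w‖ • vcons 1 0 := by rw [← vcons_smul]; simp
  have hi : inner ℝ w (g x) = ‖w‖ * x 0 := by
    conv_lhs => rw [← hg]
    rw [g.inner_map_map, e, inner_smul_left, inner_e0]; rfl
  have h2 : ‖g x‖ ^ 2 = x 0 ^ 2 + ‖vtail x‖ ^ 2 := by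
    rw [g.norm_map]
    conv_lhs => rw [← vcons_vtail x]
    rw [norm_vcons_sq]
  rw [hi, h2]; ring

/-- Approximate symmetry under the reflection in `w⊥`, away from the equator. -/
lemma refl_strip {E : Set 𝕍} (hE : MeasurableSet E) {R : ℝ} (hR : E ⊆ 𝔹 R)
    {ϱ X : ℝ} (hϱ : 0 ≤ ϱ)
    (h : ∀ g : 𝕍 ≃ₗᵢ[ℝ] 𝕍,
      ∫⁻ s in 𝔹 ϱ, (‖cc (g ⁻¹' E) s‖ₑ + ‖qq (g ⁻¹' E) s‖ₑ) ≤ ofReal X)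
    {w : 𝕍} (hw : w ≠ 0) :
    volume {x | x ∈ E ∆ (Rf w ⁻¹' E) ∧ ‖w‖ ^ 2 * ‖x‖ ^ 2 - (inner ℝ w x) ^ 2 ≤ ‖w‖ ^ 2 * ϱ ^ 2} ≤
      ofReal (4 * X) := by
  obtain ⟨g, hg⟩ := exists_isom (vcons ‖w‖ (0 : Vec n)) w (by simp [norm_vcons_zero])
  have := flip_strip (meas_isom g hE) (finSl_of_bdd (isom_sub_ball g hR)) ϱ X (h g)
  refine le_trans (le_of_eq ?_) this
  rw [← vol_isom' g]
  congr 1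
  ext x
  have hwp : 0 < ‖w‖ ^ 2 := by positivity
  simp only [mem_preimage, mem_setOf_eq, mem_symmDiff, Rf_frame g hw hg, ← norm_vtail_frame g hw hg]
  rw [mul_le_mul_iff_right₀ hwp, sq_le_sq₀ (norm_nonneg _) hϱ]

/-- The measure of a slab in the unit ball. -/
lemma volume_slab {θ : 𝕍} (hθ : ‖θ‖ = 1) {s : ℝ} (hs : 0 ≤ s) :
    volume {w : 𝕍 | ‖w‖ ≤ 1 ∧ |inner ℝ w θ| ≤ s} ≤
      ofReal (2 * s * volume.real (𝔹[n] 1)) := by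
  obtain ⟨g, hg⟩ := exists_isom (vcons 1 (0 : Vec n)) θ (by simp [norm_vcons_zero, hθ])
  have hm : MeasurableSet {w : 𝕍 | ‖w‖ ≤ 1 ∧ |w 0| ≤ s} :=
    (measurableSet_le (f := fun w : 𝕍 => ‖w‖) (g := fun _ => 1) (by fun_prop) (by fun_prop)).inter
      (measurableSet_le (f := fun w : 𝕍 => |w 0|) (g := fun _ => s) (by fun_prop) (by fun_prop))
  rw [← vol_isom' g]
  have : g ⁻¹' {w : 𝕍 | ‖w‖ ≤ 1 ∧ |inner ℝ w θ| ≤ s} = {w : 𝕍 | ‖w‖ ≤ 1 ∧ |w 0| ≤ s} := by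
    ext w
    simp only [mem_preimage, mem_setOf_eq, g.norm_map]
    rw [← hg, g.inner_map_map, real_inner_comm, inner_e0]
  rw [this, volume_eq_sl hm]
  have key : ∀ y, volume (sl {w : 𝕍 | ‖w‖ ≤ 1 ∧ |w 0| ≤ s} y) ≤
      (𝔹[n] 1).indicator (fun _ => ofReal (2 * s)) y := by
    intro y
    by_cases hy : y ∈ 𝔹[n] 1
    · rw [indicator_of_mem hy]
      refine (measure_mono (t := Icc (-s) s) ?_).trans (le_of_eq ?_)
      · intro t ht
        exact abs_le.1 ht.2
      · rw [volume_Icc]; congr 1; ring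
    · rw [indicator_of_notMem hy]
      have : sl {w : 𝕍 | ‖w‖ ≤ 1 ∧ |w 0| ≤ s} y = ∅ := by
        ext t
        simp only [sl, mem_setOf_eq, mem_empty_iff_false, iff_false, not_and]
        intro h1
        exact absurd ((norm_le_norm_vcons t y).trans h1) (by simpa using hy)
      rw [this, measure_empty]
  refine (lintegral_mono key).trans (le_of_eq ?_)
  rw [lintegral_indicator measurableSet_closedBall, setLIntegral_const,
    ofReal_mul (p := 2 * s) (by positivity), measureReal_def, ofReal_toReal ball_ne_top]

lemma Shell.norm_bounds {d : ℕ} {r η : ℝ} {E : Set (Vec d)} (h : Shell r η E) (hη : 0 < η) {x : Vec d}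
    (hx : x ∈ E ∆ 𝔹 r) : r - η ≤ ‖x‖ ∧ ‖x‖ ≤ r + η := by
  have h1 : ‖x‖ ≤ r - η → x ∈ E := fun hh => h.2.1 (by simpa using hh)
  have h2 : x ∈ E → ‖x‖ ≤ r + η := fun hh => by simpa using h.2.2 hh
  simp only [mem_symmDiff, mem_closedBall_zero_iff] at hx
  rcases hx with ⟨a, b⟩ | ⟨a, b⟩
  · exact ⟨by linarith [not_le.1 b], h2 a⟩
  · refine ⟨?_, by linarith⟩
    by_contra hh
    exact b (h1 (by linarith))

lemma equator_est {r κ η a : ℝ} (hr : 0 < r) (hκ0 : 0 < κ) (hκ1 : κ ≤ 1 / 2) (hη : η ≤ κ * r / 4)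
    (h1 : r - η ≤ a) (h2 : a ≤ r + η) : a ^ 2 - (r * (1 - κ)) ^ 2 ≤ 4 * κ * a ^ 2 := by
  have ha0 : 0 ≤ a := by nlinarith only [h1, hη, hr, hκ1]
  have ha : a ≤ r * (1 + κ / 4) := by linarith
  have ha2 : a ^ 2 ≤ (r * (1 + κ / 4)) ^ 2 := by gcongr
  by_cases h4 : 4 * κ ≤ 1
  · have : (1 - 4 * κ) * a ^ 2 ≤ (1 - 4 * κ) * (r * (1 + κ / 4)) ^ 2 := by gcongr
    have h3 : (1 - 4 * κ) * (1 + κ / 4) ^ 2 ≤ (1 - κ) ^ 2 := by nlinarith only [hκ0, hκ1, sq_nonneg κ, mul_pos hκ0 hκ0]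
    have h5 : r ^ 2 * ((1 - 4 * κ) * (1 + κ / 4) ^ 2) ≤ r ^ 2 * (1 - κ) ^ 2 := by gcongr
    nlinarith only [this, h5]
  · nlinarith only [h4, sq_nonneg a, sq_nonneg (r * (1 - κ)), mul_nonneg (by linarith : (0:ℝ) ≤ 4 * κ - 1) (sq_nonneg a)]

/-- Average over all reflections: the set is nearly invariant under most of them. -/
lemma refl_avg {r κ η X δ : ℝ} {E : Set 𝕍} (hS : Shell r η E) (hr : 0 < r) (hη0 : 0 < η)
    (hκ0 : 0 < κ) (hκ1 : κ ≤ 1 / 2) (hη : η ≤ κ * r / 4) (hX : 0 ≤ X) (hδ0 : 0 ≤ δ)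
    (hδ : volume (E ∆ 𝔹 r) ≤ ofReal δ)
    (h : ∀ g : 𝕍 ≃ₗᵢ[ℝ] 𝕍,
      ∫⁻ s in 𝔹 (r * (1 - κ)), (‖cc (g ⁻¹' E) s‖ₑ + ‖qq (g ⁻¹' E) s‖ₑ) ≤ ofReal X) :
    ∫⁻ w in 𝔹 1, volume (E ∆ (Rf w ⁻¹' E)) ≤
      ofReal (4 * X * volume.real (𝔹[n + 1] 1) +
        8 * volume.real (𝔹[n] 1) * (√κ * δ)) := by
  have hE := hS.1
  set B := 𝔹[n + 1] r with hB
  have hBm : MeasurableSet B := measurableSet_closedBall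
  have hB1m : MeasurableSet (𝔹[n + 1] 1) := measurableSet_closedBall
  set D := E ∆ B with hD
  have hDm : MeasurableSet D := hE.symmDiff hBm
  let Q : 𝕍 → Set 𝕍 := fun w => {x | x ∈ D ∧ |inner ℝ w x| ≤ 2 * √κ * ‖x‖}
  have hQm : ∀ w, MeasurableSet (Q w) := fun w =>
    hDm.inter (measurableSet_le (f := fun x : 𝕍 => |inner ℝ w x|) (g := fun x => 2 * √κ * ‖x‖)
      (by fun_prop) (by fun_prop))
  have hw1 : ∀ w ∈ 𝔹[n + 1] 1,
      volume (E ∆ (Rf w ⁻¹' E)) ≤ ofReal (4 * X) + (volume (Q w) + volume (Q w)) := by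
    intro w hwb
    have hwn : ‖w‖ ≤ 1 := by simpa using hwb
    by_cases hw : w = 0
    · have : E ∆ (Rf w ⁻¹' E) = ∅ := by
        ext x; simp [hw, Rf, mem_symmDiff]
      rw [this, measure_empty]; exact zero_le
    have hsub : E ∆ (Rf w ⁻¹' E) ⊆
        {x | x ∈ E ∆ (Rf w ⁻¹' E) ∧
          ‖w‖ ^ 2 * ‖x‖ ^ 2 - (inner ℝ w x) ^ 2 ≤ ‖w‖ ^ 2 * (r * (1 - κ)) ^ 2} ∪
        (Q w ∪ RfI w ⁻¹' (Q w)) := by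
      intro x hx
      by_cases hs : ‖w‖ ^ 2 * ‖x‖ ^ 2 - (inner ℝ w x) ^ 2 ≤ ‖w‖ ^ 2 * (r * (1 - κ)) ^ 2
      · exact Or.inl ⟨hx, hs⟩
      right
      -- a point of the exceptional zone makes a small angle with the equator
      have ang : r - η ≤ ‖x‖ ∧ ‖x‖ ≤ r + η → |inner ℝ w x| ≤ 2 * √κ * ‖x‖ := by
        intro hb
        refine abs_le_of_sq_le_sq ?_ (by positivity)
        have e1 := equator_est hr hκ0 hκ1 hη hb.1 hb.2
        have e2 : ‖w‖ ^ 2 * (‖x‖ ^ 2 - (r * (1 - κ)) ^ 2) ≤ ‖w‖ ^ 2 * (4 * κ * ‖x‖ ^ 2) := by gcongr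
        have e3 : ‖w‖ ^ 2 * (4 * κ * ‖x‖ ^ 2) ≤ 1 * (4 * κ * ‖x‖ ^ 2) := by
          gcongr; exact pow_le_one₀ (norm_nonneg _) hwn
        have e4 : (2 * √κ * ‖x‖) ^ 2 = 4 * κ * ‖x‖ ^ 2 := by
          rw [mul_pow, mul_pow, sq_sqrt hκ0.le]; ring
        rw [e4]; linarith
      by_cases hxD : x ∈ D
      · left
        exact ⟨hxD, ang (hS.norm_bounds hη0 hxD)⟩
      · right
        have hxD' : Rf w x ∈ D := by
          have hn : x ∈ B ↔ Rf w x ∈ B := by simp [hB, norm_Rf]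
          simp only [hD, mem_symmDiff, mem_preimage] at hx hxD ⊢
          tauto
        refine ⟨hxD', ?_⟩
        rw [RfI_apply, inner_Rf hw, abs_neg, norm_Rf]
        refine ang ?_
        have := hS.norm_bounds hη0 hxD'
        rwa [norm_Rf] at this
    refine (measure_mono hsub).trans ((measure_union_le _ _).trans (add_le_add ?_ ?_))
    · exact refl_strip hE hS.2.2 (by have : 0 ≤ 1 - κ := by linarith
                                     positivity) h hw
    · refine (measure_union_le _ _).trans (add_le_add_right (le_of_eq ?_) _)
      exact vol_isom (RfI w) (hQm w)
  refine (setLIntegral_mono' hB1m hw1).trans ?_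
  have hitg : ∫⁻ w in 𝔹[n + 1] 1, volume (Q w) ≤
      ofReal (4 * volume.real (𝔹[n] 1) * (√κ * δ)) := by
    have hPm : MeasurableSet {p : 𝕍 × 𝕍 | p.2 ∈ D ∧ |inner ℝ p.1 p.2| ≤ 2 * √κ * ‖p.2‖} :=
      (measurable_snd hDm).inter (measurableSet_le
        (f := fun p : 𝕍 × 𝕍 => |inner ℝ p.1 p.2|) (g := fun p => 2 * √κ * ‖p.2‖)
        (by fun_prop) (by fun_prop))
    have e1 : ∫⁻ w in 𝔹[n + 1] 1, volume (Q w) =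
        ((volume.restrict (𝔹[n + 1] 1)).prod volume)
          {p : 𝕍 × 𝕍 | p.2 ∈ D ∧ |inner ℝ p.1 p.2| ≤ 2 * √κ * ‖p.2‖} := by
      rw [Measure.prod_apply hPm]; rfl
    rw [e1, Measure.prod_apply_symm hPm]
    have e2 : ∀ x, (volume.restrict (𝔹[n + 1] 1))
        ((fun w => (w, x)) ⁻¹' {p : 𝕍 × 𝕍 | p.2 ∈ D ∧ |inner ℝ p.1 p.2| ≤ 2 * √κ * ‖p.2‖}) ≤
        D.indicator (fun _ => ofReal (2 * (2 * √κ) * volume.real (𝔹[n] 1))) x := by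
      intro x
      by_cases hx : x ∈ D
      · rw [indicator_of_mem hx]
        have hxp : 0 < ‖x‖ := by
          have := (hS.norm_bounds hη0 hx).1
          nlinarith only [this, hη, hκ1, hr]
        have := volume_slab (n := n) (θ := ‖x‖⁻¹ • x) (by rw [norm_smul, norm_inv, norm_norm, inv_mul_cancel₀ hxp.ne'])
          (s := 2 * √κ) (by positivity)
        refine le_trans ?_ this
        rw [Measure.restrict_apply' hB1m]
        refine measure_mono ?_
        rintro w ⟨⟨_, hw1⟩, hw2⟩
        refine ⟨by simpa using hw2, ?_⟩
        rw [inner_smul_right, abs_mul, abs_inv, abs_norm, inv_mul_le_iff₀ hxp]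
        rw [mul_comm]; exact hw1
      · rw [indicator_of_notMem hx]
        have : ((fun w => (w, x)) ⁻¹' {p : 𝕍 × 𝕍 | p.2 ∈ D ∧ |inner ℝ p.1 p.2| ≤ 2 * √κ * ‖p.2‖}) = ∅ := by
          ext w; simp [hx]
        rw [this, measure_empty]
    refine (lintegral_mono e2).trans ?_
    rw [lintegral_indicator hDm, setLIntegral_const]
    refine (mul_le_mul_right hδ _).trans (le_of_eq ?_)
    rw [← ofReal_mul (by positivity)]
    congr 1; ring
  rw [lintegral_add_left measurable_const, setLIntegral_const]
  have hQmeas : Measurable fun w => volume (Q w) := by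
    have hPm : MeasurableSet {p : 𝕍 × 𝕍 | p.2 ∈ D ∧ |inner ℝ p.1 p.2| ≤ 2 * √κ * ‖p.2‖} :=
      (measurable_snd hDm).inter (measurableSet_le
        (f := fun p : 𝕍 × 𝕍 => |inner ℝ p.1 p.2|) (g := fun p => 2 * √κ * ‖p.2‖)
        (by fun_prop) (by fun_prop))
    exact measurable_measure_prodMk_left hPm
  rw [lintegral_add_left hQmeas, ofReal_add (by positivity) (by positivity)]
  refine add_le_add (le_of_eq ?_) ((add_le_add hitg hitg).trans (le_of_eq ?_))
  · rw [ofReal_mul (p := 4 * X) (by positivity), measureReal_def, ofReal_toReal ball_ne_top]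
  · rw [← ofReal_add (by positivity) (by positivity)]; congr 1; ring

/-- The quadratic map `w ↦ -‖w‖² R_w θ`, which parametrizes directions by reflections. -/
def Psi {d : ℕ} (θ w : Vec d) : Vec d := (2 * inner ℝ θ w) • w - (‖w‖ ^ 2) • θ

lemma contDiff_Psi {d : ℕ} : ContDiff ℝ 1 fun q : (Vec d × Vec d) × Vec d => Psi q.1.1 q.2 := by
  unfold Psi
  have h1 : ContDiff ℝ 1 fun q : (Vec d × Vec d) × Vec d => q.1.1 := by fun_prop
  have h2 : ContDiff ℝ 1 fun q : (Vec d × Vec d) × Vec d => q.2 := by fun_prop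
  exact ((contDiff_const.mul (h1.inner ℝ h2)).smul h2).sub ((h2.norm_sq ℝ).smul h1)

/-- `Psi` expands the measure of subsets of the unit ball by a bounded factor. -/
lemma volume_Psi_image (d : ℕ) : ∃ K > 0, ∀ θ : Vec d, ‖θ‖ = 1 → ∀ S : Set (Vec d), MeasurableSet S →
    S ⊆ 𝔹 1 → volume (Psi θ '' S) ≤ ofReal K * volume S := by
  have hc : Continuous fun p : Vec d × Vec d => (fderiv ℝ (Psi p.1) p.2).det := by
    refine ContinuousLinearMap.continuous_det.comp ?_
    have := ContDiff.fderiv (𝕜 := ℝ) (f := fun (p : Vec d × Vec d) (w : Vec d) => Psi p.1 w)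
      (g := fun p : Vec d × Vec d => p.2) (m := 1) (n := 0) contDiff_Psi (by fun_prop) (by norm_num)
    exact this.continuous
  obtain ⟨K, hK⟩ := ((isCompact_closedBall (0 : Vec d) 1).prod (isCompact_closedBall (0 : Vec d) 1)).exists_bound_of_continuousOn
    hc.continuousOn
  refine ⟨max K 1, by positivity, fun θ hθ S hS hS1 => ?_⟩
  have hd : Differentiable ℝ (Psi θ) := by
    have h1 : ContDiff ℝ 1 fun w : Vec d => (((θ, θ), w) : (Vec d × Vec d) × Vec d) :=
      contDiff_const.prodMk contDiff_id
    exact (contDiff_Psi.comp h1).differentiable one_ne_zero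
  refine (addHaar_image_le_lintegral_abs_det_fderiv volume hS
    (f' := fun w => fderiv ℝ (Psi θ) w) (fun w _ => (hd w).hasFDerivAt.hasFDerivWithinAt)).trans ?_
  rw [← setLIntegral_const]
  refine setLIntegral_mono' hS fun w hw => ofReal_le_ofReal ?_
  refine le_trans ?_ (le_max_left _ _)
  have := hK (θ, w) ⟨by simp [hθ], hS1 hw⟩
  simpa using this

lemma Rf_smul_left {d : ℕ} {a : ℝ} (ha : a ≠ 0) (w x : Vec d) : Rf (a • w) x = Rf w x := by
  by_cases hw : w = 0
  · simp [hw, Rf]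
  have h0 : ‖w‖ ≠ 0 := by simpa using hw
  rw [Rf, Rf, inner_smul_left, norm_smul, smul_smul, norm_eq_abs, mul_pow, sq_abs]
  congr 2
  simp only [conj_trivial]
  field_simp

lemma Rf_swap {d : ℕ} {θ φ : Vec d} (hn : ‖θ‖ = ‖φ‖) (hne : θ ≠ φ) : Rf (θ - φ) θ = φ := by
  have h0 : ‖θ - φ‖ ^ 2 ≠ 0 := by
    have : θ - φ ≠ 0 := sub_ne_zero.2 hne
    simpa using this
  have : 2 * inner ℝ (θ - φ) θ / ‖θ - φ‖ ^ 2 = 1 := by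
    rw [div_eq_one_iff_eq h0, @norm_sub_sq_real, inner_sub_left, real_inner_self_eq_norm_sq, ← hn,
      real_inner_comm]
    ring
  rw [Rf, this, one_smul, sub_sub_cancel]

lemma Psi_eq {d : ℕ} {θ w : Vec d} (hw : w ≠ 0) : Psi θ w = -(‖w‖ ^ 2 • Rf w θ) := by
  have h0 : ‖w‖ ≠ 0 := by simpa using hw
  rw [Psi, Rf, smul_sub, smul_smul, real_inner_comm]
  have : ‖w‖ ^ 2 * (2 * inner ℝ w θ / ‖w‖ ^ 2) = 2 * inner ℝ w θ := by field_simp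
  rw [this]; abel

lemma Rf_smul {d : ℕ} (w x : Vec d) (a : ℝ) : Rf w (a • x) = a • Rf w x := (RfI w).map_smul a x

/-- The points with a bad direction `z` are parametrized by the bad reflections. -/
lemma bad_dir {d : ℕ} {K : ℝ} (hK : ∀ θ : Vec d, ‖θ‖ = 1 → ∀ S : Set (Vec d), MeasurableSet S →
    S ⊆ 𝔹 1 → volume (Psi θ '' S) ≤ ofReal K * volume S)
    {E : Set (Vec d)} (hE : MeasurableSet E) (x : Vec d) :
    volume {z | z ∈ 𝔹 1 \ {0} ∧ x ∈ E ∆ ((fun y => (-(‖y‖ / ‖z‖)) • z) ⁻¹' E)} ≤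
      ofReal K * volume {w | w ∈ 𝔹 1 ∧ x ∈ E ∆ (Rf w ⁻¹' E)} := by
  by_cases hx : x = 0
  · subst hx
    have : {z : Vec d | z ∈ 𝔹 1 \ {0} ∧
        (0 : Vec d) ∈ E ∆ ((fun y => (-(‖y‖ / ‖z‖)) • z) ⁻¹' E)} = ∅ := by
      ext z; simp [mem_symmDiff]
    rw [this, measure_empty]; exact zero_le
  have hxp : 0 < ‖x‖ := norm_pos_iff.2 hx
  obtain ⟨θ, hθd⟩ : ∃ θ : Vec d, θ = ‖x‖⁻¹ • x := ⟨_, rfl⟩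
  have hθ : ‖θ‖ = 1 := by rw [hθd, norm_smul, norm_inv, norm_norm, inv_mul_cancel₀ hxp.ne']
  have hxθ : x = ‖x‖ • θ := by rw [hθd, smul_smul, mul_inv_cancel₀ hxp.ne', one_smul]
  have hSm : MeasurableSet {w : Vec d | w ∈ 𝔹 1 ∧ x ∈ E ∆ (Rf w ⁻¹' E)} := by
    refine measurableSet_closedBall.inter ?_
    have hm : Measurable fun w : Vec d => Rf w x := measurable_Rf.comp (measurable_id.prodMk measurable_const)
    have : {w : Vec d | x ∈ E ∆ (Rf w ⁻¹' E)} = symmDiff {_w : Vec d | x ∈ E} ((fun w => Rf w x) ⁻¹' E) := by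
      ext w; simp [mem_symmDiff]
    show MeasurableSet {w : Vec d | x ∈ E ∆ (Rf w ⁻¹' E)}
    rw [this]
    exact (MeasurableSet.const _).symmDiff (hm hE)
  refine le_trans (measure_mono ?_) (hK θ hθ _ hSm fun w hw => hw.1)
  rintro z ⟨⟨hz1, hz0⟩, hb⟩
  have hz1' : ‖z‖ ≤ 1 := by simpa using hz1
  have hzp : 0 < ‖z‖ := norm_pos_iff.2 (by simpa using hz0)
  obtain ⟨φ, hφd⟩ : ∃ φ : Vec d, φ = -(‖z‖⁻¹ • z) := ⟨_, rfl⟩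
  have hφ : ‖φ‖ = 1 := by rw [hφd, norm_neg, norm_smul, norm_inv, norm_norm, inv_mul_cancel₀ hzp.ne']
  have hzφ : z = -(‖z‖ • φ) := by rw [hφd, smul_neg, neg_neg, smul_smul, mul_inv_cancel₀ hzp.ne', one_smul]
  have hpt : (-(‖x‖ / ‖z‖)) • z = ‖x‖ • φ := by rw [hφd]; module
  have hne : θ ≠ φ := by
    rintro rfl
    simp only [mem_symmDiff, mem_preimage, hpt, ← hxθ] at hb
    tauto
  have hu : 0 < ‖θ - φ‖ := norm_pos_iff.2 (sub_ne_zero.2 hne)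
  have ha : √‖z‖ / ‖θ - φ‖ ≠ 0 := by positivity
  refine ⟨(√‖z‖ / ‖θ - φ‖) • (θ - φ), ⟨?_, ?_⟩, ?_⟩
  · rw [mem_closedBall_zero_iff, norm_smul, norm_eq_abs, abs_of_nonneg (by positivity),
      div_mul_cancel₀ _ hu.ne']
    exact Real.sqrt_le_one.2 hz1'
  · have : Rf ((√‖z‖ / ‖θ - φ‖) • (θ - φ)) x = ‖x‖ • φ := by
      rw [Rf_smul_left ha]
      conv_lhs => rw [hxθ]
      rw [Rf_smul, Rf_swap (hθ.trans hφ.symm) hne]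
    simp only [mem_symmDiff, mem_preimage, hpt, this] at hb ⊢
    exact hb
  · rw [Psi_eq (smul_ne_zero ha (sub_ne_zero.2 hne)), Rf_smul_left ha, Rf_swap (hθ.trans hφ.symm) hne,
      norm_smul, norm_eq_abs, abs_of_nonneg (by positivity), div_mul_cancel₀ _ hu.ne',
      sq_sqrt (norm_nonneg _)]
    exact hzφ.symm

/-- A set which is nearly invariant under most reflections is nearly radial. -/
lemma exists_radial (n : ℕ) : ∃ K > 0, ∀ (E : Set (Vec (n + 1))) (Y : ℝ), MeasurableSet E → 0 ≤ Y →
    ∫⁻ w in 𝔹 1, volume (E ∆ (Rf w ⁻¹' E)) ≤ ofReal Y →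
    ∃ z : Vec (n + 1), ‖z‖ = 1 ∧ volume (E ∆ ((fun x => ‖x‖ • z) ⁻¹' E)) ≤ ofReal (K * Y) := by
  obtain ⟨K, hK0, hK⟩ := volume_Psi_image (n + 1)
  set ω := volume.real (𝔹[n + 1] 1) with hω
  have hωp : 0 < ω := by
    rw [hω, measureReal_def]
    exact toReal_pos (measure_closedBall_pos _ _ one_pos).ne' ball_ne_top
  refine ⟨K / ω, by positivity, fun E Y hE hY h => ?_⟩
  set B := 𝔹[n + 1] 1 with hB
  have hBm : MeasurableSet B := measurableSet_closedBall
  have hB0m : MeasurableSet (B \ {0}) := hBm.diff (measurableSet_singleton _)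
  have hB0v : volume (B \ {0}) = volume B := measure_diff_null (by simp)
  have m1 : MeasurableSet {p : Vec (n + 1) × Vec (n + 1) | p.2 ∈ E ∆ (Rf p.1 ⁻¹' E)} := by
    have : {p : Vec (n + 1) × Vec (n + 1) | p.2 ∈ E ∆ (Rf p.1 ⁻¹' E)} =
      (Prod.snd ⁻¹' E) ∆ ((fun p => Rf p.1 p.2) ⁻¹' E) := by ext p; simp [mem_symmDiff]
    exact this ▸ (measurable_snd hE).symmDiff (measurable_Rf hE)
  have m2 : MeasurableSet {p : Vec (n + 1) × Vec (n + 1) |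
      p.2 ∈ E ∆ ((fun y => (-(‖y‖ / ‖p.1‖)) • p.1) ⁻¹' E)} := by
    have : {p : Vec (n + 1) × Vec (n + 1) | p.2 ∈ E ∆ ((fun y => (-(‖y‖ / ‖p.1‖)) • p.1) ⁻¹' E)} =
      (Prod.snd ⁻¹' E) ∆ ((fun p => (-(‖p.2‖ / ‖p.1‖)) • p.1) ⁻¹' E) := by ext p; simp [mem_symmDiff]
    have hm : Measurable fun p : Vec (n + 1) × Vec (n + 1) => (-(‖p.2‖ / ‖p.1‖)) • p.1 := by fun_prop
    exact this ▸ (measurable_snd hE).symmDiff (hm hE)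
  have e1 : ∫⁻ z in B \ {0}, volume (E ∆ ((fun y => (-(‖y‖ / ‖z‖)) • z) ⁻¹' E)) ≤ ofReal (K * Y) := by
    have a1 : ∫⁻ z in B \ {0}, volume (E ∆ ((fun y => (-(‖y‖ / ‖z‖)) • z) ⁻¹' E)) =
        ((volume.restrict (B \ {0})).prod volume) {p : Vec (n + 1) × Vec (n + 1) |
          p.2 ∈ E ∆ ((fun y => (-(‖y‖ / ‖p.1‖)) • p.1) ⁻¹' E)} := by
      rw [Measure.prod_apply m2]; rfl
    have a2 : ∫⁻ w in B, volume (E ∆ (Rf w ⁻¹' E)) =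
        ((volume.restrict B).prod volume) {p : Vec (n + 1) × Vec (n + 1) | p.2 ∈ E ∆ (Rf p.1 ⁻¹' E)} := by
      rw [Measure.prod_apply m1]; rfl
    rw [a2, Measure.prod_apply_symm m1] at h
    rw [a1, Measure.prod_apply_symm m2, ofReal_mul hK0.le]
    refine le_trans ?_ (mul_le_mul_right h _)
    rw [← lintegral_const_mul' _ _ ofReal_ne_top]
    refine lintegral_mono fun x => ?_
    simp only
    rw [Measure.restrict_apply' hB0m, Measure.restrict_apply' hBm, inter_comm, inter_comm _ B]
    exact bad_dir hK hE x
  have hne : volume (B \ {0}) ≠ 0 := by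
    rw [hB0v]; exact (measure_closedBall_pos _ _ one_pos).ne'
  obtain ⟨z, hz, hzle⟩ := exists_le_setLAverage (μ := volume) hne (by rw [hB0v]; exact ball_ne_top)
    (f := fun z => volume (E ∆ ((fun y => (-(‖y‖ / ‖z‖)) • z) ⁻¹' E)))
    (measurable_measure_prodMk_left m2).aemeasurable
  have hzp : 0 < ‖z‖ := norm_pos_iff.2 (by simpa using hz.2)
  refine ⟨(-‖z‖⁻¹) • z, by rw [norm_smul, norm_neg, norm_inv, norm_norm, inv_mul_cancel₀ hzp.ne'], ?_⟩
  have : (fun x : Vec (n + 1) => ‖x‖ • (-‖z‖⁻¹) • z) = fun y => (-(‖y‖ / ‖z‖)) • z := by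
    funext x; module
  rw [this]
  refine hzle.trans ?_
  rw [setLAverage_eq, hB0v]
  refine (ENNReal.div_le_div_right e1 _).trans (le_of_eq ?_)
  have : volume B = ofReal ω := by rw [hω, measureReal_def, ofReal_toReal ball_ne_top]
  rw [this, ← ofReal_div_of_pos hωp]
  congr 1; ring

lemma volume_norm_mem (n : ℕ) : ∃ K > 0, ∀ S : Set ℝ, MeasurableSet S → volume S ≠ ⊤ →
    volume {x : Vec (n + 1) | ‖x‖ ∈ S ∧ ‖x‖ ≤ 2} ≤ ofReal K * volume S := by
  set ω := volume.real (Metric.ball (0 : Vec (n + 1)) 1) with hω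
  have hωp : 0 < ω := by
    rw [hω, measureReal_def]
    exact toReal_pos (measure_ball_pos _ _ one_pos).ne' measure_ball_lt_top.ne
  refine ⟨(n + 1) * ω * 2 ^ n, by positivity, fun S hS hSf => ?_⟩
  have hS2 : MeasurableSet (S ∩ Iic 2) := hS.inter measurableSet_Iic
  have hset : {x : Vec (n + 1) | ‖x‖ ∈ S ∧ ‖x‖ ≤ 2} = (fun x => ‖x‖) ⁻¹' (S ∩ Iic 2) := rfl
  have hm : MeasurableSet {x : Vec (n + 1) | ‖x‖ ∈ S ∧ ‖x‖ ≤ 2} := by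
    rw [hset]; exact measurable_norm hS2
  have hfin : volume {x : Vec (n + 1) | ‖x‖ ∈ S ∧ ‖x‖ ≤ 2} ≠ ⊤ := by
    refine ne_top_of_le_ne_top (measure_closedBall_lt_top (x := (0 : Vec (n + 1))) (r := 2)).ne (measure_mono ?_)
    intro x hx; simpa using hx.2
  have h := integral_fun_norm_addHaar (volume : Measure (Vec (n + 1))) ((S ∩ Iic 2).indicator (fun _ => (1 : ℝ)))
  have hl : ∫ x : Vec (n + 1), (S ∩ Iic 2).indicator (fun _ => (1 : ℝ)) ‖x‖ =
      volume.real {x : Vec (n + 1) | ‖x‖ ∈ S ∧ ‖x‖ ≤ 2} := by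
    rw [← integral_indicator_one hm]
    rfl
  rw [hl, finrank_euclideanSpace_fin, nsmul_eq_mul, smul_eq_mul, ← hω] at h
  have hr : ∫ y in Ioi (0 : ℝ), y ^ (n + 1 - 1) • (S ∩ Iic 2).indicator (fun _ => (1 : ℝ)) y ≤ 2 ^ n * volume.real S := by
    calc _ ≤ ∫ y in Ioi (0 : ℝ), S.indicator (fun _ => (2 : ℝ) ^ n) y := by
          refine integral_mono_of_nonneg ?_ ?_ ?_
          · filter_upwards [ae_restrict_mem measurableSet_Ioi] with y hy
            have : (0 : ℝ) < y := hy
            exact smul_nonneg (by positivity) (indicator_nonneg (fun _ _ => zero_le_one) _)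
          · refine (IntegrableOn.integrable_indicator ?_ hS)
            exact integrableOn_const (ne_top_of_le_ne_top hSf (Measure.restrict_le_self _))
          · filter_upwards [ae_restrict_mem measurableSet_Ioi] with y hy
            have hy0 : (0 : ℝ) < y := hy
            simp only [Nat.add_sub_cancel, smul_eq_mul]
            by_cases h1 : y ∈ S
            · by_cases h2 : y ≤ 2
              · rw [indicator_of_mem h1, indicator_of_mem (show y ∈ S ∩ Iic 2 from ⟨h1, h2⟩), mul_one]
                gcongr
              · rw [indicator_of_mem h1, indicator_of_notMem (fun h => h2 h.2), mul_zero]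
                positivity
            · rw [indicator_of_notMem h1, indicator_of_notMem (fun h => h1 h.1), mul_zero]
      _ = (volume.restrict (Ioi 0)).real S * 2 ^ n := by
          rw [integral_indicator hS, setIntegral_const, smul_eq_mul]
      _ ≤ 2 ^ n * volume.real S := by
          rw [mul_comm]
          gcongr
          rw [measureReal_def, measureReal_def]
          exact toReal_mono hSf (Measure.restrict_le_self _)
  rw [← ofReal_toReal hfin, ← ofReal_toReal hSf, ← ofReal_mul (by positivity)]
  refine ofReal_le_ofReal ?_
  rw [← measureReal_def, ← measureReal_def, h, mul_assoc, mul_assoc]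
  push_cast
  gcongr
  exact hr

lemma lipschitz_norm_vcons (y : Vec n) : LipschitzWith 1 fun t : ℝ => ‖vcons t y‖ := by
  refine LipschitzWith.of_dist_le_mul fun s t => ?_
  rw [NNReal.coe_one, one_mul, Real.dist_eq, Real.dist_eq]
  refine (abs_norm_sub_norm_le _ _).trans (le_of_eq ?_)
  rw [← vcons_sub, sub_self, norm_vcons_zero]

/-- If one slice of the radial set `{x | ‖x‖ • z ∈ E}` is close to a symmetric interval, then that
radial set is close to a ball. -/
lemma radial_ball {K : ℝ} (hK : ∀ S : Set ℝ, MeasurableSet S → volume S ≠ ⊤ →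
    volume {x : 𝕍 | ‖x‖ ∈ S ∧ ‖x‖ ≤ 2} ≤ ofReal K * volume S)
    {E : Set 𝕍} {r η h : ℝ} (hS : Shell r η E) (hr0 : 0 < r) (hr1 : r ≤ 1) (hη : η ≤ r / 8)
    {z : 𝕍} (hz : ‖z‖ = 1) {y : Vec n} (hy : ‖y‖ ≤ r / 2) (hh0 : 0 < h) (hh : h ≤ 9 / 8)
    (hf : volume ((sl ((fun x : 𝕍 => ‖x‖ • z) ⁻¹' E) y) ∆ J 0 h) ≠ ⊤) :
    volume (((fun x : 𝕍 => ‖x‖ • z) ⁻¹' E) ∆ (𝔹 ‖vcons h y‖)) ≤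
      ofReal K * volume ((sl ((fun x : 𝕍 => ‖x‖ • z) ⁻¹' E) y) ∆ J 0 h) := by
  set S := (sl ((fun x : 𝕍 => ‖x‖ • z) ⁻¹' E) y) ∆ J 0 h with hSd
  have hN : volume ((fun t : ℝ => ‖vcons t y‖) '' S) ≤ volume S := by
    have := (lipschitz_norm_vcons y).hausdorffMeasure_image_le (d := 1) zero_le_one S
    simpa [hausdorffMeasure_real] using this
  set T := toMeasurable volume ((fun t : ℝ => ‖vcons t y‖) '' S) with hT
  have hTv : volume T ≤ volume S := by rw [hT, measure_toMeasurable]; exact hN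
  refine le_trans (measure_mono ?_) ((hK T (measurableSet_toMeasurable _ _) (ne_top_of_le_ne_top hf hTv)).trans
    (mul_le_mul_right hTv _))
  have hvb : ‖vcons h y‖ ≤ 2 := by
    have : ‖vcons h y‖ ^ 2 ≤ 2 ^ 2 := by
      rw [norm_vcons_sq]
      have : ‖y‖ ^ 2 ≤ (1 / 2) ^ 2 := by gcongr; linarith
      have : h ^ 2 ≤ (9 / 8) ^ 2 := by gcongr
      linarith
    exact le_of_sq_le_sq this (by norm_num)
  have hyv : ‖y‖ ≤ ‖vcons h y‖ := norm_le_norm_vcons h y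
  intro x hx
  have hEn : ∀ x : 𝕍, ‖x‖ • z ∈ E → ‖x‖ ≤ r + η := fun x hx => by
    have := hS.2.2 hx
    simpa [norm_smul, hz] using this
  have hEi : ∀ x : 𝕍, ‖x‖ ≤ r - η → ‖x‖ • z ∈ E := fun x hx =>
    hS.2.1 (by simpa [norm_smul, hz] using hx)
  have hx2 : ‖x‖ ≤ 2 := by
    rcases hx with ⟨a, _⟩ | ⟨a, _⟩
    · have := hEn x a
      linarith
    · have : ‖x‖ ≤ ‖vcons h y‖ := by simpa using a
      linarith
  refine ⟨subset_toMeasurable _ _ ?_, hx2⟩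
  have hxy : ‖y‖ ≤ ‖x‖ := by
    by_contra hlt
    have h1 := hEi x (by linarith)
    have h2 : x ∈ 𝔹[n + 1] ‖vcons h y‖ := by
      simp only [mem_closedBall_zero_iff]; linarith
    rcases hx with ⟨_, b⟩ | ⟨_, b⟩
    · exact b h2
    · exact b h1
  obtain ⟨t, ht⟩ : ∃ t, t = √(‖x‖ ^ 2 - ‖y‖ ^ 2) := ⟨_, rfl⟩
  have ht0 : 0 ≤ t := ht ▸ sqrt_nonneg _
  have htx : ‖vcons (-t) y‖ = ‖x‖ := by
    have : ‖vcons (-t) y‖ ^ 2 = ‖x‖ ^ 2 := by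
      rw [norm_vcons_sq, neg_sq, ht, sq_sqrt (by nlinarith only [hxy, norm_nonneg y, norm_nonneg x])]
      ring
    exact (sq_eq_sq₀ (norm_nonneg _) (norm_nonneg _)).1 this
  refine ⟨-t, ?_, htx⟩
  have i1 : -t ∈ sl ((fun x : 𝕍 => ‖x‖ • z) ⁻¹' E) y ↔ x ∈ (fun x : 𝕍 => ‖x‖ • z) ⁻¹' E := by
    simp only [sl, mem_setOf_eq, mem_preimage, htx]
  have i2 : -t ∈ J 0 h ↔ x ∈ 𝔹[n + 1] ‖vcons h y‖ := by
    rw [mem_closedBall_zero_iff, ← htx, ← sq_le_sq₀ (norm_nonneg _) (norm_nonneg _), norm_vcons_sq, norm_vcons_sq,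
      neg_sq, add_le_add_iff_right, sq_le_sq₀ ht0 hh0.le, J, mem_Ico]
    constructor
    · intro h; linarith [h.1]
    · intro h; constructor <;> linarith
  rw [hSd, mem_symmDiff, i1, i2]
  exact hx

lemma symmDiff_balls_le {d : ℕ} {E : Set (Vec d)} {r s : ℝ}
    (hv : volume E = volume (𝔹[d] r)) :
    volume (𝔹[d] s ∆ 𝔹 r) ≤
      volume (E ∆ 𝔹 s) := by
  rcases le_total s r with h | h
  · have hsub : 𝔹[d] s ⊆ 𝔹 r := cball_mono h
    rw [symmDiff_of_le hsub, sdiff_eq, ← sdiff_eq, measure_diff hsub measurableSet_closedBall.nullMeasurableSet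
      ball_ne_top, ← hv]
    exact le_measure_symmDiff
  · have hsub : 𝔹[d] r ⊆ 𝔹 s := cball_mono h
    rw [symmDiff_comm, symmDiff_of_le hsub, measure_diff hsub measurableSet_closedBall.nullMeasurableSet
      ball_ne_top, ← hv, symmDiff_comm E]
    exact le_measure_symmDiff

lemma ball_of_radial (n : ℕ) {τ : ℝ} (hτ : 0 < τ) : ∃ C > 0, ∀ (r η Y : ℝ) (E : Set (Vec (n + 1))) (z : Vec (n + 1)),
    τ ≤ r → r ≤ 1 → η ≤ r / 8 → Shell r η E → volume E = volume (𝔹[n + 1] r) → 0 ≤ Y →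
    ‖z‖ = 1 → volume (E ∆ ((fun x => ‖x‖ • z) ⁻¹' E)) ≤ ofReal Y →
    ∫⁻ s in 𝔹 (r / 2), (‖cc E s‖ₑ + ‖qq E s‖ₑ) ≤ ofReal Y →
    volume (E ∆ 𝔹 r) ≤ ofReal (C * Y) := by
  obtain ⟨K, hK0, hK⟩ := volume_norm_mem n
  set ω := volume.real (𝔹[n] (τ / 2)) with hω
  have hωe : volume (𝔹[n] (τ / 2)) = ofReal ω := by
    rw [hω, measureReal_def, ofReal_toReal ball_ne_top]
  have hωp : 0 < ω := by
    rw [hω, measureReal_def]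
    exact toReal_pos (measure_closedBall_pos _ _ (by positivity)).ne' ball_ne_top
  refine ⟨2 * (1 + K * (3 / ω)), by positivity, fun r η Y E z hτr hr1 hη hS hv hY hz h1 h2 => ?_⟩
  have hr0 : 0 < r := hτ.trans_le hτr
  have hE := hS.1
  have hfE : FinSl E := finSl_of_bdd hS.2.2
  set G : Set (Vec (n + 1)) := (fun x => ‖x‖ • z) ⁻¹' E
  have hGm : MeasurableSet G := (by fun_prop : Measurable fun x : Vec (n + 1) => ‖x‖ • z) hE
  set B := 𝔹[n] (r / 2) with hB
  have hBm : MeasurableSet B := measurableSet_closedBall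
  have hBf : volume B ≠ ⊤ := ball_ne_top
  have hB0 : volume B ≠ 0 := (measure_closedBall_pos _ _ (by positivity)).ne'
  have hEG : MeasurableSet (E ∆ G) := hE.symmDiff hGm
  have hme : Measurable fun s => ‖cc E s‖ₑ + ‖qq E s‖ₑ := (measurable_cc hE).enorm.add (measurable_qq hE).enorm
  have hF : Measurable fun y => volume (sl (E ∆ G) y) + ofReal 2 * (‖cc E y‖ₑ + ‖qq E y‖ₑ) :=
    (measurable_vol_sl hEG).add (hme.const_mul _)
  have hitg : ∫⁻ y in B, (volume (sl (E ∆ G) y) + ofReal 2 * (‖cc E y‖ₑ + ‖qq E y‖ₑ)) ≤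
      ofReal (3 * Y) := by
    rw [lintegral_add_left (measurable_vol_sl hEG), lintegral_const_mul' _ _ ofReal_ne_top]
    have : 3 * Y = Y + 2 * Y := by ring
    rw [this, ofReal_add hY (by positivity), ofReal_mul (by norm_num)]
    refine add_le_add ((setLIntegral_le_lintegral _ _).trans ?_) (mul_le_mul_right h2 _)
    rw [← volume_eq_sl hEG]; exact h1
  obtain ⟨y, hy, hyle⟩ := exists_le_setLAverage (μ := volume) hB0 hBf hF.aemeasurable
  have hyn : ‖y‖ ≤ r / 2 := by simpa [hB] using hy
  have hyF : volume (sl (E ∆ G) y) + ofReal 2 * (‖cc E y‖ₑ + ‖qq E y‖ₑ) ≤ ofReal (3 * Y / ω) := by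
    refine hyle.trans ?_
    rw [setLAverage_eq, ofReal_div_of_pos hωp, ← hωe]
    exact ENNReal.div_le_div hitg (measure_mono (cball_mono (by linarith)))
  have hh := hlf_eq_len hE hfE y
  have hlen1 := len_shell_lower hS hr0 hη hfE hyn
  have hlen2 : len E y ≤ 2 * (r + η) := by
    have : volume (sl E y) ≤ ofReal (2 * (r + η)) := by
      refine (measure_mono (sl_subset_Icc hS.2.2 y)).trans (le_of_eq ?_)
      rw [volume_Icc]; congr 1; ring
    rw [len]
    by_cases hp : 0 ≤ 2 * (r + η)
    · exact toReal_le_of_le_ofReal hp this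
    · exfalso
      rw [ofReal_of_nonpos (not_le.1 hp).le] at this
      have h0 : len E y = 0 := by rw [len, le_antisymm this zero_le]; rfl
      linarith
  obtain ⟨h, hhd⟩ : ∃ h, h = hlf (sl E y) := ⟨_, rfl⟩
  have hslice : volume (sl G y ∆ J 0 h) ≤ ofReal (3 * Y / ω) := by
    refine le_trans ?_ hyF
    refine (measure_symmDiff_le _ (sl E y) _).trans (add_le_add ?_ ?_)
    · rw [sl_symmDiff, symmDiff_comm]
    · rw [hhd]
      refine (slice_center (hfE y)).trans ?_
      rw [enorm_eq_ofReal_abs, enorm_eq_ofReal_abs, ← ofReal_add (by positivity) (by positivity),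
        ← ofReal_mul (by norm_num)]
      refine ofReal_le_ofReal ?_
      rw [abs_of_nonneg (a := qq E y) measureReal_nonneg]
      have : 0 ≤ qq E y := measureReal_nonneg
      show 2 * |cc E y| + qq E y ≤ _
      linarith
  have hGB := radial_ball hK hS hr0 hr1 hη hz hyn (h := h) (by linarith) (by linarith)
    (ne_top_of_le_ne_top ofReal_ne_top hslice)
  have hEB : volume (E ∆ (𝔹 ‖vcons h y‖)) ≤ ofReal ((1 + K * (3 / ω)) * Y) := by
    refine (measure_symmDiff_le _ G _).trans ((add_le_add h1 (hGB.trans (mul_le_mul_right hslice _))).trans (le_of_eq ?_))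
    rw [← ofReal_mul hK0.le, ← ofReal_add hY (by positivity)]
    congr 1; ring
  refine (measure_symmDiff_le _ (𝔹 ‖vcons h y‖) _).trans ?_
  refine (add_le_add hEB ((symmDiff_balls_le hv).trans hEB)).trans (le_of_eq ?_)
  rw [← ofReal_add (by positivity) (by positivity)]
  congr 1; ring

/-- If all slices of a shell set in all directions are nearly centred intervals away from the
equator, then the set is nearly a ball. -/
lemma ball_of_strips (n : ℕ) {τ : ℝ} (hτ : 0 < τ) : ∃ C > 0, ∀ (r κ η X δ : ℝ) (E : Set (Vec (n + 1))),
    τ ≤ r → r ≤ 1 → 0 < κ → κ ≤ 1 / 2 → 0 < η → η ≤ κ * r / 4 → Shell r η E →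
    volume E = volume (𝔹[n + 1] r) → 0 ≤ X → 0 ≤ δ →
    volume (E ∆ 𝔹 r) ≤ ofReal δ →
    (∀ g : Vec (n + 1) ≃ₗᵢ[ℝ] Vec (n + 1),
      ∫⁻ s in 𝔹 (r * (1 - κ)), (‖cc (g ⁻¹' E) s‖ₑ + ‖qq (g ⁻¹' E) s‖ₑ) ≤ ofReal X) →
    volume (E ∆ 𝔹 r) ≤ ofReal (C * (X + √κ * δ)) := by
  obtain ⟨C₁, hC₁, H1⟩ := ball_of_radial n hτ
  obtain ⟨K, hK, H2⟩ := exists_radial n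
  obtain ⟨a, ha⟩ : ∃ a, a = volume.real (𝔹[n + 1] 1) := ⟨_, rfl⟩
  obtain ⟨b, hb⟩ : ∃ b, b = volume.real (𝔹[n] 1) := ⟨_, rfl⟩
  have ha0 : 0 ≤ a := ha ▸ measureReal_nonneg
  have hb0 : 0 ≤ b := hb ▸ measureReal_nonneg
  refine ⟨C₁ * (1 + K * (4 * a + 8 * b)), by positivity, fun r κ η X δ E hτr hr1 hκ0 hκ1 hη0 hη hS hv hX hδ hd h => ?_⟩
  have hr0 : 0 < r := hτ.trans_le hτr
  have havg := refl_avg hS hr0 hη0 hκ0 hκ1 hη hX hδ hd h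
  rw [← ha, ← hb] at havg
  have hsd : 0 ≤ √κ * δ := by positivity
  obtain ⟨z, hz, hzE⟩ := H2 E _ hS.1 (by positivity) havg
  have hle : K * (4 * X * a + 8 * b * (√κ * δ)) ≤ (1 + K * (4 * a + 8 * b)) * (X + √κ * δ) := by
    have h1 : 0 ≤ K * (8 * b * X + 4 * a * (√κ * δ)) := by positivity
    nlinarith only [h1, hX, hsd]
  have hXle : X ≤ (1 + K * (4 * a + 8 * b)) * (X + √κ * δ) := by
    have h1 : 0 ≤ K * (4 * a + 8 * b) * (X + √κ * δ) := by positivity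
    nlinarith only [h1, hX, hsd]
  have := H1 r η _ E z hτr hr1 (by nlinarith only [hη, hκ1, hr0]) hS hv (hX.trans hXle) hz
    (hzE.trans (ofReal_le_ofReal hle)) (by
      have h0 := h (LinearIsometryEquiv.refl ℝ _)
      rw [show ((LinearIsometryEquiv.refl ℝ (Vec (n + 1)) : Vec (n + 1) → Vec (n + 1)) ⁻¹' E) = E from rfl] at h0
      refine (lintegral_mono_set (cball_mono ?_)).trans
        (h0.trans (ofReal_le_ofReal hXle))
      nlinarith only [hκ1, hr0])
  rwa [← mul_assoc] at this

lemma Bal0.isom {d : ℕ} {E : Set (Vec d)} (h : Bal0 E) (g : Vec d ≃ₗᵢ[ℝ] Vec d) : Bal0 (g ⁻¹' E) := by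
  intro u
  have := g.measurePreserving.setIntegral_preimage_emb g.toHomeomorph.measurableEmbedding
    (fun x => inner ℝ (g u) x) E
  simpa only [g.inner_map_map, h (g u)] using this

lemma Bal1.isom {d : ℕ} {E : Set (Vec d)} (h : Bal1 E) (g : Vec d ≃ₗᵢ[ℝ] Vec d) : Bal1 (g ⁻¹' E) := by
  refine ⟨h.1.isom g, fun u w huw => ?_⟩
  have := g.measurePreserving.setIntegral_preimage_emb g.toHomeomorph.measurableEmbedding
    (fun x => inner ℝ (g u) x * inner ℝ (g w) x) E
  simpa only [g.inner_map_map, h.2 (g u) (g w) (by rw [g.inner_map_map, huw])] using this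

lemma Cfg.isom {d : ℕ} {τ η ε δ : ℝ} {r : Fin 3 → ℝ} {E : Triple d} (h : Cfg τ η ε δ r E)
    (g : Vec d ≃ₗᵢ[ℝ] Vec d) : Cfg τ η ε δ r (fun j => g ⁻¹' E j) where
  adm := h.adm
  hη := h.hη
  hε := h.hε
  hδ := h.hδ
  shell j := ⟨meas_isom g (h.shell j).1, by
    have := preimage_mono (f := g) (h.shell j).2.1
    rwa [ball_isom] at this, isom_sub_ball g (h.shell j).2.2⟩
  vol j := by rw [vol_isom', h.vol j]
  def_le := by rw [T3_isom g (fun j => (h.shell j).1)]; exact h.def_le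
  diff j := by
    have : (g ⁻¹' E j) ∆ (𝔹 (r j)) = g ⁻¹' (E j ∆ (𝔹 (r j))) := by
      rw [preimage_symmDiff, ball_isom]
    rw [this, vol_isom']
    exact h.diff j

lemma Adm.rl {τ : ℝ} {r : Fin 3 → ℝ} (h : Adm τ (r 0) (r 1) (r 2)) (j : Fin 3) : τ ≤ r j := by
  fin_cases j
  exacts [h.l1, h.l2, h.l3]

lemma Adm.ru {τ : ℝ} {r : Fin 3 → ℝ} (h : Adm τ (r 0) (r 1) (r 2)) (j : Fin 3) : r j ≤ 1 := by
  fin_cases j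
  exacts [h.u1, h.u2, h.u3]

/-- Stability for balanced shell triples: the distance to the balls is controlled by the square
root of the deficit. -/
theorem shell_stability (n : ℕ) {τ : ℝ} (hτ0 : 0 < τ) (hτ1 : τ ≤ 1) : ∃ η₀ > 0, ∃ C > 0,
    ∀ (η ε δ : ℝ) (r : Fin 3 → ℝ) (E : Triple (n + 1)), Cfg τ η ε δ r E → η ≤ η₀ →
      Bal1 (E 0) → Bal0 (E 1) →
      ∀ j, volume (E j ∆ (𝔹 (r j))) ≤ ofReal (C * ε) := by
  obtain ⟨C₀, hC₀, H⟩ := strip_small n hτ0 hτ1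
  obtain ⟨C₁, hC₁, H1⟩ := ball_of_strips n hτ0
  -- `κ` is chosen so that the distance can be absorbed
  obtain ⟨q, hq⟩ : ∃ q, q = C₁ * (C₀ + 1) := ⟨_, rfl⟩
  have hq0 : 0 < q := by rw [hq]; positivity
  obtain ⟨κ, hκ0, hκ1, hκ⟩ : ∃ κ : ℝ, 0 < κ ∧ κ ≤ 1 / 2 ∧ q * √κ ≤ 1 / 2 := by
    refine ⟨min (1 / 2) ((1 / (2 * q)) ^ 2), by positivity, min_le_left _ _, ?_⟩
    have : √(min (1 / 2) ((1 / (2 * q)) ^ 2)) ≤ 1 / (2 * q) :=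
      (Real.sqrt_le_sqrt (min_le_right _ _)).trans (by rw [Real.sqrt_sq (by positivity)])
    calc q * √(min (1 / 2) ((1 / (2 * q)) ^ 2)) ≤ q * (1 / (2 * q)) := by gcongr
      _ = 1 / 2 := by field_simp
  obtain ⟨η₀, hη₀, hη₀κ, C, hC, HC⟩ := H κ hκ0 hκ1
  refine ⟨η₀, hη₀, 2 * (C₁ * C), by positivity, fun η ε δ r E hc hη hb1 hb0 => ?_⟩
  have hfin : ∀ j, volume (E j ∆ (𝔹 (r j))) ≠ ⊤ := fun j =>
    ne_top_of_le_ne_top ofReal_ne_top (hc.diff j)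
  obtain ⟨D, hD⟩ : ∃ D : ℝ, D = Finset.univ.sup' Finset.univ_nonempty
    (fun j => volume.real (E j ∆ (𝔹 (r j)))) := ⟨_, rfl⟩
  have hDj : ∀ j, volume.real (E j ∆ (𝔹 (r j))) ≤ D := fun j => by
    rw [hD]; exact Finset.le_sup' (fun j => volume.real (E j ∆ (𝔹 (r j)))) (Finset.mem_univ j)
  have hD0 : 0 ≤ D := measureReal_nonneg.trans (hDj 0)
  have hcD : Cfg τ η ε D r E := ⟨hc.adm, hc.hη, hc.hε, hD0, hc.shell, hc.vol, hc.def_le, fun j => by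
    rw [← ofReal_toReal (hfin j)]
    exact ofReal_le_ofReal (hDj j)⟩
  have hε := hc.hε
  have main : ∀ j, volume.real (E j ∆ (𝔹 (r j))) ≤
      C₁ * (C * ε + C₀ * (√κ * D) + √κ * D) := by
    intro j
    refine toReal_le_of_le_ofReal (by positivity) ?_
    have hrl : τ ≤ r j := hc.adm.rl j
    exact H1 (r j) κ η (C * ε + C₀ * (√κ * D)) D (E j) hrl (hc.adm.ru j) hκ0 hκ1 hc.hη
      (hη.trans (hη₀κ.trans (by gcongr))) (hc.shell j) (hc.vol j) (by positivity) hD0 (hcD.diff j)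
      (fun g => HC η ε D r _ (hcD.isom g) hη (hb1.isom g) (hb0.isom g) j)
  have hDle : D ≤ C₁ * (C * ε + C₀ * (√κ * D) + √κ * D) := by
    rw [hD]
    refine Finset.sup'_le _ _ fun j _ => ?_
    rw [← hD]; exact main j
  have hDfin : D ≤ 2 * (C₁ * C) * ε := by
    have e1 : C₁ * (C * ε + C₀ * (√κ * D) + √κ * D) = C₁ * C * ε + (q * √κ) * D := by rw [hq]; ring
    have e2 : (q * √κ) * D ≤ 1 / 2 * D := by gcongr
    rw [e1] at hDle
    linarith
  intro j
  rw [← ofReal_toReal (hfin j)]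
  exact ofReal_le_ofReal ((hDj j).trans hDfin)

/-! ### Normalization by moments -/

lemma shell_vol (n : ℕ) : ∃ K > 0, ∀ (r η : ℝ) (F : Set (Vec (n + 1))), r ≤ 1 → 0 < η → η ≤ 1 → Shell r η F →
    volume (F ∆ 𝔹 r) ≤ ofReal (K * η) := by
  obtain ⟨K, hK0, hK⟩ := volume_norm_mem n
  refine ⟨2 * K, by positivity, fun r η F hr hη0 hη hS => ?_⟩
  refine (measure_mono ?_).trans ((hK (Icc (r - η) (r + η)) measurableSet_Icc (by simp)).trans (le_of_eq ?_))
  · intro x hx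
    have := hS.norm_bounds hη0 hx
    exact ⟨⟨this.1, this.2⟩, by linarith [this.2]⟩
  · rw [volume_Icc, ← ofReal_mul hK0.le]; congr 1; ring

/-- Integrals of a bounded function over two sets differ by at most a multiple of the measure of
the symmetric difference. -/
lemma setIntegral_symmDiff_le {d : ℕ} {G : Type*} [NormedAddCommGroup G] [NormedSpace ℝ G]
    {E F : Set (Vec d)} (hE : MeasurableSet E) (hF : MeasurableSet F) {R K : ℝ} (hER : E ⊆ 𝔹 R)
    (hFR : F ⊆ 𝔹 R) {f : Vec d → G} (hf : Continuous f)
    (hK : ∀ x ∈ 𝔹[d] R, ‖f x‖ ≤ K) :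
    ‖(∫ x in E, f x) - ∫ x in F, f x‖ ≤ K * volume.real (E ∆ F) := by
  have hi : IntegrableOn f (𝔹 R) :=
    hf.continuousOn.integrableOn_compact (isCompact_closedBall _ _)
  have hfin : ∀ {S : Set (Vec d)}, S ⊆ 𝔹 R → volume S < ⊤ := fun h =>
    (measure_mono h).trans_lt measure_closedBall_lt_top
  have e1 := integral_inter_add_diff hF (hi.mono_set hER)
  have e2 := integral_inter_add_diff hE (hi.mono_set hFR)
  have h1 : ‖∫ x in E \ F, f x‖ ≤ K * volume.real (E \ F) :=
    norm_setIntegral_le_of_norm_le_const (hfin (diff_subset.trans hER)) fun x hx => hK x (hER hx.1)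
  have h2 : ‖∫ x in F \ E, f x‖ ≤ K * volume.real (F \ E) :=
    norm_setIntegral_le_of_norm_le_const (hfin (diff_subset.trans hFR)) fun x hx => hK x (hFR hx.1)
  have h3 : volume.real (E ∆ F) = volume.real (E \ F) + volume.real (F \ E) := by
    rw [measureReal_def, measure_symmDiff_eq hE.nullMeasurableSet hF.nullMeasurableSet,
      toReal_add (hfin (diff_subset.trans hER)).ne (hfin (diff_subset.trans hFR)).ne]
    rfl
  rw [← e1, ← e2, inter_comm F E, add_sub_add_left_eq_sub, h3, mul_add]
  exact (norm_sub_le _ _).trans (add_le_add h1 h2)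

lemma integral_ball_id {d : ℕ} (r : ℝ) : ∫ x in 𝔹[d] r, x = 0 := by
  have h : (∫ x in 𝔹[d] r, x) = - ∫ x in 𝔹[d] r, x := by
    rw [← integral_neg]
    have mp : MeasurePreserving (fun x : Vec d => -x) := Measure.measurePreserving_neg volume
    have := mp.setIntegral_preimage_emb (MeasurableEquiv.neg (Vec d)).measurableEmbedding (fun x => x)
      (𝔹 r)
    rw [← this]
    congr 2
    ext x; simp
  have h2 : (2 : ℝ) • ∫ x in 𝔹[d] r, x = 0 := by
    rw [two_smul]; nth_rewrite 1 [h]; simp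
  simpa using h2

lemma shift_shell {d : ℕ} {r η : ℝ} {E : Set (Vec d)} (h : Shell r η E) (v : Vec d) {η' : ℝ} (hη : η + ‖v‖ ≤ η') :
    Shell r η' {x | x + v ∈ E} := by
  refine ⟨(measurable_id.add_const v) h.1, fun x hx => h.2.1 ?_, fun x hx => ?_⟩
  · simp only [mem_closedBall_zero_iff] at hx ⊢
    exact (norm_add_le _ _).trans (by linarith)
  · have h1 := h.2.2 hx
    simp only [mem_closedBall_zero_iff] at h1 ⊢
    have : ‖x‖ ≤ ‖x + v‖ + ‖v‖ := by simpa using norm_sub_le (x + v) v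
    linarith

/-- A shell set has a small translate with barycentre at the origin. -/
lemma exists_center (n : ℕ) {τ : ℝ} (hτ : 0 < τ) : ∃ K > 0, ∀ (r η : ℝ) (E : Set (Vec (n + 1))), τ ≤ r → r ≤ 1 →
    0 < η → η ≤ τ / 2 → Shell r η E → ∃ m : Vec (n + 1), ‖m‖ ≤ K * η ∧ Bal0 {x | x + m ∈ E} := by
  obtain ⟨K, hK0, hK⟩ := shell_vol n
  obtain ⟨ω, hω⟩ : ∃ ω, ω = volume.real (𝔹[n + 1] (τ / 2)) := ⟨_, rfl⟩
  have hωp : 0 < ω := by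
    rw [hω, measureReal_def]
    exact toReal_pos (measure_closedBall_pos _ _ (by positivity)).ne' ball_ne_top
  refine ⟨2 * K / ω, by positivity, fun r η E hτr hr1 hη0 hη hS => ?_⟩
  have hEf : volume E < ⊤ := (measure_mono hS.2.2).trans_lt measure_closedBall_lt_top
  have hωE : ω ≤ volume.real E := by
    rw [hω]
    exact measureReal_mono ((cball_mono (by linarith)).trans hS.2.1) hEf.ne
  have hEp : 0 < volume.real E := hωp.trans_le hωE
  have hR : E ⊆ 𝔹 2 := hS.2.2.trans (cball_mono (by linarith))
  have hid : IntegrableOn (fun x : Vec (n + 1) => x) E :=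
    (continuous_id.continuousOn.integrableOn_compact (isCompact_closedBall _ _)).mono_set hR
  refine ⟨(volume.real E)⁻¹ • ∫ x in E, x, ?_, ?_⟩
  · have h1 := setIntegral_symmDiff_le hS.1 (isClosed_closedBall (x := (0 : Vec (n + 1))) (ε := r)).measurableSet hR
      (cball_mono (by linarith)) continuous_id (K := 2) (fun x hx => by simpa using hx)
    simp only [id] at h1
    rw [integral_ball_id, sub_zero] at h1
    have h2 : volume.real (E ∆ 𝔹 r) ≤ K * η :=
      toReal_le_of_le_ofReal (by positivity) (hK r η E hr1 hη0 (by linarith) hS)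
    rw [norm_smul, norm_inv, norm_of_nonneg hEp.le, inv_mul_le_iff₀ hEp]
    calc ‖∫ x in E, x‖ ≤ 2 * (K * η) := h1.trans (by gcongr)
      _ = ω * (2 * K / ω * η) := by field_simp
      _ ≤ volume.real E * (2 * K / ω * η) := by gcongr
  · intro u
    obtain ⟨m, hm⟩ : ∃ m, m = (volume.real E)⁻¹ • ∫ x in E, x := ⟨_, rfl⟩
    rw [← hm]
    have mp : MeasurePreserving (fun x : Vec (n + 1) => x + m) := measurePreserving_add_right volume m
    have := mp.setIntegral_preimage_emb (MeasurableEquiv.addRight m).measurableEmbedding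
      (fun x => inner ℝ u (x - m)) E
    simp only [add_sub_cancel_right] at this
    rw [show {x | x + m ∈ E} = (fun x => x + m) ⁻¹' E from rfl, this]
    simp only [inner_sub_right]
    have i1 : Integrable (fun x : Vec (n + 1) => (inner ℝ u x : ℝ)) (volume.restrict E) :=
      ((Continuous.continuousOn (by fun_prop)).integrableOn_compact (isCompact_closedBall 0 2)).mono_set hR
    have i2 : Integrable (fun _ : Vec (n + 1) => (inner ℝ u m : ℝ)) (volume.restrict E) :=
      integrableOn_const hEf.ne (by simp)
    rw [integral_sub i1 i2, integral_inner hid, setIntegral_const, hm, inner_smul_right, smul_eq_mul]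
    field_simp
    ring

/-- The unimodular linear map with eigenbasis `b` and eigenvalues `ℓ`. -/
lemma exists_diag {d : ℕ} (b : OrthonormalBasis (Fin d) ℝ (Vec d)) (ℓ : Fin d → ℝ) (h1 : ∏ i, ℓ i = 1) :
    ∃ L : Vec d ≃ₗ[ℝ] Vec d, MeasurePreserving L ∧ ∀ i x, inner ℝ (b i) (L x) = ℓ i * inner ℝ (b i) x := by
  obtain ⟨f, hf⟩ : ∃ f, f = Matrix.toLin b.toBasis b.toBasis (Matrix.diagonal ℓ) := ⟨_, rfl⟩
  have hdet : LinearMap.det f = 1 := by rw [hf, LinearMap.det_toLin, Matrix.det_diagonal, h1]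
  have hne : LinearMap.det f ≠ 0 := by rw [hdet]; exact one_ne_zero
  refine ⟨f.equivOfDetNeZero hne, ⟨?_, ?_⟩, fun i x => ?_⟩
  · exact (LinearMap.continuous_of_finiteDimensional f).measurable
  · have := Measure.map_linearMap_addHaar_eq_smul_addHaar (volume : Measure (Vec d)) hne
    rw [hdet] at this
    simp only [inv_one, abs_one, ofReal_one, one_smul] at this
    exact this
  · show inner ℝ (b i) (f x) = _
    rw [← OrthonormalBasis.repr_apply_apply, ← OrthonormalBasis.repr_apply_apply,
      ← OrthonormalBasis.coe_toBasis_repr_apply, ← OrthonormalBasis.coe_toBasis_repr_apply, hf,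
      Matrix.toLin_apply]
    simp [Matrix.mulVec_diagonal]

lemma second_moment (n : ℕ) {τ : ℝ} (hτ : 0 < τ) : ∃ κ > 0, ∀ r, τ ≤ r → ∃ c, κ ≤ c ∧
    ∀ u : Vec (n + 1), ‖u‖ = 1 → ∫ x in 𝔹 r, (inner ℝ u x : ℝ) ^ 2 = c := by
  obtain ⟨e, he⟩ : ∃ e : Vec (n + 1), e = vcons 1 0 := ⟨_, rfl⟩
  have hen : ‖e‖ = 1 := by rw [he, norm_vcons_zero]; simp
  obtain ⟨S, hS⟩ : ∃ S, S = closedBall ((τ / 2) • e) (τ / 4) := ⟨_, rfl⟩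
  have hSp : 0 < volume.real S := by
    rw [hS, measureReal_def]
    exact toReal_pos (measure_closedBall_pos _ _ (by positivity)).ne' ball_ne_top
  have hSm : MeasurableSet S := hS ▸ measurableSet_closedBall
  have hii : ∀ r, IntegrableOn (fun x => (inner ℝ e x : ℝ) ^ 2) (𝔹 r) := fun r =>
    (Continuous.continuousOn (by fun_prop)).integrableOn_compact (isCompact_closedBall _ _)
  refine ⟨(τ / 4) ^ 2 * volume.real S, by positivity, fun r hr =>
    ⟨∫ x in 𝔹 r, (inner ℝ e x : ℝ) ^ 2, ?_, fun u hu => ?_⟩⟩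
  · have hsub : S ⊆ 𝔹 r := by
      rw [hS]
      refine closedBall_subset_closedBall' ?_
      rw [dist_zero_right, norm_smul, hen, norm_of_nonneg (by positivity)]; linarith
    have h1 : (τ / 4) ^ 2 * volume.real S ≤ ∫ x in S, (inner ℝ e x : ℝ) ^ 2 := by
      rw [mul_comm, ← smul_eq_mul, ← setIntegral_const]
      refine setIntegral_mono_on (integrableOn_const (hS ▸ ball_ne_top) (by simp))
        ((hii r).mono_set hsub) hSm fun x hx => ?_
      have h2 : ‖x - (τ / 2) • e‖ ≤ τ / 4 := by rw [hS] at hx; simpa [dist_eq_norm] using hx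
      have h3 := abs_real_inner_le_norm e (x - (τ / 2) • e)
      rw [inner_sub_right, inner_smul_right, real_inner_self_eq_norm_sq, hen] at h3
      have h4 := abs_le.1 h3
      have h5 : τ / 4 ≤ inner ℝ e x := by linarith [h4.1]
      gcongr
    refine h1.trans (setIntegral_mono_set (hii r) (ae_of_all _ fun x => sq_nonneg _) hsub.eventuallyLE)
  · obtain ⟨g, hg⟩ := exists_isom e u (hen.trans hu.symm)
    have := g.measurePreserving.setIntegral_preimage_emb g.toHomeomorph.measurableEmbedding
      (fun x => (inner ℝ u x : ℝ) ^ 2) (𝔹 r)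
    rw [← this, ← hg]
    simp only [LinearIsometryEquiv.inner_map_map]
    congr 2
    ext x; simp

lemma sqrt_ratio {c t l s : ℝ} (hc : 0 < c) (ht0 : 0 ≤ t) (ht : t ≤ 1 / 4) (l1 : c * (1 - t) ≤ l) (l2 : l ≤ c * (1 + t))
    (s1 : c * (1 - t) ≤ s) (s2 : s ≤ c * (1 + t)) : |√(l / s) - 1| ≤ 4 * t := by
  have hs : 0 < s := lt_of_lt_of_le (mul_pos hc (by linarith)) s1
  have hl : 0 < l := lt_of_lt_of_le (mul_pos hc (by linarith)) l1
  have hq : |l / s - 1| ≤ 4 * t := by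
    rw [div_sub_one hs.ne', abs_div, abs_of_pos hs, div_le_iff₀ hs, abs_le]
    constructor <;> nlinarith only [l1, l2, s1, s2, ht0, ht, hc, mul_nonneg hc.le ht0, mul_nonneg (mul_nonneg hc.le ht0) (sub_nonneg.2 ht)]
  have h1 := sqrt_nonneg (l / s)
  have h2 : l / s - 1 = (√(l / s) - 1) * (√(l / s) + 1) := by
    have := sq_sqrt (div_pos hl hs).le; linear_combination -this
  rw [h2, abs_mul] at hq
  refine le_trans ?_ hq
  refine le_mul_of_one_le_right (abs_nonneg _) ?_
  rw [abs_of_nonneg (by linarith)]; linarith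

lemma geom_mean {d : ℕ} (hd : 0 < d) (l : Fin d → ℝ) {a b : ℝ} (ha : 0 < a) (h1 : ∀ i, a ≤ l i) (h2 : ∀ i, l i ≤ b) :
    ∃ s, a ≤ s ∧ s ≤ b ∧ ∏ i, √(l i / s) = 1 := by
  have hb : 0 < b := ha.trans_le ((h1 ⟨0, hd⟩).trans (h2 ⟨0, hd⟩))
  have hp0 : 0 < ∏ i, l i := Finset.prod_pos fun i _ => ha.trans_le (h1 i)
  obtain ⟨s, hs⟩ : ∃ s, s = (∏ i, l i) ^ ((d : ℝ)⁻¹) := ⟨_, rfl⟩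
  have hs0 : 0 < s := hs ▸ Real.rpow_pos_of_pos hp0 _
  have hsd : s ^ d = ∏ i, l i := by rw [hs, Real.rpow_inv_natCast_pow hp0.le hd.ne']
  refine ⟨s, ?_, ?_, ?_⟩
  · refine le_of_pow_le_pow_left₀ hd.ne' hs0.le ?_
    rw [hsd]
    calc a ^ d = ∏ _i : Fin d, a := by simp
      _ ≤ _ := Finset.prod_le_prod (fun _ _ => ha.le) fun i _ => h1 i
  · refine le_of_pow_le_pow_left₀ hd.ne' hb.le ?_
    rw [hsd]
    calc _ ≤ ∏ _i : Fin d, b := Finset.prod_le_prod (fun i _ => ha.le.trans (h1 i)) fun i _ => h2 i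
      _ = b ^ d := by simp
  · rw [← Real.sqrt_prod _ fun i _ => (div_pos (ha.trans_le (h1 i)) hs0).le, Finset.prod_div_distrib, ← hsd]
    simp [hs0.ne']

lemma Shell.mono {d : ℕ} {r η η' : ℝ} {E : Set (Vec d)} (h : Shell r η E) (hη : η ≤ η') : Shell r η' E :=
  ⟨h.1, (cball_mono (by linarith)).trans h.2.1,
    h.2.2.trans (cball_mono (by linarith))⟩

lemma linear_shell {d : ℕ} {r η θ η' : ℝ} {E : Set (Vec d)} (h : Shell r η E) (hr : r ≤ 1) (hη0 : 0 ≤ η) (hη : η ≤ 1)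
    (L : Vec d ≃ₗ[ℝ] Vec d) (hθ0 : 0 ≤ θ) (hθ : θ ≤ 1 / 2) (hL : ∀ x, ‖L x - x‖ ≤ θ * ‖x‖) (h' : η + 4 * θ ≤ η') :
    Shell r η' (L ⁻¹' E) := by
  refine ⟨(LinearMap.continuous_of_finiteDimensional L.toLinearMap).measurable h.1, fun x hx => h.2.1 ?_, fun x hx => ?_⟩
  · simp only [mem_closedBall_zero_iff] at hx ⊢
    have h1 : ‖L x‖ ≤ ‖x‖ + ‖L x - x‖ := by simpa using norm_add_le x (L x - x)
    have h2 := hL x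
    have h4 : θ * ‖x‖ ≤ 4 * θ := by
      rw [mul_comm]; gcongr
      linarith
    linarith
  · have h1 := h.2.2 hx
    simp only [mem_closedBall_zero_iff] at h1 ⊢
    have h2 := hL x
    have h3 : ‖x‖ ≤ ‖L x‖ + ‖L x - x‖ := by simpa using norm_sub_le (L x) (L x - x)
    have h4 : θ * ‖x‖ ≤ 1 / 2 * ‖x‖ := by gcongr
    have h5 : ‖x‖ ≤ 4 := by linarith
    have h6 : θ * ‖x‖ ≤ θ * 4 := by gcongr
    linarith

/-- The second-moment operator of a bounded set. -/
lemma moment_op {d : ℕ} {F : Set (Vec d)} {R : ℝ} (hR : F ⊆ 𝔹 R) :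
    ∃ T : Vec d →ₗ[ℝ] Vec d, ∀ u w, inner ℝ (T u) w = ∫ x in F, inner ℝ u x * inner ℝ w x := by
  have hi : ∀ u, IntegrableOn (fun x : Vec d => (inner ℝ u x : ℝ) • x) F := fun u =>
    ((Continuous.continuousOn (by fun_prop)).integrableOn_compact (isCompact_closedBall _ _)).mono_set hR
  refine ⟨{ toFun := fun u => ∫ x in F, (inner ℝ u x : ℝ) • x, map_add' := fun u v => ?_, map_smul' := fun a u => ?_ },
    fun u w => ?_⟩
  · rw [← integral_add (hi u) (hi v)]
    simp only [inner_add_left, add_smul]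
  · simp only [inner_smul_left, mul_smul, conj_trivial, RingHom.id_apply]
    rw [integral_smul]
  · show inner ℝ (∫ x in F, (inner ℝ u x : ℝ) • x) w = _
    rw [real_inner_comm, ← integral_inner (hi u)]
    simp only [inner_smul_right]

/-- A shell set is balanced up to second order by a unimodular linear map close to the identity. -/
lemma exists_linear (n : ℕ) {τ : ℝ} (hτ : 0 < τ) : ∃ K > 0, ∀ (r η : ℝ) (F : Set (Vec (n + 1))), τ ≤ r → r ≤ 1 →
    0 < η → η ≤ 1 → K * η ≤ 1 → Shell r η F → Bal0 F → ∃ L : Vec (n + 1) ≃ₗ[ℝ] Vec (n + 1), MeasurePreserving L ∧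
      (∀ x, ‖L x - x‖ ≤ K * η * ‖x‖) ∧ Bal1 (L ⁻¹' F) := by
  obtain ⟨K, hK0, hK⟩ := shell_vol n
  obtain ⟨κ, hκ0, hκ⟩ := second_moment n hτ
  refine ⟨16 * K / κ, by positivity, fun r η F hτr hr1 hη0 hη hKη hS hB => ?_⟩
  obtain ⟨c, hκc, hc⟩ := hκ r hτr
  have hc0 : 0 < c := hκ0.trans_le hκc
  have hR : F ⊆ 𝔹 2 := hS.2.2.trans (cball_mono (by linarith))
  obtain ⟨T, hT⟩ := moment_op hR
  have hsym : T.IsSymmetric := fun u w => by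
    rw [hT, real_inner_comm, hT]; simp only [mul_comm]
  obtain ⟨b, l, hbl⟩ : ∃ b : OrthonormalBasis (Fin (n + 1)) ℝ (Vec (n + 1)), ∃ l : Fin (n + 1) → ℝ, ∀ i, T (b i) = l i • b i :=
    ⟨hsym.eigenvectorBasis (by simp), hsym.eigenvalues (by simp), fun i => hsym.apply_eigenvectorBasis (by simp) i⟩
  obtain ⟨t, ht⟩ : ∃ t, t = 4 * K * η / κ := ⟨_, rfl⟩
  have ht0 : 0 < t := by rw [ht]; positivity
  have ht4 : 16 * K / κ * η = 4 * t := by rw [ht]; ring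
  rw [ht4] at hKη ⊢
  have hl : ∀ i, |l i - c| ≤ c * t := fun i => by
    have e1 : l i = ∫ x in F, (inner ℝ (b i) x : ℝ) ^ 2 := by
      have := hT (b i) (b i)
      rw [hbl, inner_smul_left, real_inner_self_eq_norm_sq, b.orthonormal.1 i] at this
      simpa [sq] using this
    have h1 := setIntegral_symmDiff_le hS.1 (isClosed_closedBall (x := (0 : Vec (n + 1))) (ε := r)).measurableSet hR
      (cball_mono (by linarith)) (f := fun x => (inner ℝ (b i) x : ℝ) ^ 2) (by fun_prop) (K := 4)
      (fun x hx => by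
        have h2 := abs_real_inner_le_norm (b i) x
        rw [b.orthonormal.1 i, one_mul] at h2
        have h3 : |(inner ℝ (b i) x : ℝ)| ≤ 2 := h2.trans (by simpa using hx)
        rw [norm_pow, norm_eq_abs]
        calc _ ≤ (2 : ℝ) ^ 2 := by gcongr
          _ = 4 := by norm_num)
    rw [← e1, hc _ (b.orthonormal.1 i), norm_eq_abs] at h1
    have h2 : volume.real (F ∆ 𝔹 r) ≤ K * η :=
      toReal_le_of_le_ofReal (by positivity) (hK r η F hr1 hη0 hη hS)
    calc |l i - c| ≤ 4 * (K * η) := h1.trans (by gcongr)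
      _ = κ * t := by rw [ht]; field_simp
      _ ≤ c * t := by gcongr
  have hl1 : ∀ i, c * (1 - t) ≤ l i := fun i => by linarith [(abs_le.1 (hl i)).1]
  have hl2 : ∀ i, l i ≤ c * (1 + t) := fun i => by linarith [(abs_le.1 (hl i)).2]
  obtain ⟨s, hs1, hs2, hs⟩ := geom_mean (Nat.succ_pos n) l (mul_pos hc0 (by linarith)) hl1 hl2
  have hs0 : 0 < s := lt_of_lt_of_le (mul_pos hc0 (by linarith)) hs1
  have hl0 : ∀ i, 0 < l i := fun i => lt_of_lt_of_le (mul_pos hc0 (by linarith)) (hl1 i)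
  obtain ⟨q, hq⟩ : ∃ q : Fin (n + 1) → ℝ, q = fun i => √(l i / s) := ⟨_, rfl⟩
  have hq0 : ∀ i, 0 < q i := fun i => hq ▸ Real.sqrt_pos.2 (div_pos (hl0 i) hs0)
  have hq2 : ∀ i, q i ^ 2 = l i / s := fun i => by rw [hq]; exact sq_sqrt (div_pos (hl0 i) hs0).le
  obtain ⟨L, hLm, hL⟩ := exists_diag b q (by rw [hq]; exact hs)
  have hemb : MeasurableEmbedding L := L.toContinuousLinearEquiv.toHomeomorph.measurableEmbedding
  obtain ⟨P, hP⟩ : ∃ P : Vec (n + 1) → Vec (n + 1), P = fun u => ∑ i, ((inner ℝ (b i) u : ℝ) / q i) • b i := ⟨_, rfl⟩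
  have hPb : ∀ u i, inner ℝ (b i) (P u) = inner ℝ (b i) u / q i := fun u i => by
    rw [hP]; simp [inner_sum, inner_smul_right, orthonormal_iff_ite.1 b.orthonormal]
  have hPL : ∀ u x, inner ℝ u x = inner ℝ (P u) (L x) := fun u x => by
    rw [← b.sum_inner_mul_inner u x, ← b.sum_inner_mul_inner (P u) (L x)]
    refine Finset.sum_congr rfl fun i _ => ?_
    rw [hL, real_inner_comm, real_inner_comm (b i) (P u), hPb]
    have := (hq0 i).ne'
    field_simp
  refine ⟨L, hLm, fun x => ?_, fun u => ?_, fun u w huw => ?_⟩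
  · refine le_of_sq_le_sq ?_ (by positivity)
    rw [mul_pow, ← b.sum_sq_norm_inner_right, ← b.sum_sq_norm_inner_right x, Finset.mul_sum]
    refine Finset.sum_le_sum fun i _ => ?_
    rw [inner_sub_right, hL, ← mul_pow]
    have : q i * inner ℝ (b i) x - inner ℝ (b i) x = (q i - 1) * (inner ℝ (b i) x : ℝ) := by ring
    rw [this, norm_mul]
    gcongr
    rw [hq]
    exact sqrt_ratio hc0 ht0.le (by linarith) (hl1 i) (hl2 i) hs1 hs2
  · simp only [hPL u]
    rw [hLm.setIntegral_preimage_emb hemb (fun y => (inner ℝ (P u) y : ℝ)) F]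
    exact hB _
  · simp only [hPL u, hPL w]
    rw [hLm.setIntegral_preimage_emb hemb (fun y => (inner ℝ (P u) y * inner ℝ (P w) y : ℝ)) F, ← hT,
      ← b.sum_inner_mul_inner]
    calc _ = ∑ i, s * (inner ℝ u (b i) * inner ℝ (b i) w) := by
          refine Finset.sum_congr rfl fun i _ => ?_
          rw [hsym, hbl, inner_smul_right, real_inner_comm, hPb, hPb, real_inner_comm u]
          have h1 := hq2 i
          have h2 := (hq0 i).ne'
          rw [eq_div_iff hs0.ne'] at h1
          rw [← h1]
          field_simp
      _ = 0 := by rw [← Finset.mul_sum, b.sum_inner_mul_inner, huw, mul_zero]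

/-- Putting a triple of shell sets in balanced position by an element of the symmetry group of `T`
close to the identity. -/
lemma exists_normal (n : ℕ) {τ η₁ : ℝ} (hτ : 0 < τ) (hη₁ : 0 < η₁) : ∃ η₂ > 0, ∀ (r : Fin 3 → ℝ) (E : Triple (n + 1)),
    (∀ j, τ ≤ r j) → (∀ j, r j ≤ 1) → (∀ j, Shell (r j) η₂ (E j)) → ∃ L : Vec (n + 1) ≃ₗ[ℝ] Vec (n + 1),
      ∃ v : Fin 3 → Vec (n + 1), v 0 + v 1 + v 2 = 0 ∧ MeasurePreserving L ∧
      (∀ j, Shell (r j) η₁ ((fun x => L x + v j) ⁻¹' E j)) ∧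
      Bal1 ((fun x => L x + v 0) ⁻¹' E 0) ∧ Bal0 ((fun x => L x + v 1) ⁻¹' E 1) := by
  obtain ⟨K, hK0, hK⟩ := exists_center n hτ
  obtain ⟨K', hK'0, hK'⟩ := exists_linear n hτ
  obtain ⟨A, hA⟩ : ∃ A, A = 1 + 2 * K := ⟨_, rfl⟩
  have hA1 : 1 ≤ A := by linarith
  obtain ⟨η, hη⟩ : ∃ η, η = min (τ / 2) (min 1 (min 1 η₁ / (A * (1 + 4 * K')))) := ⟨_, rfl⟩
  have hη0 : 0 < η := by rw [hη]; positivity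
  have h1 : η ≤ τ / 2 := hη ▸ min_le_left _ _
  have h3 : η * (A * (1 + 4 * K')) ≤ min 1 η₁ := by
    rw [← le_div_iff₀ (by positivity)]
    exact hη ▸ (min_le_right _ _).trans (min_le_right _ _)
  have h4 := h3.trans (min_le_left _ _)
  have h5 := h3.trans (min_le_right _ _)
  have hp : 0 < A * η * K' := by positivity
  have hp' : 0 < A * η := by positivity
  refine ⟨η, hη0, fun r E hr hr1 hE => ?_⟩
  obtain ⟨m₀, hm₀, hb₀⟩ := hK (r 0) η (E 0) (hr 0) (hr1 0) hη0 h1 (hE 0)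
  obtain ⟨m₁, hm₁, hb₁⟩ := hK (r 1) η (E 1) (hr 1) (hr1 1) hη0 h1 (hE 1)
  have hv : ∀ j, η + ‖(![m₀, m₁, -m₀ - m₁] : Fin 3 → Vec (n + 1)) j‖ ≤ A * η := by
    have hKη : 0 < K * η := by positivity
    intro j; fin_cases j
    · show η + ‖m₀‖ ≤ _; rw [hA]; linarith
    · show η + ‖m₁‖ ≤ _; rw [hA]; linarith
    · show η + ‖-m₀ - m₁‖ ≤ _
      have := norm_sub_le (-m₀) m₁
      rw [norm_neg] at this; rw [hA]; linarith
  have hS := fun j => shift_shell (hE j) _ (hv j)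
  obtain ⟨L, hLm, hL, hB⟩ := hK' (r 0) (A * η) _ (hr 0) (hr1 0) (by positivity) (by linarith) (by linarith) (hS 0) hb₀
  refine ⟨L, ![m₀, m₁, -m₀ - m₁], by simp, hLm, fun j => ?_, hB, fun u => ?_⟩
  · exact linear_shell (hS j) (hr1 j) (by positivity) (by linarith) L (θ := K' * (A * η)) (by positivity)
      (by linarith) hL (by linarith)
  · have hemb : MeasurableEmbedding L := L.toContinuousLinearEquiv.toHomeomorph.measurableEmbedding
    obtain ⟨f, hf⟩ : ∃ f, f = LinearMap.adjoint L.symm.toLinearMap := ⟨_, rfl⟩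
    have hfx : ∀ x, inner ℝ u x = inner ℝ (f u) (L x) := fun x => by
      rw [hf, LinearMap.adjoint_inner_left]; simp
    simp only [hfx]
    have := hLm.setIntegral_preimage_emb hemb (fun y => (inner ℝ (f u) y : ℝ)) {x | x + m₁ ∈ E 1}
    exact this.trans (hb₁ _)

/-! ### Truncation to thin shells -/

lemma KK_Icc (h₁ h₂ x : ℝ) :
    KK (Icc (-h₁) h₁) (Icc (-h₂) h₂) x = ofReal (min h₁ (h₂ - x) + min h₁ (h₂ + x)) := by
  have : Icc (-h₁) h₁ ∩ {y | -x - y ∈ Icc (-h₂) h₂} = Icc (max (-h₁) (-x - h₂)) (min h₁ (-x + h₂)) := by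
    ext y
    simp only [mem_inter_iff, mem_Icc, mem_setOf_eq, max_le_iff, le_min_iff]
    constructor
    · rintro ⟨⟨a, b⟩, c, d⟩; refine ⟨⟨?_, ?_⟩, ?_, ?_⟩ <;> linarith
    · rintro ⟨⟨a, b⟩, c, d⟩; refine ⟨⟨?_, ?_⟩, ?_, ?_⟩ <;> linarith
  rw [KK, this, volume_Icc]
  congr 1
  have h1 : max (-h₁) (-x - h₂) = - min h₁ (h₂ + x) := by rw [← max_neg_neg]; congr 1; ring
  rw [h1, show -x + h₂ = h₂ - x by ring]; ring

lemma min_anti {h₁ h₂ x y : ℝ} (hx : 0 ≤ x) (hxy : x ≤ y) :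
    min h₁ (h₂ - y) + min h₁ (h₂ + y) ≤ min h₁ (h₂ - x) + min h₁ (h₂ + x) := by
  rcases min_cases h₁ (h₂ - y) with h | h <;> rcases min_cases h₁ (h₂ + y) with h' | h' <;>
  rcases min_cases h₁ (h₂ - x) with h'' | h'' <;> rcases min_cases h₁ (h₂ + x) with h''' | h''' <;> linarith

lemma KK_slices {B C : Set 𝕍} (hB : MeasurableSet B) (hC : MeasurableSet C) (s : ℝ) :
    KK B C (vcons s 0) = ∫⁻ z : Vec n, KK (sl B z) (sl C (-z)) s := by
  have hm : MeasurableSet {y | -vcons s (0 : Vec n) - y ∈ C} := (measurable_const.sub measurable_id) hC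
  rw [KK, volume_eq_sl (hB.inter hm)]
  congr 1; funext z
  rw [KK]
  congr 1; ext t
  show vcons t z ∈ B ∧ -vcons s 0 - vcons t z ∈ C ↔ vcons t z ∈ B ∧ vcons (-s - t) (-z) ∈ C
  rw [← vcons_neg, ← vcons_sub]; simp

lemma KK_ball_isom {d : ℕ} (g : Vec d ≃ₗᵢ[ℝ] Vec d) (r₂ r₃ : ℝ) (x : Vec d) :
    KK (𝔹 r₂) (𝔹 r₃) (g x) = KK (𝔹 r₂) (𝔹 r₃) x := by
  rw [KK, KK, ← g.measurePreserving.measure_preimage_emb g.toHomeomorph.measurableEmbedding]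
  congr 1; ext y
  simp only [mem_preimage, mem_inter_iff, mem_setOf_eq, mem_closedBall_zero_iff, ← map_neg, ← map_sub,
    LinearIsometryEquiv.norm_map]

/-- The autocorrelation of two balls drops by a definite amount across a shell near the critical
sphere. -/
lemma ball_gap (n : ℕ) {τ η : ℝ} (hτ : 0 < τ) (hη : 0 < η) (hητ : η ≤ τ / 4) : ∃ γ > 0, ∀ r₁ r₂ r₃ a, Adm τ r₁ r₂ r₃ →
    r₁ - η ≤ a → a ≤ r₁ → ∃ θ : ℝ≥0∞,
      (∀ x : Vec (n + 1), ‖x‖ ≤ a → θ + ofReal γ ≤ KK (𝔹 r₂) (𝔹 r₃) x) ∧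
      (∀ x : Vec (n + 1), a + η ≤ ‖x‖ → KK (𝔹 r₂) (𝔹 r₃) x ≤ θ) := by
  obtain ⟨S, hS⟩ : ∃ S, S = 𝔹[n] (τ / 4) := ⟨_, rfl⟩
  have hSm : MeasurableSet S := hS ▸ measurableSet_closedBall
  have hSf : volume S ≠ ⊤ := hS ▸ ball_ne_top
  have hSp : 0 < volume.real S := by
    rw [measureReal_def]
    exact toReal_pos (hS ▸ (measure_closedBall_pos _ _ (by positivity)).ne') hSf
  refine ⟨η * volume.real S, by positivity, fun r₁ r₂ r₃ a hA ha1 ha2 => ?_⟩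
  obtain ⟨-, l1, l2, l3, u1, u2, u3, t1, t2, t3⟩ := hA
  obtain ⟨B, hB⟩ : ∃ B, B = 𝔹[n + 1] r₂ := ⟨_, rfl⟩
  obtain ⟨C, hC⟩ : ∃ C, C = 𝔹[n + 1] r₃ := ⟨_, rfl⟩
  have hBm : MeasurableSet B := hB ▸ measurableSet_closedBall
  have hCm : MeasurableSet C := hC ▸ measurableSet_closedBall
  rw [← hB, ← hC]
  have hax : ∀ x : Vec (n + 1), KK B C x = ∫⁻ z : Vec n, KK (sl B z) (sl C (-z)) ‖x‖ := fun x => by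
    obtain ⟨g, hg⟩ := exists_isom (vcons ‖x‖ (0 : Vec n)) x (by rw [norm_vcons_zero]; simp)
    rw [← KK_slices hBm hCm]
    conv_lhs => rw [← hg]
    rw [hB, hC, KK_ball_isom]
  have hsl : ∀ z : Vec n, ‖z‖ ≤ r₂ → ‖z‖ ≤ r₃ → ∀ s,
      KK (sl B z) (sl C (-z)) s = ofReal (min (hgt r₂ z) (hgt r₃ z - s) + min (hgt r₂ z) (hgt r₃ z + s)) := by
    intro z h2 h3 s
    rw [hB, hC, sl_ball (by linarith) h2, sl_ball (by linarith) (by rwa [norm_neg]), ← KK_Icc]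
    simp [hgt]
  have hanti : ∀ (z : Vec n) {s t : ℝ}, 0 ≤ s → s ≤ t → KK (sl B z) (sl C (-z)) t ≤ KK (sl B z) (sl C (-z)) s := by
    intro z s t hs hst
    rcases lt_or_ge r₂ ‖z‖ with h2 | h2
    · rw [hB, sl_ball_empty h2]; simp [KK]
    rcases lt_or_ge r₃ ‖z‖ with h3 | h3
    · rw [hC, sl_ball_empty (by rwa [norm_neg])]; simp [KK]
    rw [hsl z h2 h3, hsl z h2 h3]
    exact ofReal_le_ofReal (min_anti hs hst)
  have hh : ∀ r, τ ≤ r → ∀ z ∈ S, r - τ / 8 ≤ hgt r z ∧ hgt r z ≤ r := by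
    intro r hr z hz
    have hz' : ‖z‖ ≤ τ / 4 := by rw [hS] at hz; simpa using hz
    have hz2 : ‖z‖ ^ 2 ≤ (τ / 4) ^ 2 := by gcongr
    constructor
    · refine Real.le_sqrt_of_sq_le ?_
      nlinarith only [hz2, hr, hτ, mul_le_mul_of_nonneg_left hr hτ.le]
    · rw [hgt, Real.sqrt_le_left (by linarith)]; linarith [sq_nonneg ‖z‖]
  have ha0 : 0 ≤ a := by linarith
  have hmid : (∫⁻ z : Vec n, KK (sl B z) (sl C (-z)) (a + η)) + ofReal (η * volume.real S)
      ≤ ∫⁻ z : Vec n, KK (sl B z) (sl C (-z)) a := by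
    have e : ofReal (η * volume.real S) = ∫⁻ z, S.indicator (fun _ => ofReal η) z := by
      rw [lintegral_indicator hSm, setLIntegral_const, ofReal_mul hη.le, ofReal_measureReal hSf]
    rw [e, ← lintegral_add_right _ (measurable_const.indicator hSm)]
    refine lintegral_mono fun z => ?_
    by_cases hz : z ∈ S
    · rw [indicator_of_mem hz]
      have hz' : ‖z‖ ≤ τ / 4 := by rw [hS] at hz; simpa using hz
      have b2 := hh r₂ l2 z hz
      have b3 := hh r₃ l3 z hz
      rw [hsl z (by linarith) (by linarith), hsl z (by linarith) (by linarith), min_eq_right (by linarith),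
        min_eq_left (by linarith), min_eq_right (by linarith), min_eq_left (by linarith),
        ← ofReal_add (by linarith) hη.le]
      exact ofReal_le_ofReal (by linarith)
    · rw [indicator_of_notMem hz, add_zero]
      exact hanti z ha0 (by linarith)
  refine ⟨_, fun x hx => hmid.trans ?_, fun x hx => ?_⟩
  · rw [hax]; exact lintegral_mono fun z => hanti z (norm_nonneg _) hx
  · rw [hax]; exact lintegral_mono fun z => hanti z (by linarith) hx

lemma exists_subset_vol {S : Set 𝕍} (hS : MeasurableSet S) (hS2 : S ⊆ 𝔹 2) {m : ℝ≥0∞}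
    (hm : m ≤ volume S) : ∃ S' ⊆ S, MeasurableSet S' ∧ volume S' = m := by
  have hf : volume S ≠ ⊤ := ((measure_mono hS2).trans_lt measure_closedBall_lt_top).ne
  obtain ⟨K, hK0, hK⟩ := volume_norm_mem n
  obtain ⟨φ, hφ⟩ : ∃ φ : ℝ → ℝ, φ = fun ρ => volume.real (S ∩ 𝔹 ρ) := ⟨_, rfl⟩
  have hfin : ∀ ρ, volume (S ∩ 𝔹 ρ) ≠ ⊤ := fun ρ => measure_ne_top_of_subset inter_subset_left hf
  have hstep : ∀ ρ ρ', ρ ≤ ρ' → φ ρ ≤ φ ρ' ∧ φ ρ' ≤ φ ρ + K * (ρ' - ρ) := by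
    intro ρ ρ' h
    rw [hφ]
    refine ⟨measureReal_mono (inter_subset_inter_right _ (cball_mono h)) (hfin _), ?_⟩
    have h1 : S ∩ 𝔹 ρ' ⊆ (S ∩ 𝔹 ρ) ∪ {x | ‖x‖ ∈ Icc ρ ρ' ∧ ‖x‖ ≤ 2} := by
      intro x hx
      by_cases hx' : ‖x‖ ≤ ρ
      · exact Or.inl ⟨hx.1, by simpa using hx'⟩
      · exact Or.inr ⟨⟨(not_le.1 hx').le, by simpa using hx.2⟩, by simpa using hS2 hx.1⟩
    have h2 := (measure_mono h1).trans (measure_union_le (μ := volume) _ _)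
    have h3 := hK (Icc ρ ρ') measurableSet_Icc (by simp)
    rw [volume_Icc, ← ofReal_mul hK0.le] at h3
    have h4 := h2.trans (add_le_add_right h3 _)
    refine toReal_le_of_le_ofReal (add_nonneg measureReal_nonneg (mul_nonneg hK0.le (by linarith))) ?_
    rw [ofReal_add measureReal_nonneg (mul_nonneg hK0.le (by linarith)), ofReal_measureReal (hfin _)]
    exact h4
  have hc : Continuous φ := by
    refine (LipschitzWith.of_dist_le_mul (K := ⟨K, hK0.le⟩) fun x y => ?_).continuous
    rw [Real.dist_eq, Real.dist_eq]
    show _ ≤ K * |x - y|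
    rcases le_total x y with h | h
    · have := hstep x y h
      rw [abs_sub_comm, abs_sub_comm x y, abs_of_nonneg (by linarith), abs_of_nonneg (by linarith)]; linarith
    · have := hstep y x h
      rw [abs_of_nonneg (by linarith), abs_of_nonneg (by linarith)]; linarith
  have h0 : φ (-1) = 0 := by rw [hφ]; simp
  have h2 : φ 2 = volume.real S := by rw [hφ]; simp only [inter_eq_left.2 hS2]
  obtain ⟨ρ, -, hρ⟩ := intermediate_value_Icc (show (-1 : ℝ) ≤ 2 by norm_num) hc.continuousOn
    (show m.toReal ∈ Icc (φ (-1)) (φ 2) from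
      ⟨h0 ▸ toReal_nonneg, h2 ▸ toReal_mono hf hm⟩)
  refine ⟨S ∩ 𝔹 ρ, inter_subset_left, hS.inter measurableSet_closedBall, ?_⟩
  rw [hφ] at hρ
  exact (ENNReal.toReal_eq_toReal_iff' (hfin _) (ne_top_of_le_ne_top hf hm)).1 hρ

lemma KK_lip {d : ℕ} (B C B' C' : Set (Vec d)) (hC : MeasurableSet C) (hC' : MeasurableSet C') (x : Vec d) :
    KK B C x ≤ KK B' C' x + (volume (B ∆ B') + volume (C ∆ C')) := by
  have h1 : B ∩ {y | -x - y ∈ C} ⊆ (B' ∩ {y | -x - y ∈ C'}) ∪ (B ∆ B' ∪ (fun y => -x - y) ⁻¹' (C ∆ C')) := by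
    intro y hy
    by_cases h2 : y ∈ B'
    · by_cases h3 : -x - y ∈ C'
      · exact Or.inl ⟨h2, h3⟩
      · exact Or.inr (Or.inr (Or.inl ⟨hy.2, h3⟩))
    · exact Or.inr (Or.inl (Or.inl ⟨hy.1, h2⟩))
  refine (measure_mono h1).trans ((measure_union_le _ _).trans (add_le_add le_rfl ((measure_union_le _ _).trans ?_)))
  rw [(Measure.measurePreserving_sub_left volume (-x)).measure_preimage (hC.symmDiff hC').nullMeasurableSet]

lemma trunc_core {d : ℕ} {r η : ℝ} {A X Y : Set (Vec d)} {K : Vec d → ℝ≥0∞} {g θ : ℝ≥0∞} (hA : MeasurableSet A)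
    (hX : MeasurableSet X) (hY : MeasurableSet Y) (hXA : X ⊆ A \ 𝔹 r)
    (hYA : Y ⊆ 𝔹 r \ A) (hv : volume X = volume Y) (hη : 0 ≤ η)
    (hout : A \ X ⊆ 𝔹 (r + η)) (hin : 𝔹 (r - η) ⊆ A ∪ Y)
    (hKX : ∀ x ∈ X, K x ≤ θ) (hKY : ∀ x ∈ Y, θ + g ≤ K x) :
    ∃ A', Shell r η A' ∧ volume A' = volume A ∧
      volume (A' ∆ 𝔹 r) ≤ volume (A ∆ 𝔹 r) ∧
      ∃ m, volume (A ∆ A') ≤ m + m ∧ (∫⁻ x in A, K x) + g * m ≤ ∫⁻ x in A', K x := by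
  have hYd : Disjoint (A \ X) Y := disjoint_left.2 fun x hx hy => (hYA hy).2 hx.1
  have hXd : Disjoint (A \ X) X := disjoint_sdiff_left
  have hAX : (A \ X) ∪ X = A := diff_union_of_subset fun x hx => (hXA hx).1
  refine ⟨(A \ X) ∪ Y, ⟨(hA.diff hX).union hY, fun x hx => ?_, union_subset hout fun x hx => ?_⟩, ?_, measure_mono ?_,
    volume Y, ?_, ?_⟩
  · rcases hin hx with h | h
    · refine Or.inl ⟨h, fun h' => (hXA h').2 (cball_mono (by linarith) hx)⟩
    · exact Or.inr h
  · exact cball_mono (by linarith) (hYA hx).1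
  · rw [measure_union hYd hY, ← hv, ← measure_union hXd hX, hAX]
  · rintro x (⟨h | h, h'⟩ | ⟨h, h'⟩)
    · exact Or.inl ⟨h.1, h'⟩
    · exact absurd (hYA h).1 h'
    · refine Or.inr ⟨h, fun hxA => h' (Or.inl ⟨hxA, fun hxX => (hXA hxX).2 h⟩)⟩
  · refine (measure_mono (t := X ∪ Y) ?_).trans ((measure_union_le _ _).trans (by rw [hv]))
    rintro x (⟨h, h'⟩ | ⟨h | h, h'⟩)
    · by_contra hc
      exact h' (Or.inl ⟨h, fun hx => hc (Or.inl hx)⟩)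
    · exact absurd h.1 h'
    · exact Or.inr h
  · rw [lintegral_union hY hYd, ← hAX, lintegral_union hX hXd, hAX, add_assoc]
    refine add_le_add le_rfl ?_
    calc (∫⁻ x in X, K x) + g * volume Y ≤ θ * volume Y + g * volume Y := by
          refine add_le_add ((setLIntegral_mono' hX hKX).trans (le_of_eq ?_)) le_rfl
          rw [setLIntegral_const, hv]
      _ = ∫⁻ x in Y, θ + g := by rw [setLIntegral_const, add_mul]
      _ ≤ _ := setLIntegral_mono' hY hKY

lemma trunc_one {r η : ℝ} {A : Set 𝕍} {K : 𝕍 → ℝ≥0∞} {g : ℝ≥0∞} (hA : MeasurableSet A)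
    (hr : r ≤ 1) (hη : 0 < η) (hη1 : η ≤ 1) (hv : volume A = volume (𝔹[n + 1] r))
    (hgap : ∀ a, r - η ≤ a → a ≤ r → ∃ θ : ℝ≥0∞, (∀ x, ‖x‖ ≤ a → θ + g ≤ K x) ∧ ∀ x, a + η ≤ ‖x‖ → K x ≤ θ) :
    ∃ A', Shell r η A' ∧ volume A' = volume A ∧
      volume (A' ∆ 𝔹 r) ≤ volume (A ∆ 𝔹 r) ∧
      ∃ m, volume (A ∆ A') ≤ m + m ∧ (∫⁻ x in A, K x) + g * m ≤ ∫⁻ x in A', K x := by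
  have hB : ∀ s, MeasurableSet (𝔹[n + 1] s) := fun s => measurableSet_closedBall
  have hsub : ∀ {s t : ℝ}, s ≤ t → 𝔹[n + 1] s ⊆ 𝔹 t := fun h =>
    cball_mono h
  have hBf : volume (𝔹[n + 1] r) ≠ ⊤ := ball_ne_top
  have hd : volume (A \ 𝔹 r) = volume (𝔹 r \ A) := by
    have h1 := measure_inter_add_sdiff (μ := volume) A (hB r)
    have h2 := measure_inter_add_sdiff (μ := volume) (𝔹 r) hA
    rw [hv, ← h2, inter_comm] at h1
    exact (ENNReal.add_right_inj (measure_ne_top_of_subset inter_subset_left hBf)).1 h1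
  have hX : A \ 𝔹 (r + η) ⊆ A \ 𝔹 r := diff_subset_diff_right (hsub (by linarith))
  have hY : 𝔹 (r - η) \ A ⊆ 𝔹 r \ A := diff_subset_diff_left (hsub (by linarith))
  have hnorm : ∀ {x : 𝕍} {s : ℝ}, x ∉ 𝔹 s → s ≤ ‖x‖ := fun h => by
    rw [mem_closedBall_zero_iff, not_le] at h; exact h.le
  rcases le_total (volume (𝔹 (r - η) \ A)) (volume (A \ 𝔹 (r + η))) with h | h
  · -- enlarge the missing part inside the ball
    obtain ⟨θ, h1, h2⟩ := hgap r (by linarith) le_rfl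
    have hle : volume (A \ 𝔹 (r + η)) - volume (𝔹 (r - η) \ A) ≤
        volume ((𝔹 r \ A) \ (𝔹 (r - η) \ A)) := by
      rw [measure_sdiff hY ((hB _).diff hA).nullMeasurableSet
        (measure_ne_top_of_subset (hY.trans diff_subset) hBf), ← hd]
      exact tsub_le_tsub_right (measure_mono hX) _
    obtain ⟨S, hS, hSm, hSv⟩ := exists_subset_vol (((hB _).diff hA).diff ((hB _).diff hA))
      ((diff_subset.trans diff_subset).trans (hsub (by linarith))) hle
    refine trunc_core hA (hA.diff (hB (r + η))) (((hB (r - η)).diff hA).union hSm) hX (union_subset hY (hS.trans diff_subset)) ?_ hη.le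
      ?_ ?_ (θ := θ) (g := g) (fun x hx => h2 x (hnorm hx.2)) ?_
    · rw [measure_union (disjoint_left.2 fun x hx hx' => (hS hx').2 hx) hSm, hSv, add_tsub_cancel_of_le h]
    · rw [diff_diff_right_self]; exact inter_subset_right
    · intro x hx
      by_cases hxA : x ∈ A
      · exact Or.inl hxA
      · exact Or.inr (Or.inl ⟨hx, hxA⟩)
    · rintro x (hx | hx)
      · exact h1 x (by simpa using hsub (by linarith) hx.1)
      · exact h1 x (by simpa using (hS hx).1.1)
  · -- enlarge the excess outside the ball
    obtain ⟨θ, h1, h2⟩ := hgap (r - η) le_rfl (by linarith)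
    have hXf : volume (A \ 𝔹 (r + η)) ≠ ⊤ := measure_ne_top_of_subset diff_subset (hv ▸ hBf)
    have hle : volume (𝔹 (r - η) \ A) - volume (A \ 𝔹 (r + η)) ≤
        volume ((A \ 𝔹 r) \ (A \ 𝔹 (r + η))) := by
      rw [measure_sdiff hX (hA.diff (hB _)).nullMeasurableSet hXf, hd]
      exact tsub_le_tsub_right (measure_mono hY) _
    obtain ⟨S, hS, hSm, hSv⟩ := exists_subset_vol ((hA.diff (hB _)).diff (hA.diff (hB _)))
      (fun x hx => hsub (show r + η ≤ 2 by linarith) (by by_contra hc; exact hx.2 ⟨hx.1.1, hc⟩)) hle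
    refine trunc_core hA ((hA.diff (hB (r + η))).union hSm) ((hB (r - η)).diff hA) (union_subset hX (hS.trans diff_subset)) hY ?_ hη.le
      ?_ ?_ (θ := θ) (g := g) ?_ (fun x hx => h1 x (by simpa using hx.1))
    · rw [measure_union (disjoint_left.2 fun x hx hx' => (hS hx').2 hx) hSm, hSv, add_tsub_cancel_of_le h]
    · intro x hx
      by_contra hc
      exact hx.2 (Or.inl ⟨hx.1, hc⟩)
    · intro x hx
      by_cases hxA : x ∈ A
      · exact Or.inl hxA
      · exact Or.inr ⟨hx, hxA⟩
    · rintro x (hx | hx)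
      · exact h2 x (by linarith [hnorm hx.2])
      · exact h2 x (by linarith [hnorm (hS hx).1.2])

lemma trunc_step (n : ℕ) {τ η : ℝ} (hτ : 0 < τ) (hη : 0 < η) (hητ : η ≤ τ / 4) : ∃ g > 0, ∃ δ > 0, ∀ r₁ r₂ r₃, Adm τ r₁ r₂ r₃ →
    ∀ A B C : Set (Vec (n + 1)), MeasurableSet A → MeasurableSet B → MeasurableSet C →
    volume A = volume (𝔹[n + 1] r₁) →
    volume (B ∆ 𝔹 r₂) ≤ ofReal δ →
    volume (C ∆ 𝔹 r₃) ≤ ofReal δ →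
    ∃ A', Shell r₁ η A' ∧ volume A' = volume A ∧
      volume (A' ∆ 𝔹 r₁) ≤ volume (A ∆ 𝔹 r₁) ∧
      TT A B C + ofReal g * volume (A ∆ A') ≤ TT A' B C := by
  obtain ⟨γ, hγ, hgap⟩ := ball_gap n hτ hη hητ
  refine ⟨γ / 4, by positivity, γ / 8, by positivity, fun r₁ r₂ r₃ hAdm A B C hA hB hC hv hB' hC' => ?_⟩
  have hb : ∀ s, MeasurableSet (𝔹[n + 1] s) := fun s => measurableSet_closedBall
  have he : ofReal (γ / 8) + ofReal (γ / 8) = ofReal (γ / 4) := by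
    rw [← ofReal_add (by positivity) (by positivity)]; congr 1; ring
  obtain ⟨A', h1, h2, h3, m, h4, h5⟩ := trunc_one (K := KK B C) (g := ofReal (γ / 2)) hA hAdm.u1 hη
    (by linarith [hAdm.le_one]) hv fun a ha1 ha2 => by
      obtain ⟨θ, hθ1, hθ2⟩ := hgap r₁ r₂ r₃ a hAdm ha1 ha2
      refine ⟨θ + ofReal (γ / 4), fun x hx => ?_, fun x hx => ?_⟩
      · refine (ENNReal.add_le_add_iff_right (a := ofReal (γ / 4)) ofReal_ne_top).1 ?_
        calc _ = θ + ofReal γ := by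
              rw [add_assoc, add_assoc, ← ofReal_add (by positivity) (by positivity),
                ← ofReal_add (by positivity) (by positivity)]
              congr 2; ring
          _ ≤ _ := (hθ1 x hx).trans ((KK_lip _ _ B C (hb _) hC x).trans (add_le_add le_rfl ?_))
        rw [symmDiff_comm, symmDiff_comm _ C, ← he]
        exact add_le_add hB' hC'
      · refine (KK_lip B C _ _ hC (hb r₃) x).trans (add_le_add (hθ2 x hx) ?_)
        rw [← he]; exact add_le_add hB' hC'
  refine ⟨A', h1, h2, h3, ?_⟩
  rw [TT_eq_lintegral hA hB hC, TT_eq_lintegral h1.1 hB hC]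
  refine le_trans (add_le_add le_rfl ?_) h5
  calc _ ≤ ofReal (γ / 4) * (m + m) := by gcongr
    _ = ofReal (γ / 2) * m := by
        rw [mul_add, ← add_mul, ← ofReal_add (by positivity) (by positivity)]; congr 2; ring

/-- Near balls, a triple can be replaced by a triple of shell sets without decreasing `T`; the increase
controls the measure moved. -/
lemma truncate (n : ℕ) {τ η : ℝ} (hτ : 0 < τ) (hη : 0 < η) (hητ : η ≤ τ / 4) : ∃ g > 0, ∃ δ > 0, ∀ (r : Fin 3 → ℝ)
    (E : Triple (n + 1)), Adm τ (r 0) (r 1) (r 2) → (∀ j, MeasurableSet (E j)) →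
    (∀ j, volume (E j) = volume (𝔹[n + 1] (r j))) →
    (∀ j, volume (E j ∆ (𝔹 (r j))) ≤ ofReal δ) →
    ∃ F : Triple (n + 1), (∀ j, Shell (r j) η (F j)) ∧ (∀ j, volume (F j) = volume (E j)) ∧
      ∀ j, T3 E + ofReal g * volume (E j ∆ F j) ≤ T3 F := by
  obtain ⟨g, hg, δ, hδ, H⟩ := trunc_step n hτ hη hητ
  refine ⟨g, hg, δ, hδ, fun r E hA hE hv hd => ?_⟩
  obtain ⟨F₀, s0, v0, d0, t0⟩ := H _ _ _ hA (E 0) (E 1) (E 2) (hE 0) (hE 1) (hE 2) (hv 0) (hd 1) (hd 2)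
  obtain ⟨F₁, s1, v1, d1, t1⟩ := H _ _ _ hA.rot (E 1) (E 2) F₀ (hE 1) (hE 2) s0.1 (hv 1) (hd 2) (d0.trans (hd 0))
  obtain ⟨F₂, s2, v2, d2, t2⟩ := H _ _ _ hA.rot.rot (E 2) F₀ F₁ (hE 2) s0.1 s1.1 (hv 2) (d0.trans (hd 0)) (d1.trans (hd 1))
  rw [TT_rot (hE 1) (hE 2) s0.1, TT_rot (hE 2) s0.1 (hE 1), TT_rot s1.1 (hE 2) s0.1, TT_rot (hE 2) s0.1 s1.1] at t1
  rw [TT_rot (hE 2) s0.1 s1.1, TT_rot s2.1 s0.1 s1.1] at t2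
  have t0' := le_self_add.trans t0
  have t1' := le_self_add.trans t1
  have t2' := le_self_add.trans t2
  refine ⟨![F₀, F₁, F₂], fun j => ?_, fun j => ?_, fun j => ?_⟩
  · fin_cases j <;> assumption
  · fin_cases j <;> assumption
  · fin_cases j
    · exact t0.trans (t1'.trans t2')
    · exact le_trans (add_le_add t0' le_rfl) (t1.trans t2')
    · exact le_trans (add_le_add (t0'.trans t1') le_rfl) t2

/-! ### Local stability -/

section

variable {d : ℕ}

/-- `Clo E F x`: some element of the symmetry group moves `F` to within `x` of `E`. -/
def Clo (E F : Triple d) (x : ℝ) : Prop :=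
  ∃ (ψ : Vec d ≃ₗ[ℝ] Vec d) (v : Fin 3 → Vec d), v 0 + v 1 + v 2 = 0 ∧ MeasurePreserving ψ volume volume ∧
    ∀ j, volume (E j ∆ ((fun y => ψ y + v j) '' F j)) ≤ ofReal x

lemma aff_emb (ψ : Vec d ≃ₗ[ℝ] Vec d) (v : Vec d) : MeasurableEmbedding fun y => ψ y + v :=
  (MeasurableEquiv.addRight v).measurableEmbedding.comp ψ.toContinuousLinearEquiv.toHomeomorph.measurableEmbedding

lemma aff_mp {ψ : Vec d ≃ₗ[ℝ] Vec d} (h : MeasurePreserving ψ volume volume) (v : Vec d) :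
    MeasurePreserving fun y => ψ y + v :=
  (measurePreserving_add_right volume v).comp h

lemma aff_inj (ψ : Vec d ≃ₗ[ℝ] Vec d) (v : Vec d) : Function.Injective fun y => ψ y + v := (aff_emb ψ v).injective

lemma vol_aff {ψ : Vec d ≃ₗ[ℝ] Vec d} (h : MeasurePreserving ψ volume volume) (v : Vec d) (S : Set (Vec d)) :
    volume ((fun y => ψ y + v) '' S) = volume S := by
  rw [← (aff_mp h v).measure_preimage_emb (aff_emb ψ v), preimage_image_eq _ (aff_inj ψ v)]

lemma vol_aff_symmDiff {ψ : Vec d ≃ₗ[ℝ] Vec d} (h : MeasurePreserving ψ volume volume) (v : Vec d) (E F : Set (Vec d)) :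
    volume (E ∆ ((fun y => ψ y + v) '' F)) = volume (((fun y => ψ y + v) ⁻¹' E) ∆ F) := by
  rw [← (aff_mp h v).measure_preimage_emb (aff_emb ψ v) (E ∆ _), preimage_symmDiff,
    preimage_image_eq _ (aff_inj ψ v)]

lemma Clo.of_near {E F : Triple d} {x : ℝ} (h : ∀ j, volume (E j ∆ F j) ≤ ofReal x) :
    Clo E F x :=
  ⟨LinearEquiv.refl ℝ _, fun _ => 0, by simp, MeasurePreserving.id _, fun j => by simpa using h j⟩

lemma Clo.of_pre {E F : Triple d} {x : ℝ} {L : Vec d ≃ₗ[ℝ] Vec d} {w : Fin 3 → Vec d}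
    (hw : w 0 + w 1 + w 2 = 0) (hL : MeasurePreserving L volume volume)
    (h : Clo (fun j => (fun y => L y + w j) ⁻¹' E j) F x) : Clo E F x := by
  obtain ⟨ψ, v, hv, hψ, H⟩ := h
  refine ⟨ψ.trans L, fun j => L (v j) + w j, ?_, hL.comp hψ, fun j => ?_⟩
  · calc _ = L (v 0 + v 1 + v 2) + (w 0 + w 1 + w 2) := by simp only [map_add]; abel
      _ = 0 := by rw [hv, hw]; simp
  · refine le_trans (le_of_eq ?_) (H j)
    rw [← vol_aff_symmDiff hL (w j), image_image]
    congr 3; funext y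
    simp [add_assoc]

lemma Clo.left {E E' F : Triple d} {x e : ℝ} (h : Clo E F x) (hx : 0 ≤ x) (he : 0 ≤ e)
    (h' : ∀ j, volume (E' j ∆ E j) ≤ ofReal e) : Clo E' F (x + e) := by
  obtain ⟨ψ, v, hv, hψ, H⟩ := h
  refine ⟨ψ, v, hv, hψ, fun j => (measure_symmDiff_le _ (E j) _).trans ?_⟩
  rw [add_comm x, ofReal_add he hx]
  exact add_le_add (h' j) (H j)

lemma Clo.right {E F F' : Triple d} {x e : ℝ} (h : Clo E F x) (hx : 0 ≤ x) (he : 0 ≤ e)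
    (h' : ∀ j, volume (F j ∆ F' j) ≤ ofReal e) : Clo E F' (x + e) := by
  obtain ⟨ψ, v, hv, hψ, H⟩ := h
  refine ⟨ψ, v, hv, hψ, fun j => (measure_symmDiff_le _ ((fun y => ψ y + v j) '' F j) _).trans ?_⟩
  rw [ofReal_add hx he, ← image_symmDiff (aff_inj ψ (v j)), vol_aff hψ]
  exact add_le_add (H j) (h' j)

lemma tripleDist_nonneg (E F : Triple d) : 0 ≤ tripleDist E F := by
  refine Real.sInf_nonneg ?_
  rintro r ⟨ψ, v, -, -, rfl⟩
  exact le_max_of_le_left toReal_nonneg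

lemma Clo.dist_le {E F : Triple d} {x : ℝ} (h : Clo E F x) (hx : 0 ≤ x) : tripleDist E F ≤ x := by
  obtain ⟨ψ, v, hv, hψ, H⟩ := h
  have hb : ∀ j, (volume (E j ∆ ((fun y => ψ y + v j) '' F j))).toReal ≤ x := fun j =>
    toReal_le_of_le_ofReal hx (H j)
  unfold tripleDist
  refine le_trans (csInf_le ?_ (by exact ⟨ψ, v, hv, hψ, rfl⟩)) (max_le (hb 0) (max_le (hb 1) (hb 2)))
  refine ⟨0, ?_⟩
  rintro r ⟨ψ, v, -, -, rfl⟩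
  exact le_max_of_le_left toReal_nonneg

lemma Clo.of_dist {E F : Triple d} (hE : ∀ j, volume (E j) ≠ ⊤) (hF : ∀ j, volume (F j) ≠ ⊤) {x : ℝ}
    (h : tripleDist E F < x) : Clo E F x := by
  unfold tripleDist at h
  obtain ⟨r, ⟨ψ, v, hv, hψ, rfl⟩, hr⟩ := exists_lt_of_csInf_lt
    (by exact ⟨_, LinearEquiv.refl ℝ _, fun _ => 0, by simp, MeasurePreserving.id _, rfl⟩) h
  have hb : ∀ j, (volume (E j ∆ ((fun y => ψ y + v j) '' F j))).toReal ≤ x →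
      volume (E j ∆ ((fun y => ψ y + v j) '' F j)) ≤ ofReal x := fun j hj =>
    ENNReal.le_ofReal_iff_toReal_le (measure_symmDiff_ne_top (hE j) (by rw [vol_aff hψ]; exact hF j))
      (toReal_nonneg.trans hj) |>.2 hj
  refine ⟨ψ, v, hv, hψ, fun j => hb j ?_⟩
  fin_cases j
  · exact (le_max_left _ _).trans hr.le
  · exact (le_max_left _ _).trans ((le_max_right _ _).trans hr.le)
  · exact (le_max_right _ _).trans ((le_max_right _ _).trans hr.le)

/-- The distance to the orbit is Lipschitz in both arguments. -/
lemma tripleDist_lip {E E' F F' : Triple d} (hE : ∀ j, volume (E j) ≠ ⊤) (hF : ∀ j, volume (F j) ≠ ⊤)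
    {e e' : ℝ} (he : 0 ≤ e) (he' : 0 ≤ e') (h : ∀ j, volume (E' j ∆ E j) ≤ ofReal e)
    (h' : ∀ j, volume (F j ∆ F' j) ≤ ofReal e') :
    tripleDist E' F' ≤ tripleDist E F + e + e' := by
  refine le_of_forall_pos_le_add fun t ht => ?_
  have hx := tripleDist_nonneg E F
  have := (((Clo.of_dist hE hF (show tripleDist E F < tripleDist E F + t by linarith)).left (by linarith) he h).right
    (by linarith) he' h').dist_le (by linarith)
  linarith

lemma T3_pre {L : Vec d ≃ₗ[ℝ] Vec d} {w : Fin 3 → Vec d} (hw : w 0 + w 1 + w 2 = 0)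
    (hL : MeasurePreserving L volume volume) {E : Triple d} (hE : ∀ j, MeasurableSet (E j)) :
    T3 (fun j => (fun y => L y + w j) ⁻¹' E j) = T3 E := by
  refine TT_preimage (aff_mp hL (w 0)) (aff_mp hL (w 1)) (fun x y => ?_) (hE 0) (hE 1) (hE 2)
  rw [map_sub, map_neg, show w 2 = -w 0 - w 1 by rw [← sub_eq_zero, ← hw]; abel]
  abel

/-- Stability for triples whose orbit distance to the balls is small. -/
lemma local_stability (n : ℕ) {τ : ℝ} (hτ : 0 < τ) (hτ1 : τ ≤ 1) : ∃ δ > 0, ∃ C > 0, ∀ (ε : ℝ) (r : Fin 3 → ℝ)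
    (E : Triple (n + 1)), 0 < ε → ε ≤ 1 → Adm τ (r 0) (r 1) (r 2) → (∀ j, MeasurableSet (E j)) →
    (∀ j, volume (E j) = volume (𝔹[n + 1] (r j))) →
    (T3 fun j => 𝔹[n + 1] (r j)) ≤ T3 E + ofReal (ε ^ 2) →
    Clo E (fun j => 𝔹 (r j)) δ → Clo E (fun j => 𝔹 (r j)) (C * ε) := by
  obtain ⟨η₀, hη₀, C, hC, hst⟩ := shell_stability n hτ hτ1
  obtain ⟨η₁, hη₁⟩ : ∃ η₁, η₁ = min η₀ 1 := ⟨_, rfl⟩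
  have hη₁0 : 0 < η₁ := by rw [hη₁]; positivity
  obtain ⟨η₂, hη₂, hno⟩ := exists_normal n hτ hη₁0
  obtain ⟨g, hg, δ, hδ, htr⟩ := truncate n hτ (η := min η₂ (τ / 4)) (by positivity) (min_le_right _ _)
  refine ⟨δ, hδ, C + 1 / g, by positivity, fun ε r E hε hε1 hA hE hv hdef hclo => ?_⟩
  obtain ⟨ψ, v, hv0, hψ, hnear⟩ := hclo
  simp only [vol_aff_symmDiff hψ] at hnear
  refine Clo.of_pre hv0 hψ ?_
  have hT := T3_pre hv0 hψ hE
  have hvE : ∀ j, volume ((fun y => ψ y + v j) ⁻¹' E j) = volume (𝔹[n + 1] (r j)) := fun j => by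
    rw [(aff_mp hψ _).measure_preimage_emb (aff_emb ψ _), hv]
  have hEm : ∀ j, MeasurableSet ((fun y => ψ y + v j) ⁻¹' E j) := fun j => (aff_emb ψ _).measurable (hE j)
  obtain ⟨E', hE'⟩ : ∃ E' : Triple (n + 1), E' = fun j => (fun y => ψ y + v j) ⁻¹' E j := ⟨_, rfl⟩
  rw [← hE'] at hT ⊢
  replace hvE : ∀ j, volume (E' j) = volume (𝔹[n + 1] (r j)) := fun j => by rw [hE']; exact hvE j
  replace hEm : ∀ j, MeasurableSet (E' j) := fun j => by rw [hE']; exact hEm j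
  rw [← hT] at hdef
  obtain ⟨F, hFs, hFv, hFT⟩ := htr r E' hA hEm hvE (fun j => by rw [hE']; exact hnear j)
  have hFb : T3 F ≤ T3 fun j => 𝔹[n + 1] (r j) := by
    refine riesz_sobolev (fun j => (hFs j).1) (R := 2) (fun j => (hFs j).2.2.trans
      (cball_mono ?_)) (fun j => hτ.le.trans (hA.rl j)) (fun j => by linarith [hA.ru j])
      fun j => by rw [hFv, hvE]
    linarith [hA.ru j, min_le_right η₂ (τ / 4)]
  have hfin : T3 E' ≠ ⊤ := by
    refine ne_top_of_le_ne_top ?_ (TT_le_mul (E' 0) (E' 1) (E' 2))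
    rw [hvE, hvE]
    exact ENNReal.mul_ne_top ball_ne_top ball_ne_top
  have hEF : ∀ j, volume (E' j ∆ F j) ≤ ofReal (1 / g * ε) := fun j => by
    have h1 := (hFT j).trans (hFb.trans hdef)
    rw [ENNReal.add_le_add_iff_left hfin] at h1
    have h2 : volume (E' j ∆ F j) ≤ ofReal (ε ^ 2) / ofReal g := by
      rw [ENNReal.le_div_iff_mul_le (Or.inl (by simpa using hg)) (Or.inl ofReal_ne_top), mul_comm]
      exact h1
    refine h2.trans ?_
    rw [← ofReal_div_of_pos hg]
    refine ofReal_le_ofReal ?_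
    rw [div_mul_eq_mul_div, one_mul]
    gcongr
    nlinarith
  obtain ⟨L, w, hw, hL, hGs, hG0, hG1⟩ := hno r F hA.rl hA.ru fun j => (hFs j).mono (min_le_left _ _)
  have hcfg : Cfg τ η₁ ε (volume (𝔹[n + 1] 2)).toReal r
      (fun j => (fun y => L y + w j) ⁻¹' F j) := by
    refine ⟨hA, hη₁0, hε, toReal_nonneg, hGs, fun j => ?_, ?_, fun j => ?_⟩
    · rw [(aff_mp hL _).measure_preimage_emb (aff_emb L _), hFv, hvE]
    · rw [T3_pre hw hL fun j => (hFs j).1]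
      exact hdef.trans (add_le_add (le_self_add.trans (hFT 0)) le_rfl)
    · rw [ofReal_toReal ball_ne_top]
      refine measure_mono (symmDiff_subset_union.trans (union_subset ((hGs j).2.2.trans ?_) ?_)) <;>
      refine cball_mono ?_
      · linarith [hA.ru j, min_le_right η₀ 1]
      · linarith [hA.ru j]
  have := hst η₁ ε _ r _ hcfg (hη₁ ▸ min_le_left _ _) hG0 hG1
  rw [add_mul]
  exact (Clo.of_pre hw hL (Clo.of_near this)).left (by positivity) (by positivity) hEF

lemma local_stability' (n : ℕ) {τ : ℝ} (hτ : 0 < τ) (hτ1 : τ ≤ 1) : ∃ δ > 0, ∃ c > 0, ∀ (r : Fin 3 → ℝ)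
    (E : Triple (n + 1)), Adm τ (r 0) (r 1) (r 2) → (∀ j, MeasurableSet (E j)) →
    (∀ j, volume (E j) = volume (𝔹[n + 1] (r j))) →
    0 < tripleDist E (fun j => 𝔹 (r j)) → tripleDist E (fun j => 𝔹 (r j)) < δ →
    T3 E + ofReal (c * tripleDist E (fun j => 𝔹 (r j)) ^ 2) ≤
      T3 fun j => 𝔹[n + 1] (r j) := by
  obtain ⟨δ, hδ, C, hC, H⟩ := local_stability n hτ hτ1
  refine ⟨min δ (2 * C), by positivity, 1 / (2 * C) ^ 2, by positivity, fun r E hA hE hv hDp hd => ?_⟩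
  by_contra hcon
  push Not at hcon
  have hbf : ∀ j, volume (𝔹[n + 1] (r j)) ≠ ⊤ := fun j => ball_ne_top
  have hclo := Clo.of_dist (fun j => hv j ▸ hbf j) hbf (hd.trans_le (min_le_left _ _))
  obtain ⟨D, hD⟩ : ∃ D, D = tripleDist E (fun j => 𝔹 (r j)) := ⟨_, rfl⟩
  rw [← hD] at hcon hd hDp
  have h2 := (H (D / (2 * C)) r E (by positivity) (by rw [div_le_one (by positivity)]; exact hd.le.trans (min_le_right _ _))
    hA hE hv (by refine hcon.le.trans (le_of_eq ?_); congr 2; field_simp) hclo).dist_le (by positivity)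
  rw [← hD] at h2
  have h3 : C * (D / (2 * C)) = D / 2 := by field_simp
  linarith

/-! ### Globalization -/

lemma vol_ball_eq {r : ℝ} (hr : 0 ≤ r) : volume (𝔹[n + 1] r) =
    ofReal (r ^ (n + 1)) * volume (𝔹[n + 1] 1) := by
  rw [Measure.addHaar_closedBall' volume _ hr]
  simp

lemma unit_ball_pos (n : ℕ) : 0 < (volume (𝔹[n + 1] 1)).toReal :=
  toReal_pos (measure_closedBall_pos _ _ one_pos).ne' ball_ne_top

/-- Every finite measure is the measure of a centered ball; the radius is the one used in `ballStar`. -/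
lemma vol_ballStar {E : Set 𝕍} (hE : volume E ≠ ⊤) : volume (ballStar E) = volume E := by
  have hv := unit_ball_pos n
  have h0 : 0 ≤ (volume E).toReal / (volume (𝔹[n + 1] 1)).toReal := by positivity
  rw [ballStar, vol_ball_eq (by positivity), one_div, Real.rpow_inv_natCast_pow h0 (by omega),
    ofReal_div_of_pos hv, ofReal_toReal hE, ofReal_toReal ball_ne_top,
    ENNReal.div_mul_cancel (measure_closedBall_pos _ _ one_pos).ne' ball_ne_top]

lemma exists_radius {E : Set 𝕍} (hE : volume E ≠ ⊤) :
    ∃ r, 0 ≤ r ∧ volume E = volume (𝔹[n + 1] r) :=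
  ⟨_, by positivity, (vol_ballStar hE).symm⟩

lemma ball_symm {d : ℕ} {a b : ℝ} {e : ℝ≥0∞}
    (h1 : volume (𝔹[d] a) ≤ volume (𝔹[d] b) + e)
    (h2 : volume (𝔹[d] b) ≤ volume (𝔹[d] a) + e) :
    volume (𝔹[d] a ∆ 𝔹 b) ≤ e := by
  wlog hab : a ≤ b generalizing a b
  · rw [symmDiff_comm]
    exact this h2 h1 (le_of_not_ge hab)
  rw [symmDiff_of_le (cball_mono hab),
    measure_sdiff (cball_mono hab) measurableSet_closedBall.nullMeasurableSet
      ball_ne_top]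
  exact tsub_le_iff_left.2 h2

lemma pow_gap {n : ℕ} {τ a b : ℝ} (hτ : 0 < τ) (ha : τ ≤ a) (hab : a ≤ b) :
    (b - a) * τ ^ n ≤ b ^ (n + 1) - a ^ (n + 1) := by
  have h1 : τ ^ n ≤ b ^ n := pow_le_pow_left₀ hτ.le (ha.trans hab) n
  have h2 : a ^ n ≤ b ^ n := pow_le_pow_left₀ (hτ.le.trans ha) hab n
  rw [pow_succ, pow_succ]
  nlinarith [mul_le_mul_of_nonneg_left h1 (sub_nonneg.2 hab), mul_le_mul_of_nonneg_right h2 (hτ.le.trans ha)]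

/-- The radius of a ball depends continuously on its volume, uniformly for radii at least `τ`. -/
lemma radius_close {τ t a b : ℝ} (hτ : 0 < τ) (ht : 0 ≤ t) {e : ℝ} (he0 : 0 ≤ e)
    (he : e < t * τ ^ n * (volume (𝔹[n + 1] 1)).toReal) (hta : τ + t ≤ a)
    (h1 : volume (𝔹[n + 1] a) ≤ volume (𝔹[n + 1] b) + ofReal e)
    (h2 : volume (𝔹[n + 1] b) ≤ volume (𝔹[n + 1] a) + ofReal e) :
    |b - a| ≤ t := by
  have hv := unit_ball_pos n
  have key : ∀ x y : ℝ, τ ≤ x → x + t ≤ y →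
      volume (𝔹[n + 1] y) ≤ volume (𝔹[n + 1] x) + ofReal e →
      False := by
    intro x y hx hy h
    have h3 := pow_gap (n := n) hτ hx (by linarith : x ≤ y)
    have hx0 : 0 ≤ x := hτ.le.trans hx
    have hy0 : 0 ≤ y := by linarith
    rw [vol_ball_eq hx0, vol_ball_eq hy0, ← ofReal_toReal
      (measure_closedBall_lt_top (x := (0 : 𝕍)) (r := 1)).ne, ← ofReal_mul (p := y ^ (n + 1)) (by positivity),
      ← ofReal_mul (p := x ^ (n + 1)) (by positivity)] at h
    rw [← ofReal_add (by positivity) he0, ofReal_le_ofReal_iff (by positivity)] at h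
    have h5 : t * τ ^ n ≤ y ^ (n + 1) - x ^ (n + 1) := le_trans (by gcongr; linarith) h3
    have h6 := mul_le_mul_of_nonneg_right h5 hv.le
    linarith
  rw [abs_le]
  constructor
  · by_contra hc
    push Not at hc
    refine key (a - t) a (by linarith) (by linarith) (h1.trans ?_)
    gcongr
    linarith
  · by_contra hc
    push Not at hc
    exact key a b (by linarith) (by linarith) h2

lemma adm_pert {τ : ℝ} {r r' : Fin 3 → ℝ} (h : Adm (2 * τ) (r 0) (r 1) (r 2)) (hr : ∀ j, r j ≤ 3 / 4)
    (hrr : ∀ j, |r' j - r j| ≤ τ / 3) : Adm τ (r' 0) (r' 1) (r' 2) := by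
  obtain ⟨h0, l1, l2, l3, u1, u2, u3, t1, t2, t3⟩ := h
  have a0 := abs_le.1 (hrr 0)
  have a1 := abs_le.1 (hrr 1)
  have a2 := abs_le.1 (hrr 2)
  have b0 := hr 0
  have b1 := hr 1
  have b2 := hr 2
  constructor <;> linarith

lemma T3_ne_top {d : ℕ} {E : Triple d} (hE : ∀ j, volume (E j) ≠ ⊤) : T3 E ≠ ⊤ :=
  ne_top_of_le_ne_top (ENNReal.mul_ne_top (hE 0) (hE 1)) (TT_le_mul (E 0) (E 1) (E 2))

lemma toReal_le_add_ofReal {a b : ℝ≥0∞} {e : ℝ} (he : 0 ≤ e) (hb : b ≠ ⊤) (h : a ≤ b + ofReal e) :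
    a.toReal ≤ b.toReal + e := by
  have := toReal_mono (by finiteness) h
  rwa [toReal_add hb ofReal_ne_top, toReal_ofReal he] at this

lemma T3_lip_real {d : ℕ} {E F : Triple d} (hE : ∀ j, MeasurableSet (E j)) (hF : ∀ j, MeasurableSet (F j))
    {M η : ℝ} (hM : 0 ≤ M) (hη : 0 ≤ η) (h1 : ∀ j, volume (E j) ≤ ofReal M)
    (h2 : ∀ j, volume (F j) ≤ ofReal M) (h : ∀ j, volume (E j ∆ F j) ≤ ofReal η) :
    (T3 E).toReal ≤ (T3 F).toReal + 3 * (η * M) := by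
  refine toReal_le_add_ofReal (by positivity) (T3_ne_top fun j => ne_top_of_le_ne_top ofReal_ne_top (h2 j))
    ((T3_lip hE hF h1 h2 h).trans (le_of_eq ?_))
  rw [ofReal_mul (p := 3) (by norm_num), ofReal_mul (p := η) hη]
  simp

lemma ball_triple {r : Fin 3 → ℝ} (hr : ∀ j, r j ≤ 1) {v : ℝ}
    (hv : v = (volume (𝔹[n + 1] 1)).toReal)
    {B : Triple (n + 1)} (hB : B = fun j => 𝔹 (r j)) :
    (∀ j, MeasurableSet (B j)) ∧ (∀ j, volume (B j) ≤ ofReal v) ∧ ∀ j, volume (B j) ≠ ⊤ := by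
  subst hB
  refine ⟨fun j => measurableSet_closedBall, fun j => ?_, fun j => ball_ne_top⟩
  rw [hv, ofReal_toReal ball_ne_top]
  exact measure_mono (cball_mono (hr j))

/-- Stability for bounded triples at any distance from the balls. A triple far from the orbit is
deformed by a chain of small approximate symmetrizations until its distance is comparable to `δ`;
this hardly decreases `T3`, and the deformed triple is governed by `local_stability'`. -/
lemma global_bounded (n : ℕ) {τ : ℝ} (hτ : 0 < τ) : ∃ c > 0, ∀ (r : Fin 3 → ℝ)
    (E : Triple (n + 1)) (R : ℝ), Adm (2 * τ) (r 0) (r 1) (r 2) → (∀ j, r j ≤ 3 / 4) →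
    (∀ j, MeasurableSet (E j)) → (∀ j, E j ⊆ 𝔹 R) →
    (∀ j, volume (E j) = volume (𝔹[n + 1] (r j))) →
    (T3 E).toReal + c * tripleDist E (fun j => 𝔹 (r j)) ^ 2 ≤
      (T3 fun j => 𝔹[n + 1] (r j)).toReal := by
  rcases lt_or_ge 1 τ with hτ1 | hτ1
  · refine ⟨1, one_pos, fun r E R hA => ?_⟩
    linarith [hA.l1, hA.u1]
  obtain ⟨δ, hδ, c, hc, H⟩ := local_stability' n hτ hτ1
  have hv := unit_ball_pos n
  obtain ⟨v, hvd⟩ : ∃ v, v = (volume (𝔹[n + 1] 1)).toReal := ⟨_, rfl⟩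
  rw [← hvd] at hv
  obtain ⟨ε, hε, hεδ, hεκ, hεs⟩ : ∃ ε > 0, ε ≤ δ / 8 ∧ ε < τ / 3 * τ ^ n * v ∧ ε * (1 + 3 * v) ≤ c * δ ^ 2 / 32 := by
    refine ⟨min (δ / 8) (min (τ / 3 * τ ^ n * v / 2) (c * δ ^ 2 / 32 / (1 + 3 * v))), by positivity, min_le_left _ _,
      ((min_le_right _ _).trans (min_le_left _ _)).trans_lt (half_lt_self (by positivity)), ?_⟩
    rw [← le_div_iff₀ (by positivity)]
    exact (min_le_right _ _).trans (min_le_right _ _)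
  refine ⟨min c (c * δ ^ 2 / 32 / (2 * v) ^ 2), by positivity, fun r E R hA hr hE hER hEv => ?_⟩
  obtain ⟨B, hB⟩ : ∃ B : Triple (n + 1), B = fun j => 𝔹 (r j) := ⟨_, rfl⟩
  obtain ⟨hBm, hBv, hBf⟩ := ball_triple (fun j => by linarith [hr j]) hvd hB
  have hEB : ∀ j, volume (E j) = volume (B j) := fun j => by rw [hB]; exact hEv j
  have hEf : ∀ j, volume (E j) ≠ ⊤ := fun j => hEB j ▸ hBf j
  have hr0 : ∀ j, 0 ≤ r j := fun j => by linarith [hA.rl j]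
  have hER' : ∀ j, E j ⊆ 𝔹 (max R 1) := fun j =>
    (hER j).trans (cball_mono (le_max_left _ _))
  have hrR : ∀ j, r j ≤ max R 1 := fun j => le_max_of_le_right (by linarith [hr j])
  rw [← hB]
  have hD0 := tripleDist_nonneg E B
  rcases hD0.eq_or_lt with h0 | hDp
  · rw [← h0, hB]
    have := riesz_sobolev hE hER' hr0 hrR hEv
    rw [← hB] at this ⊢
    simpa using toReal_mono (T3_ne_top hBf) this
  rcases lt_or_ge (tripleDist E B) δ with hlt | hge
  · have h1 := H r E (by constructor <;> linarith [hA.l1, hA.l2, hA.l3, hA.u1, hA.u2, hA.u3, hA.t1, hA.t2, hA.t3])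
      hE hEv (by rw [← hB]; exact hDp) (by rw [← hB]; exact hlt)
    rw [← hB] at h1
    have h2 := toReal_mono (T3_ne_top hBf) h1
    rw [toReal_add (T3_ne_top hEf) ofReal_ne_top, toReal_ofReal (by positivity)] at h2
    refine le_trans ?_ h2
    gcongr
    exact min_le_left _ _
  have hDu : tripleDist E B ≤ 2 * v := by
    refine (Clo.of_near fun j => ?_).dist_le (by positivity)
    refine (measure_mono symmDiff_subset_union).trans ((measure_union_le _ _).trans ?_)
    rw [hEB, two_mul, ofReal_add hv.le hv.le]
    exact add_le_add (hBv j) (hBv j)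
  suffices hs : (T3 E).toReal + c * δ ^ 2 / 32 ≤ (T3 B).toReal by
    refine le_trans ?_ hs
    gcongr
    calc _ ≤ c * δ ^ 2 / 32 / (2 * v) ^ 2 * (2 * v) ^ 2 := by
          gcongr
          exact min_le_right _ _
      _ = _ := by field_simp
  obtain ⟨F, hch, hFm, -, hFv, hFB⟩ := greedy hE hER' hr0 hrR hEv (τ := δ / 4) (by positivity)
  have hΦF : tripleDist F B ≤ δ / 2 := by
    refine (Clo.of_near fun j => ?_).dist_le (by positivity)
    rw [symmDiff_le_of_vol_eq (hFm j) (hBm j) ((hFv j).trans (hEB j)) (hBf j),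
      show δ / 2 = 2 * (δ / 4) by ring, ofReal_mul (p := 2) (by norm_num), hB]
    simpa using mul_le_mul_right (hFB j) 2
  obtain ⟨Y, hYN, hY1, hY2⟩ := chain_ivt (P := Near (ofReal ε) E) (Φ := fun X => tripleDist X B) (k := ε)
    (δ := δ / 2) (fun X Y hX hXY => ⟨hXY.2, by
      have hYf : ∀ j, volume (Y j) ≠ ⊤ := fun j => ne_top_of_le_ne_top
        (ENNReal.add_ne_top.2 ⟨hEf j, ofReal_ne_top⟩) (hXY.2.2.2 j).1
      have := tripleDist_lip hYf hBf hε.le le_rfl hXY.1 (F' := B) (by simp)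
      linarith⟩) (hch ε hε) (near_refl hE _) (by linarith) hΦF
  obtain ⟨hYm, hYT, hYv⟩ := hYN
  have hYf : ∀ j, volume (Y j) ≠ ⊤ := fun j => ne_top_of_le_ne_top
    (ENNReal.add_ne_top.2 ⟨hEf j, ofReal_ne_top⟩) (hYv j).1
  choose r' hr'0 hr'v using fun j => exists_radius (hYf j)
  simp only [hEv, hr'v] at hYv
  have hA' : Adm τ (r' 0) (r' 1) (r' 2) := adm_pert hA hr fun j =>
    radius_close hτ (by positivity) hε.le (hvd ▸ hεκ) (by linarith [hA.rl j]) (hYv j).2 (hYv j).1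
  obtain ⟨B', hB'⟩ : ∃ B : Triple (n + 1), B = fun j => 𝔹 (r' j) := ⟨_, rfl⟩
  obtain ⟨hB'm, hB'v, hB'f⟩ := ball_triple hA'.ru hvd hB'
  have hBB : ∀ j, volume (B' j ∆ B j) ≤ ofReal ε := fun j => by
    rw [hB, hB']; exact ball_symm (hYv j).1 (hYv j).2
  have hd1 := tripleDist_lip hYf hB'f (E' := Y) le_rfl hε.le (by simp) hBB
  have hd2 := tripleDist_lip hYf hBf (E' := Y) (F' := B') le_rfl hε.le (by simp) (fun j => by rw [symmDiff_comm]; exact hBB j)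
  have hloc := H r' Y hA' hYm hr'v (by rw [← hB']; linarith) (by rw [← hB']; linarith)
  rw [← hB'] at hloc
  have h2 := toReal_mono (T3_ne_top hB'f) hloc
  rw [toReal_add (T3_ne_top hYf) ofReal_ne_top, toReal_ofReal (by positivity)] at h2
  have h3 := T3_lip_real hB'm hBm hv.le hε.le hB'v hBv hBB
  have h4 := toReal_le_add_ofReal hε.le (T3_ne_top hYf) hYT
  have h5 : (δ / 4) ^ 2 ≤ tripleDist Y B' ^ 2 := by
    gcongr
    linarith
  have h6 := mul_le_mul_of_nonneg_left h5 hc.le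
  linarith

/-- Stability for normalized triples of finite measure, by inner approximation with compact sets. -/
lemma global_stability (n : ℕ) {τ : ℝ} (hτ : 0 < τ) : ∃ c > 0, ∀ (r : Fin 3 → ℝ)
    (E : Triple (n + 1)), Adm (2 * (2 * τ)) (r 0) (r 1) (r 2) → (∀ j, r j ≤ 1 / 2) →
    (∀ j, MeasurableSet (E j)) →
    (∀ j, volume (E j) = volume (𝔹[n + 1] (r j))) →
    (T3 E).toReal + c * tripleDist E (fun j => 𝔹 (r j)) ^ 2 ≤
      (T3 fun j => 𝔹[n + 1] (r j)).toReal := by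
  obtain ⟨c, hc, H⟩ := global_bounded n hτ
  refine ⟨c, hc, fun r E hA hr hE hEv => ?_⟩
  have hv := unit_ball_pos n
  obtain ⟨v, hvd⟩ : ∃ v, v = (volume (𝔹[n + 1] 1)).toReal := ⟨_, rfl⟩
  rw [← hvd] at hv
  have hEf : ∀ j, volume (E j) ≠ ⊤ := fun j => by rw [hEv]; exact ball_ne_top
  obtain ⟨B, hB⟩ : ∃ B : Triple (n + 1), B = fun j => 𝔹 (r j) := ⟨_, rfl⟩
  rw [← hB]
  obtain ⟨hBm, hBv, -⟩ := ball_triple (fun j => by linarith [hr j]) hvd hB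
  have hD0 := tripleDist_nonneg E B
  obtain ⟨D, hD⟩ : ∃ D, D = tripleDist E B := ⟨_, rfl⟩
  rw [← hD] at hD0 ⊢
  have main : ∀ ε : ℝ, 0 < ε → ε ≤ 1 → ε < 2 * τ / 3 * τ ^ n * v →
      (T3 E).toReal + c * D ^ 2 ≤ (T3 B).toReal + ε * (3 * v + 3 * v + 4 * c * D) := by
    intro ε hε hε1 hεκ
    have hK : ∀ j, ∃ K ⊆ E j, IsCompact K ∧ volume (E j \ K) < ofReal ε := fun j =>
      (hE j).exists_isCompact_diff_lt (hEf j) (by simpa using hε)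
    choose K hKE hKc hKd using hK
    have hKf : ∀ j, volume (K j) ≠ ⊤ := fun j => (hKc j).measure_lt_top.ne
    have hKm : ∀ j, MeasurableSet (K j) := fun j => (hKc j).measurableSet
    have hEK : ∀ j, volume (E j ∆ K j) ≤ ofReal ε := fun j => by
      rw [symmDiff_of_ge (hKE j)]; exact (hKd j).le
    obtain ⟨R, hR⟩ := (Bornology.isBounded_iUnion.2 fun j => (hKc j).isBounded).subset_closedBall (0 : Vec (n + 1))
    choose r' hr'0 hr'v using fun j => exists_radius (hKf j)
    have h1 : ∀ j, volume (K j) ≤ volume (E j) := fun j => measure_mono (hKE j)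
    have h2 : ∀ j, volume (E j) ≤ volume (K j) + ofReal ε := fun j =>
      vol_le_of_symmDiff (hEK j)
    have hrr : ∀ j, |r' j - r j| ≤ 2 * τ / 3 := fun j =>
      radius_close hτ (by positivity) hε.le (hvd ▸ hεκ) (by linarith [hA.rl j]) (by rw [← hEv, ← hr'v]; exact h2 j)
        (by rw [← hEv, ← hr'v]; exact (h1 j).trans le_self_add)
    obtain ⟨B', hB'⟩ : ∃ B : Triple (n + 1), B = fun j => 𝔹 (r' j) := ⟨_, rfl⟩
    have hr'le : ∀ j, r' j ≤ 3 / 4 := fun j => by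
      linarith [(abs_le.1 (hrr j)).2, hr j, hA.rl j]
    have hA' := adm_pert hA (fun j => by linarith [hr j]) hrr
    have h3 := H r' K R hA' hr'le hKm (fun j => (subset_iUnion K j).trans hR) hr'v
    rw [← hB'] at h3
    obtain ⟨hB'm, hB'v, hB'f⟩ := ball_triple hA'.ru hvd hB'
    have hBB : ∀ j, volume (B' j ∆ B j) ≤ ofReal ε := fun j => by
      rw [hB, hB']
      exact ball_symm (by rw [← hEv, ← hr'v]; exact (h1 j).trans le_self_add) (by rw [← hEv, ← hr'v]; exact h2 j)
    have h4 := T3_lip_real hB'm hBm hv.le hε.le hB'v hBv hBB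
    have hEvv : ∀ j, volume (E j) ≤ ofReal v := fun j => by
      rw [hEv]; simpa only [hB] using hBv j
    have h5 := T3_lip_real hE hKm hv.le hε.le hEvv (fun j => (h1 j).trans (hEvv j)) hEK
    have h6 := tripleDist_lip hKf hB'f hε.le hε.le hEK hBB
    rw [← hD] at h6
    have h8 : D ^ 2 - 4 * ε * D ≤ tripleDist K B' ^ 2 := by
      rcases le_total D (2 * ε) with h | h
      · nlinarith
      · nlinarith [pow_le_pow_left₀ (sub_nonneg.2 h) (by linarith : D - 2 * ε ≤ tripleDist K B') 2]
    have h9 := mul_le_mul_of_nonneg_left h8 hc.le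
    linarith
  refine le_of_forall_pos_le_add fun t ht => ?_
  obtain ⟨A, hAd⟩ : ∃ A, A = 3 * v + 3 * v + 4 * c * D := ⟨_, rfl⟩
  have hA0 : 0 < A := by rw [hAd]; positivity
  obtain ⟨ε, hε⟩ : ∃ ε, ε = min 1 (min (2 * τ / 3 * τ ^ n * v / 2) (t / A)) := ⟨_, rfl⟩
  have hε0 : 0 < ε := by rw [hε]; positivity
  have hε1 : ε ≤ 1 := hε ▸ min_le_left _ _
  have hε2 : ε ≤ 2 * τ / 3 * τ ^ n * v / 2 := hε ▸ (min_le_right _ _).trans (min_le_left _ _)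
  have hε3 : ε * A ≤ t := by rw [← le_div_iff₀ hA0, hε]; exact (min_le_right _ _).trans (min_le_right _ _)
  have := main ε hε0 hε1 (hε2.trans_lt (half_lt_self (by positivity)))
  rw [← hAd] at this
  linarith

/-- The dilate of a triple by the factor `s⁻¹`. -/
def dil {d : ℕ} (s : ℝ) (E : Triple d) : Triple d := fun j => (fun y => s • y) ⁻¹' E j

lemma vol_dil {d : ℕ} {s : ℝ} (hs : 0 < s) (E : Set (Vec d)) :
    volume ((fun y => s • y) ⁻¹' E) = ofReal (s ^ d)⁻¹ * volume E := by
  rw [Measure.addHaar_preimage_smul volume hs.ne']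
  simp [abs_of_pos hs]

lemma T3_dil {d : ℕ} {s : ℝ} (hs : 0 < s) (E : Triple d) :
    T3 (dil s E) = ofReal ((s ^ d)⁻¹ ^ 2) * T3 E := by
  have : Treg (dil s E 0) (dil s E 1) (dil s E 2) = (fun p => s • p) ⁻¹' Treg (E 0) (E 1) (E 2) := by
    ext p
    simp [Treg, dil, smul_sub]
  have hH : (volume : Measure (Vec d × Vec d)).IsAddHaarMeasure :=
    inferInstanceAs ((volume : Measure (Vec d)).prod volume).IsAddHaarMeasure
  rw [T3, TT, this, Measure.addHaar_preimage_smul volume hs.ne']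
  simp only [Module.finrank_prod, finrank_euclideanSpace, Fintype.card_fin, T3, TT]
  rw [abs_of_pos (by positivity), ← inv_pow, ← inv_pow, ← pow_mul, ← two_mul, mul_comm d 2]

lemma dist_dil {d : ℕ} {s : ℝ} (hs : 0 < s) {E F : Triple d} (hE : ∀ j, volume (E j) ≠ ⊤)
    (hF : ∀ j, volume (F j) ≠ ⊤) : (s ^ d)⁻¹ * tripleDist E F ≤ tripleDist (dil s E) (dil s F) := by
  have hfin : ∀ {E : Triple d}, (∀ j, volume (E j) ≠ ⊤) → ∀ j, volume (dil s E j) ≠ ⊤ := fun h j => by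
    rw [dil, vol_dil hs]; exact ENNReal.mul_ne_top ofReal_ne_top (h j)
  refine le_of_forall_pos_le_add fun t ht => ?_
  have hD := tripleDist_nonneg (dil s E) (dil s F)
  obtain ⟨ψ, v, hv, hψ, H⟩ := Clo.of_dist (hfin hE) (hfin hF)
    (show tripleDist (dil s E) (dil s F) < tripleDist (dil s E) (dil s F) + t by linarith)
  have h : Clo E F (s ^ d * (tripleDist (dil s E) (dil s F) + t)) := by
    refine ⟨ψ, fun j => s • v j, by rw [← smul_add, ← smul_add, hv, smul_zero], hψ, fun j => ?_⟩
    have h1 := H j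
    have h2 : dil s E j ∆ ((fun y => ψ y + v j) '' dil s F j) =
        (fun y => s • y) ⁻¹' E j ∆ ((fun y => ψ y + s • v j) '' F j) := by
      rw [preimage_symmDiff]
      congr 1
      ext x
      simp only [dil, mem_image, mem_preimage]
      constructor
      · rintro ⟨y, hy, rfl⟩
        exact ⟨s • y, hy, by simp⟩
      · rintro ⟨y, hy, hx⟩
        refine ⟨s⁻¹ • y, by rwa [smul_inv_smul₀ hs.ne'], ?_⟩
        rw [map_smul, ← smul_right_injective _ hs.ne' |>.eq_iff, ← hx]
        simp [smul_inv_smul₀ hs.ne']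
    rw [h2, vol_dil hs] at h1
    rw [ofReal_mul (p := s ^ d) (by positivity)]
    refine le_trans (le_of_eq ?_) (mul_le_mul_right h1 _)
    rw [← mul_assoc, ← ofReal_mul (by positivity), mul_inv_cancel₀ (by positivity)]
    simp
  rw [inv_mul_le_iff₀ (by positivity)]
  exact h.dist_le (by positivity)

lemma Tfun_eq {d : ℕ} {E : Triple d} (hE : ∀ j, MeasurableSet (E j)) : Tfun E = (T3 E).toReal := by
  have : (fun p : Vec d × Vec d => ind (E 0) p.1 * ind (E 1) p.2 * ind (E 2) (-p.1 - p.2)) =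
      (Treg (E 0) (E 1) (E 2)).indicator 1 := by
    funext p
    by_cases h0 : p.1 ∈ E 0 <;> by_cases h1 : p.2 ∈ E 1 <;> by_cases h2 : -p.1 - p.2 ∈ E 2 <;>
      simp [ind, Treg, indicator, h0, h1, h2]
  rw [Tfun, this, integral_indicator_one (measurableSet_Treg (hE 0) (hE 1) (hE 2))]
  rfl

end

/-- The sharpened Riesz–Sobolev inequality in symmetric trilinear form. -/
theorem sharpened_riesz_sobolev_symmetric (d : ℕ) (hd : 1 ≤ d) (ρ : ℝ) (hρ : 0 < ρ) :
    ∃ c > (0 : ℝ), ∀ E : Fin 3 → Set (Vec d),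
      (∀ j, MeasurableSet (E j)) → (∀ j, volume (E j) ≠ ⊤) →
      RhoStrictlyAdmissible ρ (fun j => (volume (E j)).toReal ^ ((1 : ℝ) / d)) →
      Tfun E ≤ Tfun (fun j => ballStar (E j))
        - c * (tripleDist E (fun j => ballStar (E j))) ^ 2 := by
  obtain ⟨n, rfl⟩ : ∃ n, d = n + 1 := ⟨d - 1, by omega⟩
  obtain ⟨c, hc, H⟩ := global_stability n (τ := ρ ^ 2 / 8) (by positivity)
  refine ⟨c, hc, fun E hE hEf hadm => ?_⟩
  have hv := unit_ball_pos n
  obtain ⟨r, hr⟩ : ∃ r : Fin 3 → ℝ, r = fun j => ((volume (E j)).toReal /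
    (volume (𝔹[n + 1] 1)).toReal) ^ ((1 : ℝ) / (n + 1 : ℕ)) := ⟨_, rfl⟩
  have hB : (fun j => ballStar (E j)) = fun j => 𝔹[n + 1] (r j) := by
    rw [hr]; rfl
  have hBv : ∀ j, volume (𝔹[n + 1] (r j)) = volume (E j) := fun j => by
    rw [← vol_ballStar (hEf j), hr, ballStar]
  obtain ⟨w, hw, hrw⟩ : ∃ w > 0, ∀ j, r j = w * (volume (E j)).toReal ^ ((1 : ℝ) / (n + 1 : ℕ)) := by
    refine ⟨((volume (𝔹[n + 1] 1)).toReal ^ ((1 : ℝ) / (n + 1 : ℕ)))⁻¹, by positivity, fun j => ?_⟩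
    rw [hr]
    simp only
    rw [Real.div_rpow toReal_nonneg hv.le, div_eq_mul_inv, mul_comm]
  obtain ⟨hp, ht, hm⟩ := hadm
  have hrp : ∀ j, 0 < r j := fun j => by rw [hrw]; exact mul_pos hw (hp j)
  have hrt : ∀ i j k : Fin 3, ({i, j, k} : Set (Fin 3)) = Set.univ → r k ≤ (1 - ρ) * (r i + r j) := fun i j k h => by
    rw [hrw, hrw, hrw]
    linarith [mul_le_mul_of_nonneg_left (ht i j k h) hw.le]
  have hrm : ∀ i j, ρ * r i ≤ r j := fun i j => by
    rw [hrw, hrw]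
    linarith [mul_le_mul_of_nonneg_left (hm i j) hw.le]
  have hρ1 : ρ ≤ 1 := by
    have := hrm 0 0
    have := hrp 0
    nlinarith
  -- After dilation by `1 / (2 max r)`, the largest radius is `1/2`.
  obtain ⟨m, hm1, hm2⟩ : ∃ m, (∀ j, r j ≤ m) ∧ ∀ j, ρ * m ≤ r j := by
    obtain ⟨i, hi⟩ := Finite.exists_max r
    exact ⟨r i, hi, fun j => hrm i j⟩
  have hm0 : 0 < m := (hrp 0).trans_le (hm1 0)
  have hs : 0 < 2 * m := by positivity
  have hball : dil (2 * m) (fun j => 𝔹[n + 1] (r j)) =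
      fun j => 𝔹[n + 1] (r j / (2 * m)) := by
    funext j
    ext x
    simp only [dil, mem_preimage, mem_closedBall_zero_iff, norm_smul, norm_of_nonneg hs.le]
    rw [le_div_iff₀ hs, mul_comm]
  have hA : Adm (2 * (2 * (ρ ^ 2 / 8))) (r 0 / (2 * m)) (r 1 / (2 * m)) (r 2 / (2 * m)) := by
    have hl : ∀ j, 2 * (2 * (ρ ^ 2 / 8)) ≤ r j / (2 * m) := fun j => by
      rw [le_div_iff₀ hs]
      nlinarith [hm2 j, mul_pos hρ hm0]
    have hu : ∀ j, r j / (2 * m) ≤ 1 := fun j => by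
      rw [div_le_one hs]; linarith [hm1 j]
    have htr : ∀ i j k : Fin 3, ({i, j, k} : Set (Fin 3)) = Set.univ →
        r k / (2 * m) + 2 * (2 * (ρ ^ 2 / 8)) ≤ r i / (2 * m) + r j / (2 * m) := fun i j k h => by
      rw [← add_div, ← le_sub_iff_add_le', ← sub_div, le_div_iff₀ hs]
      have h1 := hrt i j k h
      nlinarith [mul_le_mul_of_nonneg_left (hm2 i) hρ.le, mul_le_mul_of_nonneg_left (hm2 j) hρ.le, mul_pos (pow_pos hρ 2) hm0]
    exact ⟨by positivity, hl 0, hl 1, hl 2, hu 0, hu 1, hu 2, htr 1 2 0 (by ext x; fin_cases x <;> simp),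
      htr 2 0 1 (by ext x; fin_cases x <;> simp), htr 0 1 2 (by ext x; fin_cases x <;> simp)⟩
  have hmain := H (fun j => r j / (2 * m)) (dil (2 * m) E) hA
    (fun j => by rw [div_le_div_iff₀ hs two_pos]; linarith [hm1 j])
    (fun j => (measurable_const_smul (2 * m)) (hE j))
    (fun j => by
      rw [show 𝔹[n + 1] (r j / (2 * m)) = _ from (congrFun hball j).symm, dil, dil,
        vol_dil hs, vol_dil hs, hBv])
  rw [← hball, T3_dil hs, T3_dil hs, toReal_mul, toReal_mul, toReal_ofReal (by positivity)] at hmain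
  have hdist := dist_dil hs hEf (F := fun j => 𝔹[n + 1] (r j)) fun j => ball_ne_top
  have hD0 := tripleDist_nonneg E fun j => 𝔹[n + 1] (r j)
  rw [hB, Tfun_eq hE, Tfun_eq fun j => measurableSet_closedBall]
  obtain ⟨a, ha⟩ : ∃ a, a = ((2 * m) ^ (n + 1))⁻¹ := ⟨_, rfl⟩
  have ha0 : 0 < a := by rw [ha]; positivity
  rw [← ha] at hmain hdist
  have h2 := pow_le_pow_left₀ (by positivity) hdist 2
  have h3 := mul_le_mul_of_nonneg_left h2 hc.le
  rw [mul_pow] at h3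
  have h4 : 0 < a ^ 2 := by positivity
  refine le_of_mul_le_mul_left ?_ h4
  linarith
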